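/- Let c ≤ −1 be an integer. If there exist five pairwise distinct triples (n_i, x_i, y_i) ∈ ℤ_{≥0}^3 (i = 1, …, 5), each with n_i ≠ 1, such that T_{n_i} − 2^{x_i}·3^{y_i} = c for every i, then c = −8 or c = −2. Moreover, both values do admit five such representations: −8 = T_0 − 2^3·3^0 = T_2 − 2^0·3^2 = T_4 − 2^2·3^1 = T_7 − 2^5·3^0 = T_{12} − 2^9·3^0, and −2 = T_0 − 2^1·3^0 = T_2 − 2^0·3^1 = T_3 − 2^2·3^0 = T_4 − 2^1·3^1 = T_5 − 2^0·3^2. -/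

import Mathlib

/-!
Write `d = -c ≥ 1`, so that `T n + d = 2 ^ x * 3 ^ y` in five ways. The index determines the exponents,
so the five indices are distinct; let `n 0 < ⋯ < n 4`. Let `α` be the real root of `x³ = x² + x + 1`
and `β` a complex one; Binet's formula says that `ρ T n - α ^ n` is bounded for a certain
`ρ ∈ ℤ[α]`, and `T n = τ (α ^ n)` for an integral linear functional `τ` on `ℤ[α]`.

*An absolute bound.* A Gelfond–Baker argument with an auxiliary function (`RBData`, `rb_pow`) gives
effective lower bounds for linear forms in `log 2`, `log 3`, `log α` and one further logarithm. The
form in `log 2, log 3` applied to the two smallest solutions, and the form in `log ρ, log 2, log 3,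
log α` applied to the largest one, confine `n 1, …, n 4` to a short window (`Sol.window`). Among these
four, either two exponents of `2` are small, and then the difference of the two equations is, up to a
factor of small height, a power of `3`, which contradicts a lower bound for a form in three logarithms
(`Sol.small_x`); or three of them are large, and then `α ^ n` is determined projectively modulo a
high power of `2`, which contradicts a 2-adic analogue of the lower bound (`PBData.pb`,
`Sol.pb_stage`). The collinear case of the last step is `α ^ 4 - 1 = 2 (α ^ 3 - 1)`, that is, three
3-smooth numbers in arithmetic progression (`Sol.pattern`). The outcome is a descent
(`Sol.main_step`) ending in the bound `2 ^ 2276` for all unknowns (`Sol.absolute`).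

*Reduction.* For bounded coefficients, better lower bounds for the linear forms follow from a good
simultaneous rational approximation to `log 2 / log 3` and `log α / log 3`, verified with certified
enclosures of logarithms (`cert_spec`). One more descent step then gives `2 ^ 666`. From there on,
powers of `3` are used: a `3`-adic Newton iteration (`divCert`) shows that no difference of two
Tribonacci numbers with indices in a window is divisible by a high power of `3`, so at most one of
the exponents of `3` in the window is large, and three equations with small exponents of `3` bound the
index (`Sol.psi_stage`, `Sol.level`). Two such rounds reduce the bound to `2 ^ 13` and to `n ≤ 228`.

*Search.* For indices up to `228` no difference `T j - T i` is divisible by `2 ^ 16` or by `3 ^ 11`.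
Hence three of the five right-hand sides divide `2 ^ 15 * 3 ^ 10`, and all candidates for `d` can be
tried; only `2` and `8` survive (`Sol.concl`).
-/

/-- The Tribonacci sequence: `T 0 = 0`, `T 1 = T 2 = 1`,
`T (n+3) = T (n+2) + T (n+1) + T n`. -/
def T : ℕ → ℤ
  | 0 => 0
  | 1 => 1
  | 2 => 1
  | n + 3 => T (n + 2) + T (n + 1) + T n

/-! ### The cubic ring `ℤ[α]` and its embeddings -/

/-- `Cub S` is the ring `S[x] / (x³ - x² - x - 1)`, an element being the list of its
coordinates in the basis `1, x, x²`. -/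
@[ext] structure Cub (S : Type) where
  c0 : S
  c1 : S
  c2 : S

namespace Cub

variable {S : Type} [CommRing S]

instance : Zero (Cub S) := ⟨⟨0, 0, 0⟩⟩
instance : One (Cub S) := ⟨⟨1, 0, 0⟩⟩
instance : Add (Cub S) := ⟨fun a b => ⟨a.c0 + b.c0, a.c1 + b.c1, a.c2 + b.c2⟩⟩
instance : Neg (Cub S) := ⟨fun a => ⟨-a.c0, -a.c1, -a.c2⟩⟩
instance : Mul (Cub S) := ⟨fun a b =>
  ⟨a.c0 * b.c0 + (a.c1 * b.c2 + a.c2 * b.c1) + a.c2 * b.c2,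
   a.c0 * b.c1 + a.c1 * b.c0 + (a.c1 * b.c2 + a.c2 * b.c1) + 2 * (a.c2 * b.c2),
   a.c0 * b.c2 + a.c1 * b.c1 + a.c2 * b.c0 + (a.c1 * b.c2 + a.c2 * b.c1)
     + 2 * (a.c2 * b.c2)⟩⟩

@[simp] lemma zero_c0 : (0 : Cub S).c0 = 0 := rfl
@[simp] lemma zero_c1 : (0 : Cub S).c1 = 0 := rfl
@[simp] lemma zero_c2 : (0 : Cub S).c2 = 0 := rfl
@[simp] lemma one_c0 : (1 : Cub S).c0 = 1 := rfl
@[simp] lemma one_c1 : (1 : Cub S).c1 = 0 := rfl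
@[simp] lemma one_c2 : (1 : Cub S).c2 = 0 := rfl
@[simp] lemma add_c0 (a b : Cub S) : (a + b).c0 = a.c0 + b.c0 := rfl
@[simp] lemma add_c1 (a b : Cub S) : (a + b).c1 = a.c1 + b.c1 := rfl
@[simp] lemma add_c2 (a b : Cub S) : (a + b).c2 = a.c2 + b.c2 := rfl
@[simp] lemma neg_c0 (a : Cub S) : (-a).c0 = -a.c0 := rfl
@[simp] lemma neg_c1 (a : Cub S) : (-a).c1 = -a.c1 := rfl
@[simp] lemma neg_c2 (a : Cub S) : (-a).c2 = -a.c2 := rfl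
@[simp] lemma mul_c0 (a b : Cub S) : (a * b).c0 =
    a.c0 * b.c0 + (a.c1 * b.c2 + a.c2 * b.c1) + a.c2 * b.c2 := rfl
@[simp] lemma mul_c1 (a b : Cub S) : (a * b).c1 =
    a.c0 * b.c1 + a.c1 * b.c0 + (a.c1 * b.c2 + a.c2 * b.c1) + 2 * (a.c2 * b.c2) := rfl
@[simp] lemma mul_c2 (a b : Cub S) : (a * b).c2 =
    a.c0 * b.c2 + a.c1 * b.c1 + a.c2 * b.c0 + (a.c1 * b.c2 + a.c2 * b.c1)
     + 2 * (a.c2 * b.c2) := rfl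

instance : CommRing (Cub S) where
  add_assoc a b c := by ext <;> simp <;> ring
  zero_add a := by ext <;> simp
  add_zero a := by ext <;> simp
  add_comm a b := by ext <;> simp <;> ring
  mul_assoc a b c := by ext <;> simp <;> ring
  one_mul a := by ext <;> simp
  mul_one a := by ext <;> simp
  left_distrib a b c := by ext <;> simp <;> ring
  right_distrib a b c := by ext <;> simp <;> ring
  mul_comm a b := by ext <;> simp <;> ring
  zero_mul a := by ext <;> simp
  mul_zero a := by ext <;> simp
  neg_add_cancel a := by ext <;> simp
  nsmul := nsmulRec
  zsmul := zsmulRec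

@[simp] lemma sub_c0 (a b : Cub S) : (a - b).c0 = a.c0 - b.c0 := by
  rw [sub_eq_add_neg, sub_eq_add_neg]; rfl
@[simp] lemma sub_c1 (a b : Cub S) : (a - b).c1 = a.c1 - b.c1 := by
  rw [sub_eq_add_neg, sub_eq_add_neg]; rfl
@[simp] lemma sub_c2 (a b : Cub S) : (a - b).c2 = a.c2 - b.c2 := by
  rw [sub_eq_add_neg, sub_eq_add_neg]; rfl

/-- The inclusion of scalars. -/
def C : S →+* Cub S where
  toFun s := ⟨s, 0, 0⟩
  map_zero' := rfl
  map_one' := rfl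
  map_add' a b := by ext <;> simp
  map_mul' a b := by ext <;> simp

@[simp] lemma C_c0 (s : S) : (C s).c0 = s := rfl
@[simp] lemma C_c1 (s : S) : (C s).c1 = 0 := rfl
@[simp] lemma C_c2 (s : S) : (C s).c2 = 0 := rfl

@[simp] lemma intCast_c0 (n : ℤ) : ((n : ℤ) : Cub S).c0 = n := by
  rw [← map_intCast (C : S →+* Cub S)]; rfl
@[simp] lemma intCast_c1 (n : ℤ) : ((n : ℤ) : Cub S).c1 = 0 := by
  rw [← map_intCast (C : S →+* Cub S)]; rfl
@[simp] lemma intCast_c2 (n : ℤ) : ((n : ℤ) : Cub S).c2 = 0 := by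
  rw [← map_intCast (C : S →+* Cub S)]; rfl
@[simp] lemma ofNat_c0 (n : ℕ) [n.AtLeastTwo] : (ofNat(n) : Cub S).c0 = OfNat.ofNat n := by
  rw [← map_ofNat (C : S →+* Cub S) n]; rfl
@[simp] lemma ofNat_c1 (n : ℕ) [n.AtLeastTwo] : (ofNat(n) : Cub S).c1 = 0 := by
  rw [← map_ofNat (C : S →+* Cub S) n]; rfl
@[simp] lemma ofNat_c2 (n : ℕ) [n.AtLeastTwo] : (ofNat(n) : Cub S).c2 = 0 := by
  rw [← map_ofNat (C : S →+* Cub S) n]; rfl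

/-- The class of `x`. -/
def X : Cub S := ⟨0, 1, 0⟩

@[simp] lemma X_c0 : (X : Cub S).c0 = 0 := rfl
@[simp] lemma X_c1 : (X : Cub S).c1 = 1 := rfl
@[simp] lemma X_c2 : (X : Cub S).c2 = 0 := rfl

lemma X_cube : (X : Cub S) ^ 3 = X ^ 2 + X + 1 := by
  ext <;> simp [pow_succ]

/-- The inverse `x² - x - 1` of `x`. -/
def Y : Cub S := ⟨-1, -1, 1⟩

lemma X_mul_Y : (X : Cub S) * Y = 1 := by
  ext <;> simp [Y]

/-- Evaluation at a root `a` of the cubic. -/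
def ev {A : Type} [CommRing A] (φ : S →+* A) (a : A) (ha : a ^ 3 = a ^ 2 + a + 1) :
    Cub S →+* A where
  toFun z := φ z.c0 + φ z.c1 * a + φ z.c2 * a ^ 2
  map_zero' := by simp
  map_one' := by simp
  map_add' z w := by simp; ring
  map_mul' z w := by
    simp only [mul_c0, mul_c1, mul_c2, map_add, map_mul, map_ofNat]
    linear_combination (-(φ z.c1 * φ w.c2 + φ z.c2 * φ w.c1)
      - φ z.c2 * φ w.c2 * (a + 1)) * ha

lemma ev_apply {A : Type} [CommRing A] (φ : S →+* A) (a : A) (ha) (z : Cub S) :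
    ev φ a ha z = φ z.c0 + φ z.c1 * a + φ z.c2 * a ^ 2 := rfl

/-- The functional with `tau (x ^ n) = T n`. -/
def tau : Cub ℤ →+ ℤ where
  toFun z := z.c1 + z.c2
  map_zero' := rfl
  map_add' a b := by simp only [add_c1, add_c2]; ring

lemma tau_apply (z : Cub ℤ) : tau z = z.c1 + z.c2 := rfl

lemma tau_X_pow : ∀ n : ℕ, tau (X ^ n) = T n
  | 0 => by simp [tau_apply, T]
  | 1 => by simp [tau_apply, T]
  | 2 => by simp [tau_apply, T, pow_succ]
  | n + 3 => by
    have h : (X : Cub ℤ) ^ (n + 3) = X ^ (n + 2) + X ^ (n + 1) + X ^ n := by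
      rw [pow_add, X_cube]; ring
    rw [h, map_add, map_add, tau_X_pow, tau_X_pow, tau_X_pow, T]

/-- The cofactor of `z`: `z * cof z` is the integer `nm z`. -/
def cof (z : Cub ℤ) : Cub ℤ :=
  ⟨(z.c0 + z.c2) * (z.c0 + z.c1 + 2 * z.c2) - (z.c1 + 2 * z.c2) * (z.c1 + z.c2),
   (z.c1 + 2 * z.c2) * z.c2 - z.c1 * (z.c0 + z.c1 + 2 * z.c2),
   z.c1 * (z.c1 + z.c2) - (z.c0 + z.c2) * z.c2⟩

/-- The norm from `ℤ[α]` to `ℤ`. -/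
def nm (z : Cub ℤ) : ℤ :=
  z.c0 * (cof z).c0 + z.c2 * (cof z).c1 + (z.c1 + z.c2) * (cof z).c2

lemma mul_cof (z : Cub ℤ) : z * cof z = C (nm z) := by
  ext <;> simp [cof, nm] <;> ring

lemma nm_mul (z w : Cub ℤ) : nm (z * w) = nm z * nm w := by
  simp only [nm, cof, mul_c0, mul_c1, mul_c2]; ring

/-- The norm as a monoid homomorphism. -/
def nmHom : Cub ℤ →* ℤ where
  toFun := nm
  map_one' := by simp [nm, cof]
  map_mul' := nm_mul

lemma nm_pow (z : Cub ℤ) (n : ℕ) : nm (z ^ n) = nm z ^ n := map_pow nmHom z n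

/-- The cubic is irreducible modulo `3`, so an element whose norm is divisible by `3` is
divisible by `3`. -/
lemma three_dvd_of_nm (z : Cub ℤ) (h : (3 : ℤ) ∣ nm z) : 3 ∣ z.c0 ∧ 3 ∣ z.c1 ∧ 3 ∣ z.c2 := by
  have key : ∀ a b c : ZMod 3,
      a * ((a + c) * (a + b + 2 * c) - (b + 2 * c) * (b + c))
      + c * ((b + 2 * c) * c - b * (a + b + 2 * c))
      + (b + c) * (b * (b + c) - (a + c) * c) = 0 → a = 0 ∧ b = 0 ∧ c = 0 := by decide
  have h' := (ZMod.intCast_zmod_eq_zero_iff_dvd (nm z) 3).2 (by exact_mod_cast h)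
  simp only [nm, cof] at h'
  push_cast at h'
  have := key _ _ _ h'
  simpa only [ZMod.intCast_zmod_eq_zero_iff_dvd, Nat.cast_ofNat] using this

lemma nm_ne_zero_aux (k : ℕ) : ∀ z : Cub ℤ, z.c0.natAbs + z.c1.natAbs + z.c2.natAbs ≤ k →
    nm z = 0 → z = 0 := by
  induction k using Nat.strong_induction_on with
  | _ k ih =>
    intro z hz h
    obtain ⟨⟨a, ha⟩, ⟨b, hb⟩, ⟨c, hc⟩⟩ := three_dvd_of_nm z (by simp [h])
    by_contra hne
    have hpos : z.c0.natAbs + z.c1.natAbs + z.c2.natAbs ≠ 0 := by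
      intro h0
      apply hne
      ext
      · show z.c0 = 0
        omega
      · show z.c1 = 0
        omega
      · show z.c2 = 0
        omega
    have hz3 : z = C 3 * ⟨a, b, c⟩ := by
      ext <;> simp [ha, hb, hc]
    have h3 : nm (⟨a, b, c⟩ : Cub ℤ) = 0 := by
      rw [hz3, nm_mul] at h
      rcases mul_eq_zero.1 h with h | h
      · simp [nm, cof] at h
      · exact h
    have := ih (a.natAbs + b.natAbs + c.natAbs) (by omega) ⟨a, b, c⟩ le_rfl h3
    apply hne
    rw [hz3, this, mul_zero]

lemma nm_eq_zero {z : Cub ℤ} : nm z = 0 ↔ z = 0 :=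
  ⟨fun h => nm_ne_zero_aux _ z le_rfl h, fun h => by simp [h, nm, cof]⟩

/-- A submultiplicative height on `ℤ[α]`. -/
def sz (z : Cub ℤ) : ℝ := 9 * (|(z.c0 : ℝ)| + |(z.c1 : ℝ)| + |(z.c2 : ℝ)|)

lemma sz_nonneg (z : Cub ℤ) : 0 ≤ sz z := by unfold sz; positivity

lemma sz_zero : sz 0 = 0 := by simp [sz]

lemma sz_one : sz 1 = 9 := by simp [sz]

lemma sz_add (z w : Cub ℤ) : sz (z + w) ≤ sz z + sz w := by
  unfold sz
  have h0 := abs_add_le (z.c0 : ℝ) w.c0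
  have h1 := abs_add_le (z.c1 : ℝ) w.c1
  have h2 := abs_add_le (z.c2 : ℝ) w.c2
  simp only [add_c0, add_c1, add_c2]
  push_cast
  linarith

lemma sz_neg (z : Cub ℤ) : sz (-z) = sz z := by simp [sz]

lemma sz_sum {ι : Type*} (s : Finset ι) (f : ι → Cub ℤ) :
    sz (∑ i ∈ s, f i) ≤ ∑ i ∈ s, sz (f i) := by
  classical
  induction s using Finset.induction_on with
  | empty => simp [sz_zero]
  | insert a s ha ih =>
    rw [Finset.sum_insert ha, Finset.sum_insert ha]
    exact (sz_add _ _).trans (by linarith)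

lemma sz_C_mul (n : ℤ) (z : Cub ℤ) : sz (C n * z) = |(n : ℝ)| * sz z := by
  simp [sz, abs_mul]; ring

lemma sz_C (n : ℤ) : sz (C n) = 9 * |(n : ℝ)| := by simp [sz]

lemma sz_mul (z w : Cub ℤ) : sz (z * w) ≤ sz z * sz w := by
  unfold sz
  simp only [mul_c0, mul_c1, mul_c2]
  push_cast
  generalize (z.c0 : ℝ) = a
  generalize (z.c1 : ℝ) = b
  generalize (z.c2 : ℝ) = c
  generalize (w.c0 : ℝ) = d
  generalize (w.c1 : ℝ) = e
  generalize (w.c2 : ℝ) = f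
  have h0 : |a * d + (b * f + c * e) + c * f| ≤
      |a| * |d| + |b| * |f| + |c| * |e| + |c| * |f| := by
    simp only [← abs_mul]
    linarith [abs_add_le (a * d + (b * f + c * e)) (c * f), abs_add_le (a * d) (b * f + c * e),
      abs_add_le (b * f) (c * e)]
  have h3 : |2 * (c * f)| = 2 * |c * f| := by rw [abs_mul, abs_two]
  have h1 : |a * e + b * d + (b * f + c * e) + 2 * (c * f)| ≤
      |a| * |e| + |b| * |d| + |b| * |f| + |c| * |e| + 2 * (|c| * |f|) := by
    simp only [← abs_mul]
    linarith [abs_add_le (a * e + b * d + (b * f + c * e)) (2 * (c * f)),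
      abs_add_le (a * e + b * d) (b * f + c * e), abs_add_le (a * e) (b * d),
      abs_add_le (b * f) (c * e)]
  have h2 : |a * f + b * e + c * d + (b * f + c * e) + 2 * (c * f)| ≤
      |a| * |f| + |b| * |e| + |c| * |d| + |b| * |f| + |c| * |e| + 2 * (|c| * |f|) := by
    simp only [← abs_mul]
    linarith [abs_add_le (a * f + b * e + c * d + (b * f + c * e)) (2 * (c * f)),
      abs_add_le (a * f + b * e + c * d) (b * f + c * e), abs_add_three (a * f) (b * e) (c * d),
      abs_add_le (b * f) (c * e)]
  have hp : ∀ x y : ℝ, 0 ≤ |x| * |y| := fun x y => by positivity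
  nlinarith [hp a d, hp a e, hp a f, hp b d, hp b e, hp b f, hp c d, hp c e, hp c f]

lemma sz_pow (z : Cub ℤ) (n : ℕ) : sz (z ^ n) ≤ 9 * sz z ^ n := by
  induction n with
  | zero => simp [sz_one]
  | succ n ih =>
    rw [pow_succ, pow_succ, ← mul_assoc]
    exact (sz_mul _ _).trans (mul_le_mul_of_nonneg_right ih (sz_nonneg z))

lemma one_le_sz {z : Cub ℤ} (hz : z ≠ 0) : 9 ≤ sz z := by
  unfold sz
  have : (1 : ℤ) ≤ |z.c0| + |z.c1| + |z.c2| := by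
    by_contra h
    push Not at h
    have h0 := abs_nonneg z.c0
    have h1 := abs_nonneg z.c1
    have h2 := abs_nonneg z.c2
    apply hz
    ext
    · exact abs_eq_zero.1 (by omega)
    · exact abs_eq_zero.1 (by omega)
    · exact abs_eq_zero.1 (by omega)
  have h' : (1 : ℝ) ≤ |(z.c0 : ℝ)| + |(z.c1 : ℝ)| + |(z.c2 : ℝ)| := by exact_mod_cast this
  linarith

end Cub

lemma exists_al : ∃ a : ℝ, 1.839 < a ∧ a < 1.84 ∧ a ^ 3 = a ^ 2 + a + 1 := by
  have hc : ContinuousOn (fun a : ℝ => a ^ 3 - a ^ 2 - a - 1) (Set.Icc 1.839 1.84) := by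
    fun_prop
  have h := intermediate_value_Ioo (by norm_num : (1.839 : ℝ) ≤ 1.84) hc
  have h0 : (0 : ℝ) ∈ Set.Ioo ((1.839 : ℝ) ^ 3 - 1.839 ^ 2 - 1.839 - 1)
      ((1.84 : ℝ) ^ 3 - 1.84 ^ 2 - 1.84 - 1) := by constructor <;> norm_num
  obtain ⟨a, ha, h⟩ := h h0
  exact ⟨a, ha.1, ha.2, by simp only at h; linarith⟩

/-- The real root of `x³ = x² + x + 1`, the Tribonacci constant. -/
noncomputable def al : ℝ := exists_al.choose

lemma al_gt : 1.839 < al := exists_al.choose_spec.1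
lemma al_lt : al < 1.84 := exists_al.choose_spec.2.1
lemma al_cube : al ^ 3 = al ^ 2 + al + 1 := exists_al.choose_spec.2.2
lemma al_pos : 0 < al := by linarith [al_gt]
lemma one_lt_al : 1 < al := by linarith [al_gt]

/-- Evaluation at the real root. -/
noncomputable def ea : Cub ℤ →+* ℝ := Cub.ev (Int.castRingHom ℝ) al al_cube

lemma ea_apply (z : Cub ℤ) : ea z = z.c0 + z.c1 * al + z.c2 * al ^ 2 := by
  simp [ea, Cub.ev_apply]

@[simp] lemma ea_X : ea Cub.X = al := by simp [ea_apply]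

@[simp] lemma ea_C (n : ℤ) : ea (Cub.C n) = n := by simp

lemma abs_ea_le (z : Cub ℤ) : |ea z| ≤ Cub.sz z := by
  rw [ea_apply, Cub.sz]
  have h1 := al_gt
  have h2 := al_lt
  have h3 : al ^ 2 ≤ 9 := by nlinarith
  have hb : |(z.c1 : ℝ) * al| ≤ |(z.c1 : ℝ)| * 9 := by
    rw [abs_mul, abs_of_pos al_pos]
    exact mul_le_mul_of_nonneg_left (by linarith) (abs_nonneg _)
  have hc : |(z.c2 : ℝ) * al ^ 2| ≤ |(z.c2 : ℝ)| * 9 := by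
    rw [abs_mul, abs_of_pos (pow_pos al_pos 2)]
    exact mul_le_mul_of_nonneg_left h3 (abs_nonneg _)
  have ha := abs_nonneg (z.c0 : ℝ)
  have := abs_add_three (z.c0 : ℝ) (z.c1 * al) (z.c2 * al ^ 2)
  linarith

lemma abs_ea_cof_le (z : Cub ℤ) : |ea (Cub.cof z)| ≤ Cub.sz z ^ 2 := by
  rw [ea_apply, Cub.sz]
  simp only [Cub.cof]
  push_cast
  generalize (z.c0 : ℝ) = u
  generalize (z.c1 : ℝ) = v
  generalize (z.c2 : ℝ) = w
  set s := |u| + |v| + |w| with hs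
  have hu := abs_nonneg u
  have hv := abs_nonneg v
  have hw := abs_nonneg w
  have b1 : |u + w| ≤ 2 * s := (abs_add_le _ _).trans (by linarith)
  have b2 : |v + w| ≤ 2 * s := (abs_add_le _ _).trans (by linarith)
  have b3 : |v + 2 * w| ≤ 2 * s := (abs_add_le _ _).trans (by rw [abs_mul, abs_two]; linarith)
  have b4 : |u + v + 2 * w| ≤ 2 * s :=
    (abs_add_three _ _ _).trans (by rw [abs_mul, abs_two]; linarith)
  have b5 : |v| ≤ 2 * s := by linarith
  have b6 : |w| ≤ 2 * s := by linarith
  have hs0 : 0 ≤ s := by positivity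
  have mm : ∀ x y p q : ℝ, |x| ≤ 2 * s → |y| ≤ 2 * s → |p| ≤ 2 * s → |q| ≤ 2 * s →
      |x * y - p * q| ≤ 8 * s ^ 2 := by
    intro x y p q hx hy hp hq
    have h1 : |x * y| ≤ 2 * s * (2 * s) := by
      rw [abs_mul]; exact mul_le_mul hx hy (abs_nonneg _) (by linarith)
    have h2 : |p * q| ≤ 2 * s * (2 * s) := by
      rw [abs_mul]; exact mul_le_mul hp hq (abs_nonneg _) (by linarith)
    calc |x * y - p * q| ≤ |x * y| + |p * q| := abs_sub _ _
      _ ≤ 8 * s ^ 2 := by nlinarith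
  have g0 := mm _ _ _ _ b1 b4 b3 b2
  have g1 := mm _ _ _ _ b3 b6 b5 b4
  have g2 := mm _ _ _ _ b5 b2 b1 b6
  have h1 := al_gt
  have h2 := al_lt
  have h3 : al ^ 2 ≤ 4 := by nlinarith
  refine (abs_add_three _ _ _).trans ?_
  rw [abs_mul, abs_mul, abs_of_pos al_pos, abs_of_pos (pow_pos al_pos 2)]
  have t1 : |(v + 2 * w) * w - v * (u + v + 2 * w)| * al ≤ 8 * s ^ 2 * 2 :=
    mul_le_mul g1 (by linarith) al_pos.le (by positivity)
  have t2 : |v * (v + w) - (u + w) * w| * al ^ 2 ≤ 8 * s ^ 2 * 4 :=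
    mul_le_mul g2 h3 (by positivity) (by positivity)
  nlinarith [sq_nonneg s]

/-- Liouville's inequality in `ℤ[α]`: the product of a nonzero element with its cofactor is a
nonzero integer. -/
lemma liouville {z : Cub ℤ} (hz : z ≠ 0) : 1 ≤ |ea z| * Cub.sz z ^ 2 := by
  have h := congrArg ea (Cub.mul_cof z)
  rw [map_mul, ea_C] at h
  have hn : (1 : ℝ) ≤ |(Cub.nm z : ℝ)| := by
    have : Cub.nm z ≠ 0 := fun h => hz (Cub.nm_eq_zero.1 h)
    exact_mod_cast Int.one_le_abs this
  rw [← h, abs_mul] at hn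
  exact hn.trans (mul_le_mul_of_nonneg_left (abs_ea_cof_le z) (abs_nonneg _))

lemma ea_injective : Function.Injective ea := by
  rw [injective_iff_map_eq_zero]
  intro z h
  by_contra hz
  have := liouville hz
  rw [h] at this
  norm_num at this

lemma exists_be : ∃ b : ℂ, b ^ 3 = b ^ 2 + b + 1 ∧ b.re = -(al - 1) / 2 ∧
    b.im ^ 2 = 1 / al - ((al - 1) / 2) ^ 2 := by
  have h1 := al_gt
  have h2 := al_lt
  have hp : 0 ≤ 1 / al - ((al - 1) / 2) ^ 2 := by
    have : (0.5 : ℝ) ≤ 1 / al := by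
      rw [le_div_iff₀ al_pos]; linarith
    nlinarith
  set y := Real.sqrt (1 / al - ((al - 1) / 2) ^ 2) with hy
  have hy2 : y ^ 2 = 1 / al - ((al - 1) / 2) ^ 2 := Real.sq_sqrt hp
  refine ⟨⟨-(al - 1) / 2, y⟩, ?_, rfl, hy2⟩
  have hai : al * (1 / al) = 1 := by field_simp [al_pos.ne']
  have hinv : 1 / al = al ^ 2 - al - 1 := by
    have := al_cube
    have h3 : al * (1 / al) = al * (al ^ 2 - al - 1) := by rw [hai]; linarith
    exact mul_left_cancel₀ al_pos.ne' h3
  rw [hinv] at hy2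
  have hc := al_cube
  apply Complex.ext
  · simp [pow_succ]
    have : y * y = al ^ 2 - al - 1 - ((al - 1) / 2) ^ 2 := by rw [← hy2]; ring
    linear_combination (3 * (1 - al) / 2 - 1) * (-1) * this + hc
  · simp [pow_succ]
    have : y * y = al ^ 2 - al - 1 - ((al - 1) / 2) ^ 2 := by rw [← hy2]; ring
    linear_combination (-y) * this

/-- A complex root of `x³ = x² + x + 1`. -/
noncomputable def be : ℂ := exists_be.choose

lemma be_cube : be ^ 3 = be ^ 2 + be + 1 := exists_be.choose_spec.1
lemma be_re : be.re = -(al - 1) / 2 := exists_be.choose_spec.2.1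
lemma be_im_sq : be.im ^ 2 = 1 / al - ((al - 1) / 2) ^ 2 := exists_be.choose_spec.2.2

lemma inv_al : 1 / al = al ^ 2 - al - 1 := by
  have hc := al_cube
  rw [div_eq_iff al_pos.ne']
  linarith

lemma normSq_be : Complex.normSq be = 1 / al := by
  rw [Complex.normSq_apply, ← pow_two, ← pow_two, be_im_sq, be_re]; ring

/-- Evaluation at the complex root. -/
noncomputable def eb : Cub ℤ →+* ℂ := Cub.ev (Int.castRingHom ℂ) be be_cube

lemma eb_apply (z : Cub ℤ) : eb z = z.c0 + z.c1 * be + z.c2 * be ^ 2 := by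
  simp [eb, Cub.ev_apply]

@[simp] lemma eb_X : eb Cub.X = be := by simp [eb_apply]

/-- `|z(β)|²`, for real coordinates, after reduction modulo the quadratic factor. -/
lemma normSq_eb (z : Cub ℤ) : Complex.normSq (eb z) =
    (z.c0 - z.c2 * (1 / al)) ^ 2 - (al - 1) * (z.c0 - z.c2 * (1 / al)) * (z.c1 - z.c2 * (al - 1))
      + (z.c1 - z.c2 * (al - 1)) ^ 2 * (1 / al) := by
  have him := be_im_sq
  have hre := be_re
  have h2 : be ^ 2 = -((al - 1 : ℝ) : ℂ) * be - ((1 / al : ℝ) : ℂ) := by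
    apply Complex.ext
    · simp only [pow_two, Complex.mul_re, Complex.sub_re, Complex.neg_re, Complex.ofReal_re,
        Complex.neg_im, Complex.ofReal_im]
      rw [hre]; linear_combination (-1) * him
    · simp only [pow_two, Complex.mul_im, Complex.sub_im, Complex.neg_re, Complex.ofReal_re,
        Complex.neg_im, Complex.ofReal_im]
      rw [hre]; ring
  have h : eb z = ((z.c0 - z.c2 * (1 / al) : ℝ) : ℂ) + ((z.c1 - z.c2 * (al - 1) : ℝ) : ℂ) * be := by
    rw [eb_apply, h2]; push_cast; ring
  rw [h, Complex.normSq_apply]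
  simp only [Complex.add_re, Complex.mul_re, Complex.ofReal_re, Complex.ofReal_im, zero_mul,
    sub_zero, Complex.add_im, Complex.mul_im, zero_add, add_zero]
  rw [hre]
  linear_combination (z.c1 - z.c2 * (al - 1)) ^ 2 * him

lemma ea_mul_normSq (z : Cub ℤ) : ea z * Complex.normSq (eb z) = Cub.nm z := by
  rw [normSq_eb, ea_apply, inv_al, Cub.nm]
  simp only [Cub.cof]
  push_cast
  generalize (z.c0 : ℝ) = u
  generalize (z.c1 : ℝ) = v
  generalize (z.c2 : ℝ) = w
  have hc := al_cube
  generalize al = a at *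
  have h4 : a ^ 4 = 2 * a ^ 2 + 2 * a + 1 := by linear_combination (a + 1) * hc
  have h5 : a ^ 5 = 4 * a ^ 2 + 3 * a + 2 := by linear_combination (a^2 + a + 2) * hc
  have h6 : a ^ 6 = 7 * a ^ 2 + 6 * a + 4 := by linear_combination (a^3+a^2+2*a+4) * hc
  ring_nf
  simp only [h6, h5, h4, hc]
  ring

/-- `ρ = -α² + 4α - 1`, the inverse of the leading coefficient in Binet's formula. -/
def rh : Cub ℤ := ⟨-1, 4, -1⟩

lemma ea_rh : ea rh = -1 + 4 * al - al ^ 2 := by rw [ea_apply]; simp [rh]; ring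

/-- Binet's formula as an inequality. -/
lemma binet (z : Cub ℤ) : |ea rh * Cub.tau z - ea z| ≤ 2 * ‖eb z‖ := by
  apply abs_le_of_sq_le_sq _ (by positivity)
  rw [mul_pow, ← Complex.normSq_eq_norm_sq, normSq_eb, ea_rh, ea_apply, inv_al, Cub.tau_apply]
  push_cast
  generalize (z.c0 : ℝ) = u
  generalize (z.c1 : ℝ) = v
  generalize (z.c2 : ℝ) = w
  have hc := al_cube
  have hl := al_gt
  have hg := al_lt
  set p := u - w * (al ^ 2 - al - 1) with hp
  set q := v - w * (al - 1) with hq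
  have he : (-1 + 4 * al - al ^ 2) * (v + w) - (u + v * al + w * al ^ 2) =
      (-1 + 3 * al - al ^ 2) * q - p := by
    rw [hp, hq]
    linear_combination (-w) * hc
  rw [he]
  have b2 : al ^ 2 < 3.386 := by nlinarith
  have b2' : 3.3819 < al ^ 2 := by nlinarith
  set k := -1 + 3 * al - al ^ 2 with hk
  have hk1 : 1.13 < k := by rw [hk]; linarith
  have hk2 : k < 1.1381 := by rw [hk]; linarith
  set i := al ^ 2 - al - 1 with hi
  have hi1 : 0.5419 < i := by rw [hi]; linarith
  have hkk : k ^ 2 < 1.2953 := by nlinarith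
  -- the difference of the two sides is `3p² - 2μpq + νq²` with `μ² < 3ν`
  set mu := 2 * (al - 1) - k with hmu
  have hmu1 : 0.53 < mu := by rw [hmu]; linarith
  have hmu2 : mu < 0.56 := by rw [hmu]; linarith
  have : 0 ≤ 3 * (p - mu / 3 * q) ^ 2 + (4 * i - k ^ 2 - mu ^ 2 / 3) * q ^ 2 := by
    have : 0 ≤ 4 * i - k ^ 2 - mu ^ 2 / 3 := by nlinarith
    positivity
  rw [hmu] at this
  nlinarith [this]

/-! ### Approximate interpolation for entire functions -/

lemma iteratedDeriv_factor {g : ℂ → ℂ} (hg : Differentiable ℂ g) (a c : ℂ) (j : ℕ) :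
    iteratedDeriv (j + 1) (fun z => c + (z - a) * g z) =
      fun z => (z - a) * iteratedDeriv (j + 1) g z + (j + 1) * iteratedDeriv j g z := by
  have hd : ∀ k, Differentiable ℂ (iteratedDeriv k g) := fun k =>
    (hg.contDiff (n := ⊤)).differentiable_iteratedDeriv k (by exact_mod_cast WithTop.coe_lt_top _)
  induction j with
  | zero =>
    funext z
    rw [iteratedDeriv_one, iteratedDeriv_one, iteratedDeriv_zero]
    have h : HasDerivAt (fun z => c + (z - a) * g z) (1 * g z + (z - a) * deriv g z) z :=
      (((hasDerivAt_id z).sub_const a).mul (hg z).hasDerivAt).const_add c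
    rw [h.deriv]
    push_cast
    ring
  | succ j ih =>
    rw [iteratedDeriv_succ, ih]
    funext z
    have h : HasDerivAt (fun z => (z - a) * iteratedDeriv (j + 1) g z
        + (j + 1) * iteratedDeriv j g z)
        (1 * iteratedDeriv (j + 1) g z + (z - a) * deriv (iteratedDeriv (j + 1) g) z
          + (j + 1) * deriv (iteratedDeriv j g) z) z :=
      (((hasDerivAt_id z).sub_const a).mul (hd _ z).hasDerivAt).add
        ((hd j z).hasDerivAt.const_mul _)
    rw [h.deriv, ← iteratedDeriv_succ, ← iteratedDeriv_succ]
    push_cast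
    ring

/-- If an entire function has small derivatives of order `< m s` at the points `s < S`, and is
bounded on a large circle, then it is small on a disk.  The proof divides out one zero at a time:
the quotient `g` of `f - f s` by `z - s` again has small derivatives at the nodes. -/
lemma interp (S τ : ℕ) (R X : ℝ) (hX : X ≤ R) (hX0 : 0 ≤ X) (hRS : X + S ≤ R - S) (hS : (S : ℝ) < R) :
    ∀ (N : ℕ) (m : ℕ → ℕ) (f : ℂ → ℂ) (δ M : ℝ), Differentiable ℂ f → 0 ≤ δ → 0 ≤ M →
      (∀ s, m s ≤ τ) → ∑ s ∈ Finset.range S, m s = N →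
      (∀ s < S, ∀ j < m s, ‖iteratedDeriv j f s‖ ≤ j.factorial * δ) →
      (∀ z : ℂ, ‖z‖ = R → ‖f z‖ ≤ M) → ∀ z : ℂ, ‖z‖ ≤ X →
      ‖f z‖ ≤ ((X + S) / (R - S)) ^ N * M + ((X + S) * (τ + 1) + 2) ^ N * δ := by
  have hR0 : 0 < R - S := by linarith
  have hq1 : (X + S) / (R - S) ≤ 1 := by rw [div_le_one hR0]; exact hRS
  have hq0 : 0 ≤ (X + S) / (R - S) := by positivity
  have hRpos : 0 < R := lt_of_le_of_lt (Nat.cast_nonneg S) hS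
  have maxmod : ∀ (f : ℂ → ℂ) (M : ℝ), Differentiable ℂ f → (∀ z : ℂ, ‖z‖ = R → ‖f z‖ ≤ M) →
      ∀ z : ℂ, ‖z‖ ≤ R → ‖f z‖ ≤ M := by
    intro f M hf hM z hz
    refine Complex.norm_le_of_forall_mem_frontier_norm_le (U := Metric.ball (0 : ℂ) R)
      Metric.isBounded_ball hf.diffContOnCl ?_ ?_
    · intro w hw
      rw [frontier_ball _ hRpos.ne'] at hw
      exact hM w (by simpa using hw)
    · rw [closure_ball _ hRpos.ne']
      simpa using hz
  intro N
  induction N with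
  | zero =>
    intro m f δ M hf hδ hM _ _ _ hfM z hz
    have := maxmod f M hf hfM z (hz.trans hX)
    simp only [pow_zero, one_mul]
    linarith
  | succ N ih =>
    intro m f δ M hf hδ hM hm hsum hdat hfM z hz
    obtain ⟨a, haS, ha⟩ : ∃ a ∈ Finset.range S, m a ≠ 0 := by
      by_contra h
      push Not at h
      rw [Finset.sum_eq_zero h] at hsum
      omega
    have haS' := Finset.mem_range.1 haS
    set g := dslope f (a : ℂ) with hg
    have hgd : Differentiable ℂ g := by
      rw [← differentiableOn_univ]
      exact (Complex.differentiableOn_dslope Filter.univ_mem).2 hf.differentiableOn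
    have hfg : f = fun z => f a + (z - a) * g z := by
      funext w
      have := sub_smul_dslope f (a : ℂ) w
      rw [smul_eq_mul] at this
      rw [hg, this]; ring
    have hfa : ‖f a‖ ≤ δ := by
      have := hdat a haS' 0 (Nat.pos_of_ne_zero ha)
      simpa using this
    have hder : ∀ j w, iteratedDeriv (j + 1) f w =
        (w - a) * iteratedDeriv (j + 1) g w + (j + 1) * iteratedDeriv j g w := by
      intro j w
      conv_lhs => rw [hfg]
      rw [iteratedDeriv_factor hgd]
    -- data of the quotient
    have hgdat : ∀ s < S, ∀ j < (Function.update m a (m a - 1)) s,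
        ‖iteratedDeriv j g s‖ ≤ j.factorial * ((τ + 1) * δ) := by
      intro s hs j hj
      by_cases hsa : s = a
      · subst hsa
        simp only [Function.update_self] at hj
        have h1 := hdat s hs (j + 1) (by omega)
        rw [hder j s, sub_self, zero_mul, zero_add, norm_mul, Nat.factorial_succ] at h1
        have h2 : ‖((j : ℂ) + 1)‖ = j + 1 := by
          have : ((j : ℂ) + 1) = ((j + 1 : ℕ) : ℂ) := by push_cast; ring
          rw [this, Complex.norm_natCast]; push_cast; ring
        rw [h2] at h1
        push_cast at h1
        have h3 : ‖iteratedDeriv j g s‖ ≤ j.factorial * δ := by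
          have : (0 : ℝ) < j + 1 := by positivity
          nlinarith
        refine h3.trans ?_
        have : δ ≤ (τ + 1) * δ := by nlinarith [(Nat.cast_nonneg τ : (0 : ℝ) ≤ τ)]
        gcongr
      · rw [Function.update_of_ne hsa] at hj
        have hdist : 1 ≤ ‖((s : ℂ) - a)‖ := by
          have : ((s : ℂ) - a) = (((s : ℤ) - a : ℤ) : ℂ) := by push_cast; ring
          rw [this, Complex.norm_intCast]
          have : (1 : ℤ) ≤ |(s : ℤ) - a| := Int.one_le_abs (by omega)
          exact_mod_cast this
        have main : ∀ j < m s, ‖iteratedDeriv j g s‖ ≤ j.factorial * ((j + 2) * δ) := by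
          intro j
          induction j with
          | zero =>
            intro hj
            have h1 := hdat s hs 0 hj
            rw [iteratedDeriv_zero] at h1 ⊢
            have h2 : (s - a) * g s = f s - f a := by
              have := congrFun hfg s
              linear_combination (-1) * this
            have h3 : ‖g s‖ ≤ ‖((s : ℂ) - a)‖ * ‖g s‖ := by
              nlinarith [norm_nonneg (g s)]
            rw [← norm_mul, h2] at h3
            have h4 := norm_sub_le (f s) (f a)
            simp at h1 ⊢
            linarith
          | succ j ihj =>
            intro hj
            have h1 := hdat s hs (j + 1) hj
            have h5 := ihj (by omega)
            have h2 : (s - a) * iteratedDeriv (j + 1) g s =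
                iteratedDeriv (j + 1) f s - (j + 1) * iteratedDeriv j g s := by
              rw [hder j s]; ring
            have h3 : ‖iteratedDeriv (j + 1) g s‖ ≤
                ‖((s : ℂ) - a)‖ * ‖iteratedDeriv (j + 1) g s‖ := by
              nlinarith [norm_nonneg (iteratedDeriv (j + 1) g s)]
            rw [← norm_mul, h2] at h3
            have h4 := norm_sub_le (iteratedDeriv (j + 1) f s) ((j + 1) * iteratedDeriv j g s)
            have h6 : ‖((j : ℂ) + 1)‖ = j + 1 := by
              have : ((j : ℂ) + 1) = ((j + 1 : ℕ) : ℂ) := by push_cast; ring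
              rw [this, Complex.norm_natCast]; push_cast; ring
            rw [norm_mul, h6] at h4
            rw [Nat.factorial_succ] at h1 ⊢
            push_cast at h1 ⊢
            have h7 : ((j : ℝ) + 1) * ‖iteratedDeriv j g s‖ ≤
                (j + 1) * (j.factorial * ((j + 2) * δ)) := by gcongr
            nlinarith
        refine (main j hj).trans ?_
        have : (j : ℝ) + 2 ≤ τ + 1 := by
          have := hm s
          have : j + 2 ≤ τ + 1 := by omega
          exact_mod_cast this
        gcongr
    have hgsum : ∑ s ∈ Finset.range S, (Function.update m a (m a - 1)) s = N := by
      have e1 := Finset.add_sum_erase (Finset.range S) m haS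
      have e2 := Finset.add_sum_erase (Finset.range S) (Function.update m a (m a - 1)) haS
      have e3 : ∑ x ∈ (Finset.range S).erase a, Function.update m a (m a - 1) x =
          ∑ x ∈ (Finset.range S).erase a, m x := Finset.sum_congr rfl fun x hx => by
        rw [Function.update_of_ne (Finset.ne_of_mem_erase hx)]
      rw [Function.update_self, e3] at e2
      omega
    have hgm : ∀ s, (Function.update m a (m a - 1)) s ≤ τ := by
      intro s
      by_cases h : s = a
      · subst h; rw [Function.update_self]; have := hm s; omega
      · rw [Function.update_of_ne h]; exact hm s
    have haR : (a : ℝ) ≤ S := by exact_mod_cast haS'.le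
    have hgM : ∀ z : ℂ, ‖z‖ = R → ‖g z‖ ≤ (M + δ) / (R - S) := by
      intro w hw
      have h1 := hfM w hw
      have h2 : (w - a) * g w = f w - f a := by
        have := congrFun hfg w
        linear_combination (-1) * this
      have h3 : R - S ≤ ‖w - a‖ := by
        have := norm_sub_norm_le w (a : ℂ)
        rw [hw, Complex.norm_natCast] at this
        linarith
      rw [le_div_iff₀ hR0]
      have h4 := norm_sub_le (f w) (f a)
      rw [← h2, norm_mul] at h4
      nlinarith [norm_nonneg (g w)]
    have key := ih _ g ((τ + 1) * δ) ((M + δ) / (R - S)) hgd (by positivity) (by positivity) hgm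
      hgsum hgdat hgM z hz
    have hz2 : ‖z - a‖ ≤ X + S := by
      have := norm_sub_le z (a : ℂ)
      rw [Complex.norm_natCast] at this
      linarith
    have h1 : ‖f z‖ ≤ δ + (X + S) * ‖g z‖ := by
      have h2 := congrFun hfg z
      rw [h2]
      refine (norm_add_le _ _).trans ?_
      rw [norm_mul]
      gcongr
    have hXS : 0 ≤ X + S := by positivity
    refine h1.trans ?_
    set q := (X + S) / (R - S) with hq
    set P := (X + S) * (τ + 1) + 2 with hP
    have hP1 : 1 ≤ P ^ N := one_le_pow₀ (by rw [hP]; nlinarith [mul_nonneg hXS (by positivity : (0:ℝ) ≤ τ + 1)])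
    have hqN : q ^ (N + 1) ≤ 1 := pow_le_one₀ hq0 hq1
    calc δ + (X + S) * ‖g z‖
        ≤ δ + (X + S) * (q ^ N * ((M + δ) / (R - S)) + P ^ N * ((τ + 1) * δ)) := by gcongr
      _ = q ^ (N + 1) * M + (1 + q ^ (N + 1) + P ^ N * ((X + S) * (τ + 1))) * δ := by
          have h5 : (X + S) * (q ^ N * ((M + δ) / (R - S))) = q ^ (N + 1) * (M + δ) := by
            rw [pow_succ, hq]; field_simp
          rw [mul_add, h5]; ring
      _ ≤ q ^ (N + 1) * M + P ^ (N + 1) * δ := by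
          gcongr
          rw [pow_succ P N]
          nth_rewrite 3 [hP]
          nlinarith

/-! ### Siegel's lemma in the form used below -/

section
attribute [local instance] Matrix.seminormedAddCommGroup

lemma siegel {α β : Type} [Fintype α] [Fintype β] (A : α → β → ℤ) (B : ℝ) (hB : 1 ≤ B)
    (hA : ∀ i j, |(A i j : ℝ)| ≤ B) (h : 2 * Fintype.card α ≤ Fintype.card β)
    (hpos : 0 < Fintype.card β) :
    ∃ p : β → ℤ, p ≠ 0 ∧ (∀ i, ∑ j, A i j * p j = 0) ∧
      ∀ j, |(p j : ℝ)| ≤ Fintype.card β * B := by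
  classical
  have hcard : (1 : ℝ) ≤ Fintype.card β := by exact_mod_cast hpos
  have hcB : 1 ≤ Fintype.card β * B := by nlinarith
  rcases Nat.eq_zero_or_pos (Fintype.card α) with h0 | h0
  · have : IsEmpty α := Fintype.card_eq_zero_iff.1 h0
    have : Nonempty β := Fintype.card_pos_iff.1 hpos
    exact ⟨fun _ => 1, fun h => one_ne_zero (congrFun h (Classical.arbitrary β)),
      fun i => isEmptyElim i, fun j => by simpa using hcB⟩
  · obtain ⟨t, ht0, htA, htn⟩ :=
      Int.Matrix.exists_ne_zero_int_vec_norm_le (Matrix.of A) (by omega) h0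
    refine ⟨t, ht0, fun i => congrFun htA i, fun j => ?_⟩
    have hnA : ‖Matrix.of A‖ ≤ B := by
      rw [Matrix.norm_le_iff (by linarith)]
      intro i j
      rw [Int.norm_eq_abs]
      exact hA i j
    have h1 : |(t j : ℝ)| ≤ ‖t‖ := by
      rw [← Int.norm_eq_abs]
      exact norm_le_pi_norm t j
    have hα : (2 : ℝ) * Fintype.card α ≤ Fintype.card β := by exact_mod_cast h
    have hα0 : (0 : ℝ) < Fintype.card α := by exact_mod_cast h0
    refine h1.trans (htn.trans ?_)
    calc ((Fintype.card β : ℝ) * max 1 ‖Matrix.of A‖) ^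
          ((Fintype.card α : ℝ) / (Fintype.card β - Fintype.card α))
        ≤ ((Fintype.card β : ℝ) * B) ^
          ((Fintype.card α : ℝ) / (Fintype.card β - Fintype.card α)) := by
          gcongr
          · exact div_nonneg hα0.le (by linarith)
          · exact max_le hB hnA
      _ ≤ ((Fintype.card β : ℝ) * B) ^ (1 : ℝ) := by
          apply Real.rpow_le_rpow_of_exponent_le hcB
          rw [div_le_one (by linarith)]
          linarith
      _ = _ := Real.rpow_one _
end

/-! ### The auxiliary function over the real place -/

/-- The data of a transcendence construction at the real place of `ℤ[α]`.  The functions are the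
exponentials `exp (ω λ z)`; `mon λ s` is an element of `ℤ[α]` with value `D' ^ s * exp (ω λ s)`,
and up to an error `ε` the number `b0 * ω λ` is the linear form `∑ γ λ i * l i` with integer
coefficients. Exponents of `2` bound all sizes. -/
structure RBData (L ι : Type) [Fintype L] [Fintype ι] where
  γ : L → ι → ℤ
  mon : L → ℕ → Cub ℤ
  ω : L → ℝ
  l : ι → ℝ
  b0 : ℝ
  D' : ℝ
  ε : ℝ
  g : ℕ
  η : ℕ
  kk : ℕ
  u : ℕ
  hω : Function.Injective ω
  hb0 : 1 ≤ b0
  hD'0 : 0 < D'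
  hD' : D' ≤ 2 ^ η
  hmon : ∀ a s, ea (mon a s) = D' ^ s * Real.exp (ω a * s)
  herr : ∀ a, |b0 * ω a - ∑ i, γ a i * l i| ≤ ε
  hγ : ∀ a i, |(γ a i : ℝ)| ≤ 2 ^ g
  hsz : ∀ a s, Cub.sz (mon a s) ≤ 2 ^ (η * (s + 1))
  hexp : ∀ a, Real.exp |ω a| ≤ 2 ^ η
  hK1 : ∀ a, |b0 * ω a| ≤ 2 ^ kk
  hK2 : ∀ a, |∑ i, γ a i * l i| ≤ 2 ^ kk
  hu : Fintype.card L ≤ 2 ^ u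

namespace RBData
variable {L ι : Type} [Fintype L] [Fintype ι] (d : RBData L ι)

lemma ε_nonneg [Nonempty L] : 0 ≤ d.ε :=
  (abs_nonneg _).trans (d.herr (Classical.arbitrary L))

/-- The monomial `∏ γ_i ^ t_i`. -/
def gm (a : L) (t : ι → ℕ) : ℤ := ∏ i, d.γ a i ^ t i

lemma abs_gm_le (a : L) (t : ι → ℕ) : |(d.gm a t : ℝ)| ≤ 2 ^ (d.g * ∑ i, t i) := by
  unfold gm
  push_cast
  rw [Finset.abs_prod, Finset.mul_sum, ← Finset.prod_pow_eq_pow_sum]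
  apply Finset.prod_le_prod
  · intros; positivity
  · intro i _
    rw [abs_pow, pow_mul]
    exact pow_le_pow_left₀ (abs_nonneg _) (d.hγ a i) _

/-- The values (cleared of denominators) whose vanishing is propagated. -/
def A (p : L → ℤ) (t : ι → ℕ) (s : ℕ) : Cub ℤ := ∑ a, Cub.C (p a * d.gm a t) * d.mon a s

lemma ea_A (p : L → ℤ) (t : ι → ℕ) (s : ℕ) :
    ea (d.A p t s) = d.D' ^ s * ∑ a, p a * d.gm a t * Real.exp (d.ω a * s) := by
  unfold A
  rw [map_sum, Finset.mul_sum]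
  refine Finset.sum_congr rfl fun a _ => ?_
  rw [map_mul, ea_C, d.hmon]
  push_cast
  ring

lemma A_eq_zero_iff (p : L → ℤ) (t : ι → ℕ) (s : ℕ) :
    d.A p t s = 0 ↔ ∑ a, (p a : ℝ) * d.gm a t * Real.exp (d.ω a * s) = 0 := by
  have h := d.ea_A p t s
  constructor
  · intro h0
    rw [h0, map_zero] at h
    exact (mul_eq_zero.1 h.symm).resolve_left (pow_ne_zero _ d.hD'0.ne')
  · intro h0
    rw [h0, mul_zero] at h
    exact ea_injective (by rw [h, map_zero])

/-- Exact vanishing for all monomials of degree `< |t| + j` kills the powers of the linear form. -/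
lemma sum_pow_eq_zero (p : L → ℤ) (T' S' : ℕ)
    (hV : ∀ t : ι → ℕ, ∑ i, t i < T' → ∀ s < S', d.A p t s = 0) (s : ℕ) (hs : s < S') :
    ∀ (j : ℕ) (t : ι → ℕ), ∑ i, t i + j < T' →
      ∑ a, (p a : ℝ) * d.gm a t * (∑ i, d.γ a i * d.l i) ^ j * Real.exp (d.ω a * s) = 0 := by
  classical
  intro j
  induction j with
  | zero =>
    intro t ht
    simpa using (d.A_eq_zero_iff p t s).1 (hV t ht s hs)
  | succ j ih =>
    intro t ht
    have key : ∀ i0 : ι, ∑ a, (p a : ℝ) * d.gm a (Function.update t i0 (t i0 + 1)) *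
        (∑ i, d.γ a i * d.l i) ^ j * Real.exp (d.ω a * s) = 0 := by
      intro i0
      apply ih
      rw [Finset.sum_update_of_mem (Finset.mem_univ _)]
      have := Finset.add_sum_erase Finset.univ t (Finset.mem_univ i0)
      rw [Finset.sdiff_singleton_eq_erase]
      omega
    have hgm : ∀ a i0, (d.gm a (Function.update t i0 (t i0 + 1)) : ℝ) =
        d.gm a t * d.γ a i0 := by
      intro a i0
      unfold gm
      rw [← Finset.mul_prod_erase Finset.univ _ (Finset.mem_univ i0),
        ← Finset.mul_prod_erase Finset.univ (fun i => d.γ a i ^ t i) (Finset.mem_univ i0)]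
      rw [Finset.prod_congr rfl (g := fun i => d.γ a i ^ t i)]
      · rw [Function.update_self]
        push_cast
        ring
      · intro x hx
        rw [Function.update_of_ne (Finset.ne_of_mem_erase hx)]
    calc ∑ a, (p a : ℝ) * d.gm a t * (∑ i, d.γ a i * d.l i) ^ (j + 1) * Real.exp (d.ω a * s)
        = ∑ i0, d.l i0 * ∑ a, (p a : ℝ) * d.gm a (Function.update t i0 (t i0 + 1)) *
            (∑ i, d.γ a i * d.l i) ^ j * Real.exp (d.ω a * s) := by
          simp_rw [Finset.mul_sum]
          rw [Finset.sum_comm]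
          refine Finset.sum_congr rfl fun a _ => ?_
          rw [pow_succ, ← mul_assoc, Finset.mul_sum, Finset.sum_mul]
          refine Finset.sum_congr rfl fun i _ => ?_
          rw [hgm]
          ring
      _ = 0 := Finset.sum_eq_zero fun i _ => by rw [key, mul_zero]

/-- The auxiliary entire function. -/
noncomputable def F (p : L → ℤ) (t : ι → ℕ) (z : ℂ) : ℂ :=
  ∑ a, ((p a : ℝ) * d.gm a t : ℝ) * Complex.exp ((d.ω a : ℝ) * z)

lemma F_differentiable (p : L → ℤ) (t : ι → ℕ) : Differentiable ℂ (d.F p t) := by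
  unfold F
  fun_prop

lemma iteratedDeriv_F (p : L → ℤ) (t : ι → ℕ) (j : ℕ) : iteratedDeriv j (d.F p t) =
    fun z => ∑ a, ((p a : ℝ) * d.gm a t * d.ω a ^ j : ℝ) * Complex.exp ((d.ω a : ℝ) * z) := by
  induction j with
  | zero => funext z; simp [F]
  | succ j ih =>
    rw [iteratedDeriv_succ, ih]
    funext z
    have : HasDerivAt (fun z : ℂ => ∑ a, ((p a : ℝ) * d.gm a t * d.ω a ^ j : ℝ) *
        Complex.exp ((d.ω a : ℝ) * z))
        (∑ a, ((p a : ℝ) * d.gm a t * d.ω a ^ j : ℝ) *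
          (Complex.exp ((d.ω a : ℝ) * z) * ((d.ω a : ℝ) * 1))) z := by
      apply HasDerivAt.fun_sum
      intro a _
      exact (((hasDerivAt_id z).const_mul _).cexp).const_mul _
    rw [this.deriv]
    refine Finset.sum_congr rfl fun a _ => ?_
    push_cast
    ring

lemma iteratedDeriv_F_nat (p : L → ℤ) (t : ι → ℕ) (j s : ℕ) :
    iteratedDeriv j (d.F p t) (s : ℂ) =
      ((∑ a, (p a : ℝ) * d.gm a t * d.ω a ^ j * Real.exp (d.ω a * s) : ℝ) : ℂ) := by
  rw [iteratedDeriv_F]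
  push_cast
  rfl

lemma exp_le (a : L) (n : ℕ) (x : ℝ) (hx : |x| ≤ n) : Real.exp (d.ω a * x) ≤ 2 ^ (d.η * n) := by
  calc Real.exp (d.ω a * x) ≤ Real.exp (n * |d.ω a|) := by
        apply Real.exp_le_exp.2
        calc d.ω a * x ≤ |d.ω a * x| := le_abs_self _
          _ = |d.ω a| * |x| := abs_mul _ _
          _ ≤ |d.ω a| * n := by gcongr
          _ = _ := by ring
    _ = Real.exp |d.ω a| ^ n := by rw [← Real.exp_nat_mul]
    _ ≤ (2 ^ d.η) ^ n := by gcongr; exact d.hexp a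
    _ = _ := by rw [← pow_mul]

lemma norm_F_le (p : L → ℤ) (y : ℕ) (hp : ∀ a, |(p a : ℝ)| ≤ 2 ^ y) (T : ℕ) (t : ι → ℕ)
    (ht : ∑ i, t i ≤ T) (z : ℂ) (n : ℕ) (hz : ‖z‖ ≤ n) :
    ‖d.F p t z‖ ≤ 2 ^ (d.u + y + T * d.g + d.η * n) := by
  unfold F
  have hterm : ∀ a, ‖(((p a : ℝ) * d.gm a t : ℝ) : ℂ) * Complex.exp ((d.ω a : ℝ) * z)‖ ≤
      2 ^ (y + T * d.g + d.η * n) := by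
    intro a
    rw [norm_mul, Complex.norm_real, Complex.norm_exp, Real.norm_eq_abs, abs_mul, pow_add, pow_add]
    have h1 := d.abs_gm_le a t
    have h2 : (2 : ℝ) ^ (d.g * ∑ i, t i) ≤ 2 ^ (T * d.g) := by
      apply pow_le_pow_right₀ one_le_two
      rw [mul_comm]
      exact Nat.mul_le_mul_right _ ht
    have h3 : Real.exp ((d.ω a : ℂ) * z).re ≤ 2 ^ (d.η * n) := by
      rw [Complex.re_ofReal_mul]
      exact d.exp_le a n z.re ((Complex.abs_re_le_norm z).trans hz)
    gcongr
    · exact hp a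
    · exact h1.trans h2
  calc _ ≤ ∑ a : L, (2 : ℝ) ^ (y + T * d.g + d.η * n) :=
        (norm_sum_le _ _).trans (Finset.sum_le_sum fun a _ => hterm a)
    _ = Fintype.card L * 2 ^ (y + T * d.g + d.η * n) := by
        rw [Finset.sum_const, nsmul_eq_mul, Finset.card_univ]
    _ ≤ 2 ^ d.u * 2 ^ (y + T * d.g + d.η * n) := by
        gcongr
        exact_mod_cast d.hu
    _ = _ := by rw [← pow_add]; ring_nf

lemma sz_A_le (p : L → ℤ) (y : ℕ) (hp : ∀ a, |(p a : ℝ)| ≤ 2 ^ y) (T : ℕ) (t : ι → ℕ)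
    (ht : ∑ i, t i ≤ T) (s : ℕ) :
    Cub.sz (d.A p t s) ≤ 2 ^ (d.u + y + T * d.g + d.η * (s + 1)) := by
  unfold A
  have hterm : ∀ a, Cub.sz (Cub.C (p a * d.gm a t) * d.mon a s) ≤
      2 ^ (y + T * d.g + d.η * (s + 1)) := by
    intro a
    rw [Cub.sz_C_mul]
    push_cast
    rw [abs_mul, pow_add, pow_add]
    have h1 := d.abs_gm_le a t
    have h2 : (2 : ℝ) ^ (d.g * ∑ i, t i) ≤ 2 ^ (T * d.g) := by
      apply pow_le_pow_right₀ one_le_two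
      rw [mul_comm]
      exact Nat.mul_le_mul_right _ ht
    have h4 := Cub.sz_nonneg (d.mon a s)
    gcongr
    · exact hp a
    · exact h1.trans h2
    · exact d.hsz a s
  calc _ ≤ ∑ a : L, (2 : ℝ) ^ (y + T * d.g + d.η * (s + 1)) :=
        (Cub.sz_sum _ _).trans (Finset.sum_le_sum fun a _ => hterm a)
    _ = Fintype.card L * 2 ^ (y + T * d.g + d.η * (s + 1)) := by
        rw [Finset.sum_const, nsmul_eq_mul, Finset.card_univ]
    _ ≤ 2 ^ d.u * 2 ^ (y + T * d.g + d.η * (s + 1)) := by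
        gcongr
        exact_mod_cast d.hu
    _ = _ := by rw [← pow_add]; ring_nf

end RBData

namespace RBData
variable {L ι : Type} [Fintype L] [Fintype ι] (d : RBData L ι)

/-- The derivatives at the nodes are tiny, because they would vanish exactly if the linear form
were zero. -/
lemma data_le [Nonempty L] (p : L → ℤ) (y : ℕ) (hp : ∀ a, |(p a : ℝ)| ≤ 2 ^ y) (T T' S' : ℕ)
    (hT' : T' ≤ T) (hV : ∀ t : ι → ℕ, ∑ i, t i < T' → ∀ s < S', d.A p t s = 0)
    (t : ι → ℕ) (j s : ℕ) (hs : s < S') (ht : ∑ i, t i + j < T') :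
    ‖iteratedDeriv j (d.F p t) (s : ℂ)‖ ≤
      2 ^ (d.u + y + T * d.g + d.η * S') * (T * 2 ^ (T * d.kk) * d.ε) := by
  rw [d.iteratedDeriv_F_nat, Complex.norm_real, Real.norm_eq_abs]
  have hε := d.ε_nonneg
  have h0 := d.sum_pow_eq_zero p T' S' hV s hs j t ht
  have hb : 1 ≤ d.b0 ^ j := one_le_pow₀ d.hb0
  set Z := ∑ a, (p a : ℝ) * d.gm a t * d.ω a ^ j * Real.exp (d.ω a * s) with hZ
  have h1 : d.b0 ^ j * Z = ∑ a, (p a : ℝ) * d.gm a t *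
      ((d.b0 * d.ω a) ^ j - (∑ i, d.γ a i * d.l i) ^ j) * Real.exp (d.ω a * s) := by
    have : ∀ a, (p a : ℝ) * d.gm a t *
      ((d.b0 * d.ω a) ^ j - (∑ i, d.γ a i * d.l i) ^ j) * Real.exp (d.ω a * s) =
      d.b0 ^ j * ((p a : ℝ) * d.gm a t * d.ω a ^ j * Real.exp (d.ω a * s)) -
      (p a : ℝ) * d.gm a t * (∑ i, d.γ a i * d.l i) ^ j * Real.exp (d.ω a * s) := by
      intro a; rw [mul_pow]; ring
    rw [Finset.sum_congr rfl fun a _ => this a, Finset.sum_sub_distrib, h0, sub_zero,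
      ← Finset.mul_sum]
  have h2 : |Z| ≤ |d.b0 ^ j * Z| := by
    rw [abs_mul, abs_of_nonneg (by linarith : 0 ≤ d.b0 ^ j)]
    nlinarith [abs_nonneg Z]
  refine h2.trans ?_
  rw [h1]
  have hpow : ∀ a, |(d.b0 * d.ω a) ^ j - (∑ i, d.γ a i * d.l i) ^ j| ≤
      T * 2 ^ (T * d.kk) * d.ε := by
    intro a
    have h3 := abs_pow_sub_pow_le (d.b0 * d.ω a) (∑ i, d.γ a i * d.l i) j
    have h4 : max |d.b0 * d.ω a| |∑ i, d.γ a i * d.l i| ≤ 2 ^ d.kk := max_le (d.hK1 a) (d.hK2 a)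
    have h5 : (max |d.b0 * d.ω a| |∑ i, d.γ a i * d.l i|) ^ (j - 1) ≤ 2 ^ (T * d.kk) := by
      calc _ ≤ ((2 : ℝ) ^ d.kk) ^ (j - 1) := by gcongr
        _ = 2 ^ ((j - 1) * d.kk) := by rw [← pow_mul, mul_comm]
        _ ≤ _ := pow_le_pow_right₀ one_le_two (Nat.mul_le_mul_right _ (by omega))
    have h6 : (j : ℝ) ≤ T := by
      have : j ≤ T := by omega
      exact_mod_cast this
    refine h3.trans ?_
    calc _ ≤ d.ε * T * 2 ^ (T * d.kk) := by
          have := d.herr a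
          gcongr
      _ = _ := by ring
  have hterm : ∀ a, |(p a : ℝ) * d.gm a t *
      ((d.b0 * d.ω a) ^ j - (∑ i, d.γ a i * d.l i) ^ j) * Real.exp (d.ω a * s)| ≤
      2 ^ y * 2 ^ (T * d.g) * (T * 2 ^ (T * d.kk) * d.ε) * 2 ^ (d.η * S') := by
    intro a
    rw [abs_mul, abs_mul, abs_mul, abs_of_pos (Real.exp_pos _)]
    have h1 := d.abs_gm_le a t
    have h2 : (2 : ℝ) ^ (d.g * ∑ i, t i) ≤ 2 ^ (T * d.g) := by
      apply pow_le_pow_right₀ one_le_two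
      rw [mul_comm]
      exact Nat.mul_le_mul_right _ (by omega)
    have h3 := d.exp_le a S' s (by
      rw [abs_of_nonneg (by positivity)]; exact_mod_cast hs.le)
    gcongr
    · exact hp a
    · exact h1.trans h2
    · exact hpow a
  calc _ ≤ ∑ a : L, 2 ^ y * 2 ^ (T * d.g) * (T * 2 ^ (T * d.kk) * d.ε) * 2 ^ (d.η * S') :=
        (Finset.abs_sum_le_sum_abs _ _).trans (Finset.sum_le_sum fun a _ => hterm a)
    _ = Fintype.card L * (2 ^ y * 2 ^ (T * d.g) * (T * 2 ^ (T * d.kk) * d.ε) * 2 ^ (d.η * S')) := by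
        rw [Finset.sum_const, nsmul_eq_mul, Finset.card_univ]
    _ ≤ 2 ^ d.u * (2 ^ y * 2 ^ (T * d.g) * (T * 2 ^ (T * d.kk) * d.ε) * 2 ^ (d.η * S')) := by
        gcongr
        exact_mod_cast d.hu
    _ = _ := by rw [pow_add, pow_add, pow_add]; ring

/-- Extrapolation: `τ` derivatives are traded for twice as many points. -/
lemma step [Nonempty L] (p : L → ℤ) (y T τ S0 Sm pp Q : ℕ) (hp : ∀ a, |(p a : ℝ)| ≤ 2 ^ y)
    (hτ : 25 * d.η ≤ τ) (hS0 : 3 * (d.u + y + T * d.g) + 2 ≤ S0 * τ)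
    (hpp : 3 * Sm * (τ + 1) + 2 ≤ 2 ^ pp)
    (hQ : (pp + 2) * (Sm * τ) + T * d.kk + T + 2 ≤ Q) (hε : d.ε * 2 ^ Q ≤ 1)
    (T' S' : ℕ) (hT' : T' + τ ≤ T) (hS1 : S0 ≤ S') (hS2 : S' ≤ Sm) (hS'1 : 1 ≤ S')
    (hV : ∀ t : ι → ℕ, ∑ i, t i < T' + τ → ∀ s < S', d.A p t s = 0) :
    ∀ t : ι → ℕ, ∑ i, t i < T' → ∀ s < 2 * S', d.A p t s = 0 := by
  intro t ht s hs
  by_contra hne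
  have hε0 := d.ε_nonneg
  set W := d.u + y + T * d.g with hW
  set δ : ℝ := 2 ^ (W + d.η * S') * (T * 2 ^ (T * d.kk) * d.ε) with hδ
  have hδ0 : 0 ≤ δ := by positivity
  have hS'R : (1 : ℝ) ≤ S' := by exact_mod_cast hS'1
  have hF : ‖d.F p t (s : ℂ)‖ ≤ ((2 * S' + S') / (17 * S' - S') : ℝ) ^ (S' * τ) *
      2 ^ (W + d.η * (17 * S')) + ((2 * S' + S' : ℝ) * (τ + 1) + 2) ^ (S' * τ) * δ := by
    refine interp S' τ (17 * S') (2 * S') (by linarith) (by linarith) (by linarith)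
      (by linarith) (S' * τ) (fun _ => τ) (d.F p t) δ (2 ^ (W + d.η * (17 * S')))
      (d.F_differentiable p t) hδ0 (by positivity) (fun _ => le_rfl) (by simp) ?_ ?_ _ ?_
    · intro s' hs' j hj
      refine (d.data_le p y hp T (T' + τ) S' hT' hV t j s' hs' (by omega)).trans ?_
      have : (1 : ℝ) ≤ j.factorial := by exact_mod_cast Nat.one_le_iff_ne_zero.2 j.factorial_ne_zero
      rw [← hW, ← hδ]
      nlinarith
    · intro z hz
      exact d.norm_F_le p y hp T t (by omega) z (17 * S') (by rw [hz]; push_cast; exact le_rfl)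
    · rw [Complex.norm_natCast]
      exact_mod_cast hs.le
  have hq : ((2 * S' + S') / (17 * S' - S') : ℝ) ≤ 1 / 4 := by
    rw [div_le_div_iff₀ (by linarith) (by norm_num)]
    linarith
  have hq0 : (0 : ℝ) ≤ ((2 * S' + S') / (17 * S' - S') : ℝ) := by
    apply div_nonneg <;> linarith
  have hP : ((2 * S' + S' : ℝ) * (τ + 1) + 2) ≤ 2 ^ pp := by
    have : 3 * S' * (τ + 1) + 2 ≤ 2 ^ pp := by
      refine le_trans ?_ hpp
      gcongr
    have h2 : ((3 * S' * (τ + 1) + 2 : ℕ) : ℝ) ≤ (2 ^ pp : ℕ) := by exact_mod_cast this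
    push_cast at h2
    linarith
  have hli := liouville hne
  have hsz := d.sz_A_le p y hp T t (by omega) s
  have hea : |ea (d.A p t s)| ≤ 2 ^ (d.η * (2 * S')) * ‖d.F p t (s : ℂ)‖ := by
    rw [d.ea_A, abs_mul, abs_of_pos (pow_pos d.hD'0 s)]
    have h1 : ‖d.F p t (s : ℂ)‖ = |∑ a, (p a : ℝ) * d.gm a t * Real.exp (d.ω a * s)| := by
      have := d.iteratedDeriv_F_nat p t 0 s
      rw [iteratedDeriv_zero] at this
      rw [this, Complex.norm_real, Real.norm_eq_abs]
      simp
    rw [h1]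
    gcongr
    calc d.D' ^ s ≤ (2 ^ d.η) ^ s := pow_le_pow_left₀ d.hD'0.le d.hD' s
      _ = 2 ^ (d.η * s) := by rw [← pow_mul]
      _ ≤ _ := pow_le_pow_right₀ one_le_two (by gcongr)
  have hsz2 : Cub.sz (d.A p t s) ^ 2 ≤ 2 ^ (2 * (W + d.η * (2 * S'))) := by
    rw [mul_comm 2, pow_mul]
    apply pow_le_pow_left₀ (Cub.sz_nonneg _)
    refine hsz.trans (pow_le_pow_right₀ one_le_two ?_)
    rw [← hW]
    gcongr
    omega
  -- the main term
  have m1 : ((2 * S' + S') / (17 * S' - S') : ℝ) ^ (S' * τ) * 2 ^ (2 * (S' * τ)) ≤ 1 := by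
    rw [pow_mul (2 : ℝ) 2, ← mul_pow]
    apply pow_le_one₀ (by positivity)
    linarith
  have hητ : 25 * (d.η * S') ≤ S' * τ := by
    calc 25 * (d.η * S') = S' * (25 * d.η) := by ring
      _ ≤ _ := by gcongr
  have hS0S : S0 * τ ≤ S' * τ := by gcongr
  have hSmS : S' * τ ≤ Sm * τ := by gcongr
  set N := S' * τ with hN
  set E := d.η * S' with hE
  have eE : d.η * (2 * S') = 2 * E := by rw [hE]; ring
  have eE2 : d.η * (17 * S') = 17 * E := by rw [hE]; ring
  rw [eE] at hea hsz2
  rw [eE2] at hF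
  have A1 : (2 : ℝ) ^ (2 * E) * 2 ^ (2 * (W + 2 * E)) *
      (((2 * S' + S') / (17 * S' - S') : ℝ) ^ N * 2 ^ (W + 17 * E)) ≤ 1 / 4 := by
    have h1 : (2 : ℝ) ^ (2 * E) * 2 ^ (2 * (W + 2 * E)) * 2 ^ (W + 17 * E) * 4 ≤ 2 ^ (2 * N) := by
      have : (4 : ℝ) = 2 ^ 2 := by norm_num
      rw [this, ← pow_add, ← pow_add, ← pow_add]
      apply pow_le_pow_right₀ one_le_two
      omega
    have h3 := mul_le_mul_of_nonneg_left h1 (pow_nonneg hq0 N)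
    linarith
  have A2 : (2 : ℝ) ^ (2 * E) * 2 ^ (2 * (W + 2 * E)) *
      (((2 * S' + S' : ℝ) * (τ + 1) + 2) ^ N * δ) ≤ 1 / 4 := by
    have h1 : ((2 * S' + S' : ℝ) * (τ + 1) + 2) ^ N ≤ 2 ^ (pp * N) := by
      rw [pow_mul (2 : ℝ) pp N]
      exact pow_le_pow_left₀ (by positivity) hP N
    have hTT : (T : ℝ) ≤ 2 ^ T := by exact_mod_cast Nat.lt_two_pow_self.le
    calc (2 : ℝ) ^ (2 * E) * 2 ^ (2 * (W + 2 * E)) *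
          (((2 * S' + S' : ℝ) * (τ + 1) + 2) ^ N * δ)
        ≤ (2 : ℝ) ^ (2 * E) * 2 ^ (2 * (W + 2 * E)) * (2 ^ (pp * N) *
            (2 ^ (W + E) * (2 ^ T * 2 ^ (T * d.kk) * d.ε))) := by
          rw [hδ]
          gcongr
      _ = 2 ^ (2 * E + 2 * (W + 2 * E) + pp * N + (W + E) + T + T * d.kk) * d.ε := by
          simp only [pow_add]; ring
      _ ≤ 1 / 4 := by
          have h2 : (2 : ℝ) ^ (2 * E + 2 * (W + 2 * E) + pp * N + (W + E) + T + T * d.kk) * 4 ≤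
              2 ^ Q := by
            have : (4 : ℝ) = 2 ^ 2 := by norm_num
            rw [this, ← pow_add]
            apply pow_le_pow_right₀ one_le_two
            have h5 : pp * N ≤ pp * (Sm * τ) := by gcongr
            have h6 : (pp + 2) * (Sm * τ) = pp * (Sm * τ) + 2 * (Sm * τ) := by ring
            omega
          have := mul_le_mul_of_nonneg_right h2 hε0
          linarith
  have : |ea (d.A p t s)| * Cub.sz (d.A p t s) ^ 2 ≤ 1 / 2 := by
    calc _ ≤ (2 ^ (2 * E) * ‖d.F p t (s : ℂ)‖) * 2 ^ (2 * (W + 2 * E)) := by gcongr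
      _ ≤ (2 ^ (2 * E) * (((2 * S' + S') / (17 * S' - S') : ℝ) ^ N *
      2 ^ (W + 17 * E) + ((2 * S' + S' : ℝ) * (τ + 1) + 2) ^ N * δ)) *
          2 ^ (2 * (W + 2 * E)) := by gcongr
      _ ≤ 1 / 2 := by linarith
  linarith

lemma sum_exp_ne (p : L → ℤ) (hp : p ≠ 0) (N : ℕ) (hN : Fintype.card L ≤ N)
    (h : ∀ s < N, d.A p 0 s = 0) : False := by
  classical
  obtain ⟨e⟩ := Fintype.truncEquivFin L
  apply hp
  have hinj : Function.Injective fun i : Fin (Fintype.card L) => Real.exp (d.ω (e.symm i)) := by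
    intro i j hij
    exact e.symm.injective (d.hω (Real.exp_injective hij))
  have := Matrix.eq_zero_of_forall_pow_sum_mul_pow_eq_zero (v := fun i => (p (e.symm i) : ℝ)) hinj ?_
  · funext a
    have h1 := congrFun this (e a)
    simpa using h1
  · intro i
    have h1 := (d.A_eq_zero_iff p 0 i).1 (h i (by omega))
    rw [← h1]
    rw [← Equiv.sum_comp e.symm]
    refine Finset.sum_congr rfl fun j _ => ?_
    rw [← Real.exp_nat_mul]
    simp [gm, mul_comm]

/-- The transcendence argument: the error `ε` of the linear form cannot be below `2 ^ (-Q)`. -/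
theorem core [Nonempty L] (T τ S0 J pp Q : ℕ) (hT : T = J * τ + 1) (hS01 : 1 ≤ S0)
    (hU : 6 * T ^ Fintype.card ι * S0 ≤ Fintype.card L)
    (hτ : 25 * d.η ≤ τ) (hS0 : 6 * d.u + 6 * (T * d.g) + 3 * (d.η * S0) + 2 ≤ S0 * τ)
    (hJ : Fintype.card L ≤ 2 ^ J * S0)
    (hpp : 3 * (2 ^ J * S0) * (τ + 1) + 2 ≤ 2 ^ pp)
    (hQ : (pp + 2) * (2 ^ J * S0 * τ) + T * d.kk + T + 2 ≤ Q) (hε : d.ε * 2 ^ Q ≤ 1) : False := by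
  classical
  have hcard : Fintype.card ((ι → Fin T) × Fin S0 × Fin 3) = T ^ Fintype.card ι * (S0 * 3) := by
    simp
  obtain ⟨p, hp0, hpz, hpb⟩ := siegel
    (fun (r : (ι → Fin T) × Fin S0 × Fin 3) (a : L) =>
      if ∑ i, (r.1 i : ℕ) < T then
        d.gm a (fun i => (r.1 i : ℕ)) * (![(d.mon a r.2.1).c0, (d.mon a r.2.1).c1,
          (d.mon a r.2.1).c2] r.2.2) else 0)
    (2 ^ (T * d.g + d.η * S0)) (one_le_pow₀ one_le_two) (by
      rintro ⟨t, s, k⟩ a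
      simp only
      split_ifs with ht
      · push_cast
        rw [abs_mul, pow_add]
        have h1 := d.abs_gm_le a (fun i => (t i : ℕ))
        have h2 : (2 : ℝ) ^ (d.g * ∑ i, (t i : ℕ)) ≤ 2 ^ (T * d.g) := by
          apply pow_le_pow_right₀ one_le_two
          rw [mul_comm]
          exact Nat.mul_le_mul_right _ ht.le
        have h3 : Cub.sz (d.mon a s) ≤ 2 ^ (d.η * S0) :=
          (d.hsz a s).trans (pow_le_pow_right₀ one_le_two (Nat.mul_le_mul_left _ s.2))
        gcongr
        · exact h1.trans h2
        · refine le_trans ?_ h3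
          unfold Cub.sz
          fin_cases k <;> simp <;>
            linarith [abs_nonneg ((d.mon a s).c0 : ℝ), abs_nonneg ((d.mon a s).c1 : ℝ),
              abs_nonneg ((d.mon a s).c2 : ℝ)]
      · simp) (by rw [hcard]; linarith) Fintype.card_pos
  set y := d.u + T * d.g + d.η * S0 with hy
  have hpb' : ∀ a, |(p a : ℝ)| ≤ 2 ^ y := by
    intro a
    refine (hpb a).trans ?_
    calc (Fintype.card L : ℝ) * 2 ^ (T * d.g + d.η * S0)
        ≤ 2 ^ d.u * 2 ^ (T * d.g + d.η * S0) := by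
          gcongr
          exact_mod_cast d.hu
      _ = 2 ^ y := by rw [← pow_add, hy, add_assoc]
  have hV0 : ∀ t : ι → ℕ, ∑ i, t i < T → ∀ s < S0, d.A p t s = 0 := by
    intro t ht s hs
    have htT : ∀ i, t i < T := fun i =>
      (Finset.single_le_sum (fun _ _ => Nat.zero_le _) (Finset.mem_univ i)).trans_lt ht
    have hk : ∀ k : Fin 3, ∑ a, p a * d.gm a t * (![(d.mon a s).c0, (d.mon a s).c1,
          (d.mon a s).c2] k) = 0 := by
      intro k
      have := hpz (fun i => ⟨t i, htT i⟩, ⟨s, hs⟩, k)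
      simp only [ht, if_true] at this
      rw [← this]
      exact Finset.sum_congr rfl fun a _ => by ring
    have hc0 : ∀ f : L → Cub ℤ, (∑ a, f a).c0 = ∑ a, (f a).c0 := fun f =>
      map_sum (⟨⟨fun z : Cub ℤ => z.c0, rfl⟩, fun _ _ => rfl⟩ : Cub ℤ →+ ℤ) f _
    have hc1 : ∀ f : L → Cub ℤ, (∑ a, f a).c1 = ∑ a, (f a).c1 := fun f =>
      map_sum (⟨⟨fun z : Cub ℤ => z.c1, rfl⟩, fun _ _ => rfl⟩ : Cub ℤ →+ ℤ) f _
    have hc2 : ∀ f : L → Cub ℤ, (∑ a, f a).c2 = ∑ a, (f a).c2 := fun f =>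
      map_sum (⟨⟨fun z : Cub ℤ => z.c2, rfl⟩, fun _ _ => rfl⟩ : Cub ℤ →+ ℤ) f _
    have k0 := hk 0
    have k1 := hk 1
    have k2 := hk 2
    simp only [Matrix.cons_val] at k0 k1 k2
    unfold A
    ext
    · rw [hc0, Cub.zero_c0, ← k0]
      exact Finset.sum_congr rfl fun a _ => by simp only [Cub.mul_c0, Cub.C_c0, Cub.C_c1, Cub.C_c2]; ring
    · rw [hc1, Cub.zero_c1, ← k1]
      exact Finset.sum_congr rfl fun a _ => by simp only [Cub.mul_c1, Cub.C_c0, Cub.C_c1, Cub.C_c2]; ring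
    · rw [hc2, Cub.zero_c2, ← k2]
      exact Finset.sum_congr rfl fun a _ => by simp only [Cub.mul_c2, Cub.C_c0, Cub.C_c1, Cub.C_c2]; ring
  have hV : ∀ k ≤ J, ∀ t : ι → ℕ, ∑ i, t i < (J - k) * τ + 1 → ∀ s < 2 ^ k * S0,
      d.A p t s = 0 := by
    intro k
    induction k with
    | zero =>
      intro _ t ht s hs
      exact hV0 t (by rw [hT]; simpa using ht) s (by simpa using hs)
    | succ k ih =>
      intro hk
      have e1 : (J - k) * τ + 1 = (J - (k + 1)) * τ + 1 + τ := by
        have : J - k = J - (k + 1) + 1 := by omega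
        rw [this]; ring
      have e2 : 2 ^ (k + 1) * S0 = 2 * (2 ^ k * S0) := by ring
      rw [e2]
      refine d.step p y T τ S0 (2 ^ J * S0) pp Q hpb' hτ ?_ hpp hQ hε _ (2 ^ k * S0) ?_ ?_ ?_ ?_ ?_
      · rw [hy]; linarith
      · rw [← e1, hT]
        have : (J - k) * τ ≤ J * τ := Nat.mul_le_mul_right _ (Nat.sub_le _ _)
        omega
      · exact Nat.le_mul_of_pos_left _ (by positivity)
      · gcongr
        · norm_num
        · omega
      · exact Nat.mul_pos (by positivity) hS01
      · rw [← e1]; exact ih (by omega)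
  refine d.sum_exp_ne p hp0 (2 ^ J * S0) hJ fun s hs => ?_
  exact hV J le_rfl 0 (by simp) s hs

end RBData

/-! ### Lower bounds for linear forms in logarithms of elements of `ℚ(α)` -/

/-- Lower bound for `b0 log (ν / D) + ∑ b_i log e_i` in terms of free parameters. -/
theorem rb {ι : Type} [Fintype ι] (ν : Cub ℤ) (D : ℕ) (e : ι → Cub ℤ) (b0 : ℕ) (b : ι → ℤ)
    (h0 ℓ L0 L g η u T τ S0 J pp Q : ℕ)
    (hν : 0 < ea ν) (hD : 1 ≤ D) (he : ∀ i, 1 ≤ ea (e i))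
    (hνs : Cub.sz ν ≤ 2 ^ h0) (hDs : D ≤ 2 ^ h0) (hνl : (D : ℝ) ≤ 2 ^ h0 * ea ν)
    (hes : ∀ i, Cub.sz (e i) ≤ 2 ^ 5) (hb1 : 1 ≤ b0) (hb0 : b0 ≤ 2 ^ ℓ)
    (hb : ∀ i, |b i| ≤ 2 ^ ℓ)
    (hind : ∀ (c0 : ℤ) (c : ι → ℤ), |c0| < L0 → (∀ i, |c i| < L) →
      c0 * Real.log (ea ν / D) + ∑ i, c i * Real.log (ea (e i)) = 0 → c0 = 0 ∧ c = 0)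
    (hg : 2 ^ ℓ * (L + L0) ≤ 2 ^ g) (hη1 : h0 * L0 + 5 * Fintype.card ι * L ≤ η)
    (hη2 : 4 * (Fintype.card ι + 2) ≤ η) (hL0 : 1 ≤ L0) (hL : 1 ≤ L)
    (hu : L0 * L ^ Fintype.card ι ≤ 2 ^ u) (hT : T = J * τ + 1) (hS01 : 1 ≤ S0)
    (hU : 6 * T ^ Fintype.card ι * S0 ≤ L0 * L ^ Fintype.card ι)
    (hτ : 25 * η ≤ τ) (hS0 : 6 * u + 6 * (T * g) + 3 * (η * S0) + 2 ≤ S0 * τ)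
    (hJ : L0 * L ^ Fintype.card ι ≤ 2 ^ J * S0)
    (hpp : 3 * (2 ^ J * S0) * (τ + 1) + 2 ≤ 2 ^ pp)
    (hQ : (pp + 2) * (2 ^ J * S0 * τ) + T * (g + η) + T + 2 ≤ Q) :
    1 < L0 * |b0 * Real.log (ea ν / D) + ∑ i, b i * Real.log (ea (e i))| * 2 ^ Q := by
  classical
  by_contra hcon
  rw [not_lt] at hcon
  set l0 := Real.log (ea ν / D) with hl0
  set l : ι → ℝ := fun i => Real.log (ea (e i)) with hl
  set Λ := b0 * l0 + ∑ i, b i * l i with hΛ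
  have hDR : (1 : ℝ) ≤ D := by exact_mod_cast hD
  have hlog2 : Real.log 2 ≤ 1 := by linarith [Real.log_two_lt_d9]
  have hlog20 : 0 < Real.log 2 := Real.log_pos one_lt_two
  have hl_nonneg : ∀ i, 0 ≤ l i := fun i => Real.log_nonneg (he i)
  have hl_le : ∀ i, l i ≤ 5 * Real.log 2 := by
    intro i
    have h1 : ea (e i) ≤ 2 ^ 5 := (le_abs_self _).trans ((abs_ea_le _).trans (hes i))
    have h2 := Real.log_le_log (by linarith [he i]) h1
    rw [Real.log_pow] at h2
    exact_mod_cast h2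
  have hl0_le : |l0| ≤ h0 * Real.log 2 := by
    have hpos : 0 < ea ν / D := by positivity
    rw [abs_le]
    constructor
    · have h1 : (2 ^ h0 : ℝ)⁻¹ ≤ ea ν / D := by
        rw [inv_le_comm₀ (by positivity) hpos, inv_div, div_le_iff₀ hν]
        exact hνl
      have h2 := Real.log_le_log (by positivity) h1
      rw [Real.log_inv, Real.log_pow] at h2
      linarith
    · have h1 : ea ν / D ≤ 2 ^ h0 := by
        refine (div_le_self hν.le hDR).trans ?_
        exact (le_abs_self _).trans ((abs_ea_le _).trans hνs)
      have h2 := Real.log_le_log hpos h1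
      rwa [Real.log_pow] at h2
  let ω : Fin L0 × (ι → Fin L) → ℝ := fun a => (a.1 : ℕ) * l0 + ∑ i, ((a.2 i : ℕ) : ℝ) * l i
  have hωabs : ∀ a, |ω a| ≤ η * Real.log 2 := by
    intro a
    have h1 : |((a.1 : ℕ) : ℝ) * l0| ≤ L0 * (h0 * Real.log 2) := by
      rw [abs_mul, Nat.abs_cast]
      gcongr
      exact a.1.2.le
    have h2 : |∑ i, ((a.2 i : ℕ) : ℝ) * l i| ≤ Fintype.card ι * (L * (5 * Real.log 2)) := by
      rw [abs_of_nonneg (Finset.sum_nonneg fun i _ => mul_nonneg (by positivity) (hl_nonneg i))]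
      calc ∑ i, ((a.2 i : ℕ) : ℝ) * l i ≤ ∑ i : ι, (L : ℝ) * (5 * Real.log 2) := by
            apply Finset.sum_le_sum
            intro i _
            have := hl_nonneg i
            have h3 := hl_le i
            have h4 : ((a.2 i : ℕ) : ℝ) ≤ L := by exact_mod_cast (a.2 i).2.le
            gcongr
        _ = _ := by rw [Finset.sum_const, nsmul_eq_mul, Finset.card_univ]
    have h3 : ((h0 * L0 + 5 * Fintype.card ι * L : ℕ) : ℝ) ≤ η := by exact_mod_cast hη1
    push_cast at h3
    have h4 := abs_add_le (((a.1 : ℕ) : ℝ) * l0) (∑ i, ((a.2 i : ℕ) : ℝ) * l i)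
    have h5 := mul_le_mul_of_nonneg_right h3 hlog20.le
    change |((a.1 : ℕ) : ℝ) * l0 + ∑ i, ((a.2 i : ℕ) : ℝ) * l i| ≤ _
    nlinarith
  have hη2k : (η : ℝ) ≤ 2 ^ η := by exact_mod_cast Nat.lt_two_pow_self.le
  have hγ : ∀ (a : Fin L0 × (ι → Fin L)) i,
      |(((b0 : ℤ) * ((a.2 i : ℕ) : ℤ) - b i * ((a.1 : ℕ) : ℤ) : ℤ) : ℝ)| ≤ 2 ^ g := by
    intro a i
    have hgR : ((2 ^ ℓ * (L + L0) : ℕ) : ℝ) ≤ ((2 ^ g : ℕ) : ℝ) := by exact_mod_cast hg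
    push_cast at hgR ⊢
    refine le_trans ?_ hgR
    have h1 : |(b0 : ℝ) * ((a.2 i : ℕ) : ℝ)| ≤ 2 ^ ℓ * L := by
      rw [abs_of_nonneg (by positivity)]
      have h4 : ((a.2 i : ℕ) : ℝ) ≤ L := by exact_mod_cast (a.2 i).2.le
      have h5 : (b0 : ℝ) ≤ 2 ^ ℓ := by exact_mod_cast hb0
      gcongr
    have h2 : |(b i : ℝ) * ((a.1 : ℕ) : ℝ)| ≤ 2 ^ ℓ * L0 := by
      rw [abs_mul, Nat.abs_cast]
      have h4 : ((a.1 : ℕ) : ℝ) ≤ L0 := by exact_mod_cast a.1.2.le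
      have h5 : |(b i : ℝ)| ≤ 2 ^ ℓ := by exact_mod_cast hb i
      gcongr
    have h3 := abs_sub ((b0 : ℝ) * ((a.2 i : ℕ) : ℝ)) ((b i : ℝ) * ((a.1 : ℕ) : ℝ))
    linarith
  have hgℓ : (2 : ℝ) ^ ℓ ≤ 2 ^ g := by
    have : 2 ^ ℓ ≤ 2 ^ g := le_trans (Nat.le_mul_of_pos_right _ (by omega)) hg
    exact_mod_cast this
  let d : RBData (Fin L0 × (ι → Fin L)) ι :=
    { γ := fun a i => (b0 : ℤ) * ((a.2 i : ℕ) : ℤ) - b i * ((a.1 : ℕ) : ℤ)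
      mon := fun a s => Cub.C ((D : ℤ) ^ ((L0 - a.1) * s)) *
        (ν ^ ((a.1 : ℕ) * s) * ∏ i, e i ^ ((a.2 i : ℕ) * s))
      ω := ω
      l := l
      b0 := b0
      D' := (D : ℝ) ^ L0
      ε := L0 * |Λ|
      g := g
      η := η
      kk := g + η
      u := u
      hω := by
        rintro ⟨a1, a2⟩ ⟨c1, c2⟩ h
        have h' : ((a1 : ℕ) : ℝ) * l0 + ∑ i, ((a2 i : ℕ) : ℝ) * l i =
          ((c1 : ℕ) : ℝ) * l0 + ∑ i, ((c2 i : ℕ) : ℝ) * l i := h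
        have := hind ((a1 : ℕ) - (c1 : ℕ)) (fun i => ((a2 i : ℕ) : ℤ) - (c2 i : ℕ)) (by
            have := a1.2; have := c1.2; rw [abs_lt]; constructor <;> omega) (fun i => by
            have := (a2 i).2; have := (c2 i).2; rw [abs_lt]; constructor <;> omega) (by
            push_cast
            simp only [sub_mul, Finset.sum_sub_distrib]
            linarith)
        obtain ⟨e1, e2⟩ := this
        ext i
        · simp only; omega
        · have := congrFun e2 i
          simp only [Pi.zero_apply] at this
          simp only
          omega
      hb0 := by exact_mod_cast hb1
      hD'0 := by positivity
      hD' := by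
        calc (D : ℝ) ^ L0 ≤ (2 ^ h0) ^ L0 := by
              gcongr
              exact_mod_cast hDs
          _ = 2 ^ (h0 * L0) := by rw [← pow_mul]
          _ ≤ 2 ^ η := pow_le_pow_right₀ one_le_two (by
              have := Nat.zero_le (5 * Fintype.card ι * L); omega)
      hmon := by
        intro a s
        rw [map_mul, map_mul, ea_C, map_pow, map_prod]
        have h1 : Real.exp (ω a * s) = (ea ν / D) ^ ((a.1 : ℕ) * s) *
            ∏ i, ea (e i) ^ ((a.2 i : ℕ) * s) := by
          have e0 : Real.exp l0 = ea ν / D := Real.exp_log (by positivity)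
          have e1 : ∀ i, Real.exp (l i) = ea (e i) := fun i =>
            Real.exp_log (by linarith [he i])
          change Real.exp ((((a.1 : ℕ) : ℝ) * l0 + ∑ i, ((a.2 i : ℕ) : ℝ) * l i) * s) = _
          rw [← e0, ← Real.exp_nat_mul, Finset.prod_congr rfl (g := fun i =>
            Real.exp (((a.2 i : ℕ) * s : ℕ) * l i)) (fun i _ => by
              rw [← e1 i, ← Real.exp_nat_mul]), ← Real.exp_sum, ← Real.exp_add]
          congr 1
          push_cast
          rw [add_mul, Finset.sum_mul]
          congr 1
          · ring
          · exact Finset.sum_congr rfl fun i _ => by ring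
        rw [h1]
        have hD0 : (D : ℝ) ≠ 0 := by positivity
        have h2 : ((D : ℝ) ^ L0) ^ s = (D : ℝ) ^ ((L0 - a.1) * s) * (D : ℝ) ^ ((a.1 : ℕ) * s) := by
          rw [← pow_mul, ← pow_add, ← add_mul, Nat.sub_add_cancel a.1.2.le]
        rw [h2, div_pow]
        push_cast
        field_simp
        simp [map_pow]
      herr := by
        intro a
        have : b0 * ω a - ∑ i, (((b0 : ℤ) * ((a.2 i : ℕ) : ℤ) - b i * ((a.1 : ℕ) : ℤ) : ℤ) : ℝ) * l i
            = (a.1 : ℕ) * Λ := by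
          change b0 * (((a.1 : ℕ) : ℝ) * l0 + ∑ i, ((a.2 i : ℕ) : ℝ) * l i) - _ = _
          rw [hΛ]
          push_cast
          simp only [sub_mul, Finset.sum_sub_distrib, mul_add, Finset.mul_sum]
          have e1 : ∀ i, (b0 : ℝ) * ((a.2 i : ℕ) : ℝ) * l i = b0 * (((a.2 i : ℕ) : ℝ) * l i) :=
            fun i => by ring
          have e2 : ∀ i, (b i : ℝ) * ((a.1 : ℕ) : ℝ) * l i = ((a.1 : ℕ) : ℝ) * (b i * l i) :=
            fun i => by ring
          simp only [e1, e2]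
          ring
        rw [this, abs_mul, Nat.abs_cast]
        gcongr
        exact a.1.2.le
      hγ := hγ
      hsz := by
        intro a s
        rw [Cub.sz_C_mul]
        have h1 : |(((D : ℤ) ^ ((L0 - a.1) * s) : ℤ) : ℝ)| ≤ 2 ^ (h0 * ((L0 - a.1) * s)) := by
          push_cast
          rw [abs_of_nonneg (by positivity), pow_mul 2]
          gcongr
          exact_mod_cast hDs
        have h2 : Cub.sz (ν ^ ((a.1 : ℕ) * s)) ≤ 2 ^ (4 + h0 * ((a.1 : ℕ) * s)) := by
          refine (Cub.sz_pow _ _).trans ?_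
          rw [pow_add, pow_mul 2 h0]
          have := Cub.sz_nonneg ν
          gcongr
          norm_num
        have h3 : ∀ F : Finset ι, Cub.sz (∏ i ∈ F, e i ^ ((a.2 i : ℕ) * s)) ≤
            9 * 2 ^ ((4 + 5 * (L * s)) * F.card) := by
          intro F
          induction F using Finset.induction_on with
          | empty => simp [Cub.sz_one]
          | insert i F hi ih =>
            rw [Finset.prod_insert hi, Finset.card_insert_of_notMem hi]
            refine (Cub.sz_mul _ _).trans ?_
            have h4 : Cub.sz (e i ^ ((a.2 i : ℕ) * s)) ≤ 2 ^ (4 + 5 * (L * s)) := by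
              refine (Cub.sz_pow _ _).trans ?_
              rw [pow_add, pow_mul 2 5]
              have h5 := Cub.sz_nonneg (e i)
              calc 9 * Cub.sz (e i) ^ ((a.2 i : ℕ) * s) ≤ 2 ^ 4 * (2 ^ 5) ^ ((a.2 i : ℕ) * s) := by
                    gcongr
                    · norm_num
                    · exact hes i
                _ ≤ 2 ^ 4 * (2 ^ 5) ^ (L * s) := by
                    gcongr
                    · norm_num
                    · exact (a.2 i).2.le
            have h6 := Cub.sz_nonneg (∏ i ∈ F, e i ^ ((a.2 i : ℕ) * s))
            refine (mul_le_mul h4 ih h6 (by positivity)).trans (le_of_eq ?_)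
            rw [mul_add (4 + 5 * (L * s)), mul_one, pow_add _ (_ * _)]
            ring
        have h4 := (Cub.sz_mul (ν ^ ((a.1 : ℕ) * s)) (∏ i, e i ^ ((a.2 i : ℕ) * s)))
        have h5 := Cub.sz_nonneg (ν ^ ((a.1 : ℕ) * s))
        have h6 := Cub.sz_nonneg (∏ i, e i ^ ((a.2 i : ℕ) * s))
        have h7 := Cub.sz_nonneg (ν ^ ((a.1 : ℕ) * s) * ∏ i, e i ^ ((a.2 i : ℕ) * s))
        calc _ ≤ (2 : ℝ) ^ (h0 * ((L0 - a.1) * s)) * (2 ^ (4 + h0 * ((a.1 : ℕ) * s)) *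
              (9 * 2 ^ ((4 + 5 * (L * s)) * Fintype.card ι))) := by
              refine mul_le_mul h1 (h4.trans ?_) h7 (by positivity)
              exact mul_le_mul h2 (h3 Finset.univ) h6 (by positivity)
          _ ≤ (2 : ℝ) ^ (h0 * ((L0 - a.1) * s)) * (2 ^ (4 + h0 * ((a.1 : ℕ) * s)) *
              (2 ^ 4 * 2 ^ ((4 + 5 * (L * s)) * Fintype.card ι))) := by
              gcongr
              norm_num
          _ = 2 ^ (h0 * ((L0 - a.1) * s) + (4 + h0 * ((a.1 : ℕ) * s) + (4 +
              (4 + 5 * (L * s)) * Fintype.card ι))) := by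
              simp only [pow_add]
          _ ≤ _ := by
              apply pow_le_pow_right₀ one_le_two
              have e1 : h0 * ((L0 - a.1) * s) + h0 * ((a.1 : ℕ) * s) = h0 * L0 * s := by
                rw [← mul_add, ← add_mul, Nat.sub_add_cancel a.1.2.le]; ring
              have e2 : (h0 * L0 + 5 * Fintype.card ι * L) * s ≤ η * s :=
                Nat.mul_le_mul_right _ hη1
              have e3 : (4 + 5 * (L * s)) * Fintype.card ι + h0 * L0 * s =
                4 * Fintype.card ι + (h0 * L0 + 5 * Fintype.card ι * L) * s := by ring
              have e4 : η * (s + 1) = η * s + η := by ring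
              have e5 : 5 * Fintype.card ι ≤ 5 * Fintype.card ι * L :=
                Nat.le_mul_of_pos_right _ hL
              omega
      hexp := by
        intro a
        calc Real.exp |ω a| ≤ Real.exp (η * Real.log 2) := Real.exp_le_exp.2 (hωabs a)
          _ = 2 ^ η := by rw [Real.exp_nat_mul, Real.exp_log two_pos]
      hK1 := by
        intro a
        rw [abs_mul, Nat.abs_cast, pow_add]
        have h5 : (b0 : ℝ) ≤ 2 ^ ℓ := by exact_mod_cast hb0
        have h6 : |ω a| ≤ η := (hωabs a).trans (by nlinarith)
        have := abs_nonneg (ω a)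
        exact mul_le_mul (h5.trans hgℓ) (h6.trans hη2k) this (by positivity)
      hK2 := by
        intro a
        calc |∑ i, (((b0 : ℤ) * ((a.2 i : ℕ) : ℤ) - b i * ((a.1 : ℕ) : ℤ) : ℤ) : ℝ) * l i|
            ≤ ∑ i, |(((b0 : ℤ) * ((a.2 i : ℕ) : ℤ) - b i * ((a.1 : ℕ) : ℤ) : ℤ) : ℝ) * l i| :=
              Finset.abs_sum_le_sum_abs _ _
          _ ≤ ∑ i : ι, (2 : ℝ) ^ g * 5 := by
              apply Finset.sum_le_sum
              intro i _
              rw [abs_mul, abs_of_nonneg (hl_nonneg i)]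
              have := hl_le i
              exact mul_le_mul (hγ a i) (by linarith) (hl_nonneg i) (by positivity)
          _ = 2 ^ g * (5 * Fintype.card ι) := by
              rw [Finset.sum_const, nsmul_eq_mul, Finset.card_univ]; ring
          _ ≤ 2 ^ g * 2 ^ η := by
              gcongr
              refine le_trans ?_ hη2k
              have : 5 * Fintype.card ι ≤ 5 * Fintype.card ι * L := Nat.le_mul_of_pos_right _ hL
              have : 5 * Fintype.card ι ≤ η := by omega
              exact_mod_cast this
          _ = _ := by rw [pow_add]
      hu := by simpa using hu }
  have : Nonempty (Fin L0 × (ι → Fin L)) := ⟨⟨⟨0, hL0⟩, fun _ => ⟨0, hL⟩⟩⟩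
  have hcard : Fintype.card (Fin L0 × (ι → Fin L)) = L0 * L ^ Fintype.card ι := by simp
  exact d.core T τ S0 J pp Q hT hS01 (by rw [hcard]; exact hU) hτ hS0 (by rw [hcard]; exact hJ)
    hpp hQ hcon

set_option maxHeartbeats 1000000 in
/-- The lower bound with parameters specialised to powers of two. Coefficients are at most `2 ^ ℓ`,
heights of the pivot at most `2 ^ H` in the exponent. -/
theorem rb_pow {ι : Type} [Fintype ι] (κ : ℕ) (hκ : Fintype.card ι = κ) (hκ1 : 1 ≤ κ) (hκ3 : κ ≤ 3)
    (ν : Cub ℤ) (D : ℕ) (e : ι → Cub ℤ) (b0 : ℕ) (b : ι → ℤ)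
    (h0 ℓ r H a q : ℕ) (ha : a = κ * (r + 9) + 2 * r + 8)
    (hr : ℓ + 5 * a + 4 * H + 16 ≤ 2 ^ r) (hq : q = r + 11 + (κ + 2) * a + (κ + 1) * H)
    (hH : h0 ≤ 2 ^ H)
    (hν : 0 < ea ν) (hD : 1 ≤ D) (he : ∀ i, 1 ≤ ea (e i))
    (hνs : Cub.sz ν ≤ 2 ^ h0) (hDs : D ≤ 2 ^ h0) (hνl : (D : ℝ) ≤ 2 ^ h0 * ea ν)
    (hes : ∀ i, Cub.sz (e i) ≤ 2 ^ 5) (hb1 : 1 ≤ b0) (hb0 : b0 ≤ 2 ^ ℓ)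
    (hb : ∀ i, |b i| ≤ 2 ^ ℓ)
    (hind : ∀ (c0 : ℤ) (c : ι → ℤ), |c0| < 2 ^ (a + H) → (∀ i, |c i| < 2 ^ (a + H)) →
      c0 * Real.log (ea ν / D) + ∑ i, c i * Real.log (ea (e i)) = 0 → c0 = 0 ∧ c = 0) :
    1 < |b0 * Real.log (ea ν / D) + ∑ i, b i * Real.log (ea (e i))| * 2 ^ 2 ^ q := by
  set u := a + κ * (a + H) with hu
  have hκa : a ≤ κ * a := Nat.le_mul_of_pos_left _ hκ1
  have hκH : H ≤ κ * H := Nat.le_mul_of_pos_left _ hκ1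
  have hκa3 : κ * a ≤ 3 * a := Nat.mul_le_mul_right _ hκ3
  have hκH3 : κ * H ≤ 3 * H := Nat.mul_le_mul_right _ hκ3
  have hκr : r ≤ κ * r := Nat.le_mul_of_pos_left _ hκ1
  have eu : u = a + κ * a + κ * H := by rw [hu]; ring
  have ea' : a = κ * r + 9 * κ + 2 * r + 8 := by rw [ha]; ring
  have eq' : q = r + 11 + κ * a + 2 * a + κ * H + H := by rw [hq]; ring
  set J := u - (2 * r + 5) with hJ
  have hJu : J + (2 * r + 5) = u := by omega
  set τ := 2 ^ (a + H + 9) with hτ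
  have hτ1 : 1 ≤ τ := Nat.one_le_two_pow
  have hJ1 : J + 1 ≤ 2 ^ r := by omega
  have hT : J * τ + 1 ≤ 2 ^ r * τ := by
    calc J * τ + 1 ≤ J * τ + τ := by omega
      _ = (J + 1) * τ := by ring
      _ ≤ _ := Nat.mul_le_mul_right _ hJ1
  have hSJ : 2 ^ J * 2 ^ (2 * r + 5) = 2 ^ u := by rw [← pow_add, hJu]
  have hcard : (2 ^ a) * (2 ^ (a + H)) ^ Fintype.card ι = 2 ^ u := by
    rw [hκ, ← pow_mul, ← pow_add, hu]; ring_nf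
  have pr : 2 ^ 5 ≤ 2 ^ r := by
    apply Nat.pow_le_pow_right (by norm_num)
    by_contra h
    have : r < 5 := by omega
    interval_cases r <;> simp at hr <;> omega
  clear_value u J τ
  have key := rb ν D e b0 b h0 ℓ (2 ^ a) (2 ^ (a + H)) (ℓ + a + H + 1) (2 ^ (a + H + 4)) u
    (J * τ + 1) τ (2 ^ (2 * r + 5)) J (u + a + H + 12) (2 ^ (r + u + a + H + 10))
    hν hD he hνs hDs hνl hes hb1 hb0 hb (by
      intro c0 c h1 h2 h3
      refine hind c0 c (lt_of_lt_of_le h1 ?_) (fun i => by simpa using h2 i) h3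
      push_cast
      exact pow_le_pow_right₀ (by norm_num) (by omega))
    (by
      have : 2 ^ a ≤ 2 ^ (a + H) := Nat.pow_le_pow_right (by norm_num) (by omega)
      calc 2 ^ ℓ * (2 ^ (a + H) + 2 ^ a) ≤ 2 ^ ℓ * (2 ^ (a + H) * 2) := by gcongr; omega
        _ = _ := by ring)
    (by
      rw [hκ]
      calc h0 * 2 ^ a + 5 * κ * 2 ^ (a + H) ≤ 2 ^ H * 2 ^ a + 5 * 3 * 2 ^ (a + H) := by gcongr
        _ = _ := by ring)
    (by
      rw [hκ]
      calc 4 * (κ + 2) ≤ 2 ^ 5 := by omega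
        _ ≤ _ := Nat.pow_le_pow_right (by norm_num) (by omega))
    Nat.one_le_two_pow Nat.one_le_two_pow hcard.le rfl Nat.one_le_two_pow
    (by
      rw [hcard, hκ]
      calc 6 * (J * τ + 1) ^ κ * 2 ^ (2 * r + 5) ≤ 2 ^ 3 * (2 ^ r * τ) ^ κ * 2 ^ (2 * r + 5) := by
            gcongr; norm_num
        _ = 2 ^ (3 + (r + (a + H + 9)) * κ + (2 * r + 5)) := by
            rw [hτ, ← pow_add, ← pow_mul, ← pow_add, ← pow_add]
        _ ≤ 2 ^ u := by
            apply Nat.pow_le_pow_right (by norm_num)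
            have : (r + (a + H + 9)) * κ = κ * r + κ * a + κ * H + 9 * κ := by ring
            omega)
    (by
      have : 2 ^ (a + H + 9) = 32 * 2 ^ (a + H + 4) := by rw [pow_add _ _ 9, pow_add _ _ 4]; ring
      rw [hτ, this]; omega)
    (by
      have h1 : (J * τ + 1) * (ℓ + a + H + 1) ≤ 2 ^ r * τ * 2 ^ r := by
        gcongr
        omega
      have e1 : 2 ^ (2 * r + 5) = 32 * (2 ^ r * 2 ^ r) := by rw [pow_add, two_mul, pow_add]; ring
      have e2 : τ = 32 * 2 ^ (a + H + 4) := by rw [hτ, pow_add _ _ 9, pow_add _ _ 4]; ring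
      have h2 : 6 * u + 2 ≤ 2 ^ r * τ * 2 ^ r := by
        have h3 : 6 * u + 2 ≤ 2 ^ r * 6 := by omega
        calc 6 * u + 2 ≤ 2 ^ r * 1 * 6 := by omega
          _ ≤ 2 ^ r * τ * 2 ^ r := by gcongr; omega
      rw [e1]
      have e3 : 32 * (2 ^ r * 2 ^ r) * τ = 32 * (2 ^ r * τ * 2 ^ r) := by ring
      have e4 : 3 * (2 ^ (a + H + 4) * (32 * (2 ^ r * 2 ^ r))) = 3 * (2 ^ r * τ * 2 ^ r) := by
        rw [e2]; ring
      rw [e3, e4]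
      omega)
    (by rw [hcard, hSJ])
    (by
      rw [hSJ]
      have h1 : 1 ≤ 2 ^ u := Nat.one_le_two_pow
      calc 3 * 2 ^ u * (τ + 1) + 2 ≤ 3 * 2 ^ u * (τ + τ) + 2 ^ u * τ * 2 := by
            have := Nat.mul_le_mul h1 hτ1
            gcongr
            omega
        _ = 2 ^ u * (τ * 8) := by ring
        _ = 2 ^ (u + a + H + 12) := by rw [hτ]; ring)
    (by
      rw [hSJ]
      have e0 : 2 ^ (r + u + a + H + 10) = 2 * (2 ^ r * (2 ^ u * τ)) := by rw [hτ]; ring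
      have h1 : (u + a + H + 12 + 2) * (2 ^ u * τ) ≤ 2 ^ r * (2 ^ u * τ) := by gcongr; omega
      have h2 : ℓ + a + H + 1 + 2 ^ (a + H + 4) + 3 ≤ 2 ^ u := by
        have h3 : 2 ^ (a + H + 5) ≤ 2 ^ u := Nat.pow_le_pow_right (by norm_num) (by omega)
        have h4 : 2 ^ r ≤ 2 ^ (a + H + 4) := Nat.pow_le_pow_right (by norm_num) (by omega)
        have h5 : 2 ^ (a + H + 5) = 2 * 2 ^ (a + H + 4) := by ring
        omega
      have h3 : (J * τ + 1) * (ℓ + a + H + 1 + 2 ^ (a + H + 4) + 3) ≤ 2 ^ r * τ * 2 ^ u := by gcongr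
      have h4 : (J * τ + 1) * (ℓ + a + H + 1 + 2 ^ (a + H + 4) + 3) =
        (J * τ + 1) * (ℓ + a + H + 1 + 2 ^ (a + H + 4)) + 3 * (J * τ + 1) := by ring
      have h5 : 2 ^ r * τ * 2 ^ u = 2 ^ r * (2 ^ u * τ) := by ring
      omega)
  refine key.trans_le ?_
  have h1 : a + 2 ^ (r + u + a + H + 10) ≤ 2 ^ q := by
    have e1 : q = r + u + a + H + 10 + 1 := by omega
    rw [e1, pow_succ 2 (r + u + a + H + 10)]
    have h2 : 2 ^ a ≤ 2 ^ (r + u + a + H + 10) := Nat.pow_le_pow_right (by norm_num) (by omega)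
    have h3 : a < 2 ^ a := Nat.lt_two_pow_self
    generalize 2 ^ (r + u + a + H + 10) = Z at h2 ⊢
    omega
  push_cast
  calc _ = |b0 * Real.log (ea ν / D) + ∑ i, b i * Real.log (ea (e i))| *
        2 ^ (a + 2 ^ (r + u + a + H + 10)) := by rw [pow_add]; ring
    _ ≤ _ := by
        gcongr
        norm_num

/-! ### 2-adic extrapolation -/

section TwoAdic
open Polynomial

variable {R : Type} [CommRing R]

lemma two_pow_cancel (h2 : ∀ x : R, 2 * x = 0 → x = 0) :
    ∀ (e : ℕ) (x : R), 2 ^ e * x = 0 → x = 0 := by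
  intro e
  induction e with
  | zero => intro x hx; simpa using hx
  | succ e ih => intro x hx; exact ih x (h2 _ (by rw [← hx, pow_succ]; ring))

lemma cancel_two_pow (h2 : ∀ x : R, 2 * x = 0 → x = 0) (n : ℤ) (v : ℕ)
    (hn : ¬ (2 : ℤ) ^ (v + 1) ∣ n)
    (K : ℕ) (x : R) (h : (2 : R) ^ K ∣ (n : R) * x) : (2 : R) ^ (K - v) ∣ x := by
  have hn0 : n ≠ 0 := by rintro rfl; exact hn (dvd_zero _)
  have hfin : FiniteMultiplicity 2 n := Int.finiteMultiplicity_iff.2 ⟨by decide, hn0⟩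
  obtain ⟨o, hno, ho⟩ := hfin.exists_eq_pow_mul_and_not_dvd
  generalize multiplicity 2 n = e at hno
  have hev : e ≤ v := by
    by_contra hlt
    exact hn (hno ▸ (pow_dvd_pow 2 (by omega : v + 1 ≤ e)).mul_right o)
  have hco : IsCoprime ((2 : R) ^ K) (o : R) := by
    have h1 : IsCoprime ((2 : ℤ) ^ K) o :=
      ((Int.prime_two.coprime_iff_not_dvd).2 ho).pow_left
    simpa using h1.map (Int.castRingHom R)
  rw [hno] at h
  push_cast at h
  have h3 : (2 : R) ^ K ∣ 2 ^ e * x :=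
    hco.dvd_of_dvd_mul_left (by rw [← mul_assoc, mul_comm (o : R)]; exact h)
  rcases le_or_gt e K with hK | hK
  · obtain ⟨y, hy⟩ := h3
    have h4 : x - 2 ^ (K - e) * y = 0 := by
      apply two_pow_cancel h2 e
      rw [mul_sub, hy, ← mul_assoc, ← pow_add, Nat.add_sub_cancel' hK, sub_self]
    rw [sub_eq_zero.1 h4]
    exact (pow_dvd_pow 2 (by omega)).mul_right y
  · rw [show K - v = 0 by omega, pow_zero]; exact one_dvd _

/-- A polynomial whose coefficients decay 2-adically and which is 2-adically small at `N` nodes that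
are not too close to each other is small everywhere. -/
lemma poly_extrap (h2 : ∀ x : R, 2 * x = 0 → x = 0) (ℓ T0 G : ℕ) :
    ∀ (N c K : ℕ) (Q : R[X]) (nodes : Finset ℤ), nodes.card = N →
      (∀ a ∈ nodes, ∀ b ∈ nodes, a ≠ b → ¬ (2 : ℤ) ^ (ℓ + 1) ∣ a - b) →
      (∀ j, (2 : R) ^ (j + c - T0) ∣ Q.coeff j) →
      (∀ a ∈ nodes, (2 : R) ^ K ∣ Q.eval (a : R)) →
      N * ℓ + G ≤ K → T0 + G ≤ c + N → ∀ z : R, (2 : R) ^ G ∣ Q.eval z := by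
  intro N
  induction N with
  | zero =>
    intro c K Q nodes _ _ hc _ _ hG z
    rw [eval_eq_sum]
    refine Finset.dvd_sum fun j _ => Dvd.dvd.mul_right ?_ _
    exact (pow_dvd_pow 2 (by omega)).trans (hc j)
  | succ N ih =>
    intro c K Q nodes hcard hsep hc hK hKG hG z
    obtain ⟨a, ha⟩ : nodes.Nonempty := by rw [← Finset.card_pos]; omega
    set Q1 := Q /ₘ (X - C (a : R)) with hQ1
    have hdiv : ∀ x : R, Q.eval x = Q.eval (a : R) + (x - a) * Q1.eval x := by
      intro x
      have h := congrArg (eval x) (modByMonic_add_div Q (X - C (a : R)))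
      rw [modByMonic_X_sub_C_eq_C_eval, eval_add, eval_mul, eval_sub, eval_C, eval_X, eval_C] at h
      rw [← h]
    have hKN : N * ℓ + ℓ + G ≤ K := by rw [Nat.succ_mul] at hKG; exact hKG
    have key := ih (c + 1) (K - ℓ) Q1 (nodes.erase a) (by rw [Finset.card_erase_of_mem ha]; omega)
      (fun x hx y hy => hsep x (Finset.mem_of_mem_erase hx) y (Finset.mem_of_mem_erase hy))
      (by
        intro j
        rw [hQ1, coeff_divByMonic_X_sub_C]
        refine Finset.dvd_sum fun i hi => Dvd.dvd.mul_left ?_ _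
        have := (Finset.mem_Icc.1 hi).1
        exact (pow_dvd_pow 2 (by omega)).trans (hc i))
      (by
        intro b hb
        have hb' := Finset.mem_erase.1 hb
        apply cancel_two_pow h2 (b - a) ℓ (hsep b hb'.2 a ha hb'.1)
        have h := hdiv b
        push_cast
        rw [show ((b : R) - a) * Q1.eval (b : R) = Q.eval (b : R) - Q.eval (a : R) by rw [h]; ring]
        exact dvd_sub (hK b hb'.2) (hK a ha))
      (by omega) (by omega) z
    rw [hdiv z]
    exact dvd_add ((pow_dvd_pow 2 (by omega)).trans (hK a ha)) (key.mul_left _)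

/-- Modulo `2 ^ J` and up to an odd factor, `z ↦ (1 + 4 w) ^ (λ z)` is a polynomial in `z` with
2-adically decaying coefficients: truncate the binomial series. -/
lemma exp_approx (w : R) (J : ℕ) : ∃ O : ℤ, ¬ 2 ∣ O ∧ ∀ l : ℕ, ∃ Q : R[X],
    (∀ j, (2 : R) ^ j ∣ Q.coeff j) ∧
    ∀ z : ℕ, (2 : R) ^ J ∣ (O : R) * (1 + 4 * w) ^ (l * z) - Q.eval (z : R) := by
  obtain ⟨E, O, hO, hJ⟩ := Nat.exists_eq_two_pow_mul_odd (Nat.factorial_ne_zero J)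
  have hc : ∀ i, ∃ c : ℕ, i < J → c * i.factorial = O * 4 ^ i ∧ 2 ^ i ∣ c := by
    intro i
    obtain ⟨e, o, ho, hi⟩ := Nat.exists_eq_two_pow_mul_odd (Nat.factorial_ne_zero i)
    have hei : e ≤ i := by
      by_contra hlt
      rcases Nat.eq_zero_or_pos i with rfl | hpos
      · simp at hi
        have h1 : 2 ^ e ∣ 1 := Dvd.intro _ hi.symm
        have h3 : e ≠ 0 := by omega
        have := (dvd_pow_self 2 h3).trans h1
        omega
      · have h1 : (2 : ℕ) ^ e ∣ i.factorial := hi ▸ Dvd.intro _ rfl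
        have h3 := (Nat.emultiplicity_two_factorial_lt hpos.ne')
        have h4 := le_emultiplicity_of_pow_dvd h1
        have h5 := lt_of_le_of_lt h4 h3
        norm_cast at h5
        omega
    by_cases hiJ : i < J
    · have hoO : o ∣ O := by
        have h1 : o ∣ 2 ^ E * O := by
          rw [← hJ]
          exact (Dvd.intro_left _ hi.symm).trans (Nat.factorial_dvd_factorial hiJ.le)
        exact (Nat.Coprime.pow_right E (Nat.coprime_two_right.2 ho)).dvd_of_dvd_mul_left h1
      obtain ⟨m, rfl⟩ := hoO
      refine ⟨m * 2 ^ (2 * i - e), fun _ => ⟨?_, ?_⟩⟩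
      · rw [hi, show (4 : ℕ) = 2 ^ 2 by norm_num, ← pow_mul,
          show 2 ^ (2 * i) = 2 ^ (2 * i - e) * 2 ^ e by rw [← pow_add]; congr 1; omega]
        ring
      · exact (pow_dvd_pow 2 (by omega)).mul_left _
    · exact ⟨0, fun h => absurd h hiJ⟩
  choose c hc using hc
  refine ⟨O, ?_, fun l => ⟨∑ i ∈ Finset.range J, C ((c i : R) * w ^ i) *
    (descPochhammer R i).comp (C (l : R) * X), ?_, ?_⟩⟩
  · rcases hO with ⟨k, rfl⟩; push_cast; omega
  · intro j
    rw [finsetSum_coeff]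
    refine Finset.dvd_sum fun i hi => ?_
    rw [coeff_C_mul]
    rcases le_or_gt j i with hji | hij
    · apply Dvd.dvd.mul_right
      apply Dvd.dvd.mul_right
      have h1 := (hc i (Finset.mem_range.1 hi)).2
      have h3 : ((2 ^ i : ℕ) : R) ∣ (c i : R) := Nat.cast_dvd_cast h1
      push_cast at h3
      exact (pow_dvd_pow 2 hji).trans h3
    · rw [coeff_eq_zero_of_natDegree_lt, mul_zero]
      · exact dvd_zero _
      · refine lt_of_le_of_lt (natDegree_comp_le) ?_
        have h1 : (descPochhammer R i).natDegree ≤ i := by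
          have := natDegree_map_le (f := Int.castRingHom R) (p := descPochhammer ℤ i)
          rw [descPochhammer_map, descPochhammer_natDegree ℤ i] at this
          exact this
        have h3 : (C (l : R) * X).natDegree ≤ 1 := (natDegree_C_mul_le _ _).trans natDegree_X_le
        calc _ ≤ i * 1 := Nat.mul_le_mul h1 h3
          _ < j := by omega
  · intro z
    set n := l * z with hn
    have hev : (∑ i ∈ Finset.range J, C ((c i : R) * w ^ i) *
        (descPochhammer R i).comp (C (l : R) * X)).eval (z : R) =
        ∑ i ∈ Finset.range J, (O : R) * ((n.choose i : ℕ) * (4 * w) ^ i) := by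
      rw [eval_finsetSum]
      refine Finset.sum_congr rfl fun i hi => ?_
      rw [eval_mul, eval_C, eval_comp, eval_mul, eval_C, eval_X, ← Nat.cast_mul, ← hn,
        descPochhammer_eval_eq_descFactorial, Nat.descFactorial_eq_factorial_mul_choose]
      have h1 := (hc i (Finset.mem_range.1 hi)).1
      have h3 : (c i : R) * i.factorial = O * 4 ^ i := by exact_mod_cast congrArg (Nat.cast (R := R)) h1
      push_cast
      calc (c i : R) * w ^ i * (i.factorial * n.choose i)
          = ((c i : R) * i.factorial) * w ^ i * n.choose i := by ring
        _ = _ := by rw [h3]; ring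
    rw [hev, ← Finset.mul_sum]
    push_cast
    rw [← mul_sub]
    apply Dvd.dvd.mul_left
    have hbin : (1 + 4 * w) ^ n = ∑ i ∈ Finset.range (n + 1 + J), ((n.choose i : ℕ) : R) * (4 * w) ^ i := by
      rw [Finset.sum_range_add _ (n + 1) J, Finset.sum_eq_zero (s := Finset.range J), add_zero,
        add_comm 1, add_pow]
      · refine Finset.sum_congr rfl fun i _ => ?_
        rw [one_pow]; ring
      · intro i _
        rw [Nat.choose_eq_zero_of_lt (by omega)]; simp
    rw [hbin, add_comm (n + 1) J, Finset.sum_range_add, add_sub_cancel_left]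
    refine Finset.dvd_sum fun i _ => Dvd.dvd.mul_left ?_ _
    rw [mul_pow, pow_add 4]
    refine ((?_ : (2 : R) ^ J ∣ 4 ^ J).mul_right _).mul_right _
    exact pow_dvd_pow_of_dvd ⟨2, by norm_num⟩ J

end TwoAdic

section ZeroLemma
open Polynomial

/-- An exponential polynomial `∑ P_c(n) c ^ n` of total order `M` that vanishes at `n = 0, …, M - 1`
vanishes identically: the operator `g ↦ g(n + 1) - c₀ g(n)` lowers the order. -/
lemma exp_poly_zero : ∀ (M : ℕ) (s : Finset ℂ) (d : ℂ → ℕ) (P : ℂ → ℂ[X]),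
    (∀ c ∈ s, c ≠ 0) → ∑ c ∈ s, d c = M → (∀ c ∈ s, (P c).degree < d c) →
    (∀ n : ℕ, n < M → ∑ c ∈ s, (P c).eval (n : ℂ) * c ^ n = 0) → ∀ c ∈ s, P c = 0 := by
  classical
  intro M
  induction M with
  | zero =>
    intro s d P _ hd hdeg _ c hc
    have h1 := (Finset.sum_eq_zero_iff.1 hd) c hc
    have h2 := hdeg c hc
    rw [h1] at h2
    simpa using h2
  | succ M ih =>
    intro s d P hs hd hdeg hz
    by_contra! hcon
    obtain ⟨c0, hc0, hP0⟩ := hcon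
    have hd0 : 1 ≤ d c0 := by
      by_contra h
      have h1 : d c0 = 0 := by omega
      have h2 := hdeg c0 hc0
      rw [h1] at h2
      exact hP0 (by simpa using h2)
    have key := ih s (Function.update d c0 (d c0 - 1))
      (fun c => C c * taylor 1 (P c) - C c0 * P c) hs
      (by
        rw [Finset.sum_update_of_mem hc0]
        rw [← Finset.add_sum_erase s d hc0] at hd
        rw [Finset.sdiff_singleton_eq_erase]
        omega)
      (by
        intro c hc
        by_cases hcc : c = c0
        · subst hcc
          rw [Function.update_self, ← mul_sub]
          rw [degree_C_mul (hs c hc)]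
          have h1 : (taylor 1 (P c) - P c).degree < (taylor 1 (P c)).degree :=
            degree_sub_lt_left (degree_taylor _ _) (by
              intro h
              have := degree_taylor (P c) (1 : ℂ)
              rw [h, degree_zero] at this
              exact hP0 (degree_eq_bot.1 this.symm)) (leadingCoeff_taylor _ _)
          rw [degree_taylor] at h1
          have h2 := hdeg c hc
          rw [degree_eq_natDegree hP0] at h1 h2
          norm_cast at h2
          refine lt_of_lt_of_le h1 ?_
          norm_cast
          omega
        · rw [Function.update_of_ne hcc]
          refine lt_of_le_of_lt (degree_sub_le _ _) (max_lt ?_ ?_)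
          · refine lt_of_le_of_lt (degree_mul_le _ _) ?_
            rw [degree_taylor, degree_C (hs c hc), zero_add]
            exact hdeg c hc
          · refine lt_of_le_of_lt (degree_mul_le _ _) ?_
            rw [degree_C (hs c0 hc0), zero_add]
            exact hdeg c hc)
      (by
        intro n hn
        have h1 := hz (n + 1) (by omega)
        have h2 := hz n (by omega)
        have : ∑ c ∈ s, (C c * taylor 1 (P c) - C c0 * P c).eval (n : ℂ) * c ^ n =
            ∑ c ∈ s, (P c).eval ((n + 1 : ℕ) : ℂ) * c ^ (n + 1) -
              c0 * ∑ c ∈ s, (P c).eval (n : ℂ) * c ^ n := by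
          rw [Finset.mul_sum, ← Finset.sum_sub_distrib]
          refine Finset.sum_congr rfl fun c _ => ?_
          rw [eval_sub, eval_mul, eval_mul, eval_C, eval_C, taylor_eval]
          push_cast
          ring
        rw [this, h1, h2, mul_zero, sub_zero])
    have hother : ∀ c ∈ s, c ≠ c0 → P c = 0 := by
      intro c hc hcc
      by_contra hPc
      have h1 := congrArg (fun p => coeff p (P c).natDegree) (key c hc)
      simp only [coeff_sub, coeff_C_mul, coeff_zero] at h1
      have h3 : (taylor 1 (P c)).coeff (P c).natDegree = (P c).leadingCoeff := by
        have := leadingCoeff_taylor (1 : ℂ) (P c)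
        rw [← this, leadingCoeff, natDegree_taylor]
      rw [h3, coeff_natDegree, ← sub_mul] at h1
      rcases mul_eq_zero.1 h1 with h | h
      · exact hcc (sub_eq_zero.1 h)
      · exact hPc (leadingCoeff_eq_zero.1 h)
    have h0 : taylor 1 (P c0) = P c0 := by
      have h1 := key c0 hc0
      rw [← mul_sub] at h1
      rcases mul_eq_zero.1 h1 with h | h
      · exact absurd (C_eq_zero.1 h) (hs c0 hc0)
      · exact sub_eq_zero.1 h
    have hg0 := hz 0 (by omega)
    rw [Finset.sum_eq_single c0 (fun c hc hcc => by rw [hother c hc hcc]; simp)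
      (fun h => absurd hc0 h)] at hg0
    have hall : ∀ n : ℕ, (P c0).eval (n : ℂ) = 0 := by
      intro n
      induction n with
      | zero => simpa using hg0
      | succ n ihn =>
        have := taylor_eval (1 : ℂ) (P c0) n
        rw [h0, ihn] at this
        push_cast
        exact this.symm
    apply hP0
    apply eq_zero_of_infinite_isRoot
    refine Set.infinite_of_injective_forall_mem (f := fun n : ℕ => (n : ℂ)) Nat.cast_injective ?_
    intro n
    exact hall n

end ZeroLemma

/-- The ingredients of the 2-adic argument that are specific to the ring: integral coordinates, a
submultiplicative size controlling them, and a base `1 + 4 w` of modulus greater than one under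
some complex embedding. -/
structure PBData (R : Type) [CommRing R] where
  two_cancel : ∀ x : R, 2 * x = 0 → x = 0
  co : Fin 9 → R →+ ℤ
  co_inj : ∀ x, (∀ i, co i x = 0) → x = 0
  N : R → ℝ
  N_nonneg : ∀ x, 0 ≤ N x
  N_mul : ∀ x y, N (x * y) ≤ N x * N y
  N_pow : ∀ x n, N (x ^ n) ≤ 2 ^ 7 * N x ^ n
  co_le : ∀ i x, |(co i x : ℝ)| ≤ N x
  φ : R →+* ℂ
  w : R
  N_base : N (1 + 4 * w) ≤ 2 ^ 24
  φ_base : 1 < ‖φ (1 + 4 * w)‖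

namespace PBData
variable {R : Type} [CommRing R] (D : PBData R)

lemma co_int_mul (i : Fin 9) (n : ℤ) (x : R) : D.co i ((n : R) * x) = n * D.co i x := by
  rw [← zsmul_eq_mul, map_zsmul, smul_eq_mul]

lemma dvd_co (G : ℕ) (x : R) (h : (2 : R) ^ G ∣ x) (i : Fin 9) : (2 : ℤ) ^ G ∣ D.co i x := by
  obtain ⟨y, rfl⟩ := h
  have := D.co_int_mul i (2 ^ G) y
  push_cast at this
  rw [this]
  exact dvd_mul_right _ _

/-- The exponential polynomial with integral coefficients `p` vanishing at many integers. -/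
lemma coeff_zero (T0 L : ℕ) (p : Fin T0 × Fin L → ℤ)
    (h : ∀ z : ℕ, z < T0 * L →
      ∑ a : Fin T0 × Fin L, ((p a * (z : ℤ) ^ (a.1 : ℕ) : ℤ) : R) * (1 + 4 * D.w) ^ ((a.2 : ℕ) * z) = 0) :
    p = 0 := by
  classical
  set c := D.φ (1 + 4 * D.w) with hc
  have hcn := D.φ_base
  have hc0 : c ≠ 0 := by intro h0; rw [← hc, h0] at hcn; simp at hcn; linarith
  have hinj : Function.Injective (fun l : Fin L => c ^ (l : ℕ)) := by
    intro a b hab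
    have h1 : ‖c‖ ^ (a : ℕ) = ‖c‖ ^ (b : ℕ) := by rw [← norm_pow, ← norm_pow]; exact congrArg _ hab
    exact Fin.ext (pow_right_injective₀ (by linarith) hcn.ne' h1)
  let P : Fin L → Polynomial ℂ := fun l => ∑ t : Fin T0, Polynomial.monomial (t : ℕ) (p (t, l) : ℂ)
  let Pc : ℂ → Polynomial ℂ := fun x => if hx : ∃ l : Fin L, c ^ (l : ℕ) = x then P hx.choose else 0
  have hPc : ∀ l : Fin L, Pc (c ^ (l : ℕ)) = P l := by
    intro l
    have hx : ∃ l' : Fin L, c ^ (l' : ℕ) = c ^ (l : ℕ) := ⟨l, rfl⟩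
    simp only [Pc, dif_pos hx]
    congr 1
    exact hinj hx.choose_spec
  have key := exp_poly_zero (T0 * L) (Finset.univ.image fun l : Fin L => c ^ (l : ℕ))
    (fun _ => T0) Pc (by
      intro x hx
      obtain ⟨l, _, rfl⟩ := Finset.mem_image.1 hx
      exact pow_ne_zero _ hc0)
    (by
      rw [Finset.sum_const, Finset.card_image_of_injective _ hinj, Finset.card_univ, Fintype.card_fin,
        smul_eq_mul, mul_comm])
    (by
      intro x hx
      obtain ⟨l, _, rfl⟩ := Finset.mem_image.1 hx
      rw [hPc]
      refine (Polynomial.degree_sum_le _ _).trans_lt ?_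
      rw [Finset.sup_lt_iff (by exact_mod_cast WithBot.bot_lt_coe _)]
      intro t _
      refine (Polynomial.degree_monomial_le _ _).trans_lt ?_
      exact_mod_cast t.2)
    (by
      intro n hn
      rw [Finset.sum_image (fun a _ b _ hab => hinj hab)]
      have h1 := congrArg D.φ (h n hn)
      rw [map_sum, map_zero, Fintype.sum_prod_type_right] at h1
      rw [← h1]
      refine Finset.sum_congr rfl fun l _ => ?_
      rw [hPc, Polynomial.eval_finsetSum, Finset.sum_mul]
      refine Finset.sum_congr rfl fun t _ => ?_
      rw [map_mul, map_pow, map_intCast D.φ, Polynomial.eval_monomial, ← pow_mul]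
      push_cast
      rfl)
  ext ⟨t, l⟩
  have h1 := key _ (Finset.mem_image.2 ⟨l, Finset.mem_univ _, rfl⟩)
  rw [hPc] at h1
  have h2 := congrArg (fun q => Polynomial.coeff q (t : ℕ)) h1
  simp only [P, Polynomial.finsetSum_coeff, Polynomial.coeff_monomial, Polynomial.coeff_zero] at h2
  rw [Finset.sum_eq_single t (fun b _ hb => by rw [if_neg]; exact fun h => hb (Fin.ext h))
    (by simp)] at h2
  simpa using h2

end PBData

namespace PBData
variable {R : Type} [CommRing R] (D : PBData R)

set_option maxHeartbeats 1000000 in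
/-- The 2-adic estimate: `(1 + 4w)^m θ₂ - θ₁` is not divisible by a high power of two. An auxiliary
exponential polynomial `f(z) = ∑ p z^t (1 + 4w)^{λ z}` is made to vanish (after replacing the base to
the `m` by `θ₁ / θ₂`) on a two-dimensional grid of points `s₁ + s₂ m`, and 2-adic interpolation
doubles the range of `s₁` until `f` has too many zeros. -/
theorem pb (θ1 θ2 η : R) (nn : ℤ) (hη : θ2 * η = nn) (hn0 : nn ≠ 0) (h H r ℓ k m : ℕ)
    (hnn : |nn| ≤ 2 ^ h) (hN1 : D.N θ1 ≤ 2 ^ h) (hN2 : D.N θ2 ≤ 2 ^ h) (hH : h ≤ 2 ^ H)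
    (hr : ℓ + 1 ≤ 2 ^ r) (hℓ : 2 ^ (r + 17) * m ≤ 2 ^ ℓ) (hm : 2 ^ (H + 2 * r + 33) ≤ m)
    (hk : 2 ^ (H + 4 * r + 50) ≤ k)
    (hcong : (2 : R) ^ k ∣ (1 + 4 * D.w) ^ m * θ2 - θ1) : False := by
  classical
  obtain ⟨L, hL⟩ : ∃ L, L = 2 ^ (r + 8) := ⟨_, rfl⟩
  obtain ⟨S2, hS2⟩ : ∃ L, L = 2 ^ (r + 17) := ⟨_, rfl⟩
  obtain ⟨S1, hS1⟩ : ∃ L, L = 2 ^ (H + r + 11) := ⟨_, rfl⟩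
  obtain ⟨T0, hT0⟩ : ∃ L, L = 2 ^ (H + r + 25) := ⟨_, rfl⟩
  obtain ⟨u, hu⟩ : ∃ u, u = H + 2 * r + 33 := ⟨_, rfl⟩
  have hU : T0 * L = 2 ^ u := by rw [hT0, hL, ← pow_add, hu]; congr 1; ring
  have hL1 : 1 ≤ L := hL ▸ Nat.one_le_two_pow
  have hS21 : 1 ≤ S2 := hS2 ▸ Nat.one_le_two_pow
  have hS11 : 1 ≤ S1 := hS1 ▸ Nat.one_le_two_pow
  have hT01 : 1 ≤ T0 := hT0 ▸ Nat.one_le_two_pow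
  have hum : 2 ^ u ≤ m := hu ▸ hm
  obtain ⟨k0, hk0⟩ : ∃ k0, k0 = 2 ^ (H + 4 * r + 50) := ⟨_, rfl⟩
  rw [← hk0] at hk
  rw [← hS2] at hℓ
  clear hm
  -- the numerical inequality driving the extrapolation
  have hstep : ∀ S, S1 ≤ S → 2 * u + 2 * (ℓ * T0) + 42 + 72 * (L * S) + 2 * (h * (L * S2)) + 1 + T0
      ≤ S * S2 := by
    intro S hS
    have q1 : 72 * (L * S) * 4 ≤ S * S2 := by
      have : L * 512 = S2 := by rw [hL, hS2, pow_add, pow_add]; ring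
      have e : S * (L * 512) = 512 * (L * S) := by ring
      rw [← this, e]; omega
    have q2 : 2 * (h * (L * S2)) * 4 ≤ S * S2 := by
      have h1 : 8 * (2 ^ H * L) = S1 := by rw [hL, hS1, ← pow_add, show H + r + 11 = H + (r + 8) + 3 by ring, pow_add _ _ 3]; ring
      calc 2 * (h * (L * S2)) * 4 = (8 * (h * L)) * S2 := by ring
        _ ≤ (8 * (2 ^ H * L)) * S2 := by gcongr
        _ ≤ S * S2 := by rw [h1]; gcongr
    have hSS : 2 ^ (H + 2 * r + 28) ≤ S * S2 := by
      calc 2 ^ (H + 2 * r + 28) = S1 * S2 := by rw [hS1, hS2, ← pow_add]; congr 1; ring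
        _ ≤ _ := by gcongr
    have q3 : (2 * (ℓ * T0) + T0) * 4 ≤ S * S2 := by
      have h1 : (2 * (ℓ * T0) + T0) ≤ 2 * (2 ^ r * T0) := by
        have e : (ℓ + 1) * T0 ≤ 2 ^ r * T0 := Nat.mul_le_mul_right _ hr
        rw [add_mul, one_mul] at e
        omega
      have h2 : 2 * (2 ^ r * T0) * 4 = 2 ^ (H + 2 * r + 28) := by
        rw [hT0, ← pow_add, show H + 2 * r + 28 = r + (H + r + 25) + 3 by ring, pow_add _ _ 3]; ring
      omega
    have q4 : (2 * u + 43) * 4 ≤ S * S2 := by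
      have h1 : H + 2 * r < 2 ^ (H + 2 * r) := Nat.lt_two_pow_self
      have h2 : 2 ^ (H + 2 * r + 28) = 2 ^ (H + 2 * r) * 2 ^ 28 := pow_add _ _ _
      rw [h2] at hSS
      generalize 2 ^ (H + 2 * r) = x at *
      omega
    omega
  -- basic monomials
  let E : Fin T0 × Fin L → ℕ → ℕ → R := fun a s1 s2 =>
    (1 + 4 * D.w) ^ ((a.2 : ℕ) * s1) * (θ1 ^ ((a.2 : ℕ) * s2) * θ2 ^ ((L - a.2) * s2))
  have hE : ∀ a s1 s2, D.N (E a s1 s2) ≤ 2 ^ (21 + 24 * (L * s1) + h * (L * s2)) := by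
    intro a s1 s2
    have ha := a.2.2
    have b1 : D.N ((1 + 4 * D.w) ^ ((a.2 : ℕ) * s1)) ≤ 2 ^ 7 * 2 ^ (24 * (L * s1)) := by
      refine (D.N_pow _ _).trans ?_
      gcongr
      calc D.N (1 + 4 * D.w) ^ ((a.2 : ℕ) * s1) ≤ (2 ^ 24) ^ ((a.2 : ℕ) * s1) :=
            pow_le_pow_left₀ (D.N_nonneg _) D.N_base _
        _ ≤ 2 ^ (24 * (L * s1)) := by
            rw [← pow_mul]
            exact pow_le_pow_right₀ (by norm_num) (by gcongr)
    have b2 : D.N (θ1 ^ ((a.2 : ℕ) * s2)) ≤ 2 ^ 7 * 2 ^ (h * ((a.2 : ℕ) * s2)) := by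
      refine (D.N_pow _ _).trans ?_
      rw [pow_mul 2 h]
      gcongr
      exact D.N_nonneg _
    have b3 : D.N (θ2 ^ ((L - (a.2 : ℕ)) * s2)) ≤ 2 ^ 7 * 2 ^ (h * ((L - (a.2 : ℕ)) * s2)) := by
      refine (D.N_pow _ _).trans ?_
      rw [pow_mul 2 h]
      gcongr
      exact D.N_nonneg _
    have hsum : h * ((a.2 : ℕ) * s2) + h * ((L - (a.2 : ℕ)) * s2) = h * (L * s2) := by
      rw [← mul_add, ← add_mul, Nat.add_sub_cancel' ha.le]
    calc D.N (E a s1 s2) ≤ (2 ^ 7 * 2 ^ (24 * (L * s1))) * ((2 ^ 7 * 2 ^ (h * ((a.2 : ℕ) * s2))) *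
          (2 ^ 7 * 2 ^ (h * ((L - (a.2 : ℕ)) * s2)))) := by
          refine (D.N_mul _ _).trans (mul_le_mul b1 ((D.N_mul _ _).trans
            (mul_le_mul b2 b3 (D.N_nonneg _) (by positivity))) (D.N_nonneg _) (by positivity))
      _ = 2 ^ (7 + 24 * (L * s1) + (7 + h * ((a.2 : ℕ) * s2) + (7 + h * ((L - (a.2 : ℕ)) * s2)))) := by
          simp only [pow_add]
      _ = _ := by rw [← hsum]; congr 1; ring
  let F : (Fin T0 × Fin L → ℤ) → ℕ → ℕ → R := fun p s1 s2 =>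
    ∑ a, ((p a * ((s1 + s2 * m : ℕ) : ℤ) ^ (a.1 : ℕ) : ℤ) : R) * E a s1 s2
  let f : (Fin T0 × Fin L → ℤ) → ℕ → R := fun p z =>
    ∑ a, ((p a * (z : ℤ) ^ (a.1 : ℕ) : ℤ) : R) * (1 + 4 * D.w) ^ ((a.2 : ℕ) * z)
  have hFf : ∀ p s1 s2, (2 : R) ^ k ∣ θ2 ^ (L * s2) * f p (s1 + s2 * m) - F p s1 s2 := by
    intro p s1 s2
    simp only [F, f]
    rw [Finset.mul_sum, ← Finset.sum_sub_distrib]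
    refine Finset.dvd_sum fun a _ => ?_
    have ha := a.2.2
    have h1 : θ2 ^ (L * s2) * (((p a * ((s1 + s2 * m : ℕ) : ℤ) ^ (a.1 : ℕ) : ℤ) : R) *
        (1 + 4 * D.w) ^ ((a.2 : ℕ) * (s1 + s2 * m))) -
        ((p a * ((s1 + s2 * m : ℕ) : ℤ) ^ (a.1 : ℕ) : ℤ) : R) * E a s1 s2 =
        (((p a * ((s1 + s2 * m : ℕ) : ℤ) ^ (a.1 : ℕ) : ℤ) : R) *
          (1 + 4 * D.w) ^ ((a.2 : ℕ) * s1) * θ2 ^ ((L - (a.2 : ℕ)) * s2)) *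
        (((1 + 4 * D.w) ^ m * θ2) ^ ((a.2 : ℕ) * s2) - θ1 ^ ((a.2 : ℕ) * s2)) := by
      have e1 : L * s2 = (L - (a.2 : ℕ)) * s2 + (a.2 : ℕ) * s2 := by
        rw [← add_mul, Nat.sub_add_cancel ha.le]
      have e2 : (a.2 : ℕ) * (s1 + s2 * m) = (a.2 : ℕ) * s1 + m * ((a.2 : ℕ) * s2) := by ring
      simp only [E]
      rw [e1, e2, pow_add θ2, pow_add (1 + 4 * D.w), mul_pow, ← pow_mul (1 + 4 * D.w) m]
      ring
    rw [h1]
    exact (hcong.trans (sub_dvd_pow_sub_pow _ _ _)).mul_left _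
  have hzl : ∀ s1 s2, s1 < 2 ^ u → s2 < S2 → s1 + s2 * m < 2 ^ ℓ := by
    intro s1 s2 h1 h2
    have : (s2 + 1) * m ≤ S2 * m := Nat.mul_le_mul_right _ h2
    rw [add_mul, one_mul] at this
    omega
  have hzp : ∀ s1 s2 t : ℕ, s1 < 2 ^ u → s2 < S2 → t < T0 →
      |((s1 : ℝ) + s2 * m) ^ t| ≤ (2 : ℝ) ^ (ℓ * T0) := by
    intro s1 s2 t h1 h2 ht
    have h3 : ((s1 + s2 * m : ℕ) : ℝ) ≤ 2 ^ ℓ := by exact_mod_cast (hzl s1 s2 h1 h2).le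
    push_cast at h3
    have h7 : (0 : ℝ) ≤ (s1 : ℝ) + s2 * m :=
      add_nonneg (Nat.cast_nonneg _) (mul_nonneg (Nat.cast_nonneg _) (Nat.cast_nonneg _))
    have h6 : (0 : ℝ) ≤ ((s1 : ℝ) + s2 * m) ^ t := pow_nonneg h7 _
    rw [abs_of_nonneg h6, pow_mul (2 : ℝ) ℓ T0]
    have h4 : ((s1 : ℝ) + s2 * m) ^ t ≤ ((2 : ℝ) ^ ℓ) ^ t := pow_le_pow_left₀ h7 h3 t
    have h5 : (1 : ℝ) ≤ 2 ^ ℓ := one_le_pow₀ (by norm_num)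
    exact h4.trans (pow_le_pow_right₀ h5 ht.le)
  have hS1u : S1 ≤ 2 ^ u := by
    rw [hS1, hu]; exact Nat.pow_le_pow_right (by norm_num) (by omega)
  -- the auxiliary coefficients
  obtain ⟨y0, hy0⟩ : ∃ y, y = ℓ * T0 + (21 + 24 * (L * S1) + h * (L * S2)) := ⟨_, rfl⟩
  obtain ⟨p, hp0, hpz, hpb⟩ := siegel (α := (Fin S1 × Fin S2) × Fin 9) (β := Fin T0 × Fin L)
    (fun i a => (((i.1.1 : ℕ) + (i.1.2 : ℕ) * m : ℕ) : ℤ) ^ (a.1 : ℕ) *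
      D.co i.2 (E a i.1.1 i.1.2)) (2 ^ y0) (one_le_pow₀ (by norm_num))
    (by
      intro i a
      push_cast
      rw [abs_mul, hy0, pow_add 2 (ℓ * T0)]
      refine mul_le_mul (hzp _ _ _ (i.1.1.2.trans_le hS1u) i.1.2.2 a.1.2) ?_ (abs_nonneg _)
        (by positivity)
      · refine (D.co_le _ _).trans ((hE _ _ _).trans ?_)
        apply pow_le_pow_right₀ (by norm_num)
        have := i.1.1.2.le
        have := i.1.2.2.le
        gcongr)
    (by
      simp only [Fintype.card_prod, Fintype.card_fin]
      rw [hU]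
      calc 2 * (S1 * S2 * 9) ≤ S1 * S2 * 2 ^ 5 := by omega
        _ = 2 ^ u := by rw [hS1, hS2, ← pow_add, ← pow_add, hu]; congr 1; ring)
    (by simp only [Fintype.card_prod, Fintype.card_fin]; exact Nat.mul_pos hT01 hL1)
  simp only [Fintype.card_prod, Fintype.card_fin] at hpb
  rw [hU] at hpb
  have hpb' : ∀ a, |(p a : ℝ)| ≤ 2 ^ (u + y0) := by
    intro a
    rw [pow_add]
    refine (hpb a).trans (le_of_eq ?_)
    push_cast; rfl
  have hcoF : ∀ i s1 s2, D.co i (F p s1 s2) =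
      ∑ a, p a * ((s1 + s2 * m : ℕ) : ℤ) ^ (a.1 : ℕ) * D.co i (E a s1 s2) := by
    intro i s1 s2
    simp only [F]
    rw [map_sum]
    exact Finset.sum_congr rfl fun a _ => D.co_int_mul _ _ _
  have hmain : ∀ j, j ≤ r + 22 → ∀ s1 s2, s1 < S1 * 2 ^ j → s2 < S2 → F p s1 s2 = 0 := by
    intro j
    induction j with
    | zero =>
      intro _ s1 s2 h1 h2
      apply D.co_inj
      intro i
      rw [hcoF]
      have := hpz ((⟨s1, by simpa using h1⟩, ⟨s2, h2⟩), i)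
      rw [← this]
      exact Finset.sum_congr rfl fun a _ => by ring
    | succ j ih =>
      intro hj s1 s2 h1 h2
      have ih' := ih (by omega)
      obtain ⟨S, hS⟩ : ∃ S, S = S1 * 2 ^ j := ⟨_, rfl⟩
      have hS1S : S1 ≤ S := by rw [hS]; exact Nat.le_mul_of_pos_right _ (by positivity)
      have hSu : 2 * S ≤ 2 ^ u := by
        rw [hS, hS1, ← pow_add, ← pow_succ']
        exact Nat.pow_le_pow_right (by norm_num) (by omega)
      rw [← hS] at ih'
      have h1' : s1 < 2 * S := by rw [hS]; rw [pow_succ] at h1; linarith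
      have hst := hstep S hS1S
      obtain ⟨G, hG⟩ : ∃ G, G = S * S2 - T0 := ⟨_, rfl⟩
      have hG' : G + T0 = S * S2 := by omega
      obtain ⟨K, hK⟩ : ∃ K, K = S * S2 * ℓ + G := ⟨_, rfl⟩
      have hKk : K + h * (L * S2) ≤ k := by
        refine le_trans ?_ hk
        rw [hk0]
        have h3 : S * S2 * (ℓ + 1) ≤ 2 ^ (H + 4 * r + 49) := by
          calc S * S2 * (ℓ + 1) ≤ 2 ^ (H + 2 * r + 32) * 2 ^ (r + 17) * 2 ^ r := by
                rw [hS2]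
                gcongr
                rw [hu, show H + 2 * r + 33 = (H + 2 * r + 32) + 1 by ring, pow_succ] at hSu
                omega
            _ = _ := by rw [← pow_add, ← pow_add]; congr 1; ring
        have h4 : h * (L * S2) ≤ S * S2 := by omega
        have h5 : S * S2 ≤ 2 ^ (H + 4 * r + 49) := le_trans (Nat.le_mul_of_pos_right _ (by omega)) h3
        have h6 : 2 ^ (H + 4 * r + 50) = 2 * 2 ^ (H + 4 * r + 49) := by rw [← pow_succ']
        have h7 : K ≤ S * S2 * (ℓ + 1) := by rw [hK, mul_add, mul_one]; omega
        generalize 2 ^ (H + 4 * r + 50) = x1 at *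
        generalize 2 ^ (H + 4 * r + 49) = x2 at *
        omega
      have hGK : G ≤ K := by omega
      -- `f` is 2-adically small at the nodes
      have hfsmall : ∀ s1 s2, s1 < S → s2 < S2 → (2 : R) ^ K ∣ f p (s1 + s2 * m) := by
        intro s1 s2 h1 h2
        have h3 := hFf p s1 s2
        rw [ih' s1 s2 h1 h2, sub_zero] at h3
        have h4 : (2 : R) ^ k ∣ ((nn ^ (L * s2) : ℤ) : R) * f p (s1 + s2 * m) := by
          push_cast
          rw [← hη, mul_pow, mul_comm (θ2 ^ _), mul_assoc]
          exact h3.mul_left _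
        have h5 := cancel_two_pow D.two_cancel (nn ^ (L * s2)) (h * (L * S2)) (by
          intro hd
          have h6 := Int.le_of_dvd (abs_pos.2 (pow_ne_zero _ hn0)) ((dvd_abs _ _).2 hd)
          rw [abs_pow] at h6
          have h7 : |nn| ^ (L * s2) ≤ 2 ^ (h * (L * S2)) := by
            calc |nn| ^ (L * s2) ≤ (2 ^ h) ^ (L * s2) := pow_le_pow_left₀ (abs_nonneg _) hnn _
              _ ≤ (2 ^ h) ^ (L * S2) := pow_le_pow_right₀ (one_le_pow₀ (by norm_num)) (by gcongr)
              _ = _ := by rw [← pow_mul]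
          have h8 : (2 : ℤ) ^ (h * (L * S2)) < 2 ^ (h * (L * S2) + 1) :=
            pow_lt_pow_right₀ (by norm_num) (by omega)
          linarith) k _ h4
        exact (pow_dvd_pow 2 (by omega)).trans h5
      obtain ⟨O, hO, hQ⟩ := exp_approx D.w K
      choose Q hQc hQe using hQ
      let QQ : Polynomial R := ∑ a : Fin T0 × Fin L,
        Polynomial.C (p a : R) * Polynomial.X ^ (a.1 : ℕ) * Q a.2
      have hQQ : ∀ z : ℕ, (2 : R) ^ K ∣ (O : R) * f p z - QQ.eval (z : R) := by
        intro z
        simp only [f, QQ]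
        rw [Polynomial.eval_finsetSum, Finset.mul_sum, ← Finset.sum_sub_distrib]
        refine Finset.dvd_sum fun a _ => ?_
        have : (O : R) * (((p a * (z : ℤ) ^ (a.1 : ℕ) : ℤ) : R) * (1 + 4 * D.w) ^ ((a.2 : ℕ) * z)) -
            (Polynomial.C (p a : R) * Polynomial.X ^ (a.1 : ℕ) * Q a.2).eval (z : R) =
            ((p a : R) * (z : R) ^ (a.1 : ℕ)) *
              ((O : R) * (1 + 4 * D.w) ^ ((a.2 : ℕ) * z) - (Q a.2).eval (z : R)) := by
          rw [Polynomial.eval_mul, Polynomial.eval_mul, Polynomial.eval_C, Polynomial.eval_pow,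
            Polynomial.eval_X]
          push_cast
          ring
        rw [this]
        exact (hQe _ _).mul_left _
      have hext := poly_extrap D.two_cancel ℓ T0 G (S * S2) 0 K QQ
        ((Finset.range S ×ˢ Finset.range S2).image fun s => ((s.1 + s.2 * m : ℕ) : ℤ))
        (by
          rw [Finset.card_image_of_injOn]
          · simp
          · intro x hx y hy hxy
            simp only [Finset.coe_product, Finset.coe_range, Set.mem_prod, Set.mem_Iio] at hx hy
            have hxy' : x.1 + x.2 * m = y.1 + y.2 * m := Int.ofNat.inj hxy
            have hm0 : 0 < m := lt_of_lt_of_le (by positivity) hum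
            have hxm : x.1 < m := by omega
            have hym : y.1 < m := by omega
            have e1 : x.1 = y.1 := by
              have := congrArg (· % m) hxy'
              simpa [Nat.add_mul_mod_self_right, Nat.mod_eq_of_lt hxm, Nat.mod_eq_of_lt hym] using this
            have e2 : x.2 = y.2 := by
              rw [e1] at hxy'
              exact Nat.eq_of_mul_eq_mul_right hm0 (by omega)
            exact Prod.ext e1 e2)
        (by
          intro a ha b hb hab hd
          obtain ⟨x, hx, rfl⟩ := Finset.mem_image.1 ha
          obtain ⟨y, hy, rfl⟩ := Finset.mem_image.1 hb
          simp only [Finset.mem_product, Finset.mem_range] at hx hy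
          have h3 := hzl x.1 x.2 (by omega) hx.2
          have h4 := hzl y.1 y.2 (by omega) hy.2
          have h5 := Int.le_of_dvd (abs_pos.2 (sub_ne_zero.2 hab)) ((dvd_abs _ _).2 hd)
          have h6 : ((x.1 + x.2 * m : ℕ) : ℤ) < 2 ^ ℓ := by exact_mod_cast h3
          have h7 : ((y.1 + y.2 * m : ℕ) : ℤ) < 2 ^ ℓ := by exact_mod_cast h4
          rw [pow_succ] at h5
          have h8 : |((x.1 + x.2 * m : ℕ) : ℤ) - ((y.1 + y.2 * m : ℕ) : ℤ)| < 2 ^ ℓ := by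
            rw [abs_lt]; constructor <;> linarith [Int.natCast_nonneg (x.1 + x.2 * m), Int.natCast_nonneg (y.1 + y.2 * m)]
          linarith [abs_nonneg (((x.1 + x.2 * m : ℕ) : ℤ) - ((y.1 + y.2 * m : ℕ) : ℤ))])
        (by
          intro n
          simp only [QQ]
          rw [Polynomial.finsetSum_coeff]
          refine Finset.dvd_sum fun a _ => ?_
          rw [mul_assoc, Polynomial.coeff_C_mul, Polynomial.coeff_X_pow_mul']
          apply Dvd.dvd.mul_left
          split_ifs with hle
          · have := a.1.2
            exact (pow_dvd_pow 2 (by omega)).trans (hQc _ _)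
          · exact dvd_zero _)
        (by
          intro a ha
          obtain ⟨x, hx, rfl⟩ := Finset.mem_image.1 ha
          simp only [Finset.mem_product, Finset.mem_range] at hx
          have h3 := hQQ (x.1 + x.2 * m)
          have h4 := (hfsmall x.1 x.2 hx.1 hx.2).mul_left (O : R)
          have h5 := dvd_sub h4 h3
          rw [sub_sub_cancel] at h5
          rw [Int.cast_natCast]
          exact h5)
        (by omega) (by omega)
      -- `f` is therefore small at the new point
      have hfG : (2 : R) ^ G ∣ f p (s1 + s2 * m) := by
        have h3 := (pow_dvd_pow (2 : R) hGK).trans (hQQ (s1 + s2 * m))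
        have h4 := dvd_add h3 (hext ((s1 + s2 * m : ℕ) : R))
        rw [sub_add_cancel] at h4
        have h5 := cancel_two_pow D.two_cancel O 0 (by simpa using hO) G _ h4
        simpa using h5
      have hFG : (2 : R) ^ G ∣ F p s1 s2 := by
        have h3 := (pow_dvd_pow (2 : R) (by omega : G ≤ k)).trans (hFf p s1 s2)
        have h4 := dvd_sub (hfG.mul_left (θ2 ^ (L * s2))) h3
        rwa [sub_sub_cancel] at h4
      apply D.co_inj
      intro i
      have hd := D.dvd_co G _ hFG i
      by_contra hne
      have h5 := Int.le_of_dvd (abs_pos.2 hne) ((dvd_abs _ _).2 hd)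
      have h6 : ((2 : ℝ) ^ G) ≤ |(D.co i (F p s1 s2) : ℝ)| := by exact_mod_cast h5
      have h7 : |(D.co i (F p s1 s2) : ℝ)| ≤
          2 ^ u * (2 ^ (u + y0) * 2 ^ (ℓ * T0) * 2 ^ (21 + 24 * (L * (2 * S)) + h * (L * S2))) := by
        rw [hcoF]
        push_cast
        refine (Finset.abs_sum_le_sum_abs _ _).trans ?_
        have hc : ((2 : ℝ) ^ u) = (Finset.univ : Finset (Fin T0 × Fin L)).card := by
          rw [Finset.card_univ, Fintype.card_prod, Fintype.card_fin, Fintype.card_fin, hU]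
          push_cast; rfl
        rw [hc]
        refine (Finset.sum_le_card_nsmul _ _ _ fun a _ => ?_).trans_eq (nsmul_eq_mul _ _)
        rw [abs_mul, abs_mul]
        refine mul_le_mul (mul_le_mul (hpb' a) (hzp _ _ _ (by omega) h2 a.1.2) (abs_nonneg _)
          (by positivity)) ?_ (abs_nonneg _) (by positivity)
        · refine (D.co_le _ _).trans ((hE _ _ _).trans ?_)
          apply pow_le_pow_right₀ (by norm_num)
          gcongr
      rw [← pow_add, ← pow_add, ← pow_add] at h7
      have h8 := h6.trans h7
      rw [pow_le_pow_iff_right₀ (by norm_num : (1 : ℝ) < 2)] at h8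
      have h9 : L * S1 ≤ L * S := by gcongr
      have h10 : L * (2 * S) = 2 * (L * S) := by ring
      rw [h10] at h8
      omega
  apply hp0
  apply D.coeff_zero T0 L p
  intro z hz
  have h1 := hmain (r + 22) le_rfl z 0 (by
    rw [hS1, ← pow_add]
    rw [hU, hu] at hz
    refine hz.trans_le (Nat.pow_le_pow_right (by norm_num) (by omega))) hS21
  simpa [F, E] using h1

end PBData

namespace Cub

variable {S : Type} [CommRing S]

lemma int_dvd_iff (n : ℕ) (z : Cub S) :
    (2 : Cub S) ^ n ∣ z ↔ 2 ^ n ∣ z.c0 ∧ 2 ^ n ∣ z.c1 ∧ 2 ^ n ∣ z.c2 := by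
  have h2 : ((2 : Cub S) ^ n) = C (2 ^ n) := by rw [map_pow, map_ofNat]
  rw [h2]
  constructor
  · rintro ⟨y, rfl⟩
    refine ⟨⟨y.c0, by simp [-map_pow]⟩, ⟨y.c1, by simp [-map_pow]⟩, ⟨y.c2, by simp [-map_pow]⟩⟩
  · rintro ⟨⟨a, ha⟩, ⟨b, hb⟩, ⟨c, hc⟩⟩
    refine ⟨⟨a, b, c⟩, ?_⟩
    ext <;> simp [ha, hb, hc, -map_pow]

lemma X_pow_eight : (X : Cub S) ^ 8 = 1 + 4 * (X ^ 6 - X ^ 3) := by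
  ext <;> simp [pow_succ, X] <;> norm_num

lemma Y_pow_eight : (Y : Cub S) ^ 8 = 1 + 4 * (-(X ^ 6 - X ^ 3) * Y ^ 8) := by
  have h : (X : Cub S) ^ 8 * Y ^ 8 = 1 := by rw [← mul_pow, X_mul_Y, one_pow]
  rw [X_pow_eight] at h
  linear_combination h

/-- The size on `ℤ[α] ⊗ ℤ[α]`, the outer copy of `α` being a root over the inner ring. -/
noncomputable def sz2 (z : Cub (Cub ℤ)) : ℝ := 9 * (sz z.c0 + sz z.c1 + sz z.c2)

lemma sz_two_mul (z : Cub ℤ) : sz (2 * z) ≤ 2 * sz z := by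
  rw [two_mul, two_mul]; exact sz_add _ _

lemma sz2_mul (z w : Cub (Cub ℤ)) : sz2 (z * w) ≤ sz2 z * sz2 w := by
  unfold sz2
  simp only [mul_c0, mul_c1, mul_c2]
  generalize z.c0 = a
  generalize z.c1 = b
  generalize z.c2 = c
  generalize w.c0 = d
  generalize w.c1 = e
  generalize w.c2 = f
  have h0 : sz (a * d + (b * f + c * e) + c * f) ≤
      sz a * sz d + sz b * sz f + sz c * sz e + sz c * sz f := by
    linarith [sz_add (a * d + (b * f + c * e)) (c * f), sz_add (a * d) (b * f + c * e),
      sz_add (b * f) (c * e), sz_mul a d, sz_mul b f, sz_mul c e, sz_mul c f]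
  have h1 : sz (a * e + b * d + (b * f + c * e) + 2 * (c * f)) ≤
      sz a * sz e + sz b * sz d + sz b * sz f + sz c * sz e + 2 * (sz c * sz f) := by
    linarith [sz_add (a * e + b * d + (b * f + c * e)) (2 * (c * f)), sz_two_mul (c * f),
      sz_add (a * e + b * d) (b * f + c * e), sz_add (a * e) (b * d),
      sz_add (b * f) (c * e), sz_mul a e, sz_mul b d, sz_mul b f, sz_mul c e, sz_mul c f]
  have h2 : sz (a * f + b * e + c * d + (b * f + c * e) + 2 * (c * f)) ≤
      sz a * sz f + sz b * sz e + sz c * sz d + sz b * sz f + sz c * sz e + 2 * (sz c * sz f) := by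
    linarith [sz_add (a * f + b * e + c * d + (b * f + c * e)) (2 * (c * f)), sz_two_mul (c * f),
      sz_add (a * f + b * e + c * d) (b * f + c * e), sz_add (a * f + b * e) (c * d),
      sz_add (a * f) (b * e),
      sz_add (b * f) (c * e), sz_mul a f, sz_mul b e, sz_mul c d, sz_mul b f, sz_mul c e, sz_mul c f]
  have hp : ∀ x y : Cub ℤ, 0 ≤ sz x * sz y := fun x y => mul_nonneg (sz_nonneg _) (sz_nonneg _)
  nlinarith [hp a d, hp a e, hp a f, hp b d, hp b e, hp b f, hp c d, hp c e, hp c f]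

lemma sz2_nonneg (z : Cub (Cub ℤ)) : 0 ≤ sz2 z := by
  unfold sz2; linarith [sz_nonneg z.c0, sz_nonneg z.c1, sz_nonneg z.c2]

lemma sz2_C (z : Cub ℤ) : sz2 (C z) = 9 * sz z := by simp [sz2, sz_zero]

lemma sz2_pow (z : Cub (Cub ℤ)) (n : ℕ) : sz2 (z ^ n) ≤ 2 ^ 7 * sz2 z ^ n := by
  induction n with
  | zero => simp [sz2, sz_one, sz_zero]; norm_num
  | succ n ih =>
    rw [pow_succ z, pow_succ (sz2 z), ← mul_assoc]
    exact (sz2_mul _ _).trans (mul_le_mul_of_nonneg_right ih (sz2_nonneg z))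

/-- The embedding of `ℤ[α]` as the outer copy. -/
def emb : Cub ℤ →+* Cub (Cub ℤ) := ev (Int.castRingHom _) X X_cube

lemma emb_eq (z : Cub ℤ) : emb z = ⟨C z.c0, C z.c1, C z.c2⟩ := by
  rw [emb, ev_apply]
  ext <;> simp [pow_succ]

lemma emb_X : emb X = X := by
  rw [emb_eq]; ext <;> simp

lemma abs_c0_le (z : Cub ℤ) : |(z.c0 : ℝ)| ≤ sz z := by
  unfold sz; linarith [abs_nonneg (z.c0 : ℝ), abs_nonneg (z.c1 : ℝ), abs_nonneg (z.c2 : ℝ)]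
lemma abs_c1_le (z : Cub ℤ) : |(z.c1 : ℝ)| ≤ sz z := by
  unfold sz; linarith [abs_nonneg (z.c0 : ℝ), abs_nonneg (z.c1 : ℝ), abs_nonneg (z.c2 : ℝ)]
lemma abs_c2_le (z : Cub ℤ) : |(z.c2 : ℝ)| ≤ sz z := by
  unfold sz; linarith [abs_nonneg (z.c0 : ℝ), abs_nonneg (z.c1 : ℝ), abs_nonneg (z.c2 : ℝ)]

lemma sz_c0_le (z : Cub (Cub ℤ)) : sz z.c0 ≤ sz2 z := by
  unfold sz2; linarith [sz_nonneg z.c0, sz_nonneg z.c1, sz_nonneg z.c2]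
lemma sz_c1_le (z : Cub (Cub ℤ)) : sz z.c1 ≤ sz2 z := by
  unfold sz2; linarith [sz_nonneg z.c0, sz_nonneg z.c1, sz_nonneg z.c2]
lemma sz_c2_le (z : Cub (Cub ℤ)) : sz z.c2 ≤ sz2 z := by
  unfold sz2; linarith [sz_nonneg z.c0, sz_nonneg z.c1, sz_nonneg z.c2]

/-- The nine integral coordinates. -/
def co9 : Fin 9 → Cub (Cub ℤ) →+ ℤ := ![
  ⟨⟨fun z => z.c0.c0, rfl⟩, fun _ _ => rfl⟩, ⟨⟨fun z => z.c0.c1, rfl⟩, fun _ _ => rfl⟩,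
  ⟨⟨fun z => z.c0.c2, rfl⟩, fun _ _ => rfl⟩, ⟨⟨fun z => z.c1.c0, rfl⟩, fun _ _ => rfl⟩,
  ⟨⟨fun z => z.c1.c1, rfl⟩, fun _ _ => rfl⟩, ⟨⟨fun z => z.c1.c2, rfl⟩, fun _ _ => rfl⟩,
  ⟨⟨fun z => z.c2.c0, rfl⟩, fun _ _ => rfl⟩, ⟨⟨fun z => z.c2.c1, rfl⟩, fun _ _ => rfl⟩,
  ⟨⟨fun z => z.c2.c2, rfl⟩, fun _ _ => rfl⟩]

/-- The base `(α₁ / α₂) ^ 8 = 1 + 4 w`. -/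
def pw : Cub (Cub ℤ) :=
  (X ^ 6 - X ^ 3) + C (-(X ^ 6 - X ^ 3) * Y ^ 8) + 4 * ((X ^ 6 - X ^ 3) * C (-(X ^ 6 - X ^ 3) * Y ^ 8))

lemma pw_eq : 1 + 4 * pw = X ^ 8 * (C Y) ^ 8 := by
  have h : (C (Y : Cub ℤ)) ^ 8 = 1 + 4 * C (-(X ^ 6 - X ^ 3) * Y ^ 8) := by
    rw [← map_pow, Y_pow_eight, map_add, map_one, map_mul]
    congr 2
  rw [h, X_pow_eight, pw]
  ring

end Cub

/-- The complex place of `ℤ[α] ⊗ ℤ[α]` sending the outer `α` to `α` and the inner one to `β`. -/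
noncomputable def eab : Cub (Cub ℤ) →+* ℂ :=
  Cub.ev eb (al : ℂ) (by exact_mod_cast congrArg (fun x : ℝ => (x : ℂ)) al_cube)

lemma eab_base : 1 < ‖eab (1 + 4 * Cub.pw)‖ := by
  have hX : eab Cub.X = al := by simp [eab, Cub.ev_apply]
  have hC : eab (Cub.C Cub.Y) = eb Cub.Y := by simp [eab, Cub.ev_apply]
  rw [Cub.pw_eq, map_mul, map_pow, map_pow, hX, hC, norm_mul, norm_pow, norm_pow, ← mul_pow]
  apply one_lt_pow₀ _ (by norm_num)
  have h1 : be * eb Cub.Y = 1 := by rw [← eb_X, ← map_mul, Cub.X_mul_Y, map_one]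
  have h2 : ‖be‖ * ‖eb Cub.Y‖ = 1 := by rw [← norm_mul, h1, norm_one]
  have h3 : ‖be‖ < 1 := by
    have := normSq_be
    rw [Complex.normSq_eq_norm_sq] at this
    have h4 : 1 / al < 1 := by rw [div_lt_one al_pos]; exact one_lt_al
    nlinarith [norm_nonneg be]
  have h5 : 1 < ‖eb Cub.Y‖ := by nlinarith [norm_nonneg be, norm_nonneg (eb Cub.Y)]
  have h6 : ‖(al : ℂ)‖ = al := by rw [Complex.norm_real, Real.norm_of_nonneg al_pos.le]
  rw [h6]
  nlinarith [one_lt_al]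

lemma cub_two_cancel (S : Type) [CommRing S] (h : ∀ x : S, 2 * x = 0 → x = 0) (x : Cub S)
    (hx : 2 * x = 0) : x = 0 := by
  rw [two_mul] at hx
  ext
  · exact h _ (by rw [two_mul]; exact congrArg Cub.c0 hx)
  · exact h _ (by rw [two_mul]; exact congrArg Cub.c1 hx)
  · exact h _ (by rw [two_mul]; exact congrArg Cub.c2 hx)

/-- The 2-adic data of `ℤ[α] ⊗ ℤ[α]`. -/
noncomputable def pbData : PBData (Cub (Cub ℤ)) where
  two_cancel := cub_two_cancel _ (cub_two_cancel _ (fun x hx => by omega))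
  co := Cub.co9
  co_inj := by
    intro x h
    ext
    exacts [h 0, h 1, h 2, h 3, h 4, h 5, h 6, h 7, h 8]
  N := Cub.sz2
  N_nonneg := Cub.sz2_nonneg
  N_mul := Cub.sz2_mul
  N_pow := Cub.sz2_pow
  co_le := by
    intro i x
    have h0 := Cub.sz_c0_le x
    have h1 := Cub.sz_c1_le x
    have h2 := Cub.sz_c2_le x
    fin_cases i
    · exact (Cub.abs_c0_le x.c0).trans h0
    · exact (Cub.abs_c1_le x.c0).trans h0
    · exact (Cub.abs_c2_le x.c0).trans h0
    · exact (Cub.abs_c0_le x.c1).trans h1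
    · exact (Cub.abs_c1_le x.c1).trans h1
    · exact (Cub.abs_c2_le x.c1).trans h1
    · exact (Cub.abs_c0_le x.c2).trans h2
    · exact (Cub.abs_c1_le x.c2).trans h2
    · exact (Cub.abs_c2_le x.c2).trans h2
  φ := eab
  w := Cub.pw
  N_base := by
    rw [Cub.pw_eq]
    refine (Cub.sz2_mul _ _).trans ?_
    have h1 : (Cub.X : Cub (Cub ℤ)) ^ 8 = Cub.emb (Cub.X ^ 8) := by rw [map_pow, Cub.emb_X]
    have h2 : (Cub.X : Cub ℤ) ^ 8 = ⟨13, 20, 24⟩ := by ext <;> rfl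
    have h3 : (Cub.Y : Cub ℤ) ^ 8 = ⟨5, 12, -8⟩ := by ext <;> rfl
    rw [h1, ← map_pow, h2, h3, Cub.sz2_C, Cub.emb_eq, Cub.sz2]
    simp only [Cub.sz_C]
    norm_num [Cub.sz]
  φ_base := eab_base

lemma pb_coord (P θ : Cub ℤ) : Cub.emb P * Cub.C θ - Cub.C P * Cub.emb θ =
    ⟨⟨0, P.c0 * θ.c1 - P.c1 * θ.c0, P.c0 * θ.c2 - P.c2 * θ.c0⟩,
     ⟨-(P.c0 * θ.c1 - P.c1 * θ.c0), 0, P.c1 * θ.c2 - P.c2 * θ.c1⟩,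
     ⟨-(P.c0 * θ.c2 - P.c2 * θ.c0), -(P.c1 * θ.c2 - P.c2 * θ.c1), 0⟩⟩ := by
  rw [Cub.emb_eq, Cub.emb_eq]
  ext <;> simp

lemma pbData_w : pbData.w = Cub.pw := rfl

/-- `α ^ {8m}` is not 2-adically proportional to a fixed `θ` to high precision. -/
theorem pb_cub (θ : Cub ℤ) (hθ : θ ≠ 0) (h H r ℓ k m : ℕ)
    (hs : 9 * Cub.sz θ ≤ 2 ^ h) (hnn : |Cub.nm θ| ≤ 2 ^ h) (hH : h ≤ 2 ^ H)
    (hr : ℓ + 1 ≤ 2 ^ r) (hℓ : 2 ^ (r + 17) * m ≤ 2 ^ ℓ) (hm : 2 ^ (H + 2 * r + 33) ≤ m)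
    (hk : 2 ^ (H + 4 * r + 50) ≤ k) (P : Cub ℤ) (hP : P = Cub.X ^ (8 * m))
    (h01 : (2 : ℤ) ^ k ∣ P.c0 * θ.c1 - P.c1 * θ.c0) (h02 : (2 : ℤ) ^ k ∣ P.c0 * θ.c2 - P.c2 * θ.c0)
    (h12 : (2 : ℤ) ^ k ∣ P.c1 * θ.c2 - P.c2 * θ.c1) : False := by
  refine pbData.pb (Cub.emb θ) (Cub.C θ) (Cub.C (Cub.cof θ)) (Cub.nm θ) ?_ ?_ h H r ℓ k m hnn ?_ ?_
    hH hr hℓ hm hk ?_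
  · rw [← map_mul, Cub.mul_cof]; simp
  · rwa [Ne, Cub.nm_eq_zero]
  · refine le_trans (le_of_eq ?_) hs
    show Cub.sz2 _ = _
    rw [Cub.emb_eq, Cub.sz2]
    simp only [Cub.sz_C]
    unfold Cub.sz; ring
  · refine le_trans (le_of_eq ?_) hs
    exact Cub.sz2_C _
  · have hcong : (2 : Cub (Cub ℤ)) ^ k ∣ Cub.emb P * Cub.C θ - Cub.C P * Cub.emb θ := by
      rw [pb_coord]
      simp only [Cub.int_dvd_iff]
      have n01 := (dvd_neg).2 h01
      have n02 := (dvd_neg).2 h02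
      have n12 := (dvd_neg).2 h12
      have z : (2 : ℤ) ^ k ∣ 0 := dvd_zero _
      exact ⟨⟨z, h01, h02⟩, ⟨n01, z, h12⟩, n02, n12, z⟩
    have e : (1 + 4 * pbData.w) ^ m * Cub.C θ - Cub.emb θ =
        Cub.C (Cub.Y ^ (8 * m)) * (Cub.emb P * Cub.C θ - Cub.C P * Cub.emb θ) := by
      rw [pbData_w]
      have h1 : Cub.C (Cub.Y ^ (8 * m)) * Cub.C P = 1 := by
        rw [← map_mul, hP, ← mul_pow, mul_comm, Cub.X_mul_Y, one_pow, map_one]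
      have h2 : (1 + 4 * Cub.pw) ^ m = Cub.C (Cub.Y ^ (8 * m)) * Cub.emb P := by
        rw [Cub.pw_eq, hP, map_pow Cub.emb, Cub.emb_X, mul_pow, ← pow_mul, ← pow_mul, map_pow, mul_comm]
      rw [h2]
      linear_combination Cub.emb θ * h1
    rw [e]
    exact hcong.mul_left _

/-! ### Multiplicative independence -/

@[simp] lemma ea_two : ea 2 = 2 := map_ofNat ea 2
@[simp] lemma ea_three : ea 3 = 3 := map_ofNat ea 3

lemma T_nonneg : ∀ n, 0 ≤ T n
  | 0 => le_refl _
  | 1 => by decide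
  | 2 => by decide
  | n + 3 => by
    have h1 := T_nonneg n
    have h2 := T_nonneg (n + 1)
    have h3 := T_nonneg (n + 2)
    rw [T]; omega

lemma T_le_al : ∀ n, (T n : ℝ) * al ≤ al ^ n
  | 0 => by simp [T]
  | 1 => by simp [T]
  | 2 => by simp [T]; nlinarith [one_lt_al]
  | n + 3 => by
    have h1 := T_le_al n
    have h2 := T_le_al (n + 1)
    have h3 := T_le_al (n + 2)
    have e : al ^ (n + 3) = al ^ (n + 2) + al ^ (n + 1) + al ^ n := by
      rw [pow_add al n 3, al_cube]; ring
    rw [T, e]; push_cast; linarith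

lemma al_le_T : ∀ n, al ^ (n + 1) ≤ (T (n + 1) : ℝ) * al ^ 3
  | 0 => by simp [T]; nlinarith [one_lt_al, pow_pos al_pos 2, al_cube]
  | 1 => by simp [T]; nlinarith [one_lt_al, pow_pos al_pos 2, al_cube]
  | 2 => by simp [T]; nlinarith [one_lt_al, pow_pos al_pos 3, al_cube]
  | n + 3 => by
    have h1 := al_le_T n
    have h2 := al_le_T (n + 1)
    have h3 := al_le_T (n + 2)
    have e : al ^ (n + 3 + 1) = al ^ (n + 2 + 1) + al ^ (n + 1 + 1) + al ^ (n + 1) := by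
      rw [show n + 3 + 1 = n + 1 + 3 by ring, pow_add al (n + 1) 3, al_cube]; ring
    rw [show n + 3 + 1 = (n + 1) + 3 by ring, T, show n + 1 + 3 = n + 3 + 1 by ring, e]
    push_cast; rw [show n + 1 + 2 = n + 2 + 1 by ring]; linarith

lemma sqrt2_pow_le_al (n : ℕ) : (2 : ℝ) ^ (7 * n) ≤ al ^ (8 * n) := by
  rw [pow_mul, pow_mul]
  apply pow_le_pow_left₀ (by norm_num)
  have h := al_gt
  have h2 : (1.839 : ℝ) ^ 8 ≤ al ^ 8 := pow_le_pow_left₀ (by norm_num) h.le 8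
  refine le_trans ?_ h2
  norm_num

lemma sum_log_eq {ι : Type} [Fintype ι] (z : ι → ℝ) (hz : ∀ i, 0 < z i) (c : ι → ℤ)
    (h : ∑ i, c i * Real.log (z i) = 0) :
    ∏ i, z i ^ (c i).toNat = ∏ i, z i ^ (-c i).toNat := by
  have hpos : ∀ e : ι → ℕ, 0 < ∏ i, z i ^ e i := fun e => Finset.prod_pos fun i _ => pow_pos (hz i) _
  have hlog : ∀ e : ι → ℕ, Real.log (∏ i, z i ^ e i) = ∑ i, (e i : ℝ) * Real.log (z i) := by
    intro e
    rw [Real.log_prod (fun i _ => (pow_pos (hz i) _).ne')]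
    exact Finset.sum_congr rfl fun i _ => Real.log_pow _ _
  apply Real.log_injOn_pos (hpos _) (hpos _)
  rw [hlog, hlog, ← sub_eq_zero, ← Finset.sum_sub_distrib, ← h]
  refine Finset.sum_congr rfl fun i _ => ?_
  have : ((c i).toNat : ℤ) - ((-c i).toNat : ℤ) = c i := Int.toNat_sub_toNat_neg _
  rw [← sub_mul, ← this]
  push_cast; simp

/-- A multiplicative relation between elements of `ℤ[α]` gives one between their norms. -/
lemma nm_rel {ι : Type} [Fintype ι] (z : ι → Cub ℤ) (hz : ∀ i, 0 < ea (z i)) (c : ι → ℤ)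
    (h : ∑ i, c i * Real.log (ea (z i)) = 0) :
    ∑ i, c i * Real.log (Cub.nm (z i)) = 0 := by
  have h1 := sum_log_eq _ hz c h
  simp only [← map_pow] at h1
  rw [← map_prod, ← map_prod] at h1
  have h2 := congrArg Cub.nmHom (ea_injective h1)
  rw [map_prod, map_prod] at h2
  simp only [map_pow] at h2
  have hn : ∀ i, Cub.nmHom (z i) ≠ 0 := by
    intro i h0
    have : z i = 0 := Cub.nm_eq_zero.1 h0
    have h3 := hz i
    rw [this, map_zero] at h3
    exact lt_irrefl _ h3
  have h3 := congrArg (fun t : ℤ => Real.log (t : ℝ)) h2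
  simp only [Int.cast_prod, Int.cast_pow] at h3
  rw [Real.log_prod (fun i _ => pow_ne_zero _ (by exact_mod_cast hn i)),
    Real.log_prod (fun i _ => pow_ne_zero _ (by exact_mod_cast hn i)), ← sub_eq_zero,
    ← Finset.sum_sub_distrib] at h3
  rw [← h3]
  refine Finset.sum_congr rfl fun i _ => ?_
  rw [Real.log_pow, Real.log_pow, ← sub_mul]
  have : ((c i).toNat : ℤ) - ((-c i).toNat : ℤ) = c i := Int.toNat_sub_toNat_neg _
  have e : Cub.nmHom (z i) = Cub.nm (z i) := rfl
  rw [e]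
  congr 1
  exact_mod_cast this.symm

lemma log_prime_indep (a b c e : ℤ)
    (h : a * Real.log 2 + b * Real.log 3 + c * Real.log 7 + e * Real.log 11 = 0) :
    a = 0 ∧ b = 0 ∧ c = 0 ∧ e = 0 := by
  have h1 := sum_log_eq ![2, 3, 7, 11] (by intro i; fin_cases i <;> simp) ![a, b, c, e]
    (by simp [Fin.sum_univ_four]; linarith)
  simp [Fin.prod_univ_four] at h1
  have h2 : 2 ^ a.toNat * 3 ^ b.toNat * 7 ^ c.toNat * 11 ^ e.toNat =
      2 ^ (-a).toNat * 3 ^ (-b).toNat * 7 ^ (-c).toNat * 11 ^ (-e).toNat := by exact_mod_cast h1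
  have h3 := congrArg Nat.factorization h2
  have p2 := Nat.prime_two
  have p3 := Nat.prime_three
  have p7 : Nat.Prime 7 := by norm_num
  have p11 : Nat.Prime 11 := by norm_num
  simp [Nat.factorization_mul, p2.factorization, p3.factorization, p7.factorization,
    p11.factorization] at h3
  have f2 := DFunLike.congr_fun h3 2
  have f3 := DFunLike.congr_fun h3 3
  have f7 := DFunLike.congr_fun h3 7
  have f11 := DFunLike.congr_fun h3 11
  simp at f2 f3 f7 f11
  omega

lemma log_al_pos : 0 < Real.log al := Real.log_pos one_lt_al

lemma nm_C (n : ℤ) : Cub.nm (Cub.C n) = n ^ 3 := by simp [Cub.nm, Cub.cof]; ring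
lemma nm_X : Cub.nm Cub.X = 1 := by decide

/-- The pivots of the linear forms in four logarithms. -/
def piv : Fin 3 → Cub ℤ := ![rh, rh * (Cub.X - 1) ^ 2, 7 * (rh * (Cub.X - 1) ^ 2)]

lemma piv_nm (i : Fin 3) : ∃ a c : ℤ, Real.log (Cub.nm (piv i)) =
    a * Real.log 2 + c * Real.log 7 + Real.log 11 := by
  have h44 : Real.log 44 = 2 * Real.log 2 + Real.log 11 := by
    rw [show (44 : ℝ) = 2 ^ 2 * 11 by norm_num, Real.log_mul (by norm_num) (by norm_num), Real.log_pow]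
    norm_num
  have h176 : Real.log 176 = 4 * Real.log 2 + Real.log 11 := by
    rw [show (176 : ℝ) = 2 ^ 4 * 11 by norm_num, Real.log_mul (by norm_num) (by norm_num), Real.log_pow]
    norm_num
  have h343 : Real.log 60368 = 4 * Real.log 2 + 3 * Real.log 7 + Real.log 11 := by
    rw [show (60368 : ℝ) = 176 * 343 by norm_num, Real.log_mul (by norm_num) (by norm_num), h176,
      show (343 : ℝ) = 7 ^ 3 by norm_num, Real.log_pow]
    norm_num; ring
  fin_cases i
  · refine ⟨2, 0, ?_⟩
    have : Cub.nm (piv 0) = 44 ∨ Cub.nm (piv 0) = -44 := by decide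
    show Real.log (Cub.nm (piv 0)) = _
    rcases this with h | h <;> rw [h] <;> push_cast <;> simp [h44]
  · refine ⟨4, 0, ?_⟩
    have : Cub.nm (piv 1) = 176 ∨ Cub.nm (piv 1) = -176 := by decide
    show Real.log (Cub.nm (piv 1)) = _
    rcases this with h | h <;> rw [h] <;> push_cast <;> simp [h176]
  · refine ⟨4, 3, ?_⟩
    have : Cub.nm (piv 2) = 60368 ∨ Cub.nm (piv 2) = -60368 := by decide
    show Real.log (Cub.nm (piv 2)) = _
    rcases this with h | h <;> rw [h] <;> push_cast <;> simp [h343]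

lemma piv_ge (i : Fin 3) : 2 ≤ ea (piv i) := by
  have h1 := al_gt
  have h2 := al_lt
  have h0 := ea_rh
  have hr : 2.97 ≤ ea rh := by rw [h0]; nlinarith
  have hx : ea ((Cub.X - 1) ^ 2) = (al - 1) ^ 2 := by simp [map_pow]
  have hx2 : 0.7 ≤ ea ((Cub.X - 1) ^ 2) := by rw [hx]; nlinarith
  have h3 : 2.07 ≤ ea (rh * (Cub.X - 1) ^ 2) := by rw [map_mul]; nlinarith
  fin_cases i
  · show 2 ≤ ea rh; linarith
  · show 2 ≤ ea (rh * (Cub.X - 1) ^ 2); linarith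
  · show 2 ≤ ea (7 * (rh * (Cub.X - 1) ^ 2))
    rw [map_mul, map_ofNat]; linarith

lemma piv_sz (i : Fin 3) : Cub.sz (piv i) ≤ 2 ^ 16 := by
  fin_cases i
  · show Cub.sz rh ≤ _
    norm_num [Cub.sz, rh]
  · show Cub.sz (rh * (Cub.X - 1) ^ 2) ≤ _
    norm_num [Cub.sz, rh, pow_two]
  · show Cub.sz (7 * (rh * (Cub.X - 1) ^ 2)) ≤ _
    norm_num [Cub.sz, rh, pow_two]

lemma indep_three_al (a b : ℤ) (h : a * Real.log 3 + b * Real.log al = 0) : a = 0 ∧ b = 0 := by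
  have h1 := nm_rel ![Cub.C 3, Cub.X] (by intro i; fin_cases i <;> simp [al_pos]) ![a, b]
    (by simp [Fin.sum_univ_two]; exact h)
  simp only [Fin.sum_univ_two, Matrix.cons_val_zero, Matrix.cons_val_one, nm_C, nm_X] at h1
  push_cast at h1
  rw [Real.log_one, mul_zero, add_zero] at h1
  have ha : a = 0 := by
    rcases mul_eq_zero.1 h1 with h | h
    · exact_mod_cast h
    · exact absurd h (Real.log_pos (by norm_num)).ne'
  subst ha
  refine ⟨rfl, ?_⟩
  rw [Int.cast_zero, zero_mul, zero_add] at h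
  rcases mul_eq_zero.1 h with h | h
  · exact_mod_cast h
  · exact absurd h log_al_pos.ne'

lemma indep_piv (i : Fin 3) (c0 a b e : ℤ) (h : c0 * Real.log (ea (piv i)) +
    (a * Real.log 2 + b * Real.log 3 + e * Real.log al) = 0) : c0 = 0 ∧ a = 0 ∧ b = 0 ∧ e = 0 := by
  have hp : 0 < ea (piv i) := by linarith [piv_ge i]
  have h1 := nm_rel ![piv i, Cub.C 2, Cub.C 3, Cub.X]
    (by intro i; fin_cases i <;> simp [al_pos, hp]) ![c0, a, b, e]
    (by simp [Fin.sum_univ_four]; linarith)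
  rw [Fin.sum_univ_four] at h1
  change c0 * Real.log (Cub.nm (piv i)) + a * Real.log (Cub.nm (Cub.C 2)) +
    b * Real.log (Cub.nm (Cub.C 3)) + e * Real.log (Cub.nm Cub.X) = 0 at h1
  rw [nm_C, nm_C, nm_X, Int.cast_pow, Int.cast_pow, Real.log_pow, Real.log_pow, Int.cast_one,
    Real.log_one] at h1
  push_cast at h1
  obtain ⟨u, v, huv⟩ := piv_nm i
  rw [huv] at h1
  have h2 := log_prime_indep (c0 * u + 3 * a) (3 * b) (c0 * v) c0 (by push_cast; linarith)
  obtain ⟨q1, q2, q3, q4⟩ := h2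
  subst q4
  have ha : a = 0 := by omega
  have hb : b = 0 := by omega
  subst ha hb
  simp only [Int.cast_zero, zero_mul, zero_add] at h
  refine ⟨rfl, rfl, rfl, ?_⟩
  rcases mul_eq_zero.1 h with h | h
  · exact_mod_cast h
  · exact absurd h log_al_pos.ne'

/-! ### Asymptotic lower bounds -/

/-- Forms in `log 2, log 3` with coefficients up to `N` exceed `2 ^ (-Q)`. -/
def LB2 (N Q : ℕ) : Prop := ∀ a b : ℤ, |a| ≤ N → |b| ≤ N → (a ≠ 0 ∨ b ≠ 0) →
  1 ≤ |a * Real.log 2 + b * Real.log 3| * 2 ^ Q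

/-- Forms in `log ν, log 2, log 3, log α`, where `ν` is a pivot with coefficient one. -/
def LB4 (N Q : ℕ) : Prop := ∀ (i : Fin 3) (a b e : ℤ), |a| ≤ N → |b| ≤ N → |e| ≤ N →
  1 ≤ |Real.log (ea (piv i)) + (a * Real.log 2 + b * Real.log 3 + e * Real.log al)| * 2 ^ Q

/-- The lower bound for forms in `log 3, log α`; it is needed when the pivot of `Sol.small_x` is
multiplicatively dependent on `3` and `α`. -/
lemma lb_three_al (ℓ r : ℕ) (hr : ℓ + 15 * r + 113 ≤ 2 ^ r) (a b : ℤ) (ha : |a| ≤ 2 ^ ℓ)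
    (hb : |b| ≤ 2 ^ ℓ) (hab : a ≠ 0 ∨ b ≠ 0) :
    1 ≤ |a * Real.log 3 + b * Real.log al| * 2 ^ 2 ^ (10 * r + 68) := by
  wlog hpos : 0 ≤ a generalizing a b
  · have := this (-a) (-b) (by rwa [abs_neg]) (by rwa [abs_neg]) (by omega) (by omega)
    rw [← abs_neg] at this
    convert this using 3
    push_cast; ring
  rcases hpos.eq_or_lt with h0 | h0
  · subst h0
    have hb0 : b ≠ 0 := by omega
    have h1 : (1 : ℝ) ≤ |(b : ℝ)| := by exact_mod_cast Int.one_le_abs hb0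
    have h2 : (1 / 2 : ℝ) ≤ Real.log al := by
      have := Real.one_sub_inv_le_log_of_pos (x := al) al_pos
      have h3 : al⁻¹ ≤ 1 / 1.839 := by rw [inv_eq_one_div]; gcongr; exact al_gt.le
      norm_num at h3 ⊢
      have h4 : (1 / 3 : ℝ) ≤ Real.log al := by linarith
      have := Real.log_two_gt_d9
      have h5 : Real.log 3.36 ≤ Real.log (al ^ 2) := Real.log_le_log (by norm_num) (by nlinarith [al_gt])
      have h6 : (1 : ℝ) ≤ Real.log 3.36 := by
        rw [Real.le_log_iff_exp_le (by norm_num)]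
        linarith [Real.exp_one_lt_d9]
      rw [Real.log_pow] at h5
      push_cast at h5
      linarith
    rw [Int.cast_zero, zero_mul, zero_add, abs_mul, abs_of_pos log_al_pos]
    have h3 : (2 : ℝ) ≤ 2 ^ 2 ^ (10 * r + 68) := by
      calc (2 : ℝ) = 2 ^ 1 := by norm_num
        _ ≤ _ := pow_le_pow_right₀ (by norm_num) Nat.one_le_two_pow
    have h4 : (1 / 2 : ℝ) ≤ |(b : ℝ)| * Real.log al := by nlinarith
    nlinarith
  · have key := rb_pow (ι := Fin 1) 1 (by simp) le_rfl (by norm_num) (Cub.C 3) 1 (fun _ => Cub.X)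
      a.toNat (fun _ => b) 5 ℓ r 3 (3 * r + 17) (10 * r + 68) (by ring) (by omega) (by ring)
      (by norm_num) (by simp) le_rfl (by intro i; simp; exact one_lt_al.le)
      (by rw [Cub.sz_C]; norm_num) (by norm_num) (by norm_num)
      (by intro i; norm_num [Cub.sz]) (by omega)
      (by zify; rw [Int.toNat_of_nonneg hpos]; exact (le_abs_self _).trans ha) (by intro i; exact hb)
      (by
        intro c0 c _ _ h
        simp at h
        obtain ⟨h1, h2⟩ := indep_three_al c0 (c 0) h
        exact ⟨h1, by ext i; fin_cases i; exact h2⟩)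
    have e : ((a.toNat : ℕ) : ℝ) = (a : ℝ) := by
      have : ((a.toNat : ℕ) : ℤ) = a := Int.toNat_of_nonneg hpos
      exact_mod_cast congrArg (Int.cast (R := ℝ)) this
    rw [e] at key
    simp at key
    exact key.le

lemma lb2_asym (ℓ r : ℕ) (hr : ℓ + 15 * r + 113 ≤ 2 ^ r) : LB2 (2 ^ ℓ) (2 ^ (10 * r + 68)) := by
  intro b a hb ha hab
  push_cast at ha hb
  rw [add_comm]
  wlog hpos : 0 ≤ a generalizing a b
  · have := this (-b) (-a) (by omega) (by rwa [abs_neg]) (by rwa [abs_neg]) (by omega)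
    rw [← abs_neg] at this
    convert this using 3
    push_cast; ring
  rcases hpos.eq_or_lt with h0 | h0
  · subst h0
    have hb0 : b ≠ 0 := by omega
    have h1 : (1 : ℝ) ≤ |(b : ℝ)| := by exact_mod_cast Int.one_le_abs hb0
    have h2 : (1 / 2 : ℝ) ≤ Real.log 2 := by linarith [Real.log_two_gt_d9]
    rw [Int.cast_zero, zero_mul, zero_add, abs_mul, abs_of_pos (by linarith : 0 < Real.log 2)]
    have h3 : (2 : ℝ) ≤ 2 ^ 2 ^ (10 * r + 68) := by
      calc (2 : ℝ) = 2 ^ 1 := by norm_num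
        _ ≤ _ := pow_le_pow_right₀ (by norm_num) Nat.one_le_two_pow
    have h4 : (1 / 2 : ℝ) ≤ |(b : ℝ)| * Real.log 2 := by nlinarith
    nlinarith
  · have key := rb_pow (ι := Fin 1) 1 (by simp) le_rfl (by norm_num) (Cub.C 3) 1 (fun _ => Cub.C 2)
      a.toNat (fun _ => b) 5 ℓ r 3 (3 * r + 17) (10 * r + 68) (by ring) (by omega) (by ring)
      (by norm_num) (by simp) le_rfl (by intro i; simp)
      (by rw [Cub.sz_C]; norm_num) (by norm_num) (by norm_num)
      (by intro i; rw [Cub.sz_C]; norm_num) (by omega)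
      (by zify; rw [Int.toNat_of_nonneg hpos]; exact (le_abs_self _).trans ha) (by intro i; exact hb)
      (by
        intro c0 c _ _ h
        simp at h
        obtain ⟨h1, h2, _⟩ := log_prime_indep (c 0) c0 0 0 (by push_cast; linarith)
        exact ⟨h2, by ext i; fin_cases i; exact h1⟩)
    have e : ((a.toNat : ℕ) : ℝ) = (a : ℝ) := by
      have : ((a.toNat : ℕ) : ℤ) = a := Int.toNat_of_nonneg hpos
      exact_mod_cast congrArg (Int.cast (R := ℝ)) this
    rw [e] at key
    simp at key
    exact key.le

lemma lb4_asym (ℓ r : ℕ) (hr : ℓ + 25 * r + 207 ≤ 2 ^ r) : LB4 (2 ^ ℓ) (2 ^ (26 * r + 202)) := by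
  intro i a b e ha hb he
  push_cast at ha hb he
  have key := rb_pow (ι := Fin 3) 3 (by simp) (by norm_num) le_rfl (piv i) 1
      ![Cub.C 2, Cub.C 3, Cub.X]
      1 ![a, b, e] 16 ℓ r 4 (5 * r + 35) (26 * r + 202) (by ring) (by omega) (by ring)
      (by norm_num) (by linarith [piv_ge i]) le_rfl
      (by intro i; fin_cases i <;> simp; exact one_lt_al.le)
      (piv_sz i) (by norm_num) (by have := piv_ge i; norm_num; linarith)
      (by
        intro i
        fin_cases i
        · show Cub.sz (Cub.C 2) ≤ _
          rw [Cub.sz_C]; norm_num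
        · show Cub.sz (Cub.C 3) ≤ _
          rw [Cub.sz_C]; norm_num
        · show Cub.sz Cub.X ≤ _
          norm_num [Cub.sz])
      le_rfl Nat.one_le_two_pow (by intro i; fin_cases i <;> assumption)
      (by
        intro c0 c _ _ h
        simp [Fin.sum_univ_three] at h
        obtain ⟨h1, h2, h3, h4⟩ := indep_piv i c0 (c 0) (c 1) (c 2) h
        exact ⟨h1, by ext i; fin_cases i <;> assumption⟩)
  simp [Fin.sum_univ_three] at key
  exact key.le

/-! ### Solutions, window and collinearity -/

/-- Five representations of `-d`, ordered by their Tribonacci index. -/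
structure Sol (d : ℤ) (n x y : Fin 5 → ℕ) : Prop where
  hd : 1 ≤ d
  mono : StrictMono n
  ne1 : ∀ i, n i ≠ 1
  eq : ∀ i, T (n i) + d = 2 ^ x i * 3 ^ y i

/-- All the unknowns are at most `N`. -/
def Bd (n x y : Fin 5 → ℕ) (N : ℕ) : Prop := ∀ i, n i ≤ N ∧ x i ≤ N ∧ y i ≤ N

lemma T_pos (n : ℕ) (hn : 1 ≤ n) : 1 ≤ T n := by
  induction n using Nat.strong_induction_on with
  | _ n ih =>
    match n, hn with
    | 1, _ => decide
    | 2, _ => decide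
    | k + 3, _ =>
      have h1 := ih (k + 2) (by omega) (by omega)
      have h2 := T_nonneg (k + 1)
      have h3 := T_nonneg k
      rw [T]; omega

lemma T_lt_succ (n : ℕ) (hn : 2 ≤ n) : T n < T (n + 1) := by
  obtain ⟨k, rfl⟩ := Nat.exists_eq_add_of_le' hn
  have h1 := T_pos (k + 1) (by omega)
  have h3 := T_nonneg k
  have : T (k + 2 + 1) = T (k + 2) + T (k + 1) + T k := by rw [T]
  omega

lemma T_lt {a b : ℕ} (ha : a ≠ 1) (hab : a < b) : T a < T b := by
  have key : ∀ k a, 2 ≤ a → T a < T (a + k + 1) := by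
    intro k
    induction k with
    | zero => intro a ha; exact T_lt_succ a ha
    | succ k ih => intro a ha; exact (ih a ha).trans (T_lt_succ _ (by omega))
  rcases Nat.eq_zero_or_pos a with h | h
  · subst h; have := T_pos b hab; simp only [T]; omega
  · obtain ⟨k, rfl⟩ := Nat.exists_eq_add_of_lt hab
    exact key k a (by omega)

lemma T_le_two_pow : ∀ n, T n ≤ 2 ^ n
  | 0 => by decide
  | 1 => by decide
  | 2 => by decide
  | n + 3 => by
    have h1 := T_le_two_pow n
    have h2 := T_le_two_pow (n + 1)
    have h3 := T_le_two_pow (n + 2)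
    rw [T]
    have : (0 : ℤ) < 2 ^ n := by positivity
    rw [pow_succ] at h2
    rw [pow_succ, pow_succ] at h3
    rw [pow_succ, pow_succ, pow_succ]
    omega

lemma norm_be_le : ‖be‖ ≤ 0.74 := by
  have h : ‖be‖ ^ 2 = 1 / al := by rw [← Complex.normSq_eq_norm_sq, normSq_be]
  have h2 : 1 / al ≤ 0.5476 := by
    rw [div_le_iff₀ al_pos]; nlinarith [al_gt]
  by_contra hc
  push Not at hc
  nlinarith [norm_nonneg be]

lemma rh_bounds : 2.97 ≤ ea rh ∧ ea rh ≤ 2.98 := by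
  rw [ea_rh]
  constructor <;> nlinarith [al_gt, al_lt]

lemma binet_T (n : ℕ) : |ea rh * T n - al ^ n| ≤ 2 := by
  have h := binet (Cub.X ^ n)
  rw [Cub.tau_X_pow, map_pow, map_pow, ea_X, eb_X, norm_pow] at h
  refine h.trans ?_
  have := pow_le_one₀ (norm_nonneg be) (norm_be_le.trans (by norm_num)) (n := n)
  linarith

lemma abs_log_le {u : ℝ} (hu : |u| ≤ 1 / 2) : |Real.log (1 + u)| ≤ 2 * |u| := by
  have h1 : 0 < 1 + u := by linarith [neg_abs_le u]
  have h2 := Real.log_le_sub_one_of_pos h1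
  have h3 := Real.one_sub_inv_le_log_of_pos h1
  have h4 : -(2 * |u|) ≤ 1 - (1 + u)⁻¹ := by
    have e : 1 - (1 + u)⁻¹ = u / (1 + u) := by field_simp; ring
    rw [e, le_div_iff₀ h1]
    rcases abs_cases u with ⟨h, _⟩ | ⟨h, _⟩ <;> rw [h] at hu ⊢ <;> nlinarith
  rw [abs_le]
  constructor
  · linarith
  · linarith [le_abs_self u, abs_nonneg u]

/-- If the form `log A` is at least `2 ^ (-Q)` in absolute value and `A` is within `E / B` of one
then `B ≤ 2 E 2 ^ Q`. -/
lemma le_of_log_lower {A B E : ℝ} {Q : ℕ} (hB : 0 < B)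
    (h : |A - 1| ≤ E / B) (hL : 1 ≤ |Real.log A| * 2 ^ Q) : B ≤ 2 * E * 2 ^ Q := by
  have hE : 0 ≤ E := by
    by_contra hc
    push Not at hc
    have := div_neg_of_neg_of_pos hc hB
    linarith [abs_nonneg (A - 1)]
  have h1 : (1 : ℝ) ≤ 2 ^ Q := one_le_pow₀ (by norm_num)
  rcases le_or_gt (E / B) (1 / 2) with h2 | h2
  · have h3 := abs_log_le (h.trans h2)
    rw [add_sub_cancel] at h3
    have h4 : |Real.log A| ≤ 2 * (E / B) := by linarith
    have h5 : 1 ≤ 2 * (E / B) * 2 ^ Q := hL.trans (by gcongr)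
    have h6 : 2 * (E / B) * 2 ^ Q = (2 * E * 2 ^ Q) / B := by ring
    rwa [h6, one_le_div hB] at h5
  · rw [lt_div_iff₀ hB] at h2
    nlinarith

lemma log_smooth (x y : ℕ) :
    Real.log (2 ^ x * 3 ^ y) = x * Real.log 2 + y * Real.log 3 := by
  rw [Real.log_mul (by positivity) (by positivity), Real.log_pow, Real.log_pow]

lemma abs_sub_le_nat {a b N : ℕ} (ha : a ≤ N) (hb : b ≤ N) : |(a : ℤ) - b| ≤ N := by
  rw [abs_le]; omega

section
variable {d : ℤ} {n x y : Fin 5 → ℕ}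

lemma Sol.eqR (s : Sol d n x y) (i : Fin 5) : (T (n i) : ℝ) + d = 2 ^ x i * 3 ^ y i := by
  exact_mod_cast congrArg (Int.cast (R := ℝ)) (s.eq i)

lemma Sol.two_le (s : Sol d n x y) {i : Fin 5} (hi : i ≠ 0) : 2 ≤ n i := by
  have h0 : (0 : Fin 5) < i := Fin.pos_iff_ne_zero.2 hi
  have := s.mono h0
  have := s.ne1 i
  omega

/-- The two smallest solutions bound `d`. -/
lemma Sol.d_le (s : Sol d n x y) {N Q : ℕ} (hb : Bd n x y N) (hL : LB2 N Q) :
    (d : ℝ) ≤ 2 ^ Q * T (n 1) := by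
  have h01 : T (n 0) < T (n 1) := T_lt (s.ne1 0) (s.mono (by decide))
  have hd : (1 : ℝ) ≤ d := by exact_mod_cast s.hd
  have hT0 : (0 : ℝ) ≤ T (n 0) := by exact_mod_cast T_nonneg _
  have hTT : (T (n 0) : ℝ) < T (n 1) := by exact_mod_cast h01
  have key := hL ((x 1 : ℤ) - x 0) ((y 1 : ℤ) - y 0) (abs_sub_le_nat (hb 1).2.1 (hb 0).2.1)
    (abs_sub_le_nat (hb 1).2.2 (hb 0).2.2) (by
      by_contra hc
      push Not at hc
      have e1 : x 1 = x 0 := by omega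
      have e2 : y 1 = y 0 := by omega
      have a1 := s.eq 0
      have a2 := s.eq 1
      rw [e1, e2, ← a1] at a2
      omega)
  have e0 := s.eqR 0
  have e1 := s.eqR 1
  have hX0 : 0 < (T (n 0) : ℝ) + d := by linarith
  have hX1 : 0 < (T (n 1) : ℝ) + d := by linarith
  have hlog : (((x 1 : ℤ) - x 0 : ℤ) : ℝ) * Real.log 2 + (((y 1 : ℤ) - y 0 : ℤ) : ℝ) * Real.log 3 =
      Real.log (((T (n 1) : ℝ) + d) / (T (n 0) + d)) := by
    rw [Real.log_div hX1.ne' hX0.ne', e0, e1, log_smooth, log_smooth]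
    push_cast; ring
  rw [hlog] at key
  have h1 : 1 ≤ ((T (n 1) : ℝ) + d) / (T (n 0) + d) := by
    rw [one_le_div hX0]; linarith
  rw [abs_of_nonneg (Real.log_nonneg h1)] at key
  have h2 := Real.log_le_sub_one_of_pos (lt_of_lt_of_le one_pos h1)
  have h3 : ((T (n 1) : ℝ) + d) / (T (n 0) + d) - 1 ≤ T (n 1) / d := by
    rw [div_sub_one hX0.ne', div_le_div_iff₀ hX0 (by linarith)]
    nlinarith
  have h4 : 1 ≤ T (n 1) / d * (2 : ℝ) ^ Q := key.trans (by gcongr; linarith)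
  rw [div_mul_eq_mul_div, one_le_div (by linarith)] at h4
  linarith

/-- In no solution is `T n` much larger than `d`: otherwise `2 ^ x * 3 ^ y` is too close to
`α ^ n / ρ`. -/
lemma Sol.al_le (s : Sol d n x y) {N Q : ℕ} (hb : Bd n x y N) (hL : LB4 N Q) (i : Fin 5) :
    al ^ n i ≤ 10 * 2 ^ Q * d := by
  have hd : (1 : ℝ) ≤ d := by exact_mod_cast s.hd
  have hB : 0 < al ^ n i := pow_pos al_pos _
  have hrh := rh_bounds
  have key := hL 0 (x i) (y i) (-(n i : ℤ)) (by simpa using (hb i).2.1) (by simpa using (hb i).2.2)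
    (by rw [abs_neg]; simpa using (hb i).1)
  have hp : piv 0 = rh := rfl
  have hX : 0 < (T (n i) : ℝ) + d := by
    have : (0 : ℝ) ≤ T (n i) := by exact_mod_cast T_nonneg _
    linarith
  have hlog : Real.log (ea (piv 0)) + (((x i : ℕ) : ℤ) * Real.log 2 + ((y i : ℕ) : ℤ) * Real.log 3
      + ((-(n i : ℤ) : ℤ) : ℝ) * Real.log al) = Real.log (ea rh * (T (n i) + d) / al ^ n i) := by
    rw [Real.log_div (mul_pos (by linarith) hX).ne' hB.ne', Real.log_mul (by linarith) hX.ne',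
      s.eqR i, log_smooth,
      Real.log_pow, hp]
    push_cast; ring
  rw [hlog] at key
  have h2 : |ea rh * (T (n i) + d) / al ^ n i - 1| ≤ (5 * d) / al ^ n i := by
    rw [div_sub_one hB.ne', abs_div, abs_of_pos hB]
    gcongr
    have e : ea rh * (T (n i) + d) - al ^ n i = (ea rh * T (n i) - al ^ n i) + ea rh * d := by ring
    rw [e]
    refine (abs_add_le _ _).trans ?_
    rw [abs_of_nonneg (by nlinarith : 0 ≤ ea rh * d)]
    have := binet_T (n i)
    nlinarith
  have := le_of_log_lower hB h2 key
  linarith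

lemma le_of_al_pow {a b : ℕ} (h : al ^ a ≤ 2 ^ b) : 7 * a ≤ 8 * b := by
  have h1 := sqrt2_pow_le_al a
  have h2 : (2 : ℝ) ^ (7 * a) ≤ 2 ^ (8 * b) := by
    calc (2 : ℝ) ^ (7 * a) ≤ al ^ (8 * a) := h1
      _ = (al ^ a) ^ 8 := by rw [← pow_mul]; ring_nf
      _ ≤ (2 ^ b) ^ 8 := by gcongr; exact (pow_pos al_pos _).le
      _ = _ := by rw [← pow_mul]; ring_nf
  exact (pow_le_pow_iff_right₀ (by norm_num)).1 h2

lemma Sol.window (s : Sol d n x y) {N Q2 Q4 : ℕ} (hb : Bd n x y N) (h2 : LB2 N Q2) (h4 : LB4 N Q4) :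
    7 * (n 4 - n 1) ≤ 8 * (Q2 + Q4 + 3) := by
  have a1 := s.d_le hb h2
  have a2 := s.al_le hb h4 4
  have a3 := T_le_al (n 1)
  have hle : n 1 ≤ n 4 := s.mono.monotone (by decide)
  apply le_of_al_pow
  have hp : 0 < al ^ n 1 := pow_pos al_pos _
  have e : al ^ n 4 = al ^ (n 4 - n 1) * al ^ n 1 := by rw [← pow_add]; congr 1; omega
  rw [← mul_le_mul_iff_left₀ hp, ← e, pow_add, pow_add]
  have hT : (T (n 1) : ℝ) ≤ 0.55 * al ^ n 1 := by nlinarith [al_gt, al_lt]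
  have hq2 : (0 : ℝ) < 2 ^ Q2 := by positivity
  have hq4 : (0 : ℝ) < 2 ^ Q4 := by positivity
  calc al ^ n 4 ≤ 10 * 2 ^ Q4 * d := a2
    _ ≤ 10 * 2 ^ Q4 * (2 ^ Q2 * T (n 1)) := by gcongr
    _ ≤ 10 * 2 ^ Q4 * (2 ^ Q2 * (0.55 * al ^ n 1)) := by gcongr
    _ = 5.5 * (2 ^ Q2 * 2 ^ Q4 * al ^ n 1) := by ring
    _ ≤ 8 * (2 ^ Q2 * 2 ^ Q4 * al ^ n 1) := by
        have : 0 < 2 ^ Q2 * 2 ^ Q4 * al ^ n 1 := by positivity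
        linarith
    _ = _ := by ring

lemma Sol.xy_le (s : Sol d n x y) {N Q2 : ℕ} (hb : Bd n x y N) (h2 : LB2 N Q2) :
    Bd n x y (n 4 + Q2 + 1) := by
  intro i
  have a1 := s.d_le hb h2
  have hn : ∀ j : Fin 5, n j ≤ n 4 := fun j => s.mono.monotone (Fin.le_last j)
  have hi := hn i
  have hT : ∀ j : Fin 5, (T (n j) : ℝ) ≤ 2 ^ n 4 := by
    intro j
    have h1 : (T (n j) : ℝ) ≤ 2 ^ n j := by exact_mod_cast T_le_two_pow (n j)
    exact h1.trans (pow_le_pow_right₀ (by norm_num) (hn j))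
  have hq : (1 : ℝ) ≤ 2 ^ Q2 := one_le_pow₀ (by norm_num)
  have hX : (2 : ℝ) ^ x i * 3 ^ y i ≤ 2 ^ (n 4 + Q2 + 1) := by
    rw [← s.eqR i]
    calc (T (n i) : ℝ) + d ≤ 2 ^ n 4 + 2 ^ Q2 * 2 ^ n 4 := by
          refine add_le_add (hT i) (a1.trans ?_)
          gcongr; exact hT 1
      _ ≤ 2 ^ Q2 * 2 ^ n 4 + 2 ^ Q2 * 2 ^ n 4 := by
          have : (0 : ℝ) < 2 ^ n 4 := by positivity
          nlinarith
      _ = _ := by rw [pow_add, pow_add]; ring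
  refine ⟨by omega, ?_, ?_⟩
  · have h3 : (1 : ℝ) ≤ 3 ^ y i := one_le_pow₀ (by norm_num)
    have : (2 : ℝ) ^ x i ≤ 2 ^ (n 4 + Q2 + 1) := by
      refine le_trans ?_ hX
      have : (0 : ℝ) < 2 ^ x i := by positivity
      nlinarith
    exact (pow_le_pow_iff_right₀ (by norm_num)).1 this
  · have h3 : (1 : ℝ) ≤ 2 ^ x i := one_le_pow₀ (by norm_num)
    have h4 : (2 : ℝ) ^ y i ≤ 3 ^ y i := by gcongr; norm_num
    have : (2 : ℝ) ^ y i ≤ 2 ^ (n 4 + Q2 + 1) := by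
      refine le_trans (h4.trans ?_) hX
      have : (0 : ℝ) < 3 ^ y i := by positivity
      nlinarith
    exact (pow_le_pow_iff_right₀ (by norm_num)).1 this

end

/-- `α ^ a - 1` and `α ^ b - 1` are linearly independent over `ℚ`, except that
`α ^ 4 - 1 = 2 (α ^ 3 - 1)`. -/
lemma collinear {a b : ℕ} (ha : 0 < a) (hab : a < b) {p q : ℤ} (hpq : p ≠ 0 ∨ q ≠ 0)
    (h : Cub.C p * (Cub.X ^ a - 1) = Cub.C q * (Cub.X ^ b - 1)) : a = 3 ∧ b = 4 := by
  have hA : (p : ℝ) * (al ^ a - 1) = q * (al ^ b - 1) := by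
    have := congrArg ea h
    rwa [map_mul, map_mul, ea_C, ea_C, map_sub, map_sub, map_pow, map_pow, ea_X, map_one] at this
  have hB : |(p : ℝ)| * ‖be ^ a - 1‖ = |(q : ℝ)| * ‖be ^ b - 1‖ := by
    have := congrArg (fun z => ‖eb z‖) h
    have hC : ∀ t : ℤ, eb (Cub.C t) = t := by intro t; rw [eb_apply]; simp
    simpa only [map_mul, hC, map_sub, map_pow, eb_X, map_one, norm_mul, Complex.norm_intCast]
      using this
  have g1 : ∀ k : ℕ, 0 < k → 0 < al ^ k - 1 := fun k hk => by
    have := one_lt_pow₀ one_lt_al hk.ne'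
    linarith
  have ga := g1 a ha
  have gb := g1 b (by omega)
  have hp : 0 < |(p : ℝ)| := by
    rw [abs_pos]
    intro h0
    rw [h0, zero_mul] at hA
    have : (q : ℝ) = 0 := by
      rcases mul_eq_zero.1 hA.symm with h | h
      · exact h
      · linarith
    rcases hpq with h | h
    · exact h (by exact_mod_cast h0)
    · exact h (by exact_mod_cast this)
  have hA' : |(p : ℝ)| * (al ^ a - 1) = |(q : ℝ)| * (al ^ b - 1) := by
    have := congrArg abs hA
    rwa [abs_mul, abs_mul, abs_of_pos ga, abs_of_pos gb] at this
  have hcross : (al ^ b - 1) * ‖be ^ a - 1‖ = (al ^ a - 1) * ‖be ^ b - 1‖ := by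
    apply mul_left_cancel₀ hp.ne'
    linear_combination (al ^ b - 1) * hB - ‖be ^ b - 1‖ * hA'
  have hlo : ∀ k : ℕ, 1 - ‖be‖ ^ k ≤ ‖be ^ k - 1‖ := by
    intro k
    rw [← norm_pow, ← norm_neg (be ^ k - 1), neg_sub]
    have := norm_sub_norm_le (1 : ℂ) (be ^ k)
    rwa [norm_one] at this
  have hhi : ∀ k : ℕ, ‖be ^ k - 1‖ ≤ 1 + ‖be‖ ^ k := by
    intro k
    rw [← norm_pow]
    have := norm_sub_le (be ^ k) 1
    rw [norm_one] at this
    linarith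
  have hpow : ∀ k l : ℕ, l ≤ k → ‖be‖ ^ k ≤ 0.74 ^ l := by
    intro k l hkl
    exact (pow_le_pow_of_le_one (norm_nonneg _) (norm_be_le.trans (by norm_num)) hkl).trans
      (pow_le_pow_left₀ (norm_nonneg _) norm_be_le l)
  -- it suffices to compare the growth at `α` with the bounded ratio at `β`
  have main : ∀ (l m k : ℕ), l ≤ a → m ≤ b → k ≤ b - a →
      (1.839 : ℝ) ^ k * (1 - 0.74 ^ l) > 1 + 0.74 ^ m → False := by
    intro l m k hl hm hk hgt
    have e1 : (1 : ℝ) - 0.74 ^ l ≤ ‖be ^ a - 1‖ := by linarith [hlo a, hpow a l hl]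
    have e2 : ‖be ^ b - 1‖ ≤ 1 + 0.74 ^ m := by linarith [hhi b, hpow b m hm]
    have e3 : (1.839 : ℝ) ^ k ≤ al ^ (b - a) :=
      (pow_le_pow_left₀ (by norm_num) al_gt.le k).trans (pow_le_pow_right₀ one_lt_al.le hk)
    have e4 : al ^ (b - a) * (al ^ a - 1) ≤ al ^ b - 1 := by
      have : al ^ b = al ^ (b - a) * al ^ a := by rw [← pow_add]; congr 1; omega
      rw [this]
      have := one_le_pow₀ one_lt_al.le (n := b - a)
      linarith
    have e5 : (0 : ℝ) ≤ 1 - 0.74 ^ l := by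
      have : (0.74 : ℝ) ^ l ≤ 1 := pow_le_one₀ (by norm_num) (by norm_num)
      linarith
    have e6 : (1.839 : ℝ) ^ k * (al ^ a - 1) ≤ al ^ b - 1 := le_trans (by gcongr) e4
    have e7 : (1.839 : ℝ) ^ k * (al ^ a - 1) * (1 - 0.74 ^ l) ≤ (al ^ a - 1) * (1 + 0.74 ^ m) := by
      calc _ ≤ (al ^ b - 1) * ‖be ^ a - 1‖ := by gcongr
        _ = (al ^ a - 1) * ‖be ^ b - 1‖ := hcross
        _ ≤ _ := by gcongr
    have e8 : (1.839 : ℝ) ^ k * (1 - 0.74 ^ l) ≤ 1 + 0.74 ^ m := by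
      apply le_of_mul_le_mul_left _ ga
      linarith
    linarith
  have hc0 := congrArg Cub.c0 h
  have hc1 := congrArg Cub.c1 h
  have hc2 := congrArg Cub.c2 h
  rcases Nat.lt_or_ge a 4 with h4 | h4
  · interval_cases a
    · rcases Nat.lt_or_ge b 4 with h5 | h5
      · exfalso
        interval_cases b <;> simp [pow_succ] at hc0 hc1 hc2 <;> omega
      · exact (main 1 4 3 le_rfl h5 (by omega) (by norm_num)).elim
    · rcases Nat.lt_or_ge b 4 with h5 | h5
      · exfalso
        interval_cases b; simp [pow_succ] at hc0 hc1 hc2; omega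
      · exact (main 2 4 2 le_rfl h5 (by omega) (by norm_num)).elim
    · rcases Nat.lt_or_ge b 5 with h5 | h5
      · exact ⟨rfl, by omega⟩
      · exact (main 3 5 2 le_rfl h5 (by omega) (by norm_num)).elim
  · exact (main 4 5 1 h4 (by omega) (by omega) (by norm_num)).elim

/-! ### Three solutions in arithmetic progression -/

lemma three_pow_mod8 (e : ℕ) : 3 ^ e % 8 = 1 ∨ 3 ^ e % 8 = 3 := by
  induction e with
  | zero => simp
  | succ e ih => rw [pow_succ]; omega

lemma three_pow_mod80 (e : ℕ) (h : 3 ^ e % 16 = 1) : 3 ^ e % 5 = 1 := by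
  rw [← Nat.div_add_mod e 4, pow_add, pow_mul] at *
  have h4 : e % 4 < 4 := Nat.mod_lt _ (by norm_num)
  have h1 : (3 ^ 4) ^ (e / 4) % 80 = 1 := by
    rw [Nat.pow_mod]; norm_num
  generalize (3 ^ 4) ^ (e / 4) = A at *
  interval_cases e % 4 <;> omega

/-- `2 ^ s - 1 = 3 ^ e`. -/
lemma two_pow_sub_one {s e : ℕ} (h : 2 ^ s = 3 ^ e + 1) : s = 1 ∨ s = 2 := by
  have h8 := three_pow_mod8 e
  rcases Nat.lt_or_ge s 3 with h3 | h3
  · have : 1 ≤ 3 ^ e := Nat.one_le_pow _ _ (by norm_num)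
    interval_cases s
    · omega
    · exact Or.inl rfl
    · exact Or.inr rfl
  · obtain ⟨k, rfl⟩ := Nat.exists_eq_add_of_le h3
    rw [pow_add] at h
    omega

/-- `2 ^ s + 1 = 3 ^ e`. -/
lemma two_pow_add_one {s e : ℕ} (h : 2 ^ s + 1 = 3 ^ e) : s = 1 ∨ s = 3 := by
  have h8 := three_pow_mod8 e
  rcases Nat.lt_or_ge s 4 with h3 | h3
  · interval_cases s <;> omega
  · exfalso
    have h5 := three_pow_mod80 e
    obtain ⟨k, rfl⟩ := Nat.exists_eq_add_of_le h3
    rw [pow_add] at h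
    have h6 := h5 (by omega)
    have h7 : 5 ∣ 2 ^ (4 + k) := by rw [pow_add]; omega
    have := (Nat.Prime.dvd_of_dvd_pow (by norm_num) h7)
    omega

/-- Three 3-smooth numbers in arithmetic progression: the common difference is `g` or `7 g` where
`g` is 3-smooth and equals the first term or half of it. -/
lemma smooth_ap {x1 y1 x2 y2 x3 y3 : ℕ}
    (h : 2 ^ x1 * 3 ^ y1 + 2 ^ x3 * 3 ^ y3 = 2 * (2 ^ x2 * 3 ^ y2))
    (h12 : 2 ^ x1 * 3 ^ y1 < 2 ^ x2 * 3 ^ y2) :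
    2 ^ x2 * 3 ^ y2 = 2 * (2 ^ x1 * 3 ^ y1) ∨ 2 * (2 ^ x2 * 3 ^ y2) = 3 * (2 ^ x1 * 3 ^ y1) ∨
      2 * (2 ^ x2 * 3 ^ y2) = 9 * (2 ^ x1 * 3 ^ y1) := by
  induction hk : y1 + y2 + y3 using Nat.strong_induction_on generalizing y1 y2 y3 with
  | _ k ih =>
  -- at most one term is divisible by three after dividing out the common factor
  by_cases hz : 1 ≤ y1 ∧ 1 ≤ y2 ∧ 1 ≤ y3
  · obtain ⟨⟨a, rfl⟩, ⟨b, rfl⟩, ⟨c, rfl⟩⟩ := And.intro (Nat.exists_eq_add_of_le' hz.1)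
      (And.intro (Nat.exists_eq_add_of_le' hz.2.1) (Nat.exists_eq_add_of_le' hz.2.2))
    simp only [pow_succ, ← mul_assoc] at *
    have := ih (a + b + c) (by omega) (y1 := a) (y2 := b) (y3 := c) (by omega) (by omega) rfl
    omega
  have hd : ∀ a b : ℕ, 1 ≤ b → 3 ∣ 2 ^ a * 3 ^ b := fun a b hb =>
    Dvd.dvd.mul_left (dvd_pow_self 3 (by omega)) _
  have hnd : ∀ a : ℕ, ¬ 3 ∣ 2 ^ a * 3 ^ 0 := by
    intro a hc
    rw [pow_zero, mul_one] at hc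
    have := Nat.Prime.dvd_of_dvd_pow (by norm_num) hc
    omega
  have hcase : (y1 = 0 ∧ y2 = 0) ∨ (y1 = 0 ∧ y3 = 0) ∨ (y2 = 0 ∧ y3 = 0) := by
    by_contra hc
    rcases Nat.eq_zero_or_pos y1 with e1 | e1 <;> rcases Nat.eq_zero_or_pos y2 with e2 | e2 <;>
      rcases Nat.eq_zero_or_pos y3 with e3 | e3 <;> try omega
    · subst e1; have := hnd x1; have := hd x2 y2 e2; have := hd x3 y3 e3; omega
    · subst e2; have := hnd x2; have := hd x1 y1 e1; have := hd x3 y3 e3; omega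
    · subst e3; have := hnd x3; have := hd x2 y2 e2; have := hd x1 y1 e1; omega
  have hlt : ∀ {a b : ℕ}, 2 ^ a < 2 ^ b → a < b := fun h => (Nat.pow_lt_pow_iff_right (by norm_num)).1 h
  -- an odd 3-smooth number is a power of three
  have hodd : ∀ {a b c o : ℕ}, 2 ^ a * o = 2 ^ b * 3 ^ c → o % 2 = 1 → o = 3 ^ c := by
    intro a b c o he ho
    have hodd3 : (3 ^ c) % 2 = 1 := by rw [Nat.pow_mod]; simp
    have h2a : ∀ a : ℕ, 0 < 2 ^ a := fun a => by positivity
    rcases lt_trichotomy a b with hl | hl | hl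
    · obtain ⟨t, rfl⟩ := Nat.exists_eq_add_of_lt hl
      rw [show a + t + 1 = a + (t + 1) by ring, pow_add, mul_assoc] at he
      have := Nat.eq_of_mul_eq_mul_left (h2a a) he
      rw [pow_succ, mul_comm (2 ^ t) 2, mul_assoc] at this
      omega
    · subst hl; exact Nat.eq_of_mul_eq_mul_left (h2a a) he
    · obtain ⟨t, rfl⟩ := Nat.exists_eq_add_of_lt hl
      rw [show b + t + 1 = b + (t + 1) by ring, pow_add, mul_assoc] at he
      have := Nat.eq_of_mul_eq_mul_left (h2a b) he
      rw [pow_succ, mul_comm (2 ^ t) 2, mul_assoc] at this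
      omega
  rcases hcase with ⟨rfl, rfl⟩ | ⟨rfl, rfl⟩ | ⟨rfl, rfl⟩ <;> simp only [pow_zero, mul_one] at *
  · have h1 := hlt h12
    obtain ⟨t, rfl⟩ := Nat.exists_eq_add_of_lt h1
    rw [show x1 + t + 1 = x1 + (t + 1) by ring, pow_add] at *
    have e : 2 ^ x1 * (2 ^ (t + 2) - 1) = 2 ^ x3 * 3 ^ y3 := by
      rw [Nat.mul_sub, mul_one, show t + 2 = (t + 1) + 1 by ring, pow_succ 2 (t + 1), ← mul_assoc]
      omega
    have h4 : 2 ^ (t + 2) = 2 ^ t * 4 := by rw [pow_add]; norm_num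
    have hp : 0 < 2 ^ t := by positivity
    have h3 := hodd e (by omega)
    rcases two_pow_sub_one (s := t + 2) (e := y3) (by omega) with h5 | h5
    · omega
    · have : t = 0 := by omega
      subst this; left; simp; ring
  · have h13 : 2 ^ x1 < 2 ^ x3 := by omega
    have h1 := hlt h13
    obtain ⟨t, rfl⟩ := Nat.exists_eq_add_of_lt h1
    rw [show x1 + t + 1 = x1 + (t + 1) by ring, pow_add 2 x1] at *
    have e : 2 ^ x1 * (2 ^ (t + 1) + 1) = 2 ^ (x2 + 1) * 3 ^ y2 := by
      rw [Nat.mul_add, mul_one, pow_succ 2 x2, mul_comm (2 ^ x2) 2, mul_assoc]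
      omega
    have h4 : 2 ^ (t + 1) = 2 ^ t * 2 := by rw [pow_succ]
    have h3 := hodd e (by omega)
    rcases two_pow_add_one h3 with h5 | h5
    · rw [h5] at h; omega
    · rw [h5] at h; omega
  · exfalso
    have h23 : 2 ^ x2 < 2 ^ x3 := by omega
    have h1 := hlt h23
    obtain ⟨t, rfl⟩ := Nat.exists_eq_add_of_lt h1
    rw [pow_add, pow_add] at *
    have hp : 1 ≤ 2 ^ t := Nat.one_le_two_pow
    have : 2 ^ x2 ≤ 2 ^ x2 * 2 ^ t := Nat.le_mul_of_pos_right _ hp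
    have : 0 < 2 ^ x1 * 3 ^ y1 := by positivity
    omega

lemma binet_diff (m a : ℕ) : |ea rh * (T (m + a) - T m) - al ^ m * (al ^ a - 1)| ≤ 4 := by
  have h1 := binet_T (m + a)
  have h2 := binet_T m
  have e : ea rh * (T (m + a) - T m) - al ^ m * (al ^ a - 1) =
      (ea rh * T (m + a) - al ^ (m + a)) - (ea rh * T m - al ^ m) := by rw [pow_add]; ring
  rw [e]
  refine (abs_sub _ _).trans ?_
  linarith

/-- The exceptional collinear configuration forces a small index. -/
lemma Sol.pattern {d : ℤ} {n x y : Fin 5 → ℕ} (s : Sol d n x y) {N Q : ℕ} (hb : Bd n x y N)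
    (hL : LB4 N Q) {i j l : Fin 5} (hj : n j = n i + 3) (hl : n l = n i + 4) :
    7 * (n i) ≤ 8 * (Q + 2) := by
  obtain ⟨m, hm⟩ : ∃ m, m = n i := ⟨_, rfl⟩
  rw [← hm] at hj hl ⊢
  have hT4 : T (m + 4) = 2 * T (m + 3) - T m := by
    have a1 : T (m + 4) = T (m + 3) + T (m + 2) + T (m + 1) := by rw [T]
    have a2 : T (m + 3) = T (m + 2) + T (m + 1) + T m := by rw [T]
    omega
  have hT3 : T m < T (m + 3) := by
    exact T_lt (by rw [hm]; exact s.ne1 i) (by omega)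
  have ei := s.eq i
  have ej := s.eq j
  have el := s.eq l
  rw [← hm] at ei
  rw [hj] at ej
  rw [hl] at el
  have hnat : 2 ^ x i * 3 ^ y i + 2 ^ x l * 3 ^ y l = 2 * (2 ^ x j * 3 ^ y j) := by
    have : (2 : ℤ) ^ x i * 3 ^ y i + 2 ^ x l * 3 ^ y l = 2 * (2 ^ x j * 3 ^ y j) := by linarith
    exact_mod_cast this
  have hlt : 2 ^ x i * 3 ^ y i < 2 ^ x j * 3 ^ y j := by
    have : (2 : ℤ) ^ x i * 3 ^ y i < 2 ^ x j * 3 ^ y j := by linarith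
    exact_mod_cast this
  have hN := (hb l).1
  have hxi := (hb i).2.1
  have hyi := (hb i).2.2
  have hrh := rh_bounds
  have hs : (al + 1) * (al - 1) ^ 2 = 2 := by have := al_cube; linear_combination this
  have hB : 0 < al ^ (m + 1) := pow_pos al_pos _
  have hal1 := al_gt
  have hal2 := al_lt
  have hsq : (al - 1) ^ 2 ≤ 0.72 := by nlinarith
  have hsq0 : 0 < (al - 1) ^ 2 := by nlinarith
  have hbin := binet_diff m 3
  have hfac : al ^ m * (al ^ 3 - 1) = al ^ (m + 1) * (al + 1) := by rw [al_cube]; ring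
  rw [hfac] at hbin
  -- the difference is `κ 2 ^ (x - e) 3 ^ y` with `κ ∈ {1, 7}`, `e ∈ {0, 1}`
  have fin : ∀ (t : Fin 3) (e : ℕ) (κ : ℝ), e ≤ 1 → 0 < κ → ea (piv t) = κ * (ea rh * (al - 1) ^ 2) →
      ((T (m + 3) : ℝ) - T m) * 2 ^ e = κ * (2 ^ x i * 3 ^ y i) → 7 * m ≤ 8 * (Q + 2) := by
    intro t e κ he hκ hpt hdiff
    have key := hL t ((x i : ℤ) - (e + 1)) (y i) (-((m + 1 : ℕ) : ℤ))
      (by rw [abs_le]; constructor <;> omega) (by rw [abs_le]; constructor <;> omega)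
      (by rw [abs_le]; constructor <;> omega)
    have hlog : Real.log (ea (piv t)) + (((x i : ℤ) - (e + 1) : ℤ) * Real.log 2 +
        ((y i : ℤ) : ℝ) * Real.log 3 + ((-((m + 1 : ℕ) : ℤ) : ℤ) : ℝ) * Real.log al) =
        Real.log (ea rh * (T (m + 3) - T m) * ((al - 1) ^ 2 / 2) / al ^ (m + 1)) := by
      have h1 : ea rh * ((T (m + 3) : ℝ) - T m) * ((al - 1) ^ 2 / 2) =
          ea (piv t) * (2 ^ x i * 3 ^ y i) / 2 ^ (e + 1) := by
        rw [hpt, pow_succ, eq_div_iff (by positivity)]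
        linear_combination ea rh * (al - 1) ^ 2 * hdiff
      have hpp : 0 < ea (piv t) := by linarith [piv_ge t]
      rw [h1, Real.log_div (by positivity) hB.ne', Real.log_div (by positivity) (by positivity),
        Real.log_mul hpp.ne' (by positivity), log_smooth, Real.log_pow, Real.log_pow]
      push_cast; ring
    rw [hlog] at key
    have h2 : |ea rh * (T (m + 3) - T m) * ((al - 1) ^ 2 / 2) / al ^ (m + 1) - 1| ≤
        1.5 / al ^ (m + 1) := by
      rw [div_sub_one hB.ne', abs_div, abs_of_pos hB]
      gcongr
      have e1 : ea rh * ((T (m + 3) : ℝ) - T m) * ((al - 1) ^ 2 / 2) - al ^ (m + 1) =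
          (ea rh * (T (m + 3) - T m) - al ^ (m + 1) * (al + 1)) * ((al - 1) ^ 2 / 2) := by
        linear_combination (al ^ (m + 1) / 2) * hs
      rw [e1, abs_mul, abs_of_pos (by positivity : 0 < (al - 1) ^ 2 / 2)]
      exact (mul_le_mul hbin (by linarith : (al - 1) ^ 2 / 2 ≤ 0.36) (by positivity)
        (by norm_num)).trans (by norm_num)
    have h3 := le_of_log_lower hB h2 key
    apply le_of_al_pow
    have h4 : al ^ m ≤ al ^ (m + 1) := pow_le_pow_right₀ one_lt_al.le (by omega)
    rw [pow_add]
    have : (0 : ℝ) < 2 ^ Q := by positivity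
    linarith
  have hp1 : ea (piv 1) = 1 * (ea rh * (al - 1) ^ 2) := by
    show ea (rh * (Cub.X - 1) ^ 2) = _
    rw [map_mul, map_pow, map_sub, ea_X, map_one, one_mul]
  have hp2 : ea (piv 2) = 7 * (ea rh * (al - 1) ^ 2) := by
    show ea (7 * (rh * (Cub.X - 1) ^ 2)) = _
    rw [map_mul, map_mul, map_pow, map_sub, ea_X, map_one, map_ofNat]
  have eiR : (T m : ℝ) + d = 2 ^ x i * 3 ^ y i := by exact_mod_cast congrArg (Int.cast (R := ℝ)) ei
  have ejR : (T (m + 3) : ℝ) + d = 2 ^ x j * 3 ^ y j := by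
    exact_mod_cast congrArg (Int.cast (R := ℝ)) ej
  rcases smooth_ap hnat hlt with h | h | h
  · have hR : (2 : ℝ) ^ x j * 3 ^ y j = 2 * (2 ^ x i * 3 ^ y i) := by exact_mod_cast h
    exact fin 1 0 1 (by omega) one_pos hp1 (by linarith)
  · have hR : 2 * ((2 : ℝ) ^ x j * 3 ^ y j) = 3 * (2 ^ x i * 3 ^ y i) := by exact_mod_cast h
    exact fin 1 1 1 (by omega) one_pos hp1 (by linarith)
  · have hR : 2 * ((2 : ℝ) ^ x j * 3 ^ y j) = 9 * (2 ^ x i * 3 ^ y i) := by exact_mod_cast h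
    exact fin 2 1 7 (by omega) (by norm_num) hp2 (by linarith)

/-! ### The 2-adic stage -/

namespace Cub

lemma tau_C_mul (a : ℤ) (z : Cub ℤ) : tau (C a * z) = a * tau z := by
  simp [tau_apply]; ring

lemma tau_mul_X_pow (P : Cub ℤ) (t : ℕ) :
    tau (P * X ^ t) = P.c0 * T t + P.c1 * T (t + 1) + P.c2 * T (t + 2) := by
  have e : P * X ^ t = C P.c0 * X ^ t + C P.c1 * X ^ (t + 1) + C P.c2 * X ^ (t + 2) := by
    have : P = C P.c0 + C P.c1 * X + C P.c2 * X ^ 2 := by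
      ext <;> simp [pow_two]
    conv_lhs => rw [this]
    ring
  rw [e, map_add, map_add, tau_C_mul, tau_C_mul, tau_C_mul, tau_X_pow, tau_X_pow, tau_X_pow]

/-- The bilinear form `τ (z w)` is nondegenerate. -/
lemma eq_zero_of_tau (z : Cub ℤ) (h0 : tau (z * X ^ 0) = 0) (h1 : tau (z * X ^ 1) = 0)
    (h2 : tau (z * X ^ 2) = 0) : z = 0 := by
  rw [tau_mul_X_pow] at h0 h1 h2
  simp [T] at h0 h1 h2
  have a0 : z.c0 = 0 := by omega
  have a1 : z.c1 = 0 := by omega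
  have a2 : z.c2 = 0 := by omega
  ext <;> simp [a0, a1, a2]

lemma isUnit_X_pow (t : ℕ) : IsUnit ((X : Cub ℤ) ^ t) :=
  (IsUnit.of_mul_eq_one _ X_mul_Y).pow t

lemma abs_nm_le (z : Cub ℤ) : |(nm z : ℝ)| ≤ sz z ^ 3 := by
  have h := congrArg ea (mul_cof z)
  rw [map_mul, ea_C] at h
  rw [← h, abs_mul, pow_succ, mul_comm (sz z ^ 2)]
  exact mul_le_mul (abs_ea_le z) (abs_ea_cof_le z) (abs_nonneg _) (sz_nonneg z)

end Cub

lemma dvd_congr {a b c : ℤ} (h : a ∣ b) (e : c = b) : a ∣ c := e ▸ h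

lemma collinear_shift {t1 t2 t3 : ℕ} (h12 : t1 < t2) (h23 : t2 < t3) {p q : ℤ} (hpq : p ≠ 0 ∨ q ≠ 0)
    (h : Cub.C p * (Cub.X ^ t2 - Cub.X ^ t1) = Cub.C q * (Cub.X ^ t3 - Cub.X ^ t1)) :
    t2 = t1 + 3 ∧ t3 = t1 + 4 := by
  obtain ⟨a, rfl⟩ := Nat.exists_eq_add_of_lt h12
  obtain ⟨b, rfl⟩ := Nat.exists_eq_add_of_lt h23
  have h' : Cub.C p * (Cub.X ^ (a + 1) - 1) = Cub.C q * (Cub.X ^ (a + b + 2) - 1) := by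
    apply (Cub.isUnit_X_pow t1).mul_left_cancel
    linear_combination h
  have := collinear (by omega) (by omega) hpq h'
  omega

/-- If three right-hand sides in the window are divisible by a huge power of two, then so are the
differences of their Tribonacci numbers; this determines `α ^ n` projectively to high 2-adic precision,
contrary to `pb_cub`, unless the differences are collinear, in which case `Sol.pattern` applies. -/
lemma Sol.pb_stage {d : ℤ} {n x y : Fin 5 → ℕ} (s : Sol d n x y) {N Q W ℓ r H : ℕ}
    (hb : Bd n x y N) (hL : LB4 N Q) (hW : n 4 - n 1 ≤ W) (hN : N ≤ 2 ^ ℓ)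
    (hr : ℓ + r + 18 ≤ 2 ^ r) (hH : 6 * W + 72 ≤ 2 ^ H)
    {i j l : Fin 5} (hi : 1 ≤ i) (hij : i < j) (hjl : j < l) (hn : 8 * (2 ^ (H + 2 * r + 33) + 1) ≤ n 1)
    (hx : ∀ t, t = i ∨ t = j ∨ t = l → 2 ^ (H + 4 * r + 50) ≤ x t) : 7 * n i ≤ 8 * (Q + 2) := by
  obtain ⟨m, hm⟩ : ∃ m, m = n 1 / 8 := ⟨_, rfl⟩
  have hle : ∀ t : Fin 5, 1 ≤ t → n 1 ≤ n t ∧ n t ≤ n 4 := fun t ht =>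
    ⟨s.mono.monotone ht, s.mono.monotone (Fin.le_last t)⟩
  have hi' := hle i hi
  have hj' := hle j (hi.trans hij.le)
  have hl' := hle l (hi.trans (hij.trans hjl).le)
  have hnij := s.mono hij
  have hnjl := s.mono hjl
  obtain ⟨t1, h1⟩ : ∃ t, n i = 8 * m + t := ⟨n i - 8 * m, by omega⟩
  obtain ⟨t2, h2⟩ : ∃ t, n j = 8 * m + t := ⟨n j - 8 * m, by omega⟩
  obtain ⟨t3, h3⟩ : ∃ t, n l = 8 * m + t := ⟨n l - 8 * m, by omega⟩
  obtain ⟨k, hk⟩ : ∃ k, k = 2 ^ (H + 4 * r + 50) := ⟨_, rfl⟩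
  obtain ⟨P, hP⟩ : ∃ P : Cub ℤ, P = Cub.X ^ (8 * m) := ⟨_, rfl⟩
  have hT : ∀ t, T (8 * m + t) = P.c0 * T t + P.c1 * T (t + 1) + P.c2 * T (t + 2) := by
    intro t
    rw [← Cub.tau_mul_X_pow, hP, ← pow_add, Cub.tau_X_pow]
  have hdvd : ∀ t, t = i ∨ t = j ∨ t = l → (2 : ℤ) ^ k ∣ T (n t) + d := by
    intro t ht
    rw [s.eq t]
    exact Dvd.dvd.mul_right (pow_dvd_pow 2 (hk ▸ hx t ht)) _
  -- coordinates of the two difference vectors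
  obtain ⟨a, ha⟩ : ∃ a : ℕ → ℤ, a = fun u => T (t2 + u) - T (t1 + u) := ⟨_, rfl⟩
  obtain ⟨b, hbb⟩ : ∃ b : ℕ → ℤ, b = fun u => T (t3 + u) - T (t1 + u) := ⟨_, rfl⟩
  have hPa : (2 : ℤ) ^ k ∣ P.c0 * a 0 + P.c1 * a 1 + P.c2 * a 2 := by
    have := dvd_sub (hdvd j (by tauto)) (hdvd i (by tauto))
    rw [h1, h2, hT, hT] at this
    exact dvd_congr this (by rw [ha]; ring_nf)
  have hPb : (2 : ℤ) ^ k ∣ P.c0 * b 0 + P.c1 * b 1 + P.c2 * b 2 := by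
    have := dvd_sub (hdvd l (by tauto)) (hdvd i (by tauto))
    rw [h1, h3, hT, hT] at this
    exact dvd_congr this (by rw [hbb]; ring_nf)
  have hTB : ∀ t u : ℕ, t ≤ W + 7 → u ≤ 2 → T (t + u) ≤ 2 ^ (W + 9) := fun t u ht hu =>
    (T_le_two_pow _).trans (pow_le_pow_right₀ (by norm_num) (by omega))
  have haB : ∀ u, u ≤ 2 → |a u| ≤ 2 ^ (W + 9) := by
    intro u hu
    rw [ha, abs_le]
    have g1 := hTB t1 u (by omega) hu
    have g2 := hTB t2 u (by omega) hu
    have g3 := T_nonneg (t1 + u)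
    have g4 := T_nonneg (t2 + u)
    constructor <;> simp only <;> linarith
  have hbB : ∀ u, u ≤ 2 → |b u| ≤ 2 ^ (W + 9) := by
    intro u hu
    rw [hbb, abs_le]
    have g1 := hTB t1 u (by omega) hu
    have g2 := hTB t3 u (by omega) hu
    have g3 := T_nonneg (t1 + u)
    have g4 := T_nonneg (t3 + u)
    constructor <;> simp only <;> linarith
  obtain ⟨θ, hθ⟩ : ∃ θ : Cub ℤ, θ = ⟨a 1 * b 2 - a 2 * b 1, a 2 * b 0 - a 0 * b 2,
    a 0 * b 1 - a 1 * b 0⟩ := ⟨_, rfl⟩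
  have hθ0 : θ.c0 = a 1 * b 2 - a 2 * b 1 := by rw [hθ]
  have hθ1 : θ.c1 = a 2 * b 0 - a 0 * b 2 := by rw [hθ]
  have hθ2 : θ.c2 = a 0 * b 1 - a 1 * b 0 := by rw [hθ]
  by_cases hz : θ = 0
  · rw [hz] at hθ0 hθ1 hθ2
    simp only [Cub.zero_c0, Cub.zero_c1, Cub.zero_c2] at hθ0 hθ1 hθ2
    have htau : ∀ u : ℕ, ∀ p q : ℤ, Cub.tau ((Cub.C p * (Cub.X ^ t2 - Cub.X ^ t1) -
        Cub.C q * (Cub.X ^ t3 - Cub.X ^ t1)) * Cub.X ^ u) = p * a u - q * b u := by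
      intro u p q
      have e : (Cub.C p * (Cub.X ^ t2 - Cub.X ^ t1) - Cub.C q * (Cub.X ^ t3 - Cub.X ^ t1)) * Cub.X ^ u
          = Cub.C p * (Cub.X ^ (t2 + u) - Cub.X ^ (t1 + u)) -
            Cub.C q * (Cub.X ^ (t3 + u) - Cub.X ^ (t1 + u)) := by ring
      rw [e, map_sub, Cub.tau_C_mul, Cub.tau_C_mul, map_sub, map_sub, Cub.tau_X_pow, Cub.tau_X_pow,
        Cub.tau_X_pow, ha, hbb]
    have fin : ∀ p q : ℤ, (p ≠ 0 ∨ q ≠ 0) → p * a 0 - q * b 0 = 0 → p * a 1 - q * b 1 = 0 →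
        p * a 2 - q * b 2 = 0 → 7 * n i ≤ 8 * (Q + 2) := by
      intro p q hpq e0 e1 e2
      have := Cub.eq_zero_of_tau _ ((htau 0 p q).trans e0) ((htau 1 p q).trans e1)
        ((htau 2 p q).trans e2)
      obtain ⟨g1, g2⟩ := collinear_shift (by omega) (by omega) hpq (sub_eq_zero.1 this)
      exact s.pattern hb hL (by omega : n j = n i + 3) (by omega : n l = n i + 4)
    by_cases z0 : a 0 = 0
    · by_cases z1 : a 1 = 0
      · by_cases z2 : a 2 = 0
        · exact fin 1 0 (by simp) (by simp [z0]) (by simp [z1]) (by simp [z2])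
        · exact fin (b 2) (a 2) (Or.inr z2) (by linarith) (by linarith) (by ring)
      · exact fin (b 1) (a 1) (Or.inr z1) (by linarith) (by ring) (by linarith)
    · exact fin (b 0) (a 0) (Or.inr z0) (by ring) (by linarith) (by linarith)
  · exfalso
    have hprod : ∀ u v, u ≤ 2 → v ≤ 2 → |a u * b v - a v * b u| ≤ 2 * (2 ^ (W + 9) * 2 ^ (W + 9)) := by
      intro u v hu hv
      refine (abs_sub _ _).trans ?_
      rw [abs_mul, abs_mul]
      have g1 := mul_le_mul (haB u hu) (hbB v hv) (abs_nonneg _) (by positivity)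
      have g2 := mul_le_mul (haB v hv) (hbB u hu) (abs_nonneg _) (by positivity)
      linarith
    have hsz : Cub.sz θ ≤ 2 ^ (2 * W + 24) := by
      have p0 : |(θ.c0 : ℝ)| ≤ 2 * (2 ^ (W + 9) * 2 ^ (W + 9)) := by
        rw [hθ0]; exact_mod_cast hprod 1 2 (by norm_num) (by norm_num)
      have p1 : |(θ.c1 : ℝ)| ≤ 2 * (2 ^ (W + 9) * 2 ^ (W + 9)) := by
        rw [hθ1]; exact_mod_cast hprod 2 0 (by norm_num) (by norm_num)
      have p2 : |(θ.c2 : ℝ)| ≤ 2 * (2 ^ (W + 9) * 2 ^ (W + 9)) := by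
        rw [hθ2]; exact_mod_cast hprod 0 1 (by norm_num) (by norm_num)
      have e : (2 : ℝ) ^ (2 * W + 24) = 64 * (2 ^ (W + 9) * 2 ^ (W + 9)) := by
        rw [← pow_add, show 2 * W + 24 = 6 + (W + 9 + (W + 9)) by ring, pow_add]; norm_num
      rw [e, Cub.sz]
      have : (0 : ℝ) < 2 ^ (W + 9) * 2 ^ (W + 9) := by positivity
      linarith
    refine pb_cub θ hz (6 * W + 72) H r (ℓ + r + 17) k m ?_ ?_ hH (by omega) ?_ (by omega) hk.ge P hP
      ?_ ?_ ?_
    · calc 9 * Cub.sz θ ≤ 2 ^ 4 * 2 ^ (2 * W + 24) := by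
            have := Cub.sz_nonneg θ
            linarith
        _ = 2 ^ (4 + (2 * W + 24)) := (pow_add _ _ _).symm
        _ ≤ _ := pow_le_pow_right₀ (by norm_num) (by omega)
    · have h4 := Cub.abs_nm_le θ
      have h5 : Cub.sz θ ^ 3 ≤ (2 ^ (2 * W + 24)) ^ 3 := by
        gcongr; exact Cub.sz_nonneg θ
      have h6 : |(Cub.nm θ : ℝ)| ≤ 2 ^ (6 * W + 72) := by
        refine h4.trans (h5.trans (le_of_eq ?_))
        rw [← pow_mul]; congr 1; ring
      exact_mod_cast h6
    · rw [show ℓ + r + 17 = (r + 17) + ℓ by ring, pow_add 2 (r + 17) ℓ]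
      apply Nat.mul_le_mul_left
      have := (hb 1).1
      omega
    · have := dvd_sub (Dvd.dvd.mul_left hPb (a 2)) (Dvd.dvd.mul_left hPa (b 2))
      rw [hθ0, hθ1]
      exact dvd_congr this (by ring)
    · have := dvd_sub (Dvd.dvd.mul_left hPa (b 1)) (Dvd.dvd.mul_left hPb (a 1))
      rw [hθ0, hθ2]
      exact dvd_congr this (by ring)
    · have := dvd_sub (Dvd.dvd.mul_left hPb (a 0)) (Dvd.dvd.mul_left hPa (b 0))
      rw [hθ1, hθ2]
      exact dvd_congr this (by ring)

/-! ### Two solutions with a small exponent of two -/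

lemma Cub.sz_cof (z : Cub ℤ) : Cub.sz (Cub.cof z) ≤ 2 * Cub.sz z ^ 2 := by
  have key : ∀ p q r : ℝ,
      |(p + r) * (p + q + 2 * r) - (q + 2 * r) * (q + r)| + |(q + 2 * r) * r - q * (p + q + 2 * r)|
        + |q * (q + r) - (p + r) * r| ≤ 18 * (|p| + |q| + |r|) ^ 2 := by
    intro p q r
    have h1 := abs_nonneg p
    have h2 := abs_nonneg q
    have h3 := abs_nonneg r
    have a1 : |p + r| ≤ |p| + |r| := abs_add_le _ _
    have a2 : |p + q + 2 * r| ≤ |p| + |q| + 2 * |r| := by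
      refine (abs_add_le _ _).trans (add_le_add (abs_add_le _ _) ?_)
      rw [abs_mul, abs_two]
    have a3 : |q + 2 * r| ≤ |q| + 2 * |r| := by
      refine (abs_add_le _ _).trans (add_le_add le_rfl ?_)
      rw [abs_mul, abs_two]
    have a4 : |q + r| ≤ |q| + |r| := abs_add_le _ _
    have b1 : |(p + r) * (p + q + 2 * r) - (q + 2 * r) * (q + r)| ≤
        (|p| + |r|) * (|p| + |q| + 2 * |r|) + (|q| + 2 * |r|) * (|q| + |r|) := by
      refine (abs_sub _ _).trans ?_
      rw [abs_mul, abs_mul]; gcongr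
    have b2 : |(q + 2 * r) * r - q * (p + q + 2 * r)| ≤
        (|q| + 2 * |r|) * |r| + |q| * (|p| + |q| + 2 * |r|) := by
      refine (abs_sub _ _).trans ?_
      rw [abs_mul, abs_mul]; gcongr
    have b3 : |q * (q + r) - (p + r) * r| ≤ |q| * (|q| + |r|) + (|p| + |r|) * |r| := by
      refine (abs_sub _ _).trans ?_
      rw [abs_mul, abs_mul]; gcongr
    nlinarith [mul_nonneg h1 h2, mul_nonneg h1 h3, mul_nonneg h2 h3]
  have := key z.c0 z.c1 z.c2
  unfold Cub.sz Cub.cof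
  push_cast
  linarith

section
variable {d : ℤ} {n x y : Fin 5 → ℕ}

/-- The right-hand sides in the window differ by a bounded factor. -/
lemma Sol.rhs_le (s : Sol d n x y) {N Q : ℕ} (hb : Bd n x y N) (hL : LB4 N Q) (i j : Fin 5) :
    (2 : ℤ) ^ x j * 3 ^ y j ≤ 2 ^ (Q + 4) * (2 ^ x i * 3 ^ y i) := by
  have h1 := s.al_le hb hL j
  have h2 := T_le_al (n j)
  have h3 : (0 : ℝ) ≤ T (n j) := by exact_mod_cast T_nonneg _
  have h4 : (0 : ℝ) ≤ T (n i) := by exact_mod_cast T_nonneg _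
  have hd : (1 : ℝ) ≤ d := by exact_mod_cast s.hd
  have hq : (1 : ℝ) ≤ 2 ^ Q := one_le_pow₀ (by norm_num)
  have h5 : (T (n j) : ℝ) + d ≤ 2 ^ (Q + 4) * (T (n i) + d) := by
    have : (T (n j) : ℝ) ≤ T (n j) * al := by nlinarith [one_lt_al]
    rw [pow_add]
    nlinarith [mul_nonneg (by linarith : (0:ℝ) ≤ 2 ^ Q) h4]
  rw [← s.eq i, ← s.eq j]
  exact_mod_cast h5

lemma Sol.three_pow_diff (s : Sol d n x y) {N Q k : ℕ} (hb : Bd n x y N) (hL : LB4 N Q)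
    {i j : Fin 5} (hij : i < j) (hxi : x i ≤ k) (hxj : x j ≤ k) :
    ∃ (v : ℕ) (u : ℤ), v ≤ N ∧ 1 ≤ u ∧ u ≤ 2 ^ (k + Q + 4) ∧ T (n j) - T (n i) = 3 ^ v * u := by
  have hlt : T (n i) < T (n j) := T_lt (s.ne1 i) (s.mono hij)
  have ei := s.eq i
  have ej := s.eq j
  have hXi : (0 : ℤ) < 2 ^ x i * 3 ^ y i := by positivity
  have h2k : ∀ a, a ≤ k → (2 : ℤ) ^ a ≤ 2 ^ k := fun a ha => pow_le_pow_right₀ (by norm_num) ha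
  have hpos : ∀ (v : ℕ) (u : ℤ), T (n j) - T (n i) = 3 ^ v * u → 1 ≤ u := by
    intro v u h
    have h3 : (0 : ℤ) < 3 ^ v := by positivity
    by_contra hc
    have : 3 ^ v * u ≤ 0 := mul_nonpos_of_nonneg_of_nonpos h3.le (by omega)
    omega
  rcases le_total (y i) (y j) with h | h
  · obtain ⟨e, he⟩ := Nat.exists_eq_add_of_le h
    have hu : T (n j) - T (n i) = 3 ^ y i * (2 ^ x j * 3 ^ e - 2 ^ x i) := by
      have : T (n j) - T (n i) = 2 ^ x j * 3 ^ y j - 2 ^ x i * 3 ^ y i := by omega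
      rw [this, he, pow_add]; ring
    refine ⟨y i, _, (hb i).2.2, hpos _ _ hu, ?_, hu⟩
    have h1 := s.rhs_le hb hL i j
    have h3 : (0 : ℤ) < 3 ^ y i := by positivity
    have h4 : (2 : ℤ) ^ x j * 3 ^ e ≤ 2 ^ (Q + 4) * 2 ^ x i := by
      rw [he, pow_add] at h1
      refine le_of_mul_le_mul_right ?_ h3
      linarith
    have h5 : (2 : ℤ) ^ (Q + 4) * 2 ^ x i ≤ 2 ^ (Q + 4) * 2 ^ k :=
      mul_le_mul_of_nonneg_left (h2k _ hxi) (by positivity)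
    have h6 : (2 : ℤ) ^ (k + Q + 4) = 2 ^ (Q + 4) * 2 ^ k := by rw [← pow_add]; congr 1; omega
    have h7 : (0 : ℤ) < 2 ^ x i := by positivity
    rw [h6]; linarith
  · obtain ⟨e, he⟩ := Nat.exists_eq_add_of_le h
    have hu : T (n j) - T (n i) = 3 ^ y j * (2 ^ x j - 2 ^ x i * 3 ^ e) := by
      have : T (n j) - T (n i) = 2 ^ x j * 3 ^ y j - 2 ^ x i * 3 ^ y i := by omega
      rw [this, he, pow_add]; ring
    refine ⟨y j, _, (hb j).2.2, hpos _ _ hu, ?_, hu⟩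
    have h7 : (0 : ℤ) < 2 ^ x i * 3 ^ e := by positivity
    have h8 := h2k _ hxj
    have h9 : (2 : ℤ) ^ k ≤ 2 ^ (k + Q + 4) := pow_le_pow_right₀ (by norm_num) (by omega)
    linarith

end

/-- The algebraic number `u ρ / (α ^ h - 1)`, written as `ea ν / D`. -/
lemma exists_pivot {h W g : ℕ} (hh : 1 ≤ h) (hW : h ≤ W) {u : ℤ} (hu : 1 ≤ u) (hu2 : u ≤ 2 ^ g) :
    ∃ (ν : Cub ℤ) (D : ℕ), 1 ≤ D ∧ 0 < ea ν ∧ ea ν / D = u * ea rh / (al ^ h - 1) ∧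
      Cub.sz ν ≤ 2 ^ (g + 12 * W + 20) ∧ (D : ℝ) ≤ 2 ^ (g + 12 * W + 20) ∧
      (D : ℝ) ≤ 2 ^ (g + 12 * W + 20) * ea ν := by
  obtain ⟨z, hz⟩ : ∃ z : Cub ℤ, z = Cub.X ^ h - 1 := ⟨_, rfl⟩
  have hz1 : ea z = al ^ h - 1 := by rw [hz]; simp
  have hz0 : 0 < ea z := by
    rw [hz1]; have := one_lt_pow₀ one_lt_al (show h ≠ 0 by omega); linarith
  have hzne : z ≠ 0 := by rintro rfl; simp at hz0
  have hnm : Cub.nm z ≠ 0 := fun h0 => hzne (Cub.nm_eq_zero.1 h0)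
  have hcof : ea z * ea (Cub.cof z) = Cub.nm z := by
    rw [← map_mul, Cub.mul_cof, ea_C]
  have hsz : Cub.sz z ≤ 2 ^ (4 * W + 5) := by
    have h1 : Cub.sz z ≤ Cub.sz (Cub.X ^ h) + Cub.sz 1 := by
      rw [hz, sub_eq_add_neg, ← Cub.sz_neg 1]; exact Cub.sz_add _ _
    have h2 := Cub.sz_pow Cub.X h
    have h3 : Cub.sz Cub.X = 9 := by norm_num [Cub.sz]
    rw [h3] at h2
    rw [Cub.sz_one] at h1
    have h4 : (9 : ℝ) ^ h ≤ 2 ^ (4 * W) := by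
      rw [pow_mul]
      exact (pow_le_pow_left₀ (by norm_num) (by norm_num) h).trans
        (pow_le_pow_right₀ (by norm_num) hW)
    have h5 : (1 : ℝ) ≤ 2 ^ (4 * W) := one_le_pow₀ (by norm_num)
    rw [pow_add]; linarith
  have hs0 := Cub.sz_nonneg z
  have hrsz : Cub.sz rh ≤ 2 ^ 6 := by norm_num [Cub.sz, rh]
  have hcsz : Cub.sz (Cub.cof z) ≤ 2 ^ (8 * W + 11) := by
    refine (Cub.sz_cof z).trans ?_
    calc 2 * Cub.sz z ^ 2 ≤ 2 * (2 ^ (4 * W + 5)) ^ 2 := by gcongr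
      _ = _ := by rw [← pow_mul, ← pow_succ']; congr 1; omega
  have hD : ((Cub.nm z).natAbs : ℝ) = |(Cub.nm z : ℝ)| := by
    rw [Nat.cast_natAbs, Int.cast_abs]
  have hDle : |(Cub.nm z : ℝ)| ≤ 2 ^ (12 * W + 15) := by
    refine (by exact_mod_cast Cub.abs_nm_le z : |(Cub.nm z : ℝ)| ≤ Cub.sz z ^ 3).trans ?_
    calc Cub.sz z ^ 3 ≤ (2 ^ (4 * W + 5)) ^ 3 := by gcongr
      _ = _ := by rw [← pow_mul]; congr 1; omega
  have hnabs : 0 < |(Cub.nm z : ℝ)| := abs_pos.2 (by exact_mod_cast hnm)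
  obtain ⟨σ, hσ, hσ1⟩ : ∃ σ : ℤ, (σ : ℝ) * Cub.nm z = |(Cub.nm z : ℝ)| ∧ |(σ : ℝ)| = 1 := by
    rcases le_total 0 (Cub.nm z : ℝ) with h | h
    · exact ⟨1, by rw [abs_of_nonneg h]; simp, by simp⟩
    · exact ⟨-1, by rw [abs_of_nonpos h]; simp, by simp⟩
  have huR : (1 : ℝ) ≤ u := by exact_mod_cast hu
  have hrh := rh_bounds
  have hval : ea (Cub.C (σ * u) * (rh * Cub.cof z)) =
      |(Cub.nm z : ℝ)| * (u * ea rh / (al ^ h - 1)) := by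
    rw [map_mul ea, map_mul ea, ea_C, ← hz1, ← hσ, ← hcof]
    push_cast
    field_simp
  have hpos : 0 < (u : ℝ) * ea rh / (al ^ h - 1) := by
    rw [← hz1]; apply div_pos _ hz0; nlinarith
  have hu2R : (u : ℝ) ≤ 2 ^ g := by exact_mod_cast hu2
  refine ⟨Cub.C (σ * u) * (rh * Cub.cof z), (Cub.nm z).natAbs, ?_, ?_, ?_, ?_, ?_, ?_⟩
  · exact Nat.one_le_iff_ne_zero.2 (Int.natAbs_ne_zero.2 hnm)
  · rw [hval]; exact mul_pos hnabs hpos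
  · rw [hval, hD, mul_div_cancel_left₀ _ hnabs.ne']
  · rw [Cub.sz_C_mul]
    push_cast
    rw [abs_mul, hσ1, one_mul, abs_of_nonneg (by linarith)]
    calc (u : ℝ) * Cub.sz (rh * Cub.cof z) ≤ 2 ^ g * (2 ^ 6 * 2 ^ (8 * W + 11)) := by
          have := (Cub.sz_mul rh (Cub.cof z)).trans
            (mul_le_mul hrsz hcsz (Cub.sz_nonneg _) (by norm_num))
          exact mul_le_mul hu2R this (Cub.sz_nonneg _) (pow_nonneg (by norm_num) _)
      _ = 2 ^ (g + (6 + (8 * W + 11))) := by rw [← pow_add, ← pow_add]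
      _ ≤ _ := pow_le_pow_right₀ (by norm_num) (by omega)
  · rw [hD]
    exact hDle.trans (pow_le_pow_right₀ (by norm_num) (by omega))
  · rw [hD, hval]
    have h1 : al ^ h - 1 ≤ 2 ^ (g + 12 * W + 20) * (u * ea rh) := by
      have h2 : al ^ h ≤ 2 ^ (g + 12 * W + 20) := by
        calc al ^ h ≤ 2 ^ h := pow_le_pow_left₀ al_pos.le (by linarith [al_lt]) h
          _ ≤ _ := pow_le_pow_right₀ (by norm_num) (by omega)
      have h3 : 1 ≤ (u : ℝ) * ea rh := by nlinarith
      have h4 : (0 : ℝ) < 2 ^ (g + 12 * W + 20) := pow_pos (by norm_num) _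
      nlinarith
    have h2 : 1 ≤ 2 ^ (g + 12 * W + 20) * (u * ea rh / (al ^ h - 1)) := by
      rw [← mul_div_assoc, one_le_div (by rw [← hz1]; exact hz0)]
      exact h1
    calc |(Cub.nm z : ℝ)| = |(Cub.nm z : ℝ)| * 1 := (mul_one _).symm
      _ ≤ |(Cub.nm z : ℝ)| * (2 ^ (g + 12 * W + 20) * (u * ea rh / (al ^ h - 1))) :=
          mul_le_mul_of_nonneg_left h2 hnabs.le
      _ = _ := by ring

section
variable {d : ℤ} {n x y : Fin 5 → ℕ}

/-- Two window solutions with small exponent of two: the difference of the two equations is a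
power of three times a number of bounded height, so `log (u ρ / (α ^ h - 1)) + v log 3 - n log α`
is tiny, and the lower bound for linear forms in three logarithms applies (or, if these three
logarithms are dependent, the one for two logarithms does). -/
lemma Sol.small_x (s : Sol d n x y) {N Q W k ℓ r H : ℕ} (hb : Bd n x y N) (hL : LB4 N Q)
    (hN : N ≤ 2 ^ ℓ) {i j : Fin 5} (hij : i < j) (hW : n j - n i ≤ W)
    (hxi : x i ≤ k) (hxj : x j ≤ k) (hH : k + Q + 12 * W + 24 ≤ 2 ^ H)
    (hr : ℓ + 20 * r + 4 * H + 146 ≤ 2 ^ r) : 7 * n i ≤ 8 * (2 ^ (17 * r + 3 * H + 115) + 4) := by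
  obtain ⟨v, u, hv, hu1, hu2, hu⟩ := s.three_pow_diff hb hL hij hxi hxj
  have hlt := s.mono hij
  obtain ⟨h, hh⟩ : ∃ h, n j = n i + h := Nat.exists_eq_add_of_le hlt.le
  obtain ⟨ν, D, hD1, hν, hνD, hs1, hs2, hs3⟩ :=
    exists_pivot (h := h) (W := W) (by omega) (by omega) hu1 hu2
  obtain ⟨q, hq⟩ : ∃ q, q = 17 * r + 3 * H + 115 := ⟨_, rfl⟩
  rw [← hq]
  obtain ⟨A, hA⟩ : ∃ A, A = Real.log (ea ν / D) := ⟨_, rfl⟩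
  have hrh := rh_bounds
  have huR : (1 : ℝ) ≤ u := by exact_mod_cast hu1
  have hm1 : al - 1 ≤ al ^ h - 1 := by
    have := le_self_pow₀ one_lt_al.le (show h ≠ 0 by omega)
    linarith
  have hm0 : 0.839 ≤ al ^ h - 1 := by linarith [al_gt]
  have hB : 0 < al ^ n i := pow_pos al_pos _
  -- upper bound for the linear form
  have upper : ∀ Q' : ℕ, 1 ≤ |A + ((v : ℝ) * Real.log 3 - n i * Real.log al)| * 2 ^ Q' →
      7 * n i ≤ 8 * (Q' + 4) := by
    intro Q' hlow
    have hval : A + ((v : ℝ) * Real.log 3 - n i * Real.log al) =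
        Real.log (u * ea rh / (al ^ h - 1) * 3 ^ v / al ^ n i) := by
      have e1 : u * ea rh / (al ^ h - 1) ≠ 0 :=
        (div_pos (by nlinarith) (by linarith)).ne'
      rw [Real.log_div (mul_ne_zero e1 (pow_ne_zero _ (by norm_num))) hB.ne',
        Real.log_mul e1 (pow_ne_zero _ (by norm_num)), Real.log_pow, Real.log_pow, ← hνD, ← hA]
      ring
    rw [hval] at hlow
    have hdiff := binet_diff (n i) h
    have huT : ((T (n i + h) : ℤ) : ℝ) - T (n i) = 3 ^ v * u := by
      rw [← hh]; exact_mod_cast hu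
    rw [huT] at hdiff
    have h2 : |u * ea rh / (al ^ h - 1) * 3 ^ v / al ^ n i - 1| ≤ 5 / al ^ n i := by
      have e : u * ea rh / (al ^ h - 1) * 3 ^ v / al ^ n i - 1 =
          (ea rh * (3 ^ v * u) - al ^ n i * (al ^ h - 1)) / ((al ^ h - 1) * al ^ n i) := by
        have : al ^ h - 1 ≠ 0 := by linarith
        field_simp
      rw [e, abs_div, abs_of_pos (mul_pos (by linarith) hB), div_le_div_iff₀
        (mul_pos (by linarith) hB) hB]
      have : |ea rh * (3 ^ v * u) - al ^ n i * (al ^ h - 1)| ≤ 5 * (al ^ h - 1) := by linarith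
      nlinarith
    have h3 := le_of_log_lower hB h2 hlow
    apply le_of_al_pow
    rw [pow_add]
    have : (0 : ℝ) < 2 ^ Q' := pow_pos (by norm_num) _
    linarith
  have hni : n i ≤ 2 ^ ℓ := (hb i).1.trans hN
  have hvℓ : v ≤ 2 ^ ℓ := hv.trans hN
  by_cases hind : ∀ (c0 : ℤ) (c : Fin 2 → ℤ), |c0| < 2 ^ (4 * r + 26 + H) →
      (∀ i, |c i| < 2 ^ (4 * r + 26 + H)) →
      c0 * Real.log (ea ν / D) + ∑ i, c i * Real.log (ea ((![Cub.C 3, Cub.X] : Fin 2 → Cub ℤ) i)) = 0 →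
      c0 = 0 ∧ c = 0
  · have key := rb_pow (ι := Fin 2) 2 (by simp) (by norm_num) (by norm_num) ν D ![Cub.C 3, Cub.X]
      1 ![(v : ℤ), -(n i : ℤ)] (k + Q + 4 + 12 * W + 20) ℓ r H (4 * r + 26) q (by ring) (by omega)
      (by omega) (by omega) hν hD1
      (by intro i; fin_cases i <;> simp; exact one_lt_al.le) hs1 (by exact_mod_cast hs2) hs3
      (by
        intro i
        fin_cases i
        · show Cub.sz (Cub.C 3) ≤ _
          rw [Cub.sz_C]; norm_num
        · show Cub.sz Cub.X ≤ _
          norm_num [Cub.sz])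
      le_rfl Nat.one_le_two_pow
      (by
        intro i
        fin_cases i
        · show |(v : ℤ)| ≤ _
          rw [Nat.abs_cast]; exact_mod_cast hvℓ
        · show |-((n _ : ℕ) : ℤ)| ≤ _
          rw [abs_neg, Nat.abs_cast]; exact_mod_cast hni)
      hind
    apply upper
    rw [hA]
    simp [Fin.sum_univ_two] at key
    rw [sub_eq_add_neg]
    exact key.le
  · push Not at hind
    obtain ⟨c0, c, hc0, hc, hrel, hne⟩ := hind
    simp only [Fin.sum_univ_two, Matrix.cons_val_zero, Matrix.cons_val_one, ea_C, ea_X] at hrel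
    push_cast at hrel
    rw [← hA] at hrel
    have hc00 : c0 ≠ 0 := by
      intro h0
      rw [h0] at hrel
      obtain ⟨e1, e2⟩ := indep_three_al (c 0) (c 1) (by simpa using hrel)
      exact hne h0 (by ext i; fin_cases i <;> assumption)
    have hpw : (2 : ℕ) ^ (4 * r + 26 + H) ≤ 2 ^ q := Nat.pow_le_pow_right (by norm_num) (by omega)
    by_cases hz : c0 * v - c 0 = 0 ∧ -(c0 * n i) - c 1 = 0
    · have h1 : c0 * n i = - c 1 := by linarith [hz.2]
      have h2 : |c0| * n i = |c 1| := by
        rw [← abs_neg (c 1), ← h1, abs_mul, Nat.abs_cast]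
      have h3 : 1 ≤ |c0| := Int.one_le_abs hc00
      have h4 : (n i : ℤ) ≤ |c 1| := by rw [← h2]; nlinarith
      have h5 := hc 1
      have h6 : (n i : ℤ) < ((2 ^ (4 * r + 26 + H) : ℕ) : ℤ) := by push_cast; linarith
      have h7 : n i < 2 ^ (4 * r + 26 + H) := by exact_mod_cast h6
      omega
    · have hbound : ∀ (m : ℕ) (e : ℤ), m ≤ 2 ^ ℓ → |e| < 2 ^ (4 * r + 26 + H) →
          |c0 * m| + |e| ≤ 2 ^ (ℓ + (4 * r + 26 + H) + 1) := by
        intro m e hm he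
        rw [abs_mul, Nat.abs_cast]
        have hm' : (m : ℤ) ≤ 2 ^ ℓ := by exact_mod_cast hm
        have e1 : |c0| * (m : ℤ) ≤ 2 ^ (4 * r + 26 + H) * 2 ^ ℓ :=
          mul_le_mul hc0.le hm' (by omega) (pow_nonneg (by norm_num) _)
        have e2 : (1 : ℤ) ≤ 2 ^ ℓ := one_le_pow₀ (by norm_num)
        have e3 : (0 : ℤ) < 2 ^ (4 * r + 26 + H) := pow_pos (by norm_num) _
        rw [pow_succ, pow_add]
        nlinarith
      have hlow := lb_three_al (ℓ + (4 * r + 26 + H) + 1) r (by omega) (c0 * v - c 0)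
        (-(c0 * n i) - c 1)
        ((abs_sub _ _).trans (hbound v _ hvℓ (hc 0)))
        ((abs_sub _ _).trans (by rw [abs_neg]; exact hbound (n i) _ hni (hc 1)))
        (by tauto)
      have e : ((c0 * v - c 0 : ℤ) : ℝ) * Real.log 3 + ((-(c0 * n i) - c 1 : ℤ) : ℝ) * Real.log al =
          c0 * (A + ((v : ℝ) * Real.log 3 - n i * Real.log al)) := by
        push_cast
        linear_combination -hrel
      rw [e, abs_mul] at hlow
      have hc0R : |(c0 : ℝ)| ≤ 2 ^ (4 * r + 26 + H) := by exact_mod_cast hc0.le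
      have hle : 2 ^ (10 * r + 68) + (4 * r + 26 + H) ≤ 2 ^ q := by
        have h1 : 4 * r + 26 + H < 2 ^ (4 * r + 26 + H) := Nat.lt_two_pow_self
        have h2 : (2 : ℕ) ^ (10 * r + 68) ≤ 2 ^ (17 * r + 3 * H + 114) :=
          Nat.pow_le_pow_right (by norm_num) (by omega)
        have h3 : (2 : ℕ) ^ (4 * r + 26 + H) ≤ 2 ^ (17 * r + 3 * H + 114) :=
          Nat.pow_le_pow_right (by norm_num) (by omega)
        have h4 : (2 : ℕ) ^ q = 2 * 2 ^ (17 * r + 3 * H + 114) := by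
          rw [hq, ← pow_succ']
        omega
      have := upper (2 ^ (10 * r + 68) + (4 * r + 26 + H)) (by
        refine hlow.trans ?_
        rw [pow_add (2 : ℝ) (2 ^ (10 * r + 68))]
        have h0 := abs_nonneg (A + ((v : ℝ) * Real.log 3 - n i * Real.log al))
        have h1 : (0 : ℝ) < 2 ^ 2 ^ (10 * r + 68) := pow_pos (by norm_num) _
        generalize (2 : ℝ) ^ 2 ^ (10 * r + 68) = P at h1 ⊢
        generalize |A + ((v : ℝ) * Real.log 3 - n i * Real.log al)| = L at h0 ⊢
        calc |(c0 : ℝ)| * L * P = |(c0 : ℝ)| * (L * P) := by ring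
          _ ≤ 2 ^ (4 * r + 26 + H) * (L * P) := mul_le_mul_of_nonneg_right hc0R (mul_nonneg h0 h1.le)
          _ = L * (P * 2 ^ (4 * r + 26 + H)) := by ring)
      omega

end

/-! ### The descent step and the first explicit bound -/

lemma pick_three_two : ∀ p : Fin 5 → Bool,
    (∃ i j, 1 ≤ i ∧ i < j ∧ p i = true ∧ p j = true) ∨
    (∃ i j l, 1 ≤ i ∧ i < j ∧ j < l ∧ p i = false ∧ p j = false ∧ p l = false) := by decide

section
variable {d : ℤ} {n x y : Fin 5 → ℕ}

/-- One descent step: lower bounds for the linear forms with coefficients up to `N` improve the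
bound `N` for the unknowns to one depending on these lower bounds and on `log log N` only. -/
lemma Sol.main_step (s : Sol d n x y) {N Q2 Q4 ℓ r W H : ℕ} (hb : Bd n x y N) (h2 : LB2 N Q2)
    (h4 : LB4 N Q4) (hN : N ≤ 2 ^ ℓ) (hW : 8 * (Q2 + Q4 + 3) ≤ 7 * W + 6)
    (hH : 6 * W + 72 ≤ 2 ^ H) (hr : ℓ + 36 * r + 4 * H + 350 ≤ 2 ^ r) :
    Bd n x y (2 ^ (29 * r + 3 * H + 270)) := by
  have hwin := s.window hb h2 h4
  have hW' : n 4 - n 1 ≤ W := by omega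
  obtain ⟨k, hk⟩ : ∃ k, k = 2 ^ (H + 4 * r + 50) := ⟨_, rfl⟩
  obtain ⟨q, hq⟩ : ∃ q, q = 29 * r + 3 * H + 268 := ⟨_, rfl⟩
  have hHk : 2 ^ H ≤ k := by rw [hk]; exact Nat.pow_le_pow_right (by norm_num) (by omega)
  have hkq : 8 * k ≤ 2 ^ q := by
    calc 8 * k = 2 ^ (H + 4 * r + 53) := by rw [hk, pow_add _ _ 53, pow_add _ _ 50]; ring
      _ ≤ _ := Nat.pow_le_pow_right (by norm_num) (by omega)
  have hle : ∀ t : Fin 5, 1 ≤ t → n 1 ≤ n t ∧ n t ≤ n 4 := fun t ht =>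
    ⟨s.mono.monotone ht, s.mono.monotone (Fin.le_last t)⟩
  have hn1 : 7 * n 1 ≤ 8 * (2 ^ q + 4) := by
    by_cases hn : 8 * (2 ^ (H + 2 * r + 33) + 1) ≤ n 1
    · rcases pick_three_two (fun t => decide (x t ≤ k)) with ⟨i, j, hi, hij, p1, p2⟩ |
        ⟨i, j, l, hi, hij, hjl, p1, p2, p3⟩
      · have hj : 1 ≤ j := hi.trans hij.le
        have key := s.small_x (r := r) (H := H + 4 * r + 51) hb h4 hN hij
          (by have := hle i hi; have := hle j hj; omega : n j - n i ≤ W)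
          (by simpa using p1) (by simpa using p2)
          (by
            have : 2 ^ (H + 4 * r + 51) = 2 * k := by rw [hk, ← pow_succ']
            have e : 2 ^ 50 * 2 ^ H ≤ k := by
              rw [hk, ← pow_add]; exact Nat.pow_le_pow_right (by norm_num) (by omega)
            rw [this]; omega) (by omega)
        have e : 17 * r + 3 * (H + 4 * r + 51) + 115 = q := by omega
        rw [e] at key
        have := hle i hi
        omega
      · have hlt : ∀ {t : Fin 5}, decide (x t ≤ k) = false → 2 ^ (H + 4 * r + 50) ≤ x t := by
          intro t ht
          simp only [decide_eq_false_iff_not, not_le] at ht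
          omega
        have key := s.pb_stage hb h4 hW' hN (by omega) hH hi hij hjl hn (by
          rintro t (rfl | rfl | rfl) <;> apply hlt <;> assumption)
        have := hle i hi
        omega
    · have h33 : 2 * 2 ^ (H + 2 * r + 33) ≤ k := by
        rw [hk, ← pow_succ']; exact Nat.pow_le_pow_right (by norm_num) (by omega)
      omega
  have := s.xy_le hb h2
  have hfin : n 4 + Q2 + 1 ≤ 2 ^ (29 * r + 3 * H + 270) := by
    have e : 2 ^ (29 * r + 3 * H + 270) = 4 * 2 ^ q := by
      rw [show 29 * r + 3 * H + 270 = q + 2 by omega, pow_add]; omega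
    have := hle 4 (by decide)
    rw [e]; omega
  intro i
  have := this i
  omega

lemma Sol.descend (s : Sol d n x y) {ℓ r : ℕ} (hb : Bd n x y (2 ^ ℓ))
    (hr : ℓ + 140 * r + 1170 ≤ 2 ^ r) : Bd n x y (2 ^ (107 * r + 885)) := by
  have h2 := lb2_asym ℓ r (by omega)
  have h4 := lb4_asym ℓ r (by omega)
  have e : 29 * r + 3 * (26 * r + 205) + 270 = 107 * r + 885 := by ring
  rw [← e]
  have h24 : 2 ^ 20 * 2 ^ (10 * r + 68) ≤ 2 ^ (26 * r + 202) := by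
    rw [← pow_add]; exact Nat.pow_le_pow_right (by norm_num) (by omega)
  have h1 : 2 ^ 20 ≤ 2 ^ (10 * r + 68) := Nat.pow_le_pow_right (by norm_num) (by omega)
  have h8 : 2 ^ (26 * r + 205) = 8 * 2 ^ (26 * r + 202) := by
    rw [pow_add _ _ 205, pow_add _ _ 202]; ring
  obtain ⟨A, hA⟩ : ∃ A : ℕ, A = 2 ^ (10 * r + 68) := ⟨_, rfl⟩
  obtain ⟨B, hB⟩ : ∃ B : ℕ, B = 2 ^ (26 * r + 202) := ⟨_, rfl⟩
  obtain ⟨C, hC⟩ : ∃ C : ℕ, C = 2 ^ (26 * r + 205) := ⟨_, rfl⟩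
  rw [← hA] at h2 h24 h1
  rw [← hB] at h4 h24 h8
  rw [← hC] at h8
  norm_num at h24 h1
  exact s.main_step (W := 8 * (A + B + 3) / 7) hb h2 h4 le_rfl
    (by clear hr hA hB hC; omega) (by rw [← hC, h8]; clear hr hA hB hC; omega) (by linarith)

lemma exists_pow_ge (ℓ : ℕ) : ∃ r, 13 ≤ r ∧ ℓ + 140 * r + 1170 ≤ 2 ^ r := by
  refine ⟨ℓ + 13, by omega, ?_⟩
  induction ℓ with
  | zero => norm_num
  | succ ℓ ih =>
    have e : ℓ + 1 + 13 = (ℓ + 13) + 1 := by ring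
    rw [e, pow_succ]
    have : 2 ^ 13 ≤ 2 ^ (ℓ + 13) := Nat.pow_le_pow_right (by norm_num) (by omega)
    obtain ⟨A, hA⟩ : ∃ A : ℕ, A = 2 ^ (ℓ + 13) := ⟨_, rfl⟩
    rw [← hA] at this ih ⊢
    norm_num at this
    linarith

/-- The absolute bound supplied by the theory of linear forms in logarithms: the descent step, started
from any bound for the unknowns, is iterated down to `r = 13`. -/
lemma Sol.absolute (s : Sol d n x y) : Bd n x y (2 ^ 2276) := by
  obtain ⟨ℓ, hb⟩ : ∃ ℓ, Bd n x y (2 ^ ℓ) := by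
    refine ⟨∑ i, (n i + x i + y i), fun i => ?_⟩
    have h1 : n i + x i + y i ≤ ∑ i, (n i + x i + y i) :=
      Finset.single_le_sum (f := fun i => n i + x i + y i) (fun _ _ => Nat.zero_le _)
        (Finset.mem_univ i)
    have h2 : ∑ i, (n i + x i + y i) < 2 ^ ∑ i, (n i + x i + y i) := Nat.lt_two_pow_self
    omega
  obtain ⟨r, hr13, hr⟩ := exists_pow_ge ℓ
  have h0 := s.descend hb hr
  clear hr hb
  obtain ⟨t, rfl⟩ := Nat.exists_eq_add_of_le hr13
  clear hr13
  induction t with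
  | zero => exact h0
  | succ t ih =>
    apply ih
    refine s.descend h0 ?_
    clear h0 ih
    induction t with
    | zero => norm_num
    | succ t ih =>
      have e : 13 + (t + 1) = (13 + t) + 1 := by ring
      rw [e, pow_succ]
      omega

end

/-! ### Certified enclosures of logarithms

The series `log (a / b) = 2 ∑ z ^ (2 k + 1) / (2 k + 1)`, `z = (a - b) / (a + b)`, is evaluated in
fixed-point arithmetic with unit `1 / p`, rounding down for lower and up for upper bounds. -/

/-- `frc n k` is `k n`; reducing it evaluates `n` before `k` is entered. -/
def frc {α : Type} (n : ℕ) (k : ℕ → α) : α := Nat.rec (k 0) (fun m _ => k (m + 1)) n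

@[simp] lemma frc_eq {α : Type} (n : ℕ) (k : ℕ → α) : frc n k = k n := by cases n <;> rfl

/-- Lower sums of the series; `t` is a lower bound for `p z ^ (2 j + 1)` and `w` one for `p z ^ 2`. -/
def serL (p w : ℕ) (fuel : ℕ) : ℕ → ℕ → ℕ → ℕ :=
  Nat.rec (fun _ _ s => s)
    (fun _ ih j t s => frc (t * w / p) fun t' => frc (s + t / (2 * j + 1)) fun s' =>
      ih (j + 1) t' s') fuel

/-- Upper sums of the series, with a bound for the tail. -/
def serU (p w : ℕ) (fuel : ℕ) : ℕ → ℕ → ℕ → ℕ :=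
  Nat.rec (fun _ t s => s + 2 * t)
    (fun _ ih j t s => frc (t * w / p + 1) fun t' => frc (s + t / (2 * j + 1) + 1) fun s' =>
      ih (j + 1) t' s') fuel

/-- Lower bound for `p log (a / b)`. -/
def lgL (p K a b : ℕ) : ℕ :=
  frc ((a - b) * p / (a + b)) fun z => frc (z * z / p) fun w => 2 * serL p w K 0 z 0

/-- Upper bound for `p log (a / b)`. -/
def lgU (p K a b : ℕ) : ℕ :=
  frc ((a - b) * p / (a + b) + 1) fun z => frc (z * z / p + 1) fun w => 2 * serU p w K 0 z 0

lemma nat_div_le_real (a b : ℕ) : ((a / b : ℕ) : ℝ) ≤ (a : ℝ) / b := Nat.cast_div_le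

lemma real_le_nat_div (a b : ℕ) (hb : 0 < b) : (a : ℝ) / b ≤ ((a / b + 1 : ℕ) : ℝ) := by
  rw [div_le_iff₀ (by exact_mod_cast hb)]
  have := Nat.lt_div_mul_add hb (a := a)
  have h : a ≤ (a / b + 1) * b := by rw [add_mul, one_mul]; exact this.le
  exact_mod_cast h

lemma serL_le {p w : ℕ} (hp : 0 < p) {z : ℝ} (hz : 0 ≤ z) (hw : (w : ℝ) ≤ p * z ^ 2) {G : ℕ → ℝ}
    (hG : ∀ j, G j = z ^ (2 * j + 1) / (2 * j + 1) + G (j + 1)) (hG0 : ∀ j, 0 ≤ G j) (K : ℕ) :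
    ∀ j t s : ℕ, (t : ℝ) ≤ p * z ^ (2 * j + 1) → (serL p w K j t s : ℝ) ≤ s + p * G j := by
  have hpR : (0 : ℝ) < p := by exact_mod_cast hp
  induction K with
  | zero =>
    intro j t s _
    show (s : ℝ) ≤ _
    have := mul_nonneg hpR.le (hG0 j)
    linarith
  | succ K ih =>
    intro j t s ht
    have e : serL p w (K + 1) j t s =
        serL p w K (j + 1) (t * w / p) (s + t / (2 * j + 1)) := by simp [serL]
    rw [e]
    refine (ih (j + 1) _ _ ?_).trans ?_
    · refine (nat_div_le_real _ _).trans ?_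
      rw [div_le_iff₀ hpR]
      push_cast
      calc (t : ℝ) * w ≤ (p * z ^ (2 * j + 1)) * (p * z ^ 2) := by gcongr
        _ = _ := by ring
    · rw [hG j]
      have h1 := nat_div_le_real t (2 * j + 1)
      have h2 : (t : ℝ) / ((2 * j + 1 : ℕ) : ℝ) ≤ p * z ^ (2 * j + 1) / (2 * j + 1) := by
        push_cast; gcongr
      push_cast at h1 h2 ⊢
      rw [mul_add, ← mul_div_assoc]
      linarith

lemma le_serU {p w : ℕ} (hp : 0 < p) {z : ℝ} (hw : p * z ^ 2 ≤ w) {G : ℕ → ℝ}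
    (hG : ∀ j, G j = z ^ (2 * j + 1) / (2 * j + 1) + G (j + 1))
    (hG2 : ∀ j, G j ≤ 2 * z ^ (2 * j + 1)) (K : ℕ) :
    ∀ j t s : ℕ, p * z ^ (2 * j + 1) ≤ t → s + p * G j ≤ (serU p w K j t s : ℝ) := by
  have hpR : (0 : ℝ) < p := by exact_mod_cast hp
  induction K with
  | zero =>
    intro j t s ht
    have e : serU p w 0 j t s = s + 2 * t := rfl
    rw [e]
    have := mul_le_mul_of_nonneg_left (hG2 j) hpR.le
    push_cast
    linarith
  | succ K ih =>
    intro j t s ht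
    have e : serU p w (K + 1) j t s =
        serU p w K (j + 1) (t * w / p + 1) (s + t / (2 * j + 1) + 1) := by simp [serU]
    rw [e]
    refine le_trans ?_ (ih (j + 1) _ _ ?_)
    · rw [hG j]
      have h1 := real_le_nat_div t (2 * j + 1) (by omega)
      have h2 : p * z ^ (2 * j + 1) / (2 * j + 1) ≤ (t : ℝ) / ((2 * j + 1 : ℕ) : ℝ) := by
        push_cast; gcongr
      push_cast at h1 h2 ⊢
      rw [mul_add, ← mul_div_assoc]
      linarith
    · refine le_trans ?_ (real_le_nat_div _ _ hp)
      rw [le_div_iff₀ hpR]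
      push_cast
      calc (p : ℝ) * z ^ (2 * (j + 1) + 1) * p = (p * z ^ (2 * j + 1)) * (p * z ^ 2) := by ring
        _ ≤ t * w := by gcongr

/-- The tails of the series for `(log (1 + z) - log (1 - z)) / 2`. -/
lemma exists_tail {z : ℝ} (hz : 0 ≤ z) (hz2 : z ≤ 1 / 2) : ∃ G : ℕ → ℝ,
    G 0 = (Real.log (1 + z) - Real.log (1 - z)) / 2 ∧
    (∀ j, G j = z ^ (2 * j + 1) / (2 * j + 1) + G (j + 1)) ∧ (∀ j, 0 ≤ G j) ∧
    ∀ j, G j ≤ 2 * z ^ (2 * j + 1) := by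
  have hs := Real.hasSum_log_sub_log_of_abs_lt_one (x := z) (by rw [abs_of_nonneg hz]; linarith)
  have hs' : HasSum (fun k : ℕ => z ^ (2 * k + 1) / (2 * k + 1))
      ((Real.log (1 + z) - Real.log (1 - z)) / 2) := by
    have e : (fun k : ℕ => z ^ (2 * k + 1) / (2 * k + 1)) =
        fun k : ℕ => 2 * (1 / (2 * (k : ℝ) + 1)) * z ^ (2 * k + 1) / 2 := by
      funext k; field_simp
    rw [e]
    exact hs.div_const 2
  obtain ⟨f, hf⟩ : ∃ f : ℕ → ℝ, f = fun k : ℕ => z ^ (2 * k + 1) / (2 * k + 1) := ⟨_, rfl⟩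
  rw [← hf] at hs'
  have hf0 : ∀ k, 0 ≤ f k := fun k => by rw [hf]; positivity
  have hsum : ∀ j, Summable fun i => f (i + j) := fun j => (summable_nat_add_iff j).2 hs'.summable
  refine ⟨fun j => ∑' i, f (i + j), ?_, ?_, fun j => tsum_nonneg fun i => hf0 _, ?_⟩
  · simpa using hs'.tsum_eq
  · intro j
    have := (hsum j).tsum_eq_zero_add
    beta_reduce
    rw [this, zero_add]
    have e : f j = z ^ (2 * j + 1) / (2 * j + 1) := by rw [hf]
    rw [e]
    congr 2
    ext i; congr 1; ring
  · intro j
    have hz1 : z ^ 2 < 1 := by nlinarith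
    have hg := (hasSum_geometric_of_lt_one (sq_nonneg z) hz1).mul_left (z ^ (2 * j + 1))
    refine (hsum j).tsum_le_of_sum_le (fun u => ?_) |>.trans (le_refl _)
    calc ∑ i ∈ u, f (i + j) ≤ ∑ i ∈ u, z ^ (2 * j + 1) * (z ^ 2) ^ i := by
          apply Finset.sum_le_sum
          intro i _
          rw [hf]
          have h1 : (1 : ℝ) ≤ 2 * ((i + j : ℕ) : ℝ) + 1 := by
            have : (0 : ℝ) ≤ ((i + j : ℕ) : ℝ) := Nat.cast_nonneg _
            linarith
          have e : z ^ (2 * j + 1) * (z ^ 2) ^ i = z ^ (2 * (i + j) + 1) := by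
            rw [← pow_mul, ← pow_add]; congr 1; ring
          rw [e]
          exact div_le_self (pow_nonneg hz _) h1
      _ ≤ z ^ (2 * j + 1) * (1 - z ^ 2)⁻¹ :=
          sum_le_hasSum u (fun i _ => by positivity) hg
      _ ≤ 2 * z ^ (2 * j + 1) := by
          have : (1 - z ^ 2)⁻¹ ≤ 2 := by
            rw [inv_le_comm₀ (by linarith) (by norm_num)]
            nlinarith
          have h2 := mul_le_mul_of_nonneg_left this (pow_nonneg hz (2 * j + 1))
          linarith

lemma log_div_eq {a b : ℝ} (ha : 0 < a) (hb : 0 < b) :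
    Real.log (1 + (a - b) / (a + b)) - Real.log (1 - (a - b) / (a + b)) = Real.log (a / b) := by
  have h : 0 < a + b := by linarith
  have e1 : 1 + (a - b) / (a + b) = 2 * a / (a + b) := by field_simp; ring
  have e2 : 1 - (a - b) / (a + b) = 2 * b / (a + b) := by field_simp; ring
  rw [e1, e2, ← Real.log_div (by positivity) (by positivity)]
  congr 1
  field_simp

lemma lgL_le {p K a' b' : ℕ} (hp : 0 < p) {a b : ℝ} (hb : 0 < b) (hab : b ≤ a) (hab2 : a ≤ 3 * b)
    (ha' : (a' : ℝ) ≤ p * a) (hb' : p * b ≤ b') : (lgL p K a' b' : ℝ) ≤ p * Real.log (a / b) := by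
  obtain ⟨z, hz⟩ : ∃ z, z = (a - b) / (a + b) := ⟨_, rfl⟩
  have hpR : (0 : ℝ) < p := by exact_mod_cast hp
  have hz0 : 0 ≤ z := by rw [hz]; exact div_nonneg (by linarith) (by linarith)
  have hz1 : z ≤ 1 / 2 := by rw [hz, div_le_iff₀ (by linarith)]; linarith
  obtain ⟨G, h0, h1, h2, h3⟩ := exists_tail hz0 hz1
  have hlog := log_div_eq (lt_of_lt_of_le hb hab) hb
  rw [← hz] at hlog
  have e : Real.log (a / b) = 2 * G 0 := by rw [h0, hlog]; ring
  have hZ : (((a' - b') * p / (a' + b') : ℕ) : ℝ) ≤ p * z := by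
    refine (nat_div_le_real _ _).trans ?_
    rcases le_total a' b' with h | h
    · rw [Nat.sub_eq_zero_of_le h]; simp; positivity
    · have hb0 : (0 : ℝ) < b' := lt_of_lt_of_le (by positivity) hb'
      have ha0 : (0 : ℝ) ≤ a' := Nat.cast_nonneg _
      push_cast [h]
      rw [hz, ← mul_div_assoc, div_le_div_iff₀ (by linarith) (by linarith)]
      have : (a' : ℝ) * b ≤ a * b' := by
        calc (a' : ℝ) * b ≤ p * a * b := by gcongr
          _ = a * (p * b) := by ring
          _ ≤ a * b' := by gcongr; linarith
      nlinarith
  unfold lgL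
  simp only [frc_eq]
  rw [e]
  obtain ⟨Z, hZe⟩ : ∃ Z, Z = (a' - b') * p / (a' + b') := ⟨_, rfl⟩
  rw [← hZe] at hZ ⊢
  have := serL_le (w := Z * Z / p) hp hz0 (by
    refine (nat_div_le_real _ _).trans ?_
    rw [div_le_iff₀ hpR]; push_cast
    calc (Z : ℝ) * Z ≤ (p * z) * (p * z) := by gcongr
      _ = _ := by ring) h1 h2 K 0 Z 0 (by simpa using hZ)
  push_cast at this ⊢
  linarith

lemma le_lgU {p K a' b' : ℕ} (hp : 0 < p) {a b : ℝ} (hb : 0 < b) (hab : b ≤ a) (hab2 : a ≤ 3 * b)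
    (ha' : p * a ≤ a') (hb' : b' ≤ p * b) : p * Real.log (a / b) ≤ (lgU p K a' b' : ℝ) := by
  obtain ⟨z, hz⟩ : ∃ z, z = (a - b) / (a + b) := ⟨_, rfl⟩
  have hpR : (0 : ℝ) < p := by exact_mod_cast hp
  have hz0 : 0 ≤ z := by rw [hz]; exact div_nonneg (by linarith) (by linarith)
  have hz1 : z ≤ 1 / 2 := by rw [hz, div_le_iff₀ (by linarith)]; linarith
  obtain ⟨G, h0, h1, h2, h3⟩ := exists_tail hz0 hz1
  have hlog := log_div_eq (lt_of_lt_of_le hb hab) hb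
  rw [← hz] at hlog
  have e : Real.log (a / b) = 2 * G 0 := by rw [h0, hlog]; ring
  have hba : b' ≤ a' := by
    have : (b' : ℝ) ≤ a' := hb'.trans ((mul_le_mul_of_nonneg_left hab hpR.le).trans ha')
    exact_mod_cast this
  have ha0 : (0 : ℝ) < a' := lt_of_lt_of_le (mul_pos hpR (by linarith)) ha'
  have hb0 : (0 : ℝ) ≤ b' := Nat.cast_nonneg _
  have hZ : p * z ≤ (((a' - b') * p / (a' + b') + 1 : ℕ) : ℝ) := by
    refine le_trans ?_ (real_le_nat_div _ _ (by
      have : 0 < a' := by exact_mod_cast ha0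
      omega))
    push_cast [hba]
    rw [hz, ← mul_div_assoc, div_le_div_iff₀ (by linarith) (by linarith)]
    have : a * (b' : ℝ) ≤ a' * b := by
      calc a * (b' : ℝ) ≤ a * (p * b) := by gcongr; linarith
        _ = p * a * b := by ring
        _ ≤ a' * b := by gcongr
    nlinarith
  unfold lgU
  simp only [frc_eq]
  rw [e]
  obtain ⟨Z, hZe⟩ : ∃ Z, Z = (a' - b') * p / (a' + b') + 1 := ⟨_, rfl⟩
  rw [← hZe] at hZ ⊢
  have := le_serU (w := Z * Z / p + 1) hp (by
    refine le_trans ?_ (real_le_nat_div _ _ hp)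
    rw [le_div_iff₀ hpR]; push_cast
    calc (p : ℝ) * z ^ 2 * p = (p * z) * (p * z) := by ring
      _ ≤ Z * Z := by gcongr) h1 h3 K 0 Z 0 (by simpa using hZ)
  push_cast at this ⊢
  linarith

/-! ### Certificates for lower bounds of linear forms -/

/-- Integers bounding the `p`-fold logarithms of `2`, `3`, `α` and of the three pivots. -/
structure LogEnc where
  l2 : ℕ
  u2 : ℕ
  l3 : ℕ
  u3 : ℕ
  la : ℕ
  ua : ℕ
  l0 : ℕ
  u0 : ℕ
  l1 : ℕ
  u1 : ℕ
  l7 : ℕ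
  u7 : ℕ

/-- The enclosures recorded in `E` are correct. -/
structure LogEnc.Ok (E : LogEnc) (p : ℕ) : Prop where
  h2 : (E.l2 : ℝ) ≤ p * Real.log 2 ∧ p * Real.log 2 ≤ E.u2
  h3 : (E.l3 : ℝ) ≤ p * Real.log 3 ∧ p * Real.log 3 ≤ E.u3
  ha : (E.la : ℝ) ≤ p * Real.log al ∧ p * Real.log al ≤ E.ua
  h0 : (E.l0 : ℝ) ≤ p * Real.log (ea (piv 0)) ∧ p * Real.log (ea (piv 0)) ≤ E.u0
  h1 : (E.l1 : ℝ) ≤ p * Real.log (ea (piv 1)) ∧ p * Real.log (ea (piv 1)) ≤ E.u1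
  h7 : (E.l7 : ℝ) ≤ p * Real.log (ea (piv 2)) ∧ p * Real.log (ea (piv 2)) ≤ E.u7

/-- Lower bound for `p ρ`, given `A ≤ p α ≤ A + 1`. -/
def rlo (p A : ℕ) : ℕ := 4 * A - p - ((A + 1) * (A + 1) / p + 1)
/-- Upper bound for `p ρ`, given `A ≤ p α ≤ A + 1`. -/
def rhi (p A : ℕ) : ℕ := 4 * (A + 1) - p - A * A / p

/-- Evaluates all enclosures from `A = ⌊p α⌋` with `K` terms of each series and passes them on. -/
def withLogs (p K A : ℕ) (k : LogEnc → Bool) : Bool :=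
  frc (lgL p K (3 * p) (2 * p)) fun a => frc (lgU p K (3 * p) (2 * p)) fun a' =>
  frc (lgL p K (4 * p) (3 * p)) fun b => frc (lgU p K (4 * p) (3 * p)) fun b' =>
  frc (lgL p K (8 * p) (7 * p)) fun c => frc (lgU p K (8 * p) (7 * p)) fun c' =>
  frc (lgL p K (2 * p) (A + 1)) fun e => frc (lgU p K (2 * p) A) fun e' =>
  frc (rlo p A) fun r => frc (rhi p A) fun r' =>
  frc (lgL p K (3 * p) r') fun f => frc (lgU p K (3 * p) r) fun f' =>
  frc (r * ((A - p) * (A - p)) / (p * p)) fun g =>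
  frc (r' * ((A + 1 - p) * (A + 1 - p)) / (p * p) + 1) fun g' =>
  frc (lgL p K g (2 * p)) fun h => frc (lgU p K g' (2 * p)) fun h' =>
  frc (a + b) fun l2 => frc (a' + b') fun u2 =>
  frc (2 * a + b) fun l3 => frc (2 * a' + b') fun u3 =>
  frc (l2 - e') fun la => frc (u2 - e) fun ua =>
  frc (l3 - f') fun l0 => frc (u3 - f) fun u0 =>
  frc (l2 + h) fun l1 => frc (u2 + h') fun u1 =>
  frc (4 * l2 + h - c') fun l7 => frc (4 * u2 + h' - c) fun u7 =>
  k ⟨l2, u2, l3, u3, la, ua, l0, u0, l1, u1, l7, u7⟩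

/-- `A = ⌊p α⌋`, tested through the sign of the minimal polynomial. -/
def isFloorAl (p A : ℕ) : Bool :=
  Nat.ble (p + 1) A &&
  Nat.ble (A * A * A) (p * (A * A) + p * p * A + p * p * p) &&
  Nat.ble (p * ((A + 1) * (A + 1)) + p * p * (A + 1) + p * p * p) ((A + 1) * (A + 1) * (A + 1))

lemma al_bounds {p A : ℕ} (hp : 0 < p) (h : isFloorAl p A = true) :
    (A : ℝ) ≤ p * al ∧ p * al ≤ A + 1 ∧ p < A := by
  simp only [isFloorAl, Bool.and_eq_true, Nat.ble_eq] at h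
  obtain ⟨⟨h1, h2⟩, h3⟩ := h
  have hpR : (0 : ℝ) < p := by exact_mod_cast hp
  have h1R : (p : ℝ) + 1 ≤ A := by exact_mod_cast h1
  have h2R : (A : ℝ) * A * A ≤ p * (A * A) + p * p * A + p * p * p := by exact_mod_cast h2
  have h3R : (p : ℝ) * ((A + 1) * (A + 1)) + p * p * (A + 1) + p * p * p ≤
      (A + 1) * (A + 1) * (A + 1) := by exact_mod_cast h3
  obtain ⟨b, hb⟩ : ∃ b, b = (p : ℝ) * al := ⟨_, rfl⟩
  have hb3 : b ^ 3 = p * b ^ 2 + p * p * b + p * p * p := by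
    rw [hb]; linear_combination (p : ℝ) ^ 3 * al_cube
  have hbp : (p : ℝ) < b := by rw [hb]; nlinarith [one_lt_al]
  rw [← hb]
  -- `t ^ 3 - p t ^ 2 - p ^ 2 t - p ^ 3` changes sign exactly once on `t > p`
  have mono : ∀ s t : ℝ, (p : ℝ) < s → s < t →
      s ^ 3 = p * s ^ 2 + p * p * s + p * p * p → p * t ^ 2 + p * p * t + p * p * p < t ^ 3 := by
    intro s t hs hst he
    have hs0 : 0 < s := hpR.trans hs
    have k1 : s ^ 3 * t ^ 3 = p * s ^ 2 * t ^ 3 + p * p * s * t ^ 3 + p * p * p * t ^ 3 := by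
      rw [he]; ring
    have k2 : (p * t ^ 2 + p * p * t + p * p * p) * s ^ 3 < t ^ 3 * s ^ 3 := by
      have e1 : p * t ^ 2 * s ^ 3 < p * s ^ 2 * t ^ 3 := by
        have : 0 < p * s ^ 2 * t ^ 2 * (t - s) := by
          have := sub_pos.2 hst
          have : 0 < t := hs0.trans hst
          positivity
        nlinarith
      have e2 : p * p * t * s ^ 3 ≤ p * p * s * t ^ 3 := by
        have : s ^ 2 ≤ t ^ 2 := by gcongr
        have h0 : 0 ≤ p * p * s * t := by
          have : 0 < t := hs0.trans hst
          positivity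
        nlinarith
      have e3 : p * p * p * s ^ 3 ≤ p * p * p * t ^ 3 := by gcongr
      nlinarith
    exact lt_of_mul_lt_mul_right k2 (pow_nonneg hs0.le 3)
  refine ⟨?_, ?_, by omega⟩
  · by_contra hc
    push Not at hc
    have := mono b A hbp hc hb3
    nlinarith
  · by_contra hc
    push Not at hc
    have hA1 : (p : ℝ) < A + 1 := by linarith
    -- at the root the polynomial vanishes, so it is negative below
    have key : ∀ s t : ℝ, (p : ℝ) < s → s < t → t ^ 3 = p * t ^ 2 + p * p * t + p * p * p →
        s ^ 3 < p * s ^ 2 + p * p * s + p * p * p := by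
      intro s t hs hst he
      have hs0 : 0 < s := hpR.trans hs
      have ht0 : 0 < t := hs0.trans hst
      have k2 : s ^ 3 * t ^ 3 < (p * s ^ 2 + p * p * s + p * p * p) * t ^ 3 := by
        have k1 : s ^ 3 * t ^ 3 = (p * t ^ 2 + p * p * t + p * p * p) * s ^ 3 := by rw [he]; ring
        rw [k1]
        have e1 : p * t ^ 2 * s ^ 3 < p * s ^ 2 * t ^ 3 := by
          have : 0 < p * s ^ 2 * t ^ 2 * (t - s) := by
            have := sub_pos.2 hst
            positivity
          nlinarith
        have e2 : p * p * t * s ^ 3 ≤ p * p * s * t ^ 3 := by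
          have : s ^ 2 ≤ t ^ 2 := by gcongr
          have h0 : 0 ≤ p * p * s * t := by positivity
          nlinarith
        have e3 : p * p * p * s ^ 3 ≤ p * p * p * t ^ 3 := by gcongr
        nlinarith
      exact lt_of_mul_lt_mul_right k2 (pow_nonneg ht0.le 3)
    have := key _ b hA1 hc hb3
    nlinarith

lemma piv_one : ea (piv 1) = ea rh * (al - 1) ^ 2 := by
  show ea (rh * (Cub.X - 1) ^ 2) = _
  simp

lemma piv_two : ea (piv 2) = 7 * ea (piv 1) := by
  show ea (Cub.C 7 * _) = _
  rw [map_mul, ea_C]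
  rfl

lemma cast_sub_le (a b : ℕ) : (a : ℝ) - b ≤ ((a - b : ℕ) : ℝ) := by
  rcases le_total b a with h | h
  · rw [Nat.cast_sub h]
  · rw [Nat.sub_eq_zero_of_le h]
    have : (a : ℝ) ≤ b := by exact_mod_cast h
    simp; linarith

lemma sub_cast_le {a b : ℕ} {x : ℝ} (hx : 0 ≤ x) (h : (a : ℝ) - b ≤ x) : ((a - b : ℕ) : ℝ) ≤ x := by
  rcases le_total b a with h1 | h1
  · rwa [Nat.cast_sub h1]
  · rw [Nat.sub_eq_zero_of_le h1]; simpa using hx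

set_option maxHeartbeats 1000000 in
lemma withLogs_spec {p K A : ℕ} (hp : 0 < p) (hA : isFloorAl p A = true) {k : LogEnc → Bool}
    (hk : withLogs p K A k = true) : ∃ E : LogEnc, E.Ok p ∧ k E = true := by
  obtain ⟨hA1, hA2, hpA⟩ := al_bounds hp hA
  have hpR : (0 : ℝ) < p := by exact_mod_cast hp
  have hrh := rh_bounds
  have hlog32 : Real.log 2 = Real.log (3 / 2) + Real.log (4 / 3) := by
    rw [← Real.log_mul (by norm_num) (by norm_num)]; norm_num
  have hlog3 : Real.log 3 = 2 * Real.log (3 / 2) + Real.log (4 / 3) := by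
    have : (3 : ℝ) = (3 / 2) ^ 2 * (4 / 3) := by norm_num
    conv_lhs => rw [this]
    rw [Real.log_mul (by norm_num) (by norm_num), Real.log_pow]; norm_num
  have hlog7 : Real.log 7 = 3 * Real.log 2 - Real.log (8 / 7) := by
    rw [Real.log_div (by norm_num) (by norm_num), show (8 : ℝ) = 2 ^ 3 by norm_num, Real.log_pow]
    push_cast; ring
  have hloga : Real.log al = Real.log 2 - Real.log (2 / al) := by
    rw [Real.log_div (by norm_num) al_pos.ne']; ring
  have hlogr : Real.log (ea (piv 0)) = Real.log 3 - Real.log (3 / ea rh) := by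
    rw [Real.log_div (by norm_num) (by linarith)]
    show Real.log (ea rh) = _
    ring
  have hp1 := piv_ge 1
  have hlogp : Real.log (ea (piv 1)) = Real.log 2 + Real.log (ea (piv 1) / 2) := by
    rw [Real.log_div (by linarith) (by norm_num)]; ring
  have hlogq : Real.log (ea (piv 2)) = 4 * Real.log 2 + Real.log (ea (piv 1) / 2) -
      Real.log (8 / 7) := by
    rw [piv_two, Real.log_mul (by norm_num) (by linarith), hlog7, hlogp]; ring
  have a1 := lgL_le (p := p) (K := K) (a' := 3 * p) (b' := 2 * p) hp (a := 3) (b := 2) (by norm_num)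
    (by norm_num) (by norm_num) (by push_cast; linarith) (by push_cast; linarith)
  have a2 := le_lgU (p := p) (K := K) (a' := 3 * p) (b' := 2 * p) hp (a := 3) (b := 2) (by norm_num)
    (by norm_num) (by norm_num) (by push_cast; linarith) (by push_cast; linarith)
  have b1 := lgL_le (p := p) (K := K) (a' := 4 * p) (b' := 3 * p) hp (a := 4) (b := 3) (by norm_num)
    (by norm_num) (by norm_num) (by push_cast; linarith) (by push_cast; linarith)
  have b2 := le_lgU (p := p) (K := K) (a' := 4 * p) (b' := 3 * p) hp (a := 4) (b := 3) (by norm_num)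
    (by norm_num) (by norm_num) (by push_cast; linarith) (by push_cast; linarith)
  have c1 := lgL_le (p := p) (K := K) (a' := 8 * p) (b' := 7 * p) hp (a := 8) (b := 7) (by norm_num)
    (by norm_num) (by norm_num) (by push_cast; linarith) (by push_cast; linarith)
  have c2 := le_lgU (p := p) (K := K) (a' := 8 * p) (b' := 7 * p) hp (a := 8) (b := 7) (by norm_num)
    (by norm_num) (by norm_num) (by push_cast; linarith) (by push_cast; linarith)
  have e1 := lgL_le (p := p) (K := K) (a' := 2 * p) (b' := A + 1) hp (a := 2) (b := al) al_pos
    (by linarith [al_lt]) (by linarith [al_gt]) (by push_cast; linarith) (by push_cast; linarith)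
  have e2 := le_lgU (p := p) (K := K) (a' := 2 * p) (b' := A) hp (a := 2) (b := al) al_pos
    (by linarith [al_lt]) (by linarith [al_gt]) (by push_cast; linarith) (by linarith)
  have hsq1 : (A : ℝ) * A ≤ (p * al) * (p * al) :=
    mul_self_le_mul_self (Nat.cast_nonneg A) hA1
  have hsq2 : (p * al) * (p * al) ≤ ((A : ℝ) + 1) * (A + 1) := by
    have := al_pos.le
    gcongr
  have hr1 : (rlo p A : ℝ) ≤ p * ea rh := by
    unfold rlo
    apply sub_cast_le (mul_nonneg hpR.le (by linarith))
    have h1 : ((4 * A - p : ℕ) : ℝ) ≤ 4 * A - p := by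
      rw [Nat.cast_sub (by omega)]; push_cast; linarith
    have h2 := real_le_nat_div ((A + 1) * (A + 1)) p hp
    have h3 : p * al ^ 2 ≤ (((A + 1) * (A + 1) : ℕ) : ℝ) / p := by
      rw [le_div_iff₀ hpR]; push_cast; linarith
    rw [ea_rh]
    linarith
  have hr2 : p * ea rh ≤ (rhi p A : ℝ) := by
    unfold rhi
    refine le_trans ?_ (cast_sub_le _ _)
    have h1 := cast_sub_le (4 * (A + 1)) p
    have h2 := nat_div_le_real (A * A) p
    have h3 : ((A * A : ℕ) : ℝ) / p ≤ p * al ^ 2 := by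
      rw [div_le_iff₀ hpR]; push_cast; linarith
    rw [ea_rh]
    push_cast at h1
    linarith
  have f1 := lgL_le (p := p) (K := K) (a' := 3 * p) (b' := rhi p A) hp (a := 3) (b := ea rh)
    (by linarith) (by linarith) (by linarith) (by push_cast; linarith) hr2
  have f2 := le_lgU (p := p) (K := K) (a' := 3 * p) (b' := rlo p A) hp (a := 3) (b := ea rh)
    (by linarith) (by linarith) (by linarith) (by push_cast; linarith) hr1
  have hs1 : ((A - p : ℕ) : ℝ) = A - p := by rw [Nat.cast_sub hpA.le]
  have hs2 : ((A + 1 - p : ℕ) : ℝ) = A + 1 - p := by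
    rw [Nat.cast_sub (by omega)]; push_cast; ring
  have hpAR : (p : ℝ) < A := by exact_mod_cast hpA
  have hg1 : ((rlo p A * ((A - p) * (A - p)) / (p * p) : ℕ) : ℝ) ≤ p * ea (piv 1) := by
    refine (nat_div_le_real _ _).trans ?_
    push_cast
    rw [hs1, div_le_iff₀ (by positivity), piv_one]
    calc (rlo p A : ℝ) * ((A - p) * (A - p)) ≤ (p * ea rh) * ((p * al - p) * (p * al - p)) := by
          have : (0 : ℝ) ≤ A - p := by linarith
          have : (0 : ℝ) ≤ p * al - p := by linarith
          have : (0 : ℝ) ≤ p * ea rh := mul_nonneg hpR.le (by linarith)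
          gcongr
      _ = _ := by ring
  have hg2 : p * ea (piv 1) ≤
      ((rhi p A * ((A + 1 - p) * (A + 1 - p)) / (p * p) + 1 : ℕ) : ℝ) := by
    refine le_trans ?_ (real_le_nat_div _ _ (Nat.mul_pos hp hp))
    push_cast
    rw [hs2, le_div_iff₀ (by positivity), piv_one]
    calc p * (ea rh * (al - 1) ^ 2) * (p * p) = (p * ea rh) * ((p * al - p) * (p * al - p)) := by
          ring
      _ ≤ (rhi p A : ℝ) * ((A + 1 - p) * (A + 1 - p)) := by
          have : (0 : ℝ) ≤ p * al - p := by linarith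
          have : (0 : ℝ) ≤ A + 1 - p := by linarith
          gcongr
  have hp13 : ea (piv 1) ≤ 3 * 2 := by
    rw [piv_one]
    have : (al - 1) ^ 2 ≤ 1 := by nlinarith [al_lt, al_gt]
    nlinarith [sq_nonneg (al - 1)]
  obtain ⟨g, hg⟩ : ∃ g, g = rlo p A * ((A - p) * (A - p)) / (p * p) := ⟨_, rfl⟩
  obtain ⟨g', hg'⟩ : ∃ g', g' = rhi p A * ((A + 1 - p) * (A + 1 - p)) / (p * p) + 1 := ⟨_, rfl⟩
  rw [← hg] at hg1
  rw [← hg'] at hg2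
  have h2p : (p : ℝ) * 2 = ((2 * p : ℕ) : ℝ) := by push_cast; ring
  have k1 := lgL_le (p := p) (K := K) (a' := g) (b' := 2 * p) hp (a := ea (piv 1)) (b := 2)
    (by norm_num) hp1 hp13 hg1 h2p.le
  have k2 := le_lgU (p := p) (K := K) (a' := g') (b' := 2 * p) hp (a := ea (piv 1)) (b := 2)
    (by norm_num) hp1 hp13 hg2 h2p.ge
  unfold withLogs at hk
  simp only [frc_eq] at hk
  rw [← hg, ← hg'] at hk
  generalize lgL p K (3 * p) (2 * p) = a at *
  generalize lgU p K (3 * p) (2 * p) = a' at *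
  generalize lgL p K (4 * p) (3 * p) = b at *
  generalize lgU p K (4 * p) (3 * p) = b' at *
  generalize lgL p K (8 * p) (7 * p) = c at *
  generalize lgU p K (8 * p) (7 * p) = c' at *
  generalize lgL p K (2 * p) (A + 1) = e at *
  generalize lgU p K (2 * p) A = e' at *
  generalize lgL p K (3 * p) (rhi p A) = f at *
  generalize lgU p K (3 * p) (rlo p A) = f' at *
  generalize lgL p K g (2 * p) = h at *
  generalize lgU p K g' (2 * p) = h' at *
  have hpos : ∀ t : ℝ, 1 ≤ t → 0 ≤ p * Real.log t := fun t ht =>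
    mul_nonneg hpR.le (Real.log_nonneg ht)
  have p0 := hpos _ (show 1 ≤ ea (piv 0) by linarith only [piv_ge 0])
  have p2 := hpos _ (show 1 ≤ ea (piv 2) by linarith only [piv_ge 2])
  have pa := hpos _ one_lt_al.le
  have m2 : p * Real.log 2 = p * Real.log (3 / 2) + p * Real.log (4 / 3) := by rw [hlog32]; ring
  have m3 : p * Real.log 3 = 2 * (p * Real.log (3 / 2)) + p * Real.log (4 / 3) := by
    rw [hlog3]; ring
  have ma : p * Real.log al = p * Real.log 2 - p * Real.log (2 / al) := by rw [hloga]; ring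
  have m0 : p * Real.log (ea (piv 0)) = p * Real.log 3 - p * Real.log (3 / ea rh) := by
    rw [hlogr]; ring
  have m1 : p * Real.log (ea (piv 1)) = p * Real.log 2 + p * Real.log (ea (piv 1) / 2) := by
    rw [hlogp]; ring
  have m7 : p * Real.log (ea (piv 2)) = 4 * (p * Real.log 2) + p * Real.log (ea (piv 1) / 2) -
      p * Real.log (8 / 7) := by rw [hlogq]; ring
  refine ⟨_, ?_, hk⟩
  clear hk hlog32 hlog3 hlog7 hloga hlogr hlogp hlogq hpos hr1 hr2 hg1 hg2 hsq1 hsq2 hg hg'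
  refine ⟨⟨?_, ?_⟩, ⟨?_, ?_⟩, ⟨?_, ?_⟩, ⟨?_, ?_⟩, ⟨?_, ?_⟩, ?_, ?_⟩
  · rw [m2]; push_cast; linarith only [a1, b1]
  · rw [m2]; push_cast; linarith only [a2, b2]
  · rw [m3]; push_cast; linarith only [a1, b1]
  · rw [m3]; push_cast; linarith only [a2, b2]
  · refine sub_cast_le pa ?_
    rw [ma, m2]; push_cast; linarith only [a1, b1, e2]
  · refine le_trans ?_ (cast_sub_le _ _)
    rw [ma, m2]; push_cast; linarith only [a2, b2, e1]
  · refine sub_cast_le p0 ?_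
    rw [m0, m3]; push_cast; linarith only [a1, b1, f2]
  · refine le_trans ?_ (cast_sub_le _ _)
    rw [m0, m3]; push_cast; linarith only [a2, b2, f1]
  · rw [m1, m2]; push_cast; linarith only [a1, b1, k1]
  · rw [m1, m2]; push_cast; linarith only [a2, b2, k2]
  · refine sub_cast_le p2 ?_
    rw [m7, m2]; push_cast; linarith only [a1, b1, k1, c2]
  · refine le_trans ?_ (cast_sub_le _ _)
    rw [m7, m2]; push_cast; linarith only [a2, b2, k2, c1]

/-- Certificate check for `LB2 N Q`: `h / q` is a convergent to `log 2 / log 3`, `N < q`. -/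
def chk2 (N Q q h p : ℕ) (E : LogEnc) : Bool :=
  Nat.beq (Nat.gcd h q) 1 && Nat.ble (N + 1) q && Nat.ble (2 * q) (2 ^ Q) && Nat.ble p E.l3 &&
  Nat.ble (2 * N * (q * E.u2)) (2 * N * (h * E.l3) + p) &&
  Nat.ble (2 * N * (h * E.u3)) (2 * N * (q * E.l2) + p)

/-- Tests `|q log a - h log 3| ≤ 1 / (10 N)`. -/
def near3 (N q p h l u : ℕ) (E : LogEnc) : Bool :=
  Nat.ble (10 * N * (q * u)) (10 * N * (h * E.l3) + p) &&
  Nat.ble (10 * N * (h * E.u3)) (10 * N * (q * l) + p)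

/-- Tests that `q log R` keeps distance `1 / 4` from all multiples of `log 3`. -/
def far3 (q p l u : ℕ) (E : LogEnc) : Bool :=
  frc (q * l / E.u3) fun h =>
  Nat.ble (p + 4 * (h * E.u3)) (4 * (q * l)) && Nat.ble (p + 4 * (q * u)) (4 * ((h + 1) * E.l3))

/-- Certificate check for `LB4 N Q`: `q` makes `q log 2 / log 3` and `q log α / log 3` nearly
integral, but none of the numbers `q log R / log 3` for the three pivots `R`. -/
def chk4 (N Q q p : ℕ) (E : LogEnc) : Bool :=
  Nat.ble (20 * q) (2 ^ Q) &&
  (frc ((2 * (q * E.l2) + E.l3) / (2 * E.l3)) fun h => near3 N q p h E.l2 E.u2 E) &&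
  (frc ((2 * (q * E.la) + E.l3) / (2 * E.l3)) fun h => near3 N q p h E.la E.ua E) &&
  far3 q p E.l0 E.u0 E && far3 q p E.l1 E.u1 E && far3 q p E.l7 E.u7 E

/-- Certifies `LB2 N Q2` and `LB4 N Q4` at once; the unit is `2 ^ (-P)` and `A = ⌊2 ^ P α⌋`. -/
def cert (N P K A Q2 q2 h2 Q4 q4 : ℕ) : Bool :=
  frc (2 ^ P) fun p => frc A fun A => isFloorAl p A &&
    withLogs p K A fun E => chk2 N Q2 q2 h2 p E && chk4 N Q4 q4 p E

lemma chk2_spec {N Q q h p : ℕ} {E : LogEnc} (hp : 0 < p) (hE : E.Ok p)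
    (hc : chk2 N Q q h p E = true) : LB2 N Q := by
  simp only [chk2, Bool.and_eq_true, Nat.ble_eq, Nat.beq_eq] at hc
  obtain ⟨⟨⟨⟨⟨hg, hN⟩, hQ⟩, hl3⟩, k1⟩, k2⟩ := hc
  have hpR : (0 : ℝ) < p := by exact_mod_cast hp
  have hQR : (2 : ℝ) * q ≤ 2 ^ Q := by exact_mod_cast hQ
  have k1R : 2 * (N : ℝ) * (q * E.u2) ≤ 2 * N * (h * E.l3) + p := by exact_mod_cast k1
  have k2R : 2 * (N : ℝ) * (h * E.u3) ≤ 2 * N * (q * E.l2) + p := by exact_mod_cast k2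
  have hl3R : (p : ℝ) ≤ E.l3 := by exact_mod_cast hl3
  have hL3 : 1 ≤ Real.log 3 := by
    by_contra hlt
    push Not at hlt
    nlinarith [hE.h3.1]
  obtain ⟨δ, hδ⟩ : ∃ δ, δ = q * Real.log 2 - h * Real.log 3 := ⟨_, rfl⟩
  have hδ1 : 2 * N * |δ| ≤ 1 := by
    have e1 : 2 * (N : ℝ) * (q * (p * Real.log 2)) ≤ 2 * N * (q * E.u2) := by
      gcongr; exact hE.h2.2
    have e2 : 2 * (N : ℝ) * (h * E.l3) ≤ 2 * N * (h * (p * Real.log 3)) := by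
      gcongr; exact hE.h3.1
    have e3 : 2 * (N : ℝ) * (q * E.l2) ≤ 2 * N * (q * (p * Real.log 2)) := by
      gcongr; exact hE.h2.1
    have e4 : 2 * (N : ℝ) * (h * (p * Real.log 3)) ≤ 2 * N * (h * E.u3) := by
      gcongr; exact hE.h3.2
    have f1 : p * (2 * N * δ) ≤ p * 1 := by rw [hδ]; linarith
    have f2 : p * (-1) ≤ p * (2 * N * δ) := by rw [hδ]; linarith
    have f1' := le_of_mul_le_mul_left f1 hpR
    have f2' := le_of_mul_le_mul_left f2 hpR
    rcases abs_cases δ with ⟨h, -⟩ | ⟨h, -⟩ <;> rw [h] <;> linarith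
  intro a b ha _ hab
  have haR : |(a : ℝ)| ≤ N := by exact_mod_cast ha
  have hM : (a * h + b * q : ℤ) ≠ 0 := by
    intro h0
    have hdvd : (q : ℤ) ∣ a * h := ⟨-b, by linarith⟩
    have hco : IsCoprime (q : ℤ) h := by
      rw [Int.isCoprime_iff_gcd_eq_one]
      simpa [Int.gcd, Nat.gcd_comm] using hg
    have hqa := hco.dvd_of_dvd_mul_right hdvd
    have ha0 : a = 0 := Int.eq_zero_of_abs_lt_dvd hqa (by omega)
    rw [ha0, zero_mul, zero_add] at h0
    have hq0 : (q : ℤ) ≠ 0 := by omega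
    rcases mul_eq_zero.1 h0 with h1 | h1
    · simp [ha0, h1] at hab
    · exact hq0 h1
  have hM1 : (1 : ℝ) ≤ |((a * h + b * q : ℤ) : ℝ)| := by
    exact_mod_cast Int.one_le_abs hM
  have key : q * (a * Real.log 2 + b * Real.log 3) =
      a * δ + ((a * h + b * q : ℤ) : ℝ) * Real.log 3 := by rw [hδ]; push_cast; ring
  have h1 : |a * δ| ≤ 1 / 2 := by
    rw [abs_mul]
    have : |(a : ℝ)| * |δ| ≤ N * |δ| := by gcongr
    linarith
  have h2 : 1 ≤ |((a * h + b * q : ℤ) : ℝ) * Real.log 3| := by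
    rw [abs_mul, abs_of_nonneg (by linarith : 0 ≤ Real.log 3)]
    nlinarith
  have h3 : 1 / 2 ≤ |q * (a * Real.log 2 + b * Real.log 3)| := by
    rw [key]
    have := abs_sub_abs_le_abs_sub (((a * h + b * q : ℤ) : ℝ) * Real.log 3) (-(a * δ))
    rw [abs_neg, sub_neg_eq_add, add_comm (_ * _) (_ * δ)] at this
    linarith
  rw [abs_mul, abs_of_nonneg (Nat.cast_nonneg q)] at h3
  have := mul_le_mul_of_nonneg_right hQR (abs_nonneg (a * Real.log 2 + b * Real.log 3))
  linarith

lemma near3_spec {N q p h l u : ℕ} {E : LogEnc} {v : ℝ} (hp : 0 < p) (hE : E.Ok p)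
    (hl : l ≤ p * v) (hu : p * v ≤ u) (hc : near3 N q p h l u E = true) (a : ℤ) (ha : |a| ≤ N) :
    |a * (q * v - h * Real.log 3)| ≤ 1 / 10 := by
  simp only [near3, Bool.and_eq_true, Nat.ble_eq] at hc
  obtain ⟨k1, k2⟩ := hc
  have hpR : (0 : ℝ) < p := by exact_mod_cast hp
  have k1R : 10 * (N : ℝ) * (q * u) ≤ 10 * N * (h * E.l3) + p := by exact_mod_cast k1
  have k2R : 10 * (N : ℝ) * (h * E.u3) ≤ 10 * N * (q * l) + p := by exact_mod_cast k2
  obtain ⟨δ, hδ⟩ : ∃ δ, δ = q * v - h * Real.log 3 := ⟨_, rfl⟩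
  have hδ1 : 10 * N * |δ| ≤ 1 := by
    have e1 : 10 * (N : ℝ) * (q * (p * v)) ≤ 10 * N * (q * u) := by gcongr
    have e2 : 10 * (N : ℝ) * (h * E.l3) ≤ 10 * N * (h * (p * Real.log 3)) := by
      gcongr; exact hE.h3.1
    have e3 : 10 * (N : ℝ) * (q * l) ≤ 10 * N * (q * (p * v)) := by gcongr
    have e4 : 10 * (N : ℝ) * (h * (p * Real.log 3)) ≤ 10 * N * (h * E.u3) := by
      gcongr; exact hE.h3.2
    have f1 : p * (10 * N * δ) ≤ p * 1 := by rw [hδ]; linarith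
    have f2 : p * (-1) ≤ p * (10 * N * δ) := by rw [hδ]; linarith
    have f1' := le_of_mul_le_mul_left f1 hpR
    have f2' := le_of_mul_le_mul_left f2 hpR
    rcases abs_cases δ with ⟨h, -⟩ | ⟨h, -⟩ <;> rw [h] <;> linarith
  have haR : |(a : ℝ)| ≤ N := by exact_mod_cast ha
  rw [← hδ, abs_mul]
  have : |(a : ℝ)| * |δ| ≤ N * |δ| := by gcongr
  linarith

lemma far3_spec {q p l u : ℕ} {E : LogEnc} {v : ℝ} (hp : 0 < p) (hE : E.Ok p)
    (hl : l ≤ p * v) (hu : p * v ≤ u) (hc : far3 q p l u E = true) :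
    ∃ h : ℕ, 1 / 4 ≤ q * v - h * Real.log 3 ∧ q * v - h * Real.log 3 ≤ Real.log 3 - 1 / 4 := by
  simp only [far3, frc_eq, Bool.and_eq_true, Nat.ble_eq] at hc
  obtain ⟨h, hh⟩ : ∃ h, h = q * l / E.u3 := ⟨_, rfl⟩
  rw [← hh] at hc
  obtain ⟨k1, k2⟩ := hc
  have hpR : (0 : ℝ) < p := by exact_mod_cast hp
  have k1R : (p : ℝ) + 4 * (h * E.u3) ≤ 4 * (q * l) := by exact_mod_cast k1
  have k2R : (p : ℝ) + 4 * (q * u) ≤ 4 * ((h + 1) * E.l3) := by exact_mod_cast k2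
  have e1 : (q : ℝ) * l ≤ q * (p * v) := by gcongr
  have e2 : (h : ℝ) * (p * Real.log 3) ≤ h * E.u3 := by gcongr; exact hE.h3.2
  have e3 : (q : ℝ) * (p * v) ≤ q * u := by gcongr
  have e4 : (h + 1 : ℝ) * E.l3 ≤ (h + 1) * (p * Real.log 3) := by gcongr; exact hE.h3.1
  refine ⟨h, le_of_mul_le_mul_left ?_ hpR, le_of_mul_le_mul_left ?_ hpR⟩ <;> linarith

lemma chk4_spec {N Q q p : ℕ} {E : LogEnc} (hp : 0 < p) (hE : E.Ok p)
    (hc : chk4 N Q q p E = true) : LB4 N Q := by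
  simp only [chk4, frc_eq, Bool.and_eq_true, Nat.ble_eq] at hc
  obtain ⟨⟨⟨⟨⟨hQ, k2⟩, ka⟩, r0⟩, r1⟩, r7⟩ := hc
  have hQR : (20 : ℝ) * q ≤ 2 ^ Q := by exact_mod_cast hQ
  have hfar : ∀ i, ∃ h : ℕ, 1 / 4 ≤ q * Real.log (ea (piv i)) - h * Real.log 3 ∧
      q * Real.log (ea (piv i)) - h * Real.log 3 ≤ Real.log 3 - 1 / 4 := by
    intro i
    fin_cases i
    · exact far3_spec hp hE hE.h0.1 hE.h0.2 r0
    · exact far3_spec hp hE hE.h1.1 hE.h1.2 r1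
    · exact far3_spec hp hE hE.h7.1 hE.h7.2 r7
  intro i a b e ha hb he
  obtain ⟨h, f1, f2⟩ := hfar i
  have n2 := abs_le.1 (near3_spec hp hE hE.h2.1 hE.h2.2 k2 a ha)
  have na := abs_le.1 (near3_spec hp hE hE.ha.1 hE.ha.2 ka e he)
  generalize (2 * (q * E.l2) + E.l3) / (2 * E.l3) = h2 at n2
  generalize (2 * (q * E.la) + E.l3) / (2 * E.l3) = h3 at na
  generalize Real.log (ea (piv i)) = R at *
  obtain ⟨M, hM⟩ : ∃ M : ℤ, M = h + a * h2 + e * h3 + b * q := ⟨_, rfl⟩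
  obtain ⟨Λ, hΛ⟩ : ∃ Λ, Λ = R + (a * Real.log 2 + b * Real.log 3 + e * Real.log al) := ⟨_, rfl⟩
  rw [← hΛ]
  have key : q * Λ = (q * R - h * Real.log 3) + a * (q * Real.log 2 - h2 * Real.log 3) +
      e * (q * Real.log al - h3 * Real.log 3) + M * Real.log 3 := by
    rw [hM, hΛ]; push_cast; ring
  have hL3 : 0 ≤ Real.log 3 := Real.log_nonneg (by norm_num)
  have hfin : 1 / 20 ≤ |q * Λ| := by
    rw [le_abs]
    rcases le_or_gt 0 M with h0 | h0
    · left
      have : (0 : ℝ) ≤ M := by exact_mod_cast h0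
      have := mul_nonneg this hL3
      linarith [n2.1, na.1]
    · right
      have : (M : ℝ) ≤ -1 := by exact_mod_cast (by omega : M ≤ -1)
      have := mul_le_mul_of_nonneg_right this hL3
      linarith [n2.2, na.2]
  rw [abs_mul, abs_of_nonneg (Nat.cast_nonneg q)] at hfin
  have := mul_le_mul_of_nonneg_right hQR (abs_nonneg Λ)
  linarith

lemma cert_spec {N P K A Q2 q2 h2 Q4 q4 : ℕ} (hc : cert N P K A Q2 q2 h2 Q4 q4 = true) :
    LB2 N Q2 ∧ LB4 N Q4 := by
  simp only [cert, frc_eq, Bool.and_eq_true] at hc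
  have hp : 0 < 2 ^ P := by positivity
  obtain ⟨E, hE, hk⟩ := withLogs_spec hp hc.1 hc.2
  rw [Bool.and_eq_true] at hk
  exact ⟨chk2_spec hp hE hk.1, chk4_spec hp hE hk.2⟩

set_option maxRecDepth 100000
/-- `⌊2 ^ 6960 α⌋`. -/
def alFloor : ℕ := 2712809294883540001376403461148781617947332308007624939433786420384772601547056463873857187028691353648203638255826833807563455877315843649963944495563730346160934743908192857407218873381612562442600999779758023532279464543878904546326122348306864297542167139421027060462772577509484494245863941181074288730732619357002967002090801766720963790074574063433088120604167089149453240096324630604448989613725133735525159421959891932848845662767613857242380505202161293912770379314273916019798488261718879451550649651528034575561865723361974060723113579194325612825907081647136700092670919631946475592591967322407154068896965863811093327561226685026464311926566615246384767299944552280303661726270930194205847867393596767658584997458867254923504993915544571396668133899002898056476730360746692669505148659328902119715715731257821851394461975484428683625367956041011836307495336653315260203329906394906343253549030126003459912068971819523549038824391499315388991699234793616269497861063589582891830866074897977697032510921175516714912674526751943995635479749557584303043223060039769168583510852772931925163663746883392835244067816728634750117089095572249524928024390405844769680525035149472760888517904603393223206819399617038375268281155696050356525876988935101891119234737717371875962578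6609057552093663571211566891929204843365150543373020360860038948638644199759672736094545301811602176912954947866866417795439840155916845742218913767973239697660080710799461793241337351368647207546240014911274750600434492985431387932897902385527763459172903220821014111123001581060179082455815431242844303562596198356648431999062287421676847607445918227142671298819756138367430926602106533262094676778754833275028650779971946335683795057651485867950583410266028588497079334064460220391472885996048526185076813903145468360715679193462760913402813147923007432425844358435090002667390981121856751495649293906963912694381181157227542002352508832669450296834870552182088827351140727483262180349176109721601209585885292746954399911283686303938128074106294450300886581506996466136923732707820240885782513550990012830003914

theorem cert_2276 : cert (2 ^ 2276) 6960 1510 alFloor 2281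
    137838284476982712675268723705998295386036778488748410723596104621248174899173104049720878208084131898865090730671438274262915470442503112794869174875434982293784509595584665185795111978671560434104731510977161006716986529204611819005197028207395656418202849037530700938041398282094171037401608937417324954056135974226237992236476163451380178816794298688855185539726011557208467319518246760913840216927173687970484339650875172115402057448829538373691755626889506024580103486950916768683647802157754080120042033998070049782998996992373426287255402630723236252355389025110798321790058841990148011251641248806405737917903908438188630736135177277561693400591981310120311789731646946353622607
    86966274857775149874889338235117884224604775582945481505085747213085972247573321523400954504681552312014694415130813448741344361407480592466891033790537885696845967547338867150746835548354648345931301796615306062005633437390364983124970377387542489880956149207346143543176252910959229299546748127158998186859268701613314205809045822834551516229272958258152552130866490439986300888989179104610811320879704134128443865087269017406921960917685367140733229205101438704409984676224106718391393134622604446417867858710694584203347190227235803239272789115417579864926216309386450754448079736672542636537707578185195214339376961965338516698843113389649927952086376938383113053925149186090622489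
    4566
    96698804262640460535974943126762294240096023712197675499732887657377255727663466122638336192731029913697318810411091338615431430452828629645120651954487983623875325468197867691721323931043998322355763325590900344150677867127009285984922155929441768220330276013994176185236046162730561572498176439938654781232546741276475038739130288096493678726551606450444463849420466274739875910223580158711132961804553023811721786674585723782385094095054728653542946374321691255015842137908201507670415928335764559035604559344780860718482965379428331518342618956070112527696866447437232764384603573040357398233371475785665757048250337797806624634142632361329978730024591285257635733004185840471935923934311286668296198590556829324988001401115991715701335932673850657787359218888312496593287518237096084648401163709659192300943030648456811830783888280852623475514141571159116796458978269168669283048649998206408169935987154031705835326061641392122210391111370956680532992164005922098672465458601387826630375953447332494276227892532355358673434025814045169963893695876579101384496814823371773845689143151126874905822482614685142878920350544934586135872502087792702799294187057760856508195799299054631799205812269560334171719521679740332957152509076600246610278289338585947456777454059456616076137530587965553815447539815196856471115934965814545542573933973783607571317274237859798100815655 = true := by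
  decide +kernel

theorem cert_666 : cert (2 ^ 666) 2060 450 (alFloor / 2 ^ 4900) 669
    825683767212975130380014560425144856987511163871597389702424103601397835484138624448358603652181877448665040949822943192398474695419433292920835393579015167201746531929087023828613997671441467922938140
    520948455775635026872014706607511487843301781027974250671893718439891740509790734917111660275730746146220133693103600305089345690765232439038385511095171032847418752832491164793475234907566368518558799
    1343
    7444771788258812116911534128518519648484938589725588865374235851884828172400799852967231029038183725101074310685742460398873477818776725270350299829048997394337576754669797024735240017210686313490055382169165286756126303891899293453887181613221675028057178075769993197986330407749074841130419661463764767417670063721060039085410371360656159744917659161476608718296922578606085154709240102548292990127399 = true := by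
  decide +kernel

section
variable {d : ℤ} {n x y : Fin 5 → ℕ}

lemma Sol.bd_666 (s : Sol d n x y) : Bd n x y (2 ^ 666) := by
  obtain ⟨h2, h4⟩ := cert_spec cert_2276
  exact s.main_step (r := 12) (H := 16) (W := 7828) s.absolute h2 h4 le_rfl (by norm_num)
    (by norm_num) (by norm_num)
end

/-! ### Bounding the indices when three powers of `3` are small -/

/-- If `τ (α ^ m ψ) = 0`, then by Binet's formula `α ^ m ψ(α)` is as small as `β ^ m ψ(β)`, while the
norm of `ψ` is a nonzero integer; this bounds `m`. -/
lemma tau_zero_bound {ψ : Cub ℤ} (hψ : ψ ≠ 0) {m : ℕ} (h : Cub.tau (Cub.X ^ m * ψ) = 0) {U : ℝ}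
    (hU : ‖eb ψ‖ ≤ U) : al ^ (3 * m) ≤ 4 * U ^ 6 := by
  have hb := binet (Cub.X ^ m * ψ)
  rw [h, map_mul, map_mul, map_pow, map_pow, ea_X, eb_X, norm_mul, norm_pow, Int.cast_zero,
    mul_zero, zero_sub, abs_neg, abs_mul, abs_of_nonneg (pow_nonneg al_pos.le m)] at hb
  have hn : (1 : ℝ) ≤ |ea ψ| * ‖eb ψ‖ ^ 2 := by
    have h1 := ea_mul_normSq ψ
    have h2 : (1 : ℝ) ≤ |(Cub.nm ψ : ℝ)| := by
      exact_mod_cast Int.one_le_abs (fun h0 => hψ (Cub.nm_eq_zero.1 h0))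
    rw [← h1, abs_mul, Complex.normSq_eq_norm_sq, abs_of_nonneg (sq_nonneg ‖eb ψ‖)] at h2
    exact h2
  have hbe : ‖be‖ ^ 2 * al = 1 := by
    rw [← Complex.normSq_eq_norm_sq, normSq_be]; field_simp [al_pos.ne']
  obtain ⟨E, hE⟩ : ∃ E, E = ‖eb ψ‖ := ⟨_, rfl⟩
  obtain ⟨b, hbb⟩ : ∃ b, b = ‖be‖ ^ m := ⟨_, rfl⟩
  obtain ⟨A, hA⟩ : ∃ A, A = al ^ m := ⟨_, rfl⟩
  have hE0 : 0 ≤ E := hE ▸ norm_nonneg _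
  have hA0 : 0 < A := hA ▸ pow_pos al_pos m
  have hb0 : 0 ≤ b := hbb ▸ pow_nonneg (norm_nonneg _) _
  rw [← hE, ← hbb, ← hA] at hb
  rw [← hE] at hn hU
  have hbA : b ^ 2 * A = 1 := by
    rw [hbb, hA, ← pow_mul, mul_comm m 2, pow_mul, ← mul_pow, hbe, one_pow]
  have k1 : A ≤ 2 * (b * E ^ 3) := by
    calc A ≤ A * (|ea ψ| * E ^ 2) := le_mul_of_one_le_right hA0.le hn
      _ = A * |ea ψ| * E ^ 2 := by ring
      _ ≤ 2 * (b * E) * E ^ 2 := by gcongr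
      _ = _ := by ring
  have k2 : A ^ 2 ≤ (2 * (b * E ^ 3)) ^ 2 := by gcongr
  have k3 : A ^ 3 ≤ 4 * E ^ 6 := by
    calc A ^ 3 = A ^ 2 * A := by ring
      _ ≤ (2 * (b * E ^ 3)) ^ 2 * A := by gcongr
      _ = 4 * E ^ 6 * (b ^ 2 * A) := by ring
      _ = _ := by rw [hbA, mul_one]
  calc al ^ (3 * m) = A ^ 3 := by rw [hA, ← pow_mul, mul_comm]
    _ ≤ _ := k3
    _ ≤ _ := by gcongr

section
variable {d : ℤ} {n x y : Fin 5 → ℕ}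

/-- Three equations with small exponents of `3`: up to a common power of `2` the right-hand sides are
bounded, so eliminating `d` and that power gives a relation `τ (α ^ n ψ) = 0` with `ψ` of bounded
height. -/
lemma Sol.psi_stage (s : Sol d n x y) {N Q κ K : ℕ} (hb : Bd n x y N) (hL : LB4 N Q)
    (hK : (3 : ℤ) ^ K ≤ 2 ^ κ) {i j l : Fin 5} (hij : i < j) (hjl : j < l)
    (hi : y i ≤ K) (hj : y j ≤ K) (hl : y l ≤ K) :
    21 * n i ≤ 8 * (14 + 6 * (Q + 4 + κ)) := by
  obtain ⟨e, he⟩ : ∃ e, e = min (x i) (min (x j) (x l)) := ⟨_, rfl⟩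
  obtain ⟨u, hu⟩ : ∃ u : Fin 5 → ℤ, u = fun t => 2 ^ (x t - e) * 3 ^ y t := ⟨_, rfl⟩
  have hmem : ∀ {t}, t = i ∨ t = j ∨ t = l → e ≤ x t := by
    rintro t (rfl | rfl | rfl) <;> omega
  have hue : ∀ {t}, t = i ∨ t = j ∨ t = l → T (n t) + d = 2 ^ e * u t := by
    intro t ht
    rw [s.eq t, hu]
    show (2 : ℤ) ^ x t * 3 ^ y t = 2 ^ e * (2 ^ (x t - e) * 3 ^ y t)
    rw [← mul_assoc, ← pow_add, Nat.add_sub_cancel' (hmem ht)]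
  have hu0 : ∀ t, 0 < u t := fun t => by rw [hu]; positivity
  obtain ⟨t0, ht0, hxt0, hyt0⟩ : ∃ t, (t = i ∨ t = j ∨ t = l) ∧ x t = e ∧ y t ≤ K := by
    rcases min_choice (x i) (min (x j) (x l)) with h | h
    · exact ⟨i, Or.inl rfl, by omega, hi⟩
    · rcases min_choice (x j) (x l) with h' | h'
      · exact ⟨j, by tauto, by omega, hj⟩
      · exact ⟨l, by tauto, by omega, hl⟩
  have hut0 : u t0 ≤ 2 ^ κ := by
    rw [hu]
    show (2 : ℤ) ^ (x t0 - e) * 3 ^ y t0 ≤ _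
    rw [hxt0, Nat.sub_self, pow_zero, one_mul]
    exact (pow_le_pow_right₀ (by norm_num) hyt0).trans hK
  have huB : ∀ {t}, t = i ∨ t = j ∨ t = l → u t ≤ 2 ^ (Q + 4 + κ) := by
    intro t ht
    have h := s.rhs_le hb hL t0 t
    rw [← s.eq, ← s.eq, hue ht, hue ht0] at h
    have h2 : (2 : ℤ) ^ e * u t ≤ 2 ^ e * (2 ^ (Q + 4) * u t0) := by linarith
    have h3 := le_of_mul_le_mul_left h2 (by positivity)
    rw [pow_add _ (Q + 4) κ]
    exact h3.trans (mul_le_mul_of_nonneg_left hut0 (by positivity))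
  have hnij := s.mono hij
  have hnjl := s.mono hjl
  obtain ⟨a, ha⟩ := Nat.exists_eq_add_of_le hnij.le
  obtain ⟨b, hbb⟩ := Nat.exists_eq_add_of_le (hnij.trans hnjl).le
  obtain ⟨p, hp⟩ : ∃ p, p = u l - u i := ⟨_, rfl⟩
  obtain ⟨q, hq⟩ : ∃ q, q = u j - u i := ⟨_, rfl⟩
  have h2e : (2 : ℤ) ^ e ≠ 0 := by positivity
  have ei := hue (t := i) (Or.inl rfl)
  have ej := hue (t := j) (by tauto)
  have el := hue (t := l) (by tauto)
  have eq1 : T (n j) - T (n i) = 2 ^ e * q := by rw [hq]; linarith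
  have eq2 : T (n l) - T (n i) = 2 ^ e * p := by rw [hp]; linarith
  obtain ⟨ψ, hψ⟩ : ∃ ψ : Cub ℤ, ψ = Cub.C p * (Cub.X ^ a - 1) - Cub.C q * (Cub.X ^ b - 1) :=
    ⟨_, rfl⟩
  by_cases hz : ψ = 0
  · have hpq : p ≠ 0 ∨ q ≠ 0 := by
      right
      rintro h0
      rw [h0, mul_zero] at eq1
      have := T_lt (s.ne1 i) hnij
      linarith
    rw [hz] at hψ
    obtain ⟨g1, g2⟩ := collinear (by omega) (by omega) hpq (sub_eq_zero.1 hψ.symm)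
    have := s.pattern hb hL (by omega : n j = n i + 3) (by omega : n l = n i + 4)
    omega
  · have htau : Cub.tau (Cub.X ^ n i * ψ) = 0 := by
      have e1 : Cub.X ^ n i * ψ = Cub.C p * (Cub.X ^ n j - Cub.X ^ n i) -
          Cub.C q * (Cub.X ^ n l - Cub.X ^ n i) := by
        rw [hψ, ha, hbb, pow_add, pow_add]; ring
      rw [e1, map_sub, Cub.tau_C_mul, Cub.tau_C_mul, map_sub, map_sub, Cub.tau_X_pow,
        Cub.tau_X_pow, Cub.tau_X_pow, eq1, eq2]
      ring
    obtain ⟨U, hUe⟩ : ∃ U : ℝ, U = 2 ^ (Q + 4 + κ) := ⟨_, rfl⟩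
    have hU0 : 0 ≤ U := hUe ▸ by positivity
    have habs : ∀ v w : ℤ, 0 < v → 0 < w → v ≤ 2 ^ (Q + 4 + κ) → w ≤ 2 ^ (Q + 4 + κ) →
        ‖((v - w : ℤ) : ℂ)‖ ≤ U := by
      intro v w hv hw h1 h2
      rw [Complex.norm_intCast, hUe]
      have : |v - w| ≤ 2 ^ (Q + 4 + κ) := by rw [abs_le]; constructor <;> linarith
      exact_mod_cast this
    have hX : ∀ t : ℕ, ‖be ^ t - 1‖ ≤ 2 := by
      intro t
      refine (norm_sub_le _ _).trans ?_
      rw [norm_pow, norm_one]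
      have := pow_le_one₀ (norm_nonneg be) (norm_be_le.trans (by norm_num)) (n := t)
      linarith
    have hC : ∀ c : ℤ, eb (Cub.C c) = c := fun c => by simp
    have hE : ‖eb ψ‖ ≤ 4 * U := by
      rw [hψ, map_sub, map_mul, map_mul, hC, hC, map_sub, map_sub, map_pow, map_pow, map_one, eb_X]
      refine (norm_sub_le _ _).trans ?_
      rw [norm_mul, norm_mul]
      have g1 : ‖(p : ℂ)‖ ≤ U := by
        rw [hp]; exact habs _ _ (hu0 _) (hu0 _) (huB (by tauto)) (huB (by tauto))
      have g2 : ‖(q : ℂ)‖ ≤ U := by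
        rw [hq]; exact habs _ _ (hu0 _) (hu0 _) (huB (by tauto)) (huB (by tauto))
      have g3 := mul_le_mul g1 (hX a) (norm_nonneg _) hU0
      have g4 := mul_le_mul g2 (hX b) (norm_nonneg _) hU0
      linarith
    have key := tau_zero_bound hz htau hE
    have : al ^ (3 * n i) ≤ 2 ^ (14 + 6 * (Q + 4 + κ)) := by
      refine key.trans (le_of_eq ?_)
      rw [hUe, mul_pow, ← pow_mul, pow_add, mul_comm 6]
      ring
    have := le_of_al_pow this
    omega
end

/-! ### Differences of Tribonacci numbers divisible by a high power of `3`

For each shift `h` the exponents `m` with `3 ^ K ∣ T (m + h) - T m` are the solutions of a `3`-adic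
analytic equation in each class modulo `13`; they are found by Newton iteration, doubling the number
of known digits of `m` in each step.  All functions are written in continuation-passing style over
numerals, so that they can be evaluated efficiently. -/

/-- `frn n k` is `k n`; reducing it evaluates `n` to a numeral before `k` is entered. -/
def frn {α : Type} (n : ℕ) (k : ℕ → α) : α := Nat.rec (k 0) (fun m _ => k m) (Nat.add n 1)

lemma frn_eq {α : Type} (n : ℕ) (k : ℕ → α) : frn n k = k n := by cases n <;> rfl

/-- Conditional with lazily evaluated branches. -/
def tst (c : Bool) (a b : Bool) : Bool := Bool.rec b a c

lemma tst_iff (c a b : Bool) : tst c a b = true ↔ (c = true ∧ a = true) ∨ (c = false ∧ b = true) := by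
  cases c <;> simp [tst]

/-- Multiplication modulo `M` in the cubic ring. -/
def mulK (M a0 a1 a2 b0 b1 b2 : ℕ) (k : ℕ → ℕ → ℕ → Bool) : Bool :=
  frn (Nat.mul a2 b2) fun c4 =>
  frn (Nat.add (Nat.mul a1 b2) (Nat.mul a2 b1)) fun c3 =>
  frn (Nat.mod (Nat.add (Nat.add (Nat.mul a0 b0) c3) c4) M) fun r0 =>
  frn (Nat.add c3 (Nat.mul 2 c4)) fun c5 =>
  frn (Nat.mod (Nat.add (Nat.add (Nat.mul a0 b1) (Nat.mul a1 b0)) c5) M) fun r1 =>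
  frn (Nat.mod (Nat.add (Nat.add (Nat.mul a0 b2) (Nat.add (Nat.mul a1 b1) (Nat.mul a2 b0))) c5) M)
    fun r2 => k r0 r1 r2

/-- Accumulates `∑ (t choose i) zⁱ`; the list holds the next powers of `z`, and `c = t choose i`. -/
def powK (M t : ℕ) (l : List (ℕ × ℕ × ℕ)) : ℕ → ℕ → ℕ → ℕ → ℕ → (ℕ → ℕ → ℕ → Bool) → Bool :=
  List.rec
    (fun _ _ a0 a1 a2 k => frn (Nat.mod a0 M) fun a0 => frn (Nat.mod a1 M) fun a1 =>
      frn (Nat.mod a2 M) fun a2 => k a0 a1 a2)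
    (fun z _ ih i c a0 a1 a2 k =>
      frn (Nat.add i 1) fun i' =>
      frn (Nat.div (Nat.mul c (Nat.sub t i)) i') fun c' =>
      frn (Nat.add a0 (Nat.mul c' z.1)) fun a0 =>
      frn (Nat.add a1 (Nat.mul c' z.2.1)) fun a1 =>
      frn (Nat.add a2 (Nat.mul c' z.2.2)) fun a2 => ih i' c' a0 a1 a2 k) l

/-- Newton iteration for an inverse modulo `J`. -/
def invK (u J : ℕ) (fuel : ℕ) : ℕ → (ℕ → Bool) → Bool :=
  Nat.rec (fun i k => k i)
    (fun _ ih i k => frn (Nat.mod (Nat.mul u i) J) fun y =>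
      frn (Nat.mod (Nat.mul i (Nat.sub (Nat.add J 2) y)) J) fun i => ih i k) fuel

/-- The list of the powers `z ^ (i + 1), …, z ^ (i + fuel)`, given `a = z ^ i`. -/
def powsK (M z0 z1 z2 : ℕ) (fuel : ℕ) : ℕ → ℕ → ℕ → (List (ℕ × ℕ × ℕ) → Bool) → Bool :=
  Nat.rec (fun _ _ _ k => k [])
    (fun _ ih a0 a1 a2 k => mulK M a0 a1 a2 z0 z1 z2 fun a0 a1 a2 =>
      ih a0 a1 a2 fun l => k ((a0, a1, a2) :: l)) fuel

/-- Second half of a Newton step: solves `s + t u = 0` modulo `J` and moves on to `v Bᵗ`. -/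
def stepL (M J ni : ℕ) (l : List (ℕ × ℕ × ℕ)) (E : ℕ) (f : ℕ → ℕ → ℕ → ℕ → Bool)
    (v0 v1 v2 m0 s u : ℕ) : Bool :=
  invK u J ni (u % 3) fun i =>
  tst (Nat.beq (Nat.mod (Nat.mul u i) J) (Nat.mod 1 J))
    (frn (Nat.mod (Nat.sub J (Nat.mod (Nat.mul s i) J)) J) fun t =>
      powK M t l 0 1 1 0 0 fun b0 b1 b2 => mulK M v0 v1 v2 b0 b1 b2 fun v0 v1 v2 =>
      frn (Nat.add m0 (Nat.mul E t)) fun m0 => f v0 v1 v2 m0) false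

/-- A Newton step for `τ (v Bᵗ) = 0`, where `B = 1 + D w`: determines `t` modulo `J`. -/
def stepK (M D w0 w1 w2 J ni : ℕ) (l : List (ℕ × ℕ × ℕ)) (E : ℕ)
    (f : ℕ → ℕ → ℕ → ℕ → Bool) (v0 v1 v2 m0 : ℕ) : Bool :=
  frn (Nat.add v1 v2) fun tv =>
  tst (Nat.beq (Nat.mod tv D) 0)
    (frn (Nat.div tv D) fun s =>
      frn (Nat.mod (Nat.add (Nat.add (Nat.mul v0 (Nat.add w1 w2)) (Nat.mul v1 (Nat.add w0 w1)))
        (Nat.add (Nat.mul v2 w0) (Nat.add (Nat.mul 2 (Nat.add (Nat.mul v1 w2) (Nat.mul v2 w1)))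
          (Nat.mul 4 (Nat.mul v2 w2))))) (Nat.mul 3 J)) fun u =>
      tst (Nat.beq (Nat.mod u 3) 0)
        (tst (Nat.beq (Nat.mod s 3) 0)
          (frn (Nat.div u 3) fun u => frn (Nat.div s 3) fun s =>
            stepL M J ni l E f v0 v1 v2 m0 s u) true)
        (stepL M J ni l E f v0 v1 v2 m0 s u)) true

/-- Builds the search function from a schedule of steps `(J, L, ni)`; `B` is the current base, which
is `1` modulo `D`, and `E` the corresponding period. -/
def buildK (M N : ℕ) (sched : List (ℕ × ℕ × ℕ)) :
    ℕ → ℕ → ℕ → ℕ → ℕ → ((ℕ → ℕ → ℕ → ℕ → Bool) → Bool) → Bool :=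
  List.rec
    (fun _ E _ _ _ k => tst (Nat.ble N E)
      (k fun _ _ _ m0 => tst (Nat.ble N m0) true (Nat.ble m0 1)) false)
    (fun st _ ih D E b0 b1 b2 k =>
      frn st.1 fun J => frn (Nat.div (Nat.sub b0 1) D) fun w0 =>
      frn (Nat.div b1 D) fun w1 => frn (Nat.div b2 D) fun w2 =>
      tst (Nat.beq b0 (Nat.add 1 (Nat.mul D w0)) && Nat.beq b1 (Nat.mul D w1) &&
          Nat.beq b2 (Nat.mul D w2) && Nat.beq (Nat.mod M (Nat.mul D (Nat.mul 3 J))) 0 &&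
          Nat.beq (Nat.mod D (Nat.mul 3 J)) 0 && Nat.ble 1 J &&
          (Nat.ble J st.2.1 || Nat.beq (Nat.mod (Nat.pow D (Nat.add st.2.1 1)) M) 0))
        (powsK M (Nat.sub b0 1) b1 b2 st.2.1 1 0 0 fun l =>
          powK M J l 0 1 1 0 0 fun b0 b1 b2 =>
          frn (Nat.mul D J) fun D' => frn (Nat.mul E J) fun E' =>
          ih D' E' b0 b1 b2 fun f => k fun v0 v1 v2 m0 =>
            stepK M D w0 w1 w2 J st.2.2 l E f v0 v1 v2 m0) false) sched

/-- Runs the search over the residues `r, …, r + fuel - 1`; `v` is multiplied by `α` each time. -/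
def resK (f : ℕ → ℕ → ℕ → ℕ → Bool) (fuel : ℕ) : ℕ → ℕ → ℕ → ℕ → Bool :=
  Nat.rec (fun _ _ _ _ => true)
    (fun _ ih r v0 v1 v2 => tst (f v0 v1 v2 r)
      (frn (Nat.add r 1) fun r => frn (Nat.add v0 v2) fun a1 => frn (Nat.add v1 v2) fun a2 =>
        ih r v2 a1 a2) false) fuel

/-- Removes common factors `3`, at most `fuel` of them. -/
def conK (fuel : ℕ) : ℕ → ℕ → ℕ → (ℕ → ℕ → ℕ → Bool) → Bool :=
  Nat.rec (fun v0 v1 v2 k => k v0 v1 v2)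
    (fun _ ih v0 v1 v2 k => tst (Nat.beq (Nat.mod v0 3) 0 && Nat.beq (Nat.mod v1 3) 0 &&
        Nat.beq (Nat.mod v2 3) 0)
      (frn (Nat.div v0 3) fun v0 => frn (Nat.div v1 3) fun v1 => frn (Nat.div v2 3) fun v2 =>
        ih v0 v1 v2 k) (k v0 v1 v2)) fuel

/-- Runs the search for `fuel` consecutive values of `h`, where `g = α ^ h` modulo `M0`. -/
def hK (M0 M c : ℕ) (f : ℕ → ℕ → ℕ → ℕ → Bool) (fuel : ℕ) : ℕ → ℕ → ℕ → Bool :=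
  Nat.rec (fun _ _ _ => true)
    (fun _ ih g0 g1 g2 =>
      tst (frn (Nat.mod (Nat.add g0 (Nat.sub M0 1)) M0) fun v0 =>
          conK c v0 g1 g2 fun v0 v1 v2 => frn (Nat.mod v0 M) fun v0 => frn (Nat.mod v1 M) fun v1 =>
            frn (Nat.mod v2 M) fun v2 => resK f 13 0 v0 v1 v2)
        (frn (Nat.mod (Nat.add g0 g2) M0) fun a1 => frn (Nat.mod (Nat.add g1 g2) M0) fun a2 =>
          ih g2 a1 a2) false) fuel

/-- `α ^ fuel * g` modulo `M0`. -/
def advK (M0 : ℕ) (fuel : ℕ) : ℕ → ℕ → ℕ → (ℕ → ℕ → ℕ → Bool) → Bool :=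
  Nat.rec (fun g0 g1 g2 k => k g0 g1 g2)
    (fun _ ih g0 g1 g2 k => frn (Nat.mod (Nat.add g0 g2) M0) fun a1 =>
      frn (Nat.mod (Nat.add g1 g2) M0) fun a2 => ih g2 a1 a2 k) fuel

/-- Certifies that `3 ^ (K + c)` divides no `T (m + h) - T m` with `2 ≤ m < N` and
`h0 ≤ h < h0 + cnt`. The base is the multiple `1 + 9 w` of `α ^ 13`. -/
def divCert (K c N : ℕ) (sched : List (ℕ × ℕ × ℕ)) (h0 cnt : ℕ) : Bool :=
  frn (Nat.pow 3 K) fun M => frn (Nat.pow 3 (Nat.add K c)) fun M0 => frn N fun N =>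
  advK M 13 1 0 0 fun x0 x1 x2 =>
  invK x0 M 10 (Nat.mod x0 3) fun i =>
  frn (Nat.mod (Nat.mul i x0) M) fun b0 => frn (Nat.mod (Nat.mul i x1) M) fun b1 =>
  frn (Nat.mod (Nat.mul i x2) M) fun b2 =>
  buildK M N sched 9 13 b0 b1 b2 fun f =>
  advK M0 h0 1 0 0 fun g0 g1 g2 => hK M0 M c f cnt g0 g1 g2

/-! ### Correctness of the `3`-adic search -/

/-- The element of the cubic ring over `ℤ / M` with the given coordinates. -/
def vl (M a0 a1 a2 : ℕ) : Cub (ZMod M) := ⟨a0, a1, a2⟩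

/-- The functional `Cub.tau` over any ring. -/
def tz {S : Type} [CommRing S] (z : Cub S) : S := z.c1 + z.c2

section
variable {S : Type} [CommRing S]

lemma tz_add (a b : Cub S) : tz (a + b) = tz a + tz b := by simp only [tz, Cub.add_c1, Cub.add_c2]; ring

lemma tz_C_mul (s : S) (a : Cub S) : tz (Cub.C s * a) = s * tz a := by simp [tz]; ring

end

/-- Reduction modulo `M`. -/
def red (M : ℕ) : Cub ℤ →+* Cub (ZMod M) where
  toFun z := ⟨z.c0, z.c1, z.c2⟩
  map_zero' := by ext <;> simp
  map_one' := by ext <;> simp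
  map_add' a b := by ext <;> simp
  map_mul' a b := by ext <;> simp

lemma red_X (M : ℕ) : red M Cub.X = Cub.X := by ext <;> simp [red]

lemma red_C (M : ℕ) (a : ℤ) : red M (Cub.C a) = Cub.C (a : ZMod M) := by ext <;> simp [red]

lemma tz_red (M : ℕ) (z : Cub ℤ) : tz (red M z) = ((Cub.tau z : ℤ) : ZMod M) := by
  simp [tz, red, Cub.tau_apply]

lemma nat_ops : (∀ a b, Nat.add a b = a + b) ∧ (∀ a b, Nat.mul a b = a * b) ∧
    (∀ a b, Nat.sub a b = a - b) ∧ (∀ a b, Nat.mod a b = a % b) ∧ (∀ a b, Nat.div a b = a / b) ∧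
    ∀ a b, Nat.pow a b = a ^ b :=
  ⟨fun _ _ => rfl, fun _ _ => rfl, fun _ _ => rfl, fun _ _ => rfl, fun _ _ => rfl, fun _ _ => rfl⟩

lemma mulK_spec {M a0 a1 a2 b0 b1 b2 : ℕ} {k : ℕ → ℕ → ℕ → Bool}
    (h : mulK M a0 a1 a2 b0 b1 b2 k = true) :
    ∃ r0 r1 r2, vl M r0 r1 r2 = vl M a0 a1 a2 * vl M b0 b1 b2 ∧ k r0 r1 r2 = true := by
  obtain ⟨ha, hm, -, hmod, -⟩ := nat_ops
  simp only [mulK, frn_eq, ha, hm, hmod] at h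
  refine ⟨_, _, _, ?_, h⟩
  ext <;> simp [vl] <;> ring

/-- `l` lists the powers `z ^ (i + 1), z ^ (i + 2), …`. -/
def PL {M : ℕ} (z : Cub (ZMod M)) : List (ℕ × ℕ × ℕ) → ℕ → Prop
  | [], _ => True
  | a :: l, i => vl M a.1 a.2.1 a.2.2 = z ^ (i + 1) ∧ PL z l (i + 1)

lemma powK_aux {M t : ℕ} {z : Cub (ZMod M)} {k : ℕ → ℕ → ℕ → Bool} (l : List (ℕ × ℕ × ℕ)) :
    ∀ i a0 a1 a2 : ℕ, PL z l i → powK M t l i (t.choose i) a0 a1 a2 k = true →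
      vl M a0 a1 a2 = ∑ j ∈ Finset.range (i + 1), Cub.C ((t.choose j : ℕ) : ZMod M) * z ^ j →
      ∃ r0 r1 r2, vl M r0 r1 r2 =
        ∑ j ∈ Finset.range (i + l.length + 1), Cub.C ((t.choose j : ℕ) : ZMod M) * z ^ j ∧
        k r0 r1 r2 = true := by
  induction l with
  | nil =>
    intro i a0 a1 a2 _ h ha
    refine ⟨_, _, _, ?_, h⟩
    rw [List.length_nil, add_zero, ← ha]
    obtain ⟨-, -, -, hmod, -⟩ := nat_ops
    ext <;> simp [vl, hmod]
  | cons y l ih =>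
    intro i a0 a1 a2 hl h ha
    have hc : t.choose i * (t - i) / (i + 1) = t.choose (i + 1) := by
      rw [← Nat.choose_succ_right_eq, Nat.mul_div_cancel _ (Nat.succ_pos i)]
    have h' : powK M t l (i + 1) (t.choose i * (t - i) / (i + 1))
      (a0 + t.choose i * (t - i) / (i + 1) * y.1) (a1 + t.choose i * (t - i) / (i + 1) * y.2.1)
      (a2 + t.choose i * (t - i) / (i + 1) * y.2.2) k = true := h
    rw [hc] at h'
    obtain ⟨r0, r1, r2, hr, hk⟩ := ih _ _ _ _ hl.2 h' (by
      rw [Finset.sum_range_succ, ← ha, ← hl.1]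
      ext <;> simp [vl, -map_natCast])
    refine ⟨r0, r1, r2, ?_, hk⟩
    rw [hr, List.length_cons, show i + 1 + l.length + 1 = i + (l.length + 1) + 1 by ring]

lemma powK_spec {M t : ℕ} {z : Cub (ZMod M)} {k : ℕ → ℕ → ℕ → Bool} {l : List (ℕ × ℕ × ℕ)}
    (hl : PL z l 0) (ht : t ≤ l.length ∨ z ^ (l.length + 1) = 0)
    (h : powK M t l 0 1 1 0 0 k = true) :
    ∃ r0 r1 r2, vl M r0 r1 r2 = (1 + z) ^ t ∧ k r0 r1 r2 = true := by
  obtain ⟨r0, r1, r2, hr, hk⟩ := powK_aux l 0 1 0 0 hl (by rwa [Nat.choose_zero_right]) (by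
    rw [Finset.sum_range_one]; ext <;> simp [vl])
  refine ⟨r0, r1, r2, ?_, hk⟩
  rw [hr, add_comm 1 z, add_pow]
  have e : ∑ m ∈ Finset.range (t + 1), z ^ m * 1 ^ (t - m) * ((t.choose m : ℕ) : Cub (ZMod M)) =
      ∑ j ∈ Finset.range (t + 1), Cub.C ((t.choose j : ℕ) : ZMod M) * z ^ j :=
    Finset.sum_congr rfl fun j _ => by rw [map_natCast, one_pow]; ring
  rw [e, zero_add]
  rcases le_or_gt t l.length with hle | hlt
  · refine (Finset.sum_subset (fun j hj => ?_) fun j _ hj => ?_).symm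
    · rw [Finset.mem_range] at *; omega
    · rw [Finset.mem_range] at hj
      rw [Nat.choose_eq_zero_of_lt (by omega), Nat.cast_zero, map_zero, zero_mul]
  · have hz := ht.resolve_left (by omega)
    refine Finset.sum_subset (fun j hj => ?_) fun j _ hj => ?_
    · rw [Finset.mem_range] at *; omega
    · rw [Finset.mem_range] at hj
      rw [pow_eq_zero_of_le (by omega) hz, mul_zero]

lemma powsK_spec {M z0 z1 z2 : ℕ} (fuel : ℕ) : ∀ (i a0 a1 a2 : ℕ) (k : List (ℕ × ℕ × ℕ) → Bool),
    vl M a0 a1 a2 = vl M z0 z1 z2 ^ i → powsK M z0 z1 z2 fuel a0 a1 a2 k = true →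
    ∃ l, l.length = fuel ∧ PL (vl M z0 z1 z2) l i ∧ k l = true := by
  induction fuel with
  | zero => exact fun i a0 a1 a2 k _ h => ⟨[], rfl, trivial, h⟩
  | succ m ih =>
    intro i a0 a1 a2 k ha h
    have h' : mulK M a0 a1 a2 z0 z1 z2 (fun a0 a1 a2 =>
      powsK M z0 z1 z2 m a0 a1 a2 fun l => k ((a0, a1, a2) :: l)) = true := h
    obtain ⟨r0, r1, r2, hr, h2⟩ := mulK_spec h'
    rw [ha, ← pow_succ] at hr
    obtain ⟨l, hl, hp, hk⟩ := ih (i + 1) r0 r1 r2 _ hr h2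
    exact ⟨(r0, r1, r2) :: l, by rw [List.length_cons, hl], ⟨hr, hp⟩, hk⟩

lemma invK_spec {u J : ℕ} (fuel : ℕ) : ∀ (i : ℕ) (k : ℕ → Bool), invK u J fuel i k = true →
    ∃ i, k i = true := by
  induction fuel with
  | zero => exact fun i k h => ⟨i, h⟩
  | succ m ih => exact fun i k h => ih _ k h

/-- `f` is a sound test: if it accepts `v, m0`, then no exponent `m0 + E t` with
`τ (v Bᵗ) = 0` lies in the interval `[2, N)`. -/
def Sound {M : ℕ} (N : ℕ) (B : Cub (ZMod M)) (E : ℕ) (f : ℕ → ℕ → ℕ → ℕ → Bool) : Prop :=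
  ∀ v0 v1 v2 m0, f v0 v1 v2 m0 = true → ∀ t, tz (vl M v0 v1 v2 * B ^ t) = 0 →
    ¬ (2 ≤ m0 + E * t ∧ m0 + E * t < N)

lemma stepL_spec {M N J ni E v0 v1 v2 m0 s u t' : ℕ} {l : List (ℕ × ℕ × ℕ)}
    {f : ℕ → ℕ → ℕ → ℕ → Bool} {z : Cub (ZMod M)} (hJ : 1 ≤ J) (hl : PL z l 0)
    (hL : J ≤ l.length ∨ z ^ (l.length + 1) = 0) (hf : Sound N ((1 + z) ^ J) (E * J) f)
    (h : stepL M J ni l E f v0 v1 v2 m0 s u = true) (hd : (J : ℤ) ∣ s + t' * u)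
    (h0 : tz (vl M v0 v1 v2 * (1 + z) ^ t') = 0) : ¬ (2 ≤ m0 + E * t' ∧ m0 + E * t' < N) := by
  obtain ⟨ha, hm, hs, hmod, -⟩ := nat_ops
  obtain ⟨i, h⟩ := invK_spec ni _ _ h
  simp only [frn_eq, ha, hm, hs, hmod, tst_iff, Nat.beq_eq, Bool.false_eq_true, and_false, or_false]
    at h
  obtain ⟨hi, h⟩ := h
  obtain ⟨t, ht⟩ : ∃ t, t = (J - s * i % J) % J := ⟨_, rfl⟩
  rw [← ht] at h
  have htJ : t < J := ht ▸ Nat.mod_lt _ hJ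
  have key : (J : ℤ) ∣ (t' : ℤ) - t := by
    have e1 : (J : ℤ) ∣ u * i - 1 := by
      have := (Nat.modEq_iff_dvd.1 (show 1 ≡ u * i [MOD J] from hi.symm)); push_cast at this; exact this
    have e2 : (J : ℤ) ∣ (t : ℤ) + s * i := by
      have : J ∣ t + s * i := by
        rw [Nat.dvd_iff_mod_eq_zero, ht, Nat.mod_add_mod, ← Nat.add_mod_mod,
          Nat.sub_add_cancel (Nat.mod_lt _ hJ).le, Nat.mod_self]
      exact_mod_cast this
    have e3 : (t' : ℤ) - t = (s + t' * u) * i - t' * (u * i - 1) - (t + s * i) := by ring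
    rw [e3]
    exact ((hd.mul_right _).sub (e1.mul_left _)).sub e2
  have hmod' : t' % J = t := by
    have := (Nat.modEq_iff_dvd.2 key)
    rw [← Nat.mod_eq_of_lt htJ]; exact this.symm
  obtain ⟨q, hq⟩ : ∃ q, t' = t + J * q := ⟨t' / J, by rw [← hmod', Nat.mod_add_div]⟩
  obtain ⟨b0, b1, b2, hb, h⟩ := powK_spec hl (hL.imp_left fun hh => htJ.le.trans hh) h
  obtain ⟨w0, w1, w2, hw, h⟩ := mulK_spec h
  have := hf _ _ _ _ h q (by
    rw [hw, hb, mul_assoc, ← pow_mul, ← pow_add, ← hq]; exact h0)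
  rw [hq]
  convert this using 3 <;> ring

lemma one_add_pow_expand {R : Type} [CommRing R] (a : R) (t : ℕ) :
    ∃ q, (1 + a) ^ t = 1 + t * a + a ^ 2 * q := by
  induction t with
  | zero => exact ⟨0, by simp⟩
  | succ t ih =>
    obtain ⟨q, hq⟩ := ih
    exact ⟨t + q + a * q, by rw [pow_succ, hq]; push_cast; ring⟩

lemma stepK_dvd {M D w0 w1 w2 J v0 v1 v2 t : ℕ} (hd : D * (3 * J) ∣ M)
    (h0 : tz (vl M v0 v1 v2 * (1 + Cub.C (D : ZMod M) * vl M w0 w1 w2) ^ t) = 0) :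
    ∃ Q : ℤ, ((D * (3 * J) : ℕ) : ℤ) ∣ ((v1 + v2 : ℕ) : ℤ) + t * D *
      ((v0 * (w1 + w2) + v1 * (w0 + w1) + (v2 * w0 + (2 * (v1 * w2 + v2 * w1) + 4 * (v2 * w2))) : ℕ)
        : ℤ) + D * (D * Q) := by
  obtain ⟨q, hq⟩ := one_add_pow_expand (Cub.C (D : ZMod M) * vl M w0 w1 w2) t
  obtain ⟨Q, hQ⟩ := ZMod.intCast_surjective (tz (vl M v0 v1 v2 * (vl M w0 w1 w2 ^ 2 * q)))
  refine ⟨Q, (Int.natCast_dvd_natCast.2 hd).trans ?_⟩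
  rw [← ZMod.intCast_zmod_eq_zero_iff_dvd]
  push_cast
  rw [hQ, ← h0, hq]
  have e : vl M v0 v1 v2 * (1 + (t : Cub (ZMod M)) * (Cub.C (D : ZMod M) * vl M w0 w1 w2) +
      (Cub.C (D : ZMod M) * vl M w0 w1 w2) ^ 2 * q) = vl M v0 v1 v2 +
      Cub.C ((t : ZMod M) * D) * (vl M v0 v1 v2 * vl M w0 w1 w2) +
      Cub.C ((D : ZMod M) * D) * (vl M v0 v1 v2 * (vl M w0 w1 w2 ^ 2 * q)) := by
    rw [map_mul, map_mul, map_natCast Cub.C t]; ring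
  rw [e, tz_add, tz_add, tz_C_mul, tz_C_mul]
  simp only [tz, vl, Cub.mul_c1, Cub.mul_c2]
  ring

lemma stepK_spec {M N D w0 w1 w2 J ni E : ℕ} {l : List (ℕ × ℕ × ℕ)}
    {f : ℕ → ℕ → ℕ → ℕ → Bool} {z : Cub (ZMod M)} (hM : M ≠ 0) (hd : D * (3 * J) ∣ M)
    (hD : 3 * J ∣ D) (hz : z = Cub.C (D : ZMod M) * vl M w0 w1 w2) (hJ : 1 ≤ J) (hl : PL z l 0)
    (hL : J ≤ l.length ∨ z ^ (l.length + 1) = 0) (hf : Sound N ((1 + z) ^ J) (E * J) f) :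
    Sound N (1 + z) E fun v0 v1 v2 m0 => stepK M D w0 w1 w2 J ni l E f v0 v1 v2 m0 := by
  intro v0 v1 v2 m0 h t h0
  have hD0 : 0 < D := Nat.pos_of_ne_zero fun hh => hM (by rw [hh, zero_mul, zero_dvd_iff] at hd; exact hd)
  have h0' := h0
  rw [hz] at h0'
  obtain ⟨Q, hQ⟩ := stepK_dvd hd h0'
  obtain ⟨ha, hm, -, hmod, hdiv, -⟩ := nat_ops
  simp only [stepK, frn_eq, ha, hm, hmod, hdiv] at h
  obtain ⟨U, hU⟩ : ∃ U, U =
    v0 * (w1 + w2) + v1 * (w0 + w1) + (v2 * w0 + (2 * (v1 * w2 + v2 * w1) + 4 * (v2 * w2))) := ⟨_, rfl⟩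
  rw [← hU] at h hQ
  obtain ⟨V, hV⟩ : ∃ V, V = v1 + v2 := ⟨_, rfl⟩
  rw [← hV] at h hQ
  have hDV : D ∣ V := by
    have h1 : (D : ℤ) ∣ _ := (Dvd.intro _ (by push_cast; rfl) : (D : ℤ) ∣ ((D * (3 * J) : ℕ) : ℤ)).trans hQ
    have h2 : (D : ℤ) ∣ V := by
      have e : (V : ℤ) = (V + t * D * U + D * (D * Q)) - D * (t * U + D * Q) := by ring
      rw [e]; exact h1.sub (dvd_mul_right _ _)
    exact_mod_cast h2
  obtain ⟨s, hs'⟩ := hDV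
  have hVs : V / D = s := by rw [hs', Nat.mul_div_cancel_left _ hD0]
  have hVm : V % D = 0 := by rw [hs', Nat.mul_mod_right]
  rw [hVs, hVm] at h
  have h3 : ((3 * J : ℕ) : ℤ) ∣ s + t * U := by
    have h1 : (D : ℤ) * ((3 * J : ℕ) : ℤ) ∣ D * (s + t * U + D * Q) := by
      have e : (D : ℤ) * (s + t * U + D * Q) = V + t * D * U + D * (D * Q) := by rw [hs']; push_cast; ring
      rw [e]; exact_mod_cast hQ
    have h2 := Int.dvd_of_mul_dvd_mul_left (by exact_mod_cast hD0.ne') h1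
    have h4 : ((3 * J : ℕ) : ℤ) ∣ D := by exact_mod_cast hD
    exact (dvd_add_left (h4.mul_right Q)).1 h2
  obtain ⟨u, hu⟩ : ∃ u, u = U % (3 * J) := ⟨_, rfl⟩
  rw [← hu] at h
  have h4 : ((3 * J : ℕ) : ℤ) ∣ s + t * u := by
    have e : ((3 * J : ℕ) : ℤ) ∣ (U : ℤ) - u := by
      refine Nat.modEq_iff_dvd.1 ?_
      rw [hu]; exact Nat.mod_modEq _ _
    have e2 : (s : ℤ) + t * u = (s + t * U) - t * (U - u) := by ring
    rw [e2]; exact h3.sub (e.mul_left _)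
  have hJ3 : ((3 * J : ℕ) : ℤ) = 3 * J := by push_cast; rfl
  rw [hJ3] at h4
  rw [tst_iff] at h
  rcases h with ⟨-, h⟩ | ⟨h, -⟩
  swap
  · exact absurd h (by decide)
  rw [tst_iff, Nat.beq_eq] at h
  rcases h with ⟨h5, h⟩ | ⟨-, h⟩
  · have hs3 : s % 3 = 0 := by
      have h6 : (3 : ℤ) ∣ s + t * u := (dvd_mul_right _ _).trans h4
      have h7 : 3 ∣ s + t * u := by exact_mod_cast h6
      have h8 : 3 ∣ t * u := (Nat.dvd_of_mod_eq_zero h5).mul_left t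
      exact Nat.mod_eq_zero_of_dvd ((Nat.dvd_add_left h8).1 h7)
    rw [hs3, tst_iff] at h
    rcases h with ⟨-, h⟩ | ⟨h, -⟩
    swap
    · exact absurd h (by decide)
    refine stepL_spec hJ hl hL hf h ?_ h0
    obtain ⟨s', rfl⟩ := Nat.dvd_of_mod_eq_zero hs3
    obtain ⟨u', hu'⟩ := Nat.dvd_of_mod_eq_zero h5
    rw [hu'] at h4 ⊢
    rw [Nat.mul_div_cancel_left _ (by norm_num), Nat.mul_div_cancel_left _ (by norm_num)]
    refine Int.dvd_of_mul_dvd_mul_left (a := 3) (by norm_num) (h4.trans (dvd_of_eq ?_))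
    push_cast; ring
  · exact stepL_spec hJ hl hL hf h ((dvd_mul_left _ _).trans h4) h0

lemma buildK_spec {M N : ℕ} (hM : M ≠ 0) (sched : List (ℕ × ℕ × ℕ)) :
    ∀ (D E b0 b1 b2 : ℕ) (k : (ℕ → ℕ → ℕ → ℕ → Bool) → Bool),
      buildK M N sched D E b0 b1 b2 k = true → ∃ f, Sound N (vl M b0 b1 b2) E f ∧ k f = true := by
  induction sched with
  | nil =>
    intro D E b0 b1 b2 k h
    have h' : tst (Nat.ble N E)
      (k fun _ _ _ m0 => tst (Nat.ble N m0) true (Nat.ble m0 1)) false = true := h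
    rw [tst_iff, Nat.ble_eq] at h'
    simp only [Bool.false_eq_true, and_false, or_false] at h'
    refine ⟨_, ?_, h'.2⟩
    intro v0 v1 v2 m0 hf t _ hh
    simp only [tst_iff, Nat.ble_eq, and_true] at hf
    rcases Nat.eq_zero_or_pos t with rfl | ht
    · omega
    · have : E * 1 ≤ E * t := Nat.mul_le_mul_left E ht
      omega
  | cons st sched ih =>
    intro D E b0 b1 b2 k h
    obtain ⟨J, L, ni⟩ := st
    obtain ⟨w0, hw0⟩ : ∃ w, w = (b0 - 1) / D := ⟨_, rfl⟩
    obtain ⟨w1, hw1⟩ : ∃ w, w = b1 / D := ⟨_, rfl⟩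
    obtain ⟨w2, hw2⟩ : ∃ w, w = b2 / D := ⟨_, rfl⟩
    have h' : tst (Nat.beq b0 (1 + D * ((b0 - 1) / D)) && Nat.beq b1 (D * (b1 / D)) &&
          Nat.beq b2 (D * (b2 / D)) && Nat.beq (M % (D * (3 * J))) 0 &&
          Nat.beq (D % (3 * J)) 0 && Nat.ble 1 J &&
          (Nat.ble J L || Nat.beq (D ^ (L + 1) % M) 0))
        (powsK M (b0 - 1) b1 b2 L 1 0 0 fun l =>
          powK M J l 0 1 1 0 0 fun b0' b1' b2' =>
          buildK M N sched (D * J) (E * J) b0' b1' b2' fun f => k fun v0 v1 v2 m0 =>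
            stepK M D ((b0 - 1) / D) (b1 / D) (b2 / D) J ni l E f v0 v1 v2 m0) false = true := h
    rw [← hw0, ← hw1, ← hw2, tst_iff] at h'
    simp only [Bool.false_eq_true, and_false, or_false, Bool.and_eq_true, Bool.or_eq_true,
      Nat.beq_eq, Nat.ble_eq] at h'
    obtain ⟨⟨⟨⟨⟨⟨⟨e0, e1⟩, e2⟩, e3⟩, e4⟩, e5⟩, e6⟩, h'⟩ := h'
    obtain ⟨l, hlen, hl, h'⟩ := powsK_spec L 0 1 0 0 _ (by ext <;> simp [vl]) h'
    have hz : vl M (b0 - 1) b1 b2 = Cub.C (D : ZMod M) * vl M w0 w1 w2 := by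
      have e0' : b0 - 1 = D * w0 := by omega
      rw [e0', e1, e2]
      ext <;> simp [vl, -map_natCast]
    have hL : J ≤ l.length ∨ vl M (b0 - 1) b1 b2 ^ (l.length + 1) = 0 := by
      rw [hlen]
      refine e6.imp_right fun h6 => ?_
      have h7 : ((D ^ (L + 1) : ℕ) : ZMod M) = 0 :=
        (ZMod.natCast_eq_zero_iff _ _).2 (Nat.dvd_of_mod_eq_zero h6)
      rw [hz, mul_pow, ← map_pow, ← Nat.cast_pow, h7, map_zero, zero_mul]
    obtain ⟨c0, c1, c2, hc, h'⟩ := powK_spec hl hL h'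
    obtain ⟨f, hf, h'⟩ := ih _ _ _ _ _ _ h'
    refine ⟨_, ?_, h'⟩
    have hB : vl M b0 b1 b2 = 1 + vl M (b0 - 1) b1 b2 := by
      obtain ⟨a, rfl⟩ : ∃ a, b0 = 1 + a := ⟨D * w0, e0⟩
      rw [Nat.add_sub_cancel_left]
      ext <;> simp [vl]
    rw [hB]
    rw [hc] at hf
    exact stepK_spec hM (Nat.dvd_of_mod_eq_zero e3) (Nat.dvd_of_mod_eq_zero e4) hz e5 hl hL hf

lemma resK_spec {M : ℕ} {f : ℕ → ℕ → ℕ → ℕ → Bool} (fuel : ℕ) : ∀ r v0 v1 v2 : ℕ,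
    resK f fuel r v0 v1 v2 = true → ∀ j < fuel, ∃ a0 a1 a2,
      vl M a0 a1 a2 = Cub.X ^ j * vl M v0 v1 v2 ∧ f a0 a1 a2 (r + j) = true := by
  induction fuel with
  | zero => intro r v0 v1 v2 _ j hj; omega
  | succ n ih =>
    intro r v0 v1 v2 h j hj
    have h' : tst (f v0 v1 v2 r) (resK f n (r + 1) v2 (v0 + v2) (v1 + v2)) false = true := h
    simp only [tst_iff, Bool.false_eq_true, and_false, or_false] at h'
    cases j with
    | zero => exact ⟨v0, v1, v2, by rw [pow_zero, one_mul], h'.1⟩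
    | succ j =>
      obtain ⟨a0, a1, a2, h1, h2⟩ := ih _ _ _ _ h'.2 j (by omega)
      refine ⟨a0, a1, a2, ?_, by rwa [show r + (j + 1) = r + 1 + j by ring]⟩
      rw [h1, pow_succ, mul_assoc]
      congr 1
      ext <;> simp [vl]

lemma conK_spec (fuel : ℕ) : ∀ (v0 v1 v2 : ℕ) (k : ℕ → ℕ → ℕ → Bool), conK fuel v0 v1 v2 k = true →
    ∃ e a0 a1 a2, e ≤ fuel ∧ v0 = 3 ^ e * a0 ∧ v1 = 3 ^ e * a1 ∧ v2 = 3 ^ e * a2 ∧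
      k a0 a1 a2 = true := by
  induction fuel with
  | zero => exact fun v0 v1 v2 k h => ⟨0, v0, v1, v2, le_rfl, by simp, by simp, by simp, h⟩
  | succ n ih =>
    intro v0 v1 v2 k h
    have h' : tst (Nat.beq (v0 % 3) 0 && Nat.beq (v1 % 3) 0 && Nat.beq (v2 % 3) 0)
      (conK n (v0 / 3) (v1 / 3) (v2 / 3) k) (k v0 v1 v2) = true := h
    rw [tst_iff] at h'
    simp only [Bool.and_eq_true, Nat.beq_eq] at h'
    rcases h' with ⟨⟨⟨h0, h1⟩, h2⟩, h'⟩ | ⟨-, h'⟩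
    · obtain ⟨e, a0, a1, a2, he, i0, i1, i2, hk⟩ := ih _ _ _ _ h'
      refine ⟨e + 1, a0, a1, a2, by omega, ?_, ?_, ?_, hk⟩ <;> rw [pow_succ'] <;> rw [mul_assoc]
      · rw [← i0]; omega
      · rw [← i1]; omega
      · rw [← i2]; omega
    · exact ⟨0, v0, v1, v2, by omega, by simp, by simp, by simp, h'⟩

lemma advK_spec {M : ℕ} (fuel : ℕ) : ∀ (g0 g1 g2 : ℕ) (k : ℕ → ℕ → ℕ → Bool),
    advK M fuel g0 g1 g2 k = true → ∃ a0 a1 a2,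
      vl M a0 a1 a2 = Cub.X ^ fuel * vl M g0 g1 g2 ∧ k a0 a1 a2 = true := by
  induction fuel with
  | zero => exact fun g0 g1 g2 k h => ⟨g0, g1, g2, by rw [pow_zero, one_mul], h⟩
  | succ n ih =>
    intro g0 g1 g2 k h
    have h' : advK M n g2 ((g0 + g2) % M) ((g1 + g2) % M) k = true := h
    obtain ⟨a0, a1, a2, h1, h2⟩ := ih _ _ _ _ h'
    refine ⟨a0, a1, a2, ?_, h2⟩
    rw [h1, pow_succ, mul_assoc]
    congr 1
    ext <;> simp [vl]

lemma vl_mod (M a0 a1 a2 : ℕ) : vl M (a0 % M) (a1 % M) (a2 % M) = vl M a0 a1 a2 := by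
  ext <;> simp [vl]

/-- One shift `h`: the common factor `3 ^ e` of `α ^ h - 1` is divided out, which costs at most `c`
digits of precision. -/
lemma hK_one {K c N i h v0 v1 v2 : ℕ} {f : ℕ → ℕ → ℕ → ℕ → Bool}
    (hf : Sound N (Cub.C (i : ZMod (3 ^ K)) * Cub.X ^ 13) 13 f)
    (hv : vl (3 ^ (K + c)) v0 v1 v2 = Cub.X ^ h - 1)
    (hc : conK c v0 v1 v2 (fun v0 v1 v2 =>
      resK f 13 0 (v0 % 3 ^ K) (v1 % 3 ^ K) (v2 % 3 ^ K)) = true) {m : ℕ} (hm : 2 ≤ m) (hN : m < N) :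
    ¬ (3 : ℤ) ^ (K + c) ∣ T (m + h) - T m := by
  intro hdvd
  obtain ⟨e, a0, a1, a2, he, rfl, rfl, rfl, hr⟩ := conK_spec _ _ _ _ _ hc
  obtain ⟨P, hP⟩ : ∃ P : Cub ℤ, P = ⟨a0, a1, a2⟩ := ⟨_, rfl⟩
  have hred (M : ℕ) : red M P = vl M a0 a1 a2 := by rw [hP]; ext <;> simp [red, vl]
  have h1 : (3 : ℤ) ^ (K + c) ∣ 3 ^ e * Cub.tau (Cub.X ^ m * P) := by
    have e1 : Cub.tau (Cub.X ^ m * (Cub.X ^ h - 1)) = T (m + h) - T m := by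
      rw [mul_sub, mul_one, ← pow_add, map_sub, Cub.tau_X_pow, Cub.tau_X_pow]
    have e2 : (((3 ^ (K + c) : ℕ) : ℤ)) ∣ Cub.tau (Cub.X ^ m * (Cub.X ^ h - 1)) := by
      rw [e1]; exact_mod_cast hdvd
    rw [← ZMod.intCast_zmod_eq_zero_iff_dvd, ← tz_red, map_mul, map_sub, map_pow, map_pow, map_one,
      red_X, ← hv] at e2
    have e3 : vl (3 ^ (K + c)) (3 ^ e * a0) (3 ^ e * a1) (3 ^ e * a2) =
        red (3 ^ (K + c)) (Cub.C (3 ^ e) * P) := by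
      rw [map_mul, red_C, hred]; ext <;> simp [vl, -map_pow]
    rw [e3, ← red_X, ← map_pow, ← map_mul, tz_red, ZMod.intCast_zmod_eq_zero_iff_dvd] at e2
    rw [← Cub.tau_C_mul, mul_left_comm]
    exact_mod_cast e2
  have h2 : (3 : ℤ) ^ K ∣ Cub.tau (Cub.X ^ m * P) := by
    refine Int.dvd_of_mul_dvd_mul_left (a := 3 ^ e) (by positivity) (dvd_trans ?_ h1)
    rw [← pow_add]; exact pow_dvd_pow _ (by omega)
  have h3 : tz (Cub.X ^ m * vl (3 ^ K) a0 a1 a2) = 0 := by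
    rw [← hred, ← red_X, ← map_pow, ← map_mul, tz_red, ZMod.intCast_zmod_eq_zero_iff_dvd]
    exact_mod_cast h2
  obtain ⟨b0, b1, b2, hb, hfb⟩ := resK_spec (M := 3 ^ K) 13 _ _ _ _ hr (m % 13)
    (Nat.mod_lt _ (by norm_num))
  rw [vl_mod] at hb
  have h4 := hf _ _ _ _ hfb (m / 13) (by
    have e4 : vl (3 ^ K) b0 b1 b2 * (Cub.C (i : ZMod (3 ^ K)) * Cub.X ^ 13) ^ (m / 13) =
        Cub.C ((i : ZMod (3 ^ K)) ^ (m / 13)) * (Cub.X ^ m * vl (3 ^ K) a0 a1 a2) := by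
      have e5 : (Cub.X : Cub (ZMod (3 ^ K))) ^ m = Cub.X ^ (m % 13) * (Cub.X ^ 13) ^ (m / 13) := by
        rw [← pow_mul, ← pow_add, Nat.mod_add_div]
      rw [hb, e5, mul_pow, map_pow]; ring
    rw [e4, tz_C_mul, h3, mul_zero])
  rw [zero_add, Nat.mod_add_div] at h4
  exact h4 ⟨hm, hN⟩

lemma hK_spec {K c N i : ℕ} {f : ℕ → ℕ → ℕ → ℕ → Bool}
    (hf : Sound N (Cub.C (i : ZMod (3 ^ K)) * Cub.X ^ 13) 13 f) (fuel : ℕ) : ∀ h g0 g1 g2 : ℕ,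
    hK (3 ^ (K + c)) (3 ^ K) c f fuel g0 g1 g2 = true → vl (3 ^ (K + c)) g0 g1 g2 = Cub.X ^ h →
    ∀ j < fuel, ∀ m, 2 ≤ m → m < N → ¬ (3 : ℤ) ^ (K + c) ∣ T (m + (h + j)) - T m := by
  induction fuel with
  | zero => intro h g0 g1 g2 _ _ j hj; omega
  | succ n ih =>
    intro h g0 g1 g2 hh hg j hj m hm hN
    have h' : tst (conK c ((g0 + (3 ^ (K + c) - 1)) % 3 ^ (K + c)) g1 g2 fun v0 v1 v2 =>
        resK f 13 0 (v0 % 3 ^ K) (v1 % 3 ^ K) (v2 % 3 ^ K))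
      (hK (3 ^ (K + c)) (3 ^ K) c f n g2 ((g0 + g2) % 3 ^ (K + c)) ((g1 + g2) % 3 ^ (K + c)))
      false = true := hh
    simp only [tst_iff, Bool.false_eq_true, and_false, or_false] at h'
    cases j with
    | zero =>
      refine hK_one hf ?_ h'.1 hm hN
      rw [add_zero, ← hg]
      have e : ((3 ^ (K + c) - 1 : ℕ) : ZMod (3 ^ (K + c))) = -1 := by
        rw [Nat.cast_sub (Nat.one_le_pow _ _ (by norm_num)), ZMod.natCast_self, zero_sub, Nat.cast_one]
      ext
      · simp only [vl, ZMod.natCast_mod, Nat.cast_add, e, Cub.sub_c0, Cub.one_c0]; ring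
      · simp [vl]
      · simp [vl]
    | succ j =>
      rw [show h + (j + 1) = h + 1 + j by ring]
      refine ih (h + 1) _ _ _ h'.2 ?_ j (by omega) m hm hN
      rw [pow_succ', ← hg]
      ext <;> simp [vl]

lemma divCert_spec {K c N h0 cnt : ℕ} {sched : List (ℕ × ℕ × ℕ)}
    (h : divCert K c N sched h0 cnt = true) :
    ∀ j < cnt, ∀ m, 2 ≤ m → m < N → ¬ (3 : ℤ) ^ (K + c) ∣ T (m + (h0 + j)) - T m := by
  obtain ⟨ha, hm, -, hmod, -, hpow⟩ := nat_ops
  simp only [divCert, frn_eq, ha, hm, hmod, hpow] at h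
  obtain ⟨x0, x1, x2, hx, h⟩ := advK_spec (M := 3 ^ K) 13 _ _ _ _ h
  obtain ⟨i, h⟩ := invK_spec 10 _ _ h
  obtain ⟨f, hf, h⟩ := buildK_spec (by positivity) sched _ _ _ _ _ _ h
  obtain ⟨g0, g1, g2, hg, h⟩ := advK_spec (M := 3 ^ (K + c)) h0 _ _ _ _ h
  have one (M : ℕ) : vl M 1 0 0 = 1 := by ext <;> simp [vl]
  rw [one, mul_one] at hx hg
  refine hK_spec (i := i) ?_ cnt h0 g0 g1 g2 h hg
  have e : Cub.C (i : ZMod (3 ^ K)) * Cub.X ^ 13 =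
      vl (3 ^ K) (i * x0 % 3 ^ K) (i * x1 % 3 ^ K) (i * x2 % 3 ^ K) := by
    rw [vl_mod, ← hx]; ext <;> simp [vl, -map_natCast]
  rw [e]
  exact hf

/-- Steps `(J, L, ni)` of the search for `m < 2 ^ 666`: the step gains the factor `J` of the period,
uses `L` terms of the binomial series, and `ni` Newton steps for an inverse modulo `J`. -/
def schedBig : List (ℕ × ℕ × ℕ) :=
  [(3, 3, 0), (3 ^ 2, 9, 1), (3 ^ 2, 9, 1), (3 ^ 2, 9, 1), (3 ^ 2, 9, 1), (3 ^ 2, 9, 1),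
   (3 ^ 2, 9, 1), (3 ^ 14, 29, 4), (3 ^ 28, 15, 5), (3 ^ 56, 7, 6), (3 ^ 112, 3, 7),
   (3 ^ 207, 1, 8)]

set_option maxRecDepth 100000

lemma divCert_big0 : divCert 440 8 (2 ^ 666) schedBig 1 288 = true := by decide +kernel

lemma divCert_big1 : divCert 440 8 (2 ^ 666) schedBig 289 288 = true := by decide +kernel

lemma divCert_big2 : divCert 440 8 (2 ^ 666) schedBig 577 288 = true := by decide +kernel

lemma divCert_big3 : divCert 440 8 (2 ^ 666) schedBig 865 288 = true := by decide +kernel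

lemma divCert_big4 : divCert 440 8 (2 ^ 666) schedBig 1153 288 = true := by decide +kernel

lemma divCert_big5 : divCert 440 8 (2 ^ 666) schedBig 1441 288 = true := by decide +kernel

lemma divCert_big6 : divCert 440 8 (2 ^ 666) schedBig 1729 288 = true := by decide +kernel

lemma divCert_big7 : divCert 440 8 (2 ^ 666) schedBig 2017 288 = true := by decide +kernel

lemma not_dvd_big {m h : ℕ} (h1 : 1 ≤ h) (h2 : h ≤ 2304) (hm : 2 ≤ m) (hN : m < 2 ^ 666) :
    ¬ (3 : ℤ) ^ 448 ∣ T (m + h) - T m := by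
  have key (a : ℕ) (hc : divCert 440 8 (2 ^ 666) schedBig a 288 = true) (ha : a ≤ h)
      (hb : h < a + 288) : ¬ (3 : ℤ) ^ 448 ∣ T (m + h) - T m := by
    have := divCert_spec hc (h - a) (by omega) m hm hN
    rwa [Nat.add_sub_cancel' ha] at this
  rcases lt_or_ge h 289 with hh | hh
  · exact key _ divCert_big0 h1 hh
  have hk := hh
  rcases lt_or_ge h 577 with hh | hh
  · exact key _ divCert_big1 hk hh
  have hk := hh
  rcases lt_or_ge h 865 with hh | hh
  · exact key _ divCert_big2 hk hh
  have hk := hh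
  rcases lt_or_ge h 1153 with hh | hh
  · exact key _ divCert_big3 hk hh
  have hk := hh
  rcases lt_or_ge h 1441 with hh | hh
  · exact key _ divCert_big4 hk hh
  have hk := hh
  rcases lt_or_ge h 1729 with hh | hh
  · exact key _ divCert_big5 hk hh
  have hk := hh
  rcases lt_or_ge h 2017 with hh | hh
  · exact key _ divCert_big6 hk hh
  have hk := hh
  rcases lt_or_ge h 2305 with hh | hh
  · exact key _ divCert_big7 hk hh
  omega

theorem cert_13 : cert (2 ^ 13) 100 40 (alFloor / 2 ^ 6860) 16
    24727
    15601
    38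
    10288434800 = true := by
  decide +kernel

/-- The schedule of the search for `m < 2 ^ 13`. -/
def schedSmall : List (ℕ × ℕ × ℕ) :=
  [(3, 3, 0), (3 ^ 2, 9, 1), (3 ^ 2, 9, 1), (3 ^ 2, 9, 1), (3 ^ 2, 9, 1)]

lemma divCert_small : divCert 16 2 (2 ^ 13) schedSmall 1 65 = true := by decide +kernel

lemma not_dvd_small {m h : ℕ} (h1 : 1 ≤ h) (h2 : h ≤ 65) (hm : 2 ≤ m) (hN : m < 2 ^ 13) :
    ¬ (3 : ℤ) ^ 18 ∣ T (m + h) - T m := by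
  have := divCert_spec divCert_small (h - 1) (by omega) m hm hN
  rwa [Nat.add_sub_cancel' h1] at this

section
variable {d : ℤ} {n x y : Fin 5 → ℕ}

/-- A reduction step: if no difference of two Tribonacci numbers with close indices is divisible by
`3 ^ (K + 1)`, then at most one exponent `y i` with `i ≠ 0` exceeds `K`, and three small ones bound
the indices. -/
lemma Sol.level (s : Sol d n x y) {N Q2 Q4 K κ : ℕ} (hb : Bd n x y N) (h2 : LB2 N Q2)
    (h4 : LB4 N Q4) (hK : (3 : ℤ) ^ K ≤ 2 ^ κ)
    (hnd : ∀ m h, 1 ≤ h → 7 * h ≤ 8 * (Q2 + Q4 + 3) → 2 ≤ m → m < N →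
      ¬ (3 : ℤ) ^ (K + 1) ∣ T (m + h) - T m) :
    147 * n 4 ≤ 56 * (14 + 6 * (Q4 + 4 + κ)) + 168 * (Q2 + Q4 + 3) := by
  have hw := s.window hb h2 h4
  have le1 : ∀ {i : Fin 5}, 1 ≤ i → n 1 ≤ n i := fun hi => s.mono.monotone hi
  have le4 : ∀ i : Fin 5, n i ≤ n 4 := fun i => s.mono.monotone (Fin.le_last i)
  rcases pick_three_two (fun i => decide (K < y i)) with ⟨i, j, hi, hij, pi, pj⟩ |
    ⟨i, j, l, hi, hij, hjl, pi, pj, pl⟩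
  · exfalso
    have pi' : K < y i := of_decide_eq_true pi
    have pj' : K < y j := of_decide_eq_true pj
    have hlt := s.mono hij
    have hi2 : 2 ≤ n i := s.two_le (by rintro rfl; exact absurd hi (by decide))
    have hdvd : ∀ t : Fin 5, K < y t → (3 : ℤ) ^ (K + 1) ∣ T (n t) + d := fun t ht => by
      rw [s.eq t]; exact (pow_dvd_pow 3 ht).mul_left _
    have h1 := le1 hi
    have h4' := le4 j
    refine hnd (n i) (n j - n i) (by omega) (by omega) hi2 (hlt.trans_le (hb j).1) ?_
    rw [Nat.add_sub_cancel' hlt.le]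
    have := (hdvd j pj').sub (hdvd i pi')
    rwa [add_sub_add_right_eq_sub] at this
  · have hp := s.psi_stage hb h4 hK hij hjl (not_lt.1 (of_decide_eq_false pi))
      (not_lt.1 (of_decide_eq_false pj)) (not_lt.1 (of_decide_eq_false pl))
    have h1 := le1 hi
    omega

set_option exponentiation.threshold 1000 in
lemma Sol.bd_13 (s : Sol d n x y) : Bd n x y (2 ^ 13) := by
  obtain ⟨h2, h4⟩ := cert_spec cert_666
  have := s.level (K := 447) (κ := 709) s.bd_666 h2 h4 (by norm_num)
    fun m h h1 hh hm hN => not_dvd_big h1 (by omega) hm hN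
  have hx := s.xy_le s.bd_666 h2
  intro i
  have := hx i
  norm_num
  omega

lemma Sol.bd_final (s : Sol d n x y) : n 4 ≤ 228 ∧ Bd n x y 245 := by
  obtain ⟨h2, h4⟩ := cert_spec cert_13
  have := s.level (K := 17) (κ := 27) s.bd_13 h2 h4 (by norm_num)
    fun m h h1 hh hm hN => not_dvd_small h1 (by omega) hm hN
  have hx := s.xy_le s.bd_13 h2
  refine ⟨by omega, fun i => ?_⟩
  have := hx i
  omega
end

/-! ### The finite search -/

/-- The Tribonacci numbers as natural numbers. -/
def TN (n : ℕ) : ℕ := (T n).toNat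

lemma TN_cast (n : ℕ) : (TN n : ℤ) = T n := Int.toNat_of_nonneg (T_nonneg n)

lemma TN_rec (n : ℕ) : TN n + TN (n + 1) + TN (n + 2) = TN (n + 3) := by
  have : (TN (n + 3) : ℤ) = TN n + TN (n + 1) + TN (n + 2) := by
    simp only [TN_cast]; rw [T]; ring
  exact_mod_cast this.symm

lemma natBeq_false (a b : ℕ) : Nat.beq a b = false ↔ a ≠ b := by
  rw [Ne, ← Nat.beq_eq, Bool.not_eq_true]

/-- Checks that `b - a` is divisible neither by `2 ^ 16` nor by `3 ^ 11`, for `fuel` consecutive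
Tribonacci numbers `b`. -/
def pairIn (a fuel : ℕ) : ℕ → ℕ → ℕ → Bool :=
  Nat.rec (fun _ _ _ => true)
    (fun _ ih b c e => frn (Nat.sub b a) fun u =>
      tst (Nat.beq (Nat.mod u 65536) 0 || Nat.beq (Nat.mod u 177147) 0) false
        (frn (Nat.add (Nat.add b c) e) fun g => ih c e g)) fuel

lemma pairIn_spec {a : ℕ} (fuel : ℕ) : ∀ k, pairIn a fuel (TN k) (TN (k + 1)) (TN (k + 2)) = true →
    ∀ j < fuel, (TN (k + j) - a) % 2 ^ 16 ≠ 0 ∧ (TN (k + j) - a) % 3 ^ 11 ≠ 0 := by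
  induction fuel with
  | zero => intro k _ j hj; omega
  | succ n ih =>
    intro k h j hj
    have h' : tst (Nat.beq ((TN k - a) % 65536) 0 || Nat.beq ((TN k - a) % 177147) 0) false
      (pairIn a n (TN (k + 1)) (TN (k + 2)) (TN k + TN (k + 1) + TN (k + 2))) = true := h
    rw [TN_rec, tst_iff] at h'
    simp only [Bool.false_eq_true, and_false, false_or, Bool.or_eq_false_iff, natBeq_false]
      at h'
    cases j with
    | zero => exact h'.1
    | succ j =>
      rw [show k + (j + 1) = k + 1 + j by ring]
      exact ih (k + 1) h'.2 j (by omega)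

/-- Runs `pairIn` for all pairs of `fuel` consecutive Tribonacci numbers. -/
def pairOut (fuel : ℕ) : ℕ → ℕ → ℕ → Bool :=
  Nat.rec (fun _ _ _ => true)
    (fun m ih a b c => frn (Nat.add (Nat.add a b) c) fun e =>
      tst (pairIn a m b c e) (ih b c e) false) fuel

lemma pairOut_spec (fuel : ℕ) : ∀ k, pairOut fuel (TN k) (TN (k + 1)) (TN (k + 2)) = true →
    ∀ i j, k ≤ i → i < j → j < k + fuel →
      (TN j - TN i) % 2 ^ 16 ≠ 0 ∧ (TN j - TN i) % 3 ^ 11 ≠ 0 := by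
  induction fuel with
  | zero => intro k _ i j _ _ _; omega
  | succ n ih =>
    intro k h i j hi hij hj
    have h' : tst (pairIn (TN k) n (TN (k + 1)) (TN (k + 2)) (TN k + TN (k + 1) + TN (k + 2)))
      (pairOut n (TN (k + 1)) (TN (k + 2)) (TN k + TN (k + 1) + TN (k + 2))) false = true := h
    rw [TN_rec, tst_iff] at h'
    simp only [Bool.false_eq_true, and_false, or_false] at h'
    rcases hi.eq_or_lt with rfl | hi
    · have := pairIn_spec n (k + 1) h'.1 (j - (k + 1)) (by omega)
      rwa [Nat.add_sub_cancel' (by omega : k + 1 ≤ j)] at this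
    · exact ih (k + 1) h'.2 i j hi hij (by omega)

set_option maxRecDepth 100000

lemma pair_cert : (pairIn 0 230 1 2 4 && pairOut 230 1 2 4) = true := by decide +kernel

lemma TN_small : TN 2 = 1 ∧ TN 3 = 2 ∧ TN 4 = 4 := ⟨rfl, rfl, rfl⟩

lemma pair_bound {i j : ℕ} (hi : i ≠ 1) (hij : i < j) (hj : j ≤ 228) (hj1 : j ≠ 1) :
    ¬ (2 : ℤ) ^ 16 ∣ T j - T i ∧ ¬ (3 : ℤ) ^ 11 ∣ T j - T i := by
  have hc := pair_cert
  rw [Bool.and_eq_true] at hc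
  have key : (TN j - TN i) % 2 ^ 16 ≠ 0 ∧ (TN j - TN i) % 3 ^ 11 ≠ 0 := by
    obtain ⟨t2, t3, t4⟩ := TN_small
    rcases Nat.eq_zero_or_pos i with rfl | hi0
    · have h1 := hc.1
      rw [← t2, ← t3, ← t4] at h1
      have := pairIn_spec 230 2 h1 (j - 2) (by omega)
      rwa [Nat.add_sub_cancel' (by omega : 2 ≤ j)] at this
    · have h1 := hc.2
      rw [← t2, ← t3, ← t4] at h1
      exact pairOut_spec 230 2 h1 i j (by omega) hij (by omega)
  have hle : TN i ≤ TN j := Int.toNat_le_toNat (T_lt hi hij).le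
  have e : T j - T i = ((TN j - TN i : ℕ) : ℤ) := by rw [Nat.cast_sub hle, TN_cast, TN_cast]
  rw [e]
  refine ⟨fun h => key.1 (Nat.mod_eq_zero_of_dvd ?_), fun h => key.2 (Nat.mod_eq_zero_of_dvd ?_)⟩
  · exact_mod_cast h
  · exact_mod_cast h

/-- Counts the Tribonacci numbers `a` among `fuel` consecutive ones for which `a + d` divides `G`,
starting from `acc`, and passes the result to `k`. -/
def cntK (G d fuel : ℕ) : ℕ → ℕ → ℕ → ℕ → (ℕ → Bool) → Bool :=
  Nat.rec (fun _ _ _ acc k => k acc)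
    (fun _ ih a b c acc k => frn (Nat.add (Nat.add a b) c) fun e =>
      tst (Nat.beq (Nat.mod G (Nat.add a d)) 0)
        (frn (Nat.add acc 1) fun acc => ih b c e acc k) (ih b c e acc k)) fuel

lemma cntK_spec {G d : ℕ} {k : ℕ → Bool} (fuel : ℕ) : ∀ m acc,
    cntK G d fuel (TN m) (TN (m + 1)) (TN (m + 2)) acc k =
      k (acc + Nat.count (fun j => G % (TN (m + j) + d) = 0) fuel) := by
  induction fuel with
  | zero => intro m acc; rfl
  | succ n ih =>
    intro m acc
    have h' : cntK G d (n + 1) (TN m) (TN (m + 1)) (TN (m + 2)) acc k =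
      tst (Nat.beq (G % (TN m + d)) 0)
        (cntK G d n (TN (m + 1)) (TN (m + 2)) (TN m + TN (m + 1) + TN (m + 2)) (acc + 1) k)
        (cntK G d n (TN (m + 1)) (TN (m + 2)) (TN m + TN (m + 1) + TN (m + 2)) acc k) := rfl
    rw [h', TN_rec, ih, ih, Nat.count_succ']
    have e : (fun j => G % (TN (m + (j + 1)) + d) = 0) = fun j => G % (TN (m + 1 + j) + d) = 0 := by
      funext j; rw [show m + (j + 1) = m + 1 + j by ring]
    by_cases hh : G % (TN m + d) = 0
    · rw [hh]
      simp only [add_zero, hh, if_true, e]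
      change k _ = k _
      congr 1; ring
    · have hb : Nat.beq (G % (TN m + d)) 0 = false := (natBeq_false _ _).2 hh
      rw [hb]
      simp only [add_zero, hh, if_false, e]
      rfl

/-- Passes to `k` the number of `n ≠ 1` below `F + 2` for which `T n + d` divides `G`. -/
def cntAll (G d F : ℕ) (k : ℕ → Bool) : Bool :=
  tst (Nat.beq (Nat.mod G d) 0) (cntK G d F 1 2 4 1 k) (cntK G d F 1 2 4 0 k)

lemma cntAll_spec {G d F : ℕ} {k : ℕ → Bool} (h : cntAll G d F k = true) :
    ∃ c, k c = true ∧ ∀ S : Finset ℕ, (∀ n ∈ S, n ≠ 1 ∧ n < F + 2 ∧ G % (TN n + d) = 0) →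
      S.card ≤ c := by
  obtain ⟨t2, t3, t4⟩ := TN_small
  have h2 (acc : ℕ) := cntK_spec (G := G) (d := d) (k := k) F 2 acc
  rw [t2, t3, t4] at h2
  have h' : tst (Nat.beq (G % d) 0) (cntK G d F 1 2 4 1 k) (cntK G d F 1 2 4 0 k) = true := h
  rw [tst_iff, h2, h2] at h'
  obtain ⟨R, hR⟩ : ∃ R : Finset ℕ, R =
    (Finset.range F).filter (fun j => G % (TN (2 + j) + d) = 0) := ⟨_, rfl⟩
  have hcount : Nat.count (fun j => G % (TN (2 + j) + d) = 0) F = R.card := by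
    rw [Nat.count_eq_card_filter_range, hR]
  rw [hcount] at h'
  have hsub : ∀ S : Finset ℕ, (∀ n ∈ S, n ≠ 1 ∧ n < F + 2 ∧ G % (TN n + d) = 0) →
      S ⊆ insert 0 (R.image fun j : ℕ => 2 + j) := by
    intro S hS n hn
    obtain ⟨a1, a2, a3⟩ := hS n hn
    rw [Finset.mem_insert]
    by_cases h0 : n = 0
    · exact Or.inl h0
    · refine Or.inr (Finset.mem_image.2 ⟨n - 2, ?_, by omega⟩)
      rw [hR, Finset.mem_filter, Finset.mem_range, show 2 + (n - 2) = n by omega]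
      exact ⟨by omega, a3⟩
  rcases h' with ⟨-, h'⟩ | ⟨h0, h'⟩
  · refine ⟨_, h', fun S hS => ?_⟩
    calc S.card ≤ (insert 0 (R.image fun j : ℕ => 2 + j)).card := Finset.card_le_card (hsub S hS)
      _ ≤ (R.image fun j : ℕ => 2 + j).card + 1 := Finset.card_insert_le _ _
      _ ≤ R.card + 1 := Nat.add_le_add_right Finset.card_image_le 1
      _ = _ := add_comm _ _
  · refine ⟨_, h', fun S hS => ?_⟩
    have hS0 : 0 ∉ S := fun h => by
      have := (hS 0 h).2.2
      rw [show TN 0 = 0 from rfl, zero_add] at this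
      exact ((natBeq_false _ _).1 h0) this
    calc S.card ≤ (R.image fun j : ℕ => 2 + j).card :=
          Finset.card_le_card ((Finset.subset_insert_iff_of_notMem hS0).1 (hsub S hS))
      _ ≤ R.card := Finset.card_image_le
      _ = _ := (zero_add _).symm

/-- The test on a candidate `d`: unless it is `2` or `8`, there are at most two `n` for which
`T n + d` divides `2 ^ 15 * 3 ^ 10`, or at most four for which it divides `6 ^ 245`. -/
def chkD (d : ℕ) : Bool :=
  cntAll 1934917632 d 36 fun c => tst (Nat.ble c 2) true
    (frn (Nat.pow 6 245) fun G => cntAll G d 227 fun c => Nat.ble c 4 || Nat.beq d 2 || Nat.beq d 8)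

/-- Runs the test for `d = s - a`, where `a < s` is one of `fuel` consecutive Tribonacci numbers. -/
def dK (s fuel : ℕ) : ℕ → ℕ → ℕ → Bool :=
  Nat.rec (fun _ _ _ => true)
    (fun _ ih a b c => tst (Nat.ble s a) true
      (tst (frn (Nat.sub s a) fun d => chkD d)
        (frn (Nat.add (Nat.add a b) c) fun e => ih b c e) false)) fuel

lemma dK_spec {s : ℕ} (fuel : ℕ) : ∀ k, 2 ≤ k → dK s fuel (TN k) (TN (k + 1)) (TN (k + 2)) = true →
    ∀ j < fuel, TN (k + j) < s → chkD (s - TN (k + j)) = true := by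
  induction fuel with
  | zero => intro k _ _ j hj; omega
  | succ n ih =>
    intro k hk h j hj hs
    have h' : tst (Nat.ble s (TN k)) true (tst (chkD (s - TN k))
      (dK s n (TN (k + 1)) (TN (k + 2)) (TN k + TN (k + 1) + TN (k + 2))) false) = true := h
    rw [TN_rec, tst_iff, Nat.ble_eq, tst_iff] at h'
    simp only [Bool.false_eq_true, and_false, or_false, and_true] at h'
    rcases h' with h1 | ⟨-, h1, h2⟩
    · have : TN k ≤ TN (k + j) := by
        rcases Nat.eq_zero_or_pos j with rfl | hj0
        · exact le_rfl
        · exact Int.toNat_le_toNat (T_lt (by omega) (by omega)).le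
      omega
    · cases j with
      | zero => exact h1
      | succ j =>
        rw [show k + (j + 1) = k + 1 + j by ring] at hs ⊢
        exact ih (k + 1) (by omega) h2 j (by omega) hs

/-- Runs the test for all `d = s - T n`. -/
def dAll (s : ℕ) : Bool := frn s fun s => tst (chkD s) (dK s 36 1 2 4) false

lemma d_cert : ∀ x < 16, ∀ y < 11, dAll (2 ^ x * 3 ^ y) = true := by decide +kernel

/-- Among five indices, two have `p`, or two have `q`, or three have neither. -/
lemma pigeon : ∀ p q : Fin 5 → Bool, (∃ i j, i < j ∧ p i = true ∧ p j = true) ∨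
    (∃ i j, i < j ∧ q i = true ∧ q j = true) ∨
    ∃ i j l, i < j ∧ j < l ∧ (p i = false ∧ p j = false ∧ p l = false) ∧
      (q i = false ∧ q j = false ∧ q l = false) := by
  decide +kernel

/-- The finite search applied to a solution: the indices are at most `228`, so at most one exponent
of `2` exceeds `15` and at most one exponent of `3` exceeds `10`; three of the five equations then
have small right-hand sides, which leaves finitely many `d`. -/
lemma Sol.concl {d : ℤ} {n x y : Fin 5 → ℕ} (s : Sol d n x y) : d = 2 ∨ d = 8 := by
  obtain ⟨hn4, hbd⟩ := s.bd_final
  have hn (i : Fin 5) : n i ≤ 228 := (s.mono.monotone (Fin.le_last i)).trans hn4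
  obtain ⟨D, rfl⟩ : ∃ D : ℕ, d = D := ⟨d.toNat, (Int.toNat_of_nonneg (by linarith [s.hd])).symm⟩
  have hD : 1 ≤ D := by exact_mod_cast s.hd
  have heq (i : Fin 5) : TN (n i) + D = 2 ^ x i * 3 ^ y i := by
    have := s.eq i
    rw [← TN_cast] at this
    exact_mod_cast this
  have hdiff (i j : Fin 5) : T (n j) - T (n i) = 2 ^ x j * 3 ^ y j - 2 ^ x i * 3 ^ y i := by
    rw [← s.eq i, ← s.eq j]; ring
  rcases pigeon (fun i => decide (15 < x i)) (fun i => decide (10 < y i)) with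
    ⟨i, j, hij, h1, h2⟩ | ⟨i, j, hij, h1, h2⟩ | ⟨i, j, l, hij, hjl, ⟨h1, h2, h3⟩, h4, h5, h6⟩
  · exfalso
    simp only [decide_eq_true_eq] at h1 h2
    refine (pair_bound (s.ne1 i) (s.mono hij) (hn j) (s.ne1 j)).1 ?_
    rw [hdiff]
    exact dvd_sub (Dvd.dvd.mul_right (pow_dvd_pow _ (by omega)) _)
      (Dvd.dvd.mul_right (pow_dvd_pow _ (by omega)) _)
  · exfalso
    simp only [decide_eq_true_eq] at h1 h2
    refine (pair_bound (s.ne1 i) (s.mono hij) (hn j) (s.ne1 j)).2 ?_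
    rw [hdiff]
    exact dvd_sub (Dvd.dvd.mul_left (pow_dvd_pow _ (by omega)) _)
      (Dvd.dvd.mul_left (pow_dvd_pow _ (by omega)) _)
  · simp only [decide_eq_false_iff_not, not_lt] at h1 h2 h3 h4 h5 h6
    -- an index with small exponents is small, and `T n + d` divides `2 ^ 15 * 3 ^ 10`
    have hsm (i : Fin 5) (hx : x i ≤ 15) (hy : y i ≤ 10) :
        n i ≠ 1 ∧ n i < 36 + 2 ∧ 1934917632 % (TN (n i) + D) = 0 := by
      have hdv : TN (n i) + D ∣ 1934917632 := by
        rw [heq, show 1934917632 = 2 ^ 15 * 3 ^ 10 by norm_num]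
        exact Nat.mul_dvd_mul (pow_dvd_pow _ hx) (pow_dvd_pow _ hy)
      refine ⟨s.ne1 i, ?_, Nat.mod_eq_zero_of_dvd hdv⟩
      by_contra hge
      have hle := Nat.le_of_dvd (by norm_num) hdv
      have h38 : TN 38 ≤ TN (n i) := by
        rcases (show 38 ≤ n i by omega).eq_or_lt with h | h
        · rw [← h]
        · exact Int.toNat_le_toNat (T_lt (by norm_num) h).le
      have : 1934917632 < TN 38 := by decide +kernel
      omega
    have hchk : chkD D = true := by
      have hc : tst (chkD (2 ^ x i * 3 ^ y i)) (dK (2 ^ x i * 3 ^ y i) 36 1 2 4) false = true :=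
        d_cert (x i) (by omega) (y i) (by omega)
      rw [tst_iff] at hc
      simp only [Bool.false_eq_true, and_false, or_false] at hc
      rw [← heq i] at hc
      by_cases h0 : n i = 0
      · rw [h0] at hc
        simpa [show TN 0 = 0 from rfl] using hc.1
      · obtain ⟨t2, t3, t4⟩ := TN_small
        have hk := hc.2
        rw [← t2, ← t3, ← t4] at hk
        have hb := hsm i h1 h4
        have := dK_spec 36 2 le_rfl hk (n i - 2) (by omega)
        rw [Nat.add_sub_cancel' (by omega : 2 ≤ n i)] at this
        have := this (by omega)
        rwa [Nat.add_sub_cancel_left] at this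
    obtain ⟨c, hc, hS⟩ := cntAll_spec (show cntAll 1934917632 D 36 (fun c => tst (Nat.ble c 2) true
      (cntAll (6 ^ 245) D 227 fun c => Nat.ble c 4 || Nat.beq D 2 || Nat.beq D 8)) = true from hchk)
    have h3c := hS {n i, n j, n l} (by
      intro m hm
      simp only [Finset.mem_insert, Finset.mem_singleton] at hm
      rcases hm with rfl | rfl | rfl
      · exact hsm i h1 h4
      · exact hsm j h2 h5
      · exact hsm l h3 h6)
    rw [Finset.card_eq_three.2 ⟨n i, n j, n l, (s.mono hij).ne, (s.mono (hij.trans hjl)).ne,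
      (s.mono hjl).ne, rfl⟩] at h3c
    rw [tst_iff, Nat.ble_eq] at hc
    rcases hc with hc | ⟨-, hc⟩
    · omega
    obtain ⟨c', hc', hS'⟩ := cntAll_spec hc
    have h5c := hS' (Finset.univ.image n) (by
      intro m hm
      obtain ⟨i, -, rfl⟩ := Finset.mem_image.1 hm
      refine ⟨s.ne1 i, by have := hn i; omega, Nat.mod_eq_zero_of_dvd ?_⟩
      rw [heq, show 6 = 2 * 3 by norm_num, mul_pow]
      exact Nat.mul_dvd_mul (pow_dvd_pow _ (hbd i).2.1) (pow_dvd_pow _ (hbd i).2.2))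
    rw [Finset.card_image_of_injective _ s.mono.injective, Finset.card_univ, Fintype.card_fin] at h5c
    rw [Bool.or_eq_true, Bool.or_eq_true, Nat.ble_eq, Nat.beq_eq, Nat.beq_eq] at hc'
    rcases hc' with (hc' | rfl) | rfl
    · omega
    · left; rfl
    · right; rfl

lemma two_three_inj {a b a' b' : ℕ} (h : (2 : ℕ) ^ a * 3 ^ b = 2 ^ a' * 3 ^ b') :
    a = a' ∧ b = b' := by
  have f2 (a b : ℕ) : (2 ^ a * 3 ^ b).factorization 2 = a := by
    rw [Nat.factorization_mul (by positivity) (by positivity), Nat.Prime.factorization_pow Nat.prime_two,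
      Nat.Prime.factorization_pow Nat.prime_three]
    simp
  have f3 (a b : ℕ) : (2 ^ a * 3 ^ b).factorization 3 = b := by
    rw [Nat.factorization_mul (by positivity) (by positivity), Nat.Prime.factorization_pow Nat.prime_two,
      Nat.Prime.factorization_pow Nat.prime_three]
    simp
  exact ⟨by rw [← f2 a b, h, f2], by rw [← f3 a b, h, f3]⟩

theorem pillai_tribonacci_neg (c : ℤ) (hc : c ≤ -1) (s : Fin 5 → ℕ × ℕ × ℕ)
    (hinj : Function.Injective s)
    (hn : ∀ i, (s i).1 ≠ 1)
    (hrep : ∀ i, T (s i).1 - 2 ^ (s i).2.1 * 3 ^ (s i).2.2 = c) :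
    (c = -8 ∨ c = -2) ∧
      (T 0 - 2 ^ 3 * 3 ^ 0 = (-8 : ℤ) ∧ T 2 - 2 ^ 0 * 3 ^ 2 = (-8 : ℤ) ∧
        T 4 - 2 ^ 2 * 3 ^ 1 = (-8 : ℤ) ∧ T 7 - 2 ^ 5 * 3 ^ 0 = (-8 : ℤ) ∧
        T 12 - 2 ^ 9 * 3 ^ 0 = (-8 : ℤ)) ∧
      (T 0 - 2 ^ 1 * 3 ^ 0 = (-2 : ℤ) ∧ T 2 - 2 ^ 0 * 3 ^ 1 = (-2 : ℤ) ∧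
        T 3 - 2 ^ 2 * 3 ^ 0 = (-2 : ℤ) ∧ T 4 - 2 ^ 1 * 3 ^ 1 = (-2 : ℤ) ∧
        T 5 - 2 ^ 0 * 3 ^ 2 = (-2 : ℤ)) := by
  refine ⟨?_, by norm_num [T], by norm_num [T]⟩
  -- the index determines the exponents, so the five indices are distinct and can be sorted
  have hinj1 : Function.Injective fun i => (s i).1 := by
    intro i j hij
    have hij : (s i).1 = (s j).1 := hij
    have e : (2 : ℤ) ^ (s i).2.1 * 3 ^ (s i).2.2 = 2 ^ (s j).2.1 * 3 ^ (s j).2.2 := by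
      have h1 := hrep i
      have h2 := hrep j
      rw [hij] at h1
      linarith
    obtain ⟨h1, h2⟩ := two_three_inj (by exact_mod_cast e)
    exact hinj (Prod.ext hij (Prod.ext h1 h2))
  have hmono : StrictMono ((fun i => (s i).1) ∘ Tuple.sort fun i => (s i).1) :=
    (Tuple.monotone_sort _).strictMono_of_injective (hinj1.comp (Equiv.injective _))
  have hs : Sol (-c) ((fun i => (s i).1) ∘ Tuple.sort fun i => (s i).1)
      (fun i => (s (Tuple.sort (fun i => (s i).1) i)).2.1)
      (fun i => (s (Tuple.sort (fun i => (s i).1) i)).2.2) :=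
    { hd := by linarith
      mono := hmono
      ne1 := fun i => hn _
      eq := fun i => by
        have := hrep (Tuple.sort (fun i => (s i).1) i)
        simp only [Function.comp]
        linarith }
  rcases hs.concl with h | h
  · right; linarith
  · left; linarith
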